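/- Let 0<c₁<⋯<c_m be non-integer reals. For every p∈(1,∞) and r>2 there is a constant C depending only on c₁,…,c_m, m, p, r such that for every f∈ℓ^p(ℤ^m), the full variational inequality ‖ V^r(Ã_N f)_{N∈ℕ} ‖_{ℓ^p(ℤ^m)} ≤ C ‖f‖_{ℓ^p(ℤ^m)} holds, where Ã_N f(x) = (1/N) ∑_{n=1}^{N} 1_{n>N/2} f(x−(⌊n^{c₁}⌋,…,⌊n^{c_m}⌋)). -/

import Mathlib

/-!
The averages over `N ∈ [2^k, 2^(k+1)]` are compared with a martingale. Let `E k` be the conditional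
expectation onto the anisotropic dyadic boxes with sides `2^⌊k c_i⌋` (`dboxGrid`), the scale reached
by the curve `n ↦ (⌊n^{c_i}⌋)` at time `2^k`. With `k = ⌊log₂ N⌋`, the average is
`bop k N f + a_N · E k f`, where `a_N = avg N 1` is the total mass of the averaging weights. Along a
chain of times this splits the `r`-variation (`Vvar_avg_le`) into the square function in `k` of the
`2`-variations `blockV k f` of `N ↦ bop k N f` over dyadic blocks, the Doob maximal function, which
takes care of the variation of the masses `a_N`, and the `r`-variation of the martingale `E k f`.

*Martingales.* Lépingle's inequality (`Grid.variation`) is proved by stopping: at each dyadic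
threshold an anchor process follows the martingale and moves only when the distance exceeds the
threshold; its squared jumps are controlled by the maximal function through orthogonality and the
Garsia–Neveu inequality, and the thresholds are summed using `r > 2`. A Calderón–Zygmund
decomposition and Marcinkiewicz interpolation give all `p > 1`.

*Square function.* `blockV k` is almost orthogonal on `ℓ²` to the martingale differences of level
`i`, with geometric decay in `|k - i|` (`blockV_l2`). For `i ≥ k` the difference is constant on
boxes larger than the shifts, so few points are affected. For `i < k` the difference has mean zero
on small boxes, and one uses decay of the multiplier of the averages (`mult_decay`). That decay
comes from Weyl's inequality: on short blocks a phase `∑ θ_i n^{c_i}` is a polynomial up to a small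
error, and since the `c_i` are distinct and not integers, a Vandermonde argument produces a degree
with large leading coefficient (`bc_nondeg`, `expsum`); the integer parts are removed by Fejér
approximation of `y ↦ e(-ξ{y})` (`floor_removal`). Smallness of each average is upgraded to smallness
of the `2`-variation over the block by a sampling argument (`short_var`).

For exponents `p ≠ 2` the abstract framework `Fam` is used. For `1 < p < 2` the decay on `ℓ²` is
interpolated with a weak type `(1,1)` bound growing only linearly in `|k - i|`. For `p > 2` it is
interpolated with a uniform bound obtained by duality from a maximal function for the adjoint
kernels; this maximal function is in turn bounded by applying the case `p < 2` to the reflected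
curve (`adjMax`).
-/

open MeasureTheory Filter Finset
open scoped ENNReal NNReal

noncomputable section

/-- The upper-half discrete averages
`Ã_N f (x) = (1/N) ∑_{n=1}^{N} 1_{n > N/2} f(x − (⌊n^{c₁}⌋, …, ⌊n^{c_m}⌋))`. -/
def Atil (m : ℕ) (c : Fin m → ℝ) (N : ℕ) (f : (Fin m → ℤ) → ℂ)
    (x : Fin m → ℤ) : ℂ :=
  (N : ℂ)⁻¹ * ∑ n ∈ Finset.Icc 1 N,
    if N < 2 * n then f (x - fun i => ⌊(n : ℝ) ^ c i⌋) else 0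

/-- The `r`-variation norm of a sequence `a` along an index set `D ⊆ ℕ`:
`V^r(a_N)_{N∈D} = sup_{N∈D} ‖a_N‖ +
  sup_{J} sup_{N₀<⋯<N_J, N_j∈D} (∑_{j<J} ‖a_{N_{j+1}} − a_{N_j}‖^r)^{1/r}`. -/
def Vvar {E : Type*} [NormedAddCommGroup E] (r : ℝ) (a : ℕ → E) (D : Set ℕ) :
    ℝ≥0∞ :=
  (⨆ N ∈ D, (‖a N‖₊ : ℝ≥0∞)) +
    ⨆ (J : ℕ) (u : Fin (J + 1) → ℕ) (_ : StrictMono u) (_ : ∀ j, u j ∈ D),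
      (∑ j : Fin J, (‖a (u j.succ) - a (u j.castSucc)‖₊ : ℝ≥0∞) ^ r) ^ r⁻¹

/-- The `ℓ^p(ℤ^m)` norm of a complex-valued function. -/
def lpZ (m : ℕ) (p : ℝ) (f : (Fin m → ℤ) → ℂ) : ℝ≥0∞ :=
  (∑' x : Fin m → ℤ, (‖f x‖₊ : ℝ≥0∞) ^ p) ^ p⁻¹

/-- The `ℓ^p(ℤ^m)` norm of an `ℝ≥0∞`-valued function. -/
def lpZE (m : ℕ) (p : ℝ) (g : (Fin m → ℤ) → ℝ≥0∞) : ℝ≥0∞ :=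
  (∑' x : Fin m → ℤ, g x ^ p) ^ p⁻¹

/-! ### `ℓ^p` norms of extended nonnegative functions -/

/-- The `ℓ^p` norm of an extended nonnegative function on an arbitrary index type. -/
def nr {α : Type*} (p : ℝ) (F : α → ℝ≥0∞) : ℝ≥0∞ := (∑' x, F x ^ p) ^ p⁻¹

lemma nr_mono {α : Type*} {p : ℝ} (hp : 0 < p) {F G : α → ℝ≥0∞} (h : ∀ x, F x ≤ G x) :
    nr p F ≤ nr p G := by
  unfold nr
  refine ENNReal.rpow_le_rpow (ENNReal.tsum_le_tsum fun x => ?_) (by positivity)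
  exact ENNReal.rpow_le_rpow (h x) hp.le

lemma nr_rpow {α : Type*} {p : ℝ} (hp : 0 < p) (F : α → ℝ≥0∞) :
    nr p F ^ p = ∑' x, F x ^ p := by
  unfold nr
  rw [← ENNReal.rpow_mul, inv_mul_cancel₀ hp.ne', ENNReal.rpow_one]

lemma nr_le_of {α : Type*} {p : ℝ} (hp : 0 < p) {F : α → ℝ≥0∞} {K : ℝ≥0∞}
    (h : ∑' x, F x ^ p ≤ K ^ p) : nr p F ≤ K := by
  unfold nr
  calc (∑' x, F x ^ p) ^ p⁻¹ ≤ (K ^ p) ^ p⁻¹ := ENNReal.rpow_le_rpow h (by positivity)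
    _ = K := by rw [← ENNReal.rpow_mul, mul_inv_cancel₀ hp.ne', ENNReal.rpow_one]

lemma nr_add_le {α : Type*} {p : ℝ} (hp : 1 ≤ p) (F G : α → ℝ≥0∞) :
    nr p (fun x => F x + G x) ≤ nr p F + nr p G := by
  letI : MeasurableSpace α := ⊤
  have h := ENNReal.lintegral_Lp_add_le (μ := Measure.count) (p := p) (f := F) (g := G)
    (measurable_from_top.aemeasurable) (measurable_from_top.aemeasurable) hp
  simpa [nr, lintegral_count, one_div] using h

lemma nr_const_mul {α : Type*} {p : ℝ} (hp : 0 < p) (c : ℝ≥0∞) (F : α → ℝ≥0∞) :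
    nr p (fun x => c * F x) = c * nr p F := by
  unfold nr
  simp_rw [ENNReal.mul_rpow_of_nonneg _ _ hp.le]
  rw [ENNReal.tsum_mul_left, ENNReal.mul_rpow_of_nonneg _ _ (by positivity : 0 ≤ p⁻¹),
    ← ENNReal.rpow_mul, mul_inv_cancel₀ hp.ne', ENNReal.rpow_one]

lemma nr_finset_sum_le {α ι : Type*} {p : ℝ} (hp : 1 ≤ p) (s : Finset ι) (F : ι → α → ℝ≥0∞) :
    nr p (fun x => ∑ i ∈ s, F i x) ≤ ∑ i ∈ s, nr p (F i) := by
  classical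
  induction s using Finset.induction_on with
  | empty =>
    have h0 : (0:ℝ) < p := by linarith
    simp [nr, ENNReal.zero_rpow_of_pos h0, h0]
  | insert a s ha ih =>
    simp_rw [Finset.sum_insert ha]
    exact (nr_add_le hp _ _).trans (by gcongr)

/-- Continuity from below of the norm: a norm is controlled by finite parts. -/
lemma nr_le_of_finset {α : Type*} {p : ℝ} (hp : 0 < p) {F : α → ℝ≥0∞} {K : ℝ≥0∞}
    (h : ∀ s : Finset α, (∑ x ∈ s, F x ^ p) ^ p⁻¹ ≤ K) : nr p F ≤ K := by
  refine nr_le_of hp ?_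
  rw [ENNReal.tsum_eq_iSup_sum]
  refine iSup_le fun s => ?_
  calc ∑ x ∈ s, F x ^ p = ((∑ x ∈ s, F x ^ p) ^ p⁻¹) ^ p := by
        rw [← ENNReal.rpow_mul, inv_mul_cancel₀ hp.ne', ENNReal.rpow_one]
    _ ≤ K ^ p := ENNReal.rpow_le_rpow (h s) hp.le

/-- Norms pass to pointwise limits (Fatou). -/
lemma nr_le_of_tendsto {α : Type*} {p : ℝ} (hp : 0 < p) {F : ℕ → α → ℝ≥0∞} {G : α → ℝ≥0∞}
    {K : ℝ≥0∞} (hl : ∀ x, Tendsto (fun n => F n x) atTop (nhds (G x)))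
    (h : ∀ n, nr p (F n) ≤ K) : nr p G ≤ K := by
  refine nr_le_of_finset hp fun s => ?_
  have ht : Tendsto (fun n => (∑ x ∈ s, F n x ^ p) ^ p⁻¹) atTop
      (nhds ((∑ x ∈ s, G x ^ p) ^ p⁻¹)) := by
    refine (ENNReal.continuous_rpow_const.tendsto _).comp ?_
    exact tendsto_finsetSum _ fun x _ => (ENNReal.continuous_rpow_const.tendsto _).comp (hl x)
  refine le_of_tendsto' ht fun n => ?_
  refine le_trans ?_ (h n)
  exact ENNReal.rpow_le_rpow (ENNReal.sum_le_tsum s) (by positivity)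

/-- Minkowski's inequality for countable sums. -/
lemma nr_tsum_le {α ι : Type*} [Countable ι] {p : ℝ} (hp : 1 ≤ p) (F : ι → α → ℝ≥0∞) :
    nr p (fun x => ∑' i, F i x) ≤ ∑' i, nr p (F i) := by
  have h0 : (0:ℝ) < p := by linarith
  refine nr_le_of_finset h0 fun s => ?_
  have ht : Tendsto (fun t : Finset ι => (∑ x ∈ s, (∑ i ∈ t, F i x) ^ p) ^ p⁻¹) atTop
      (nhds ((∑ x ∈ s, (∑' i, F i x) ^ p) ^ p⁻¹)) := by
    refine (ENNReal.continuous_rpow_const.tendsto _).comp ?_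
    exact tendsto_finsetSum _ fun x _ => (ENNReal.continuous_rpow_const.tendsto _).comp
      ENNReal.summable.hasSum
  refine le_of_tendsto' ht fun t => ?_
  calc _ ≤ nr p (fun x => ∑ i ∈ t, F i x) :=
        ENNReal.rpow_le_rpow (ENNReal.sum_le_tsum s) (by positivity)
    _ ≤ ∑ i ∈ t, nr p (F i) := nr_finset_sum_le hp t F
    _ ≤ _ := ENNReal.sum_le_tsum t

lemma tsum_mul_le_nr {α : Type*} {p q : ℝ} (hpq : p.HolderConjugate q) (F G : α → ℝ≥0∞) :
    ∑' x, F x * G x ≤ nr p F * nr q G := by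
  letI : MeasurableSpace α := ⊤
  have h := ENNReal.lintegral_mul_le_Lp_mul_Lq (Measure.count : Measure α) hpq (f := F) (g := G)
    (measurable_from_top.aemeasurable) (measurable_from_top.aemeasurable)
  simpa [nr, lintegral_count, one_div] using h

/-- A function whose pairings with `ℓ^q` are bounded by `K` has `ℓ^p` norm at most `K`. -/
lemma nr_le_of_dual {α : Type*} {p q : ℝ} (hpq : p.HolderConjugate q) (F : α → ℝ≥0∞) (K : ℝ≥0∞)
    (h : ∀ H : α → ℝ≥0∞, ∑' x, F x * H x ≤ K * nr q H) : nr p F ≤ K := by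
  classical
  have hp := hpq.pos
  have hq := hpq.symm.pos
  -- it suffices to treat bounded functions of finite support below `F`
  have key : ∀ (s : Finset α) (n : ℕ), ∑ x ∈ s, (min (F x) n) ^ p ≤ K ^ p := by
    intro s n
    set H : α → ℝ≥0∞ := fun x => if x ∈ s then (min (F x) n) ^ (p - 1) else 0 with hH
    have hp1 : 0 < p - 1 := by linarith [hpq.lt]
    set A := ∑ x ∈ s, (min (F x) n) ^ p with hA
    have hAfin : A ≠ ⊤ := by
      refine ENNReal.sum_ne_top.2 fun x _ => ENNReal.rpow_ne_top_of_nonneg hp.le ?_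
      exact ne_top_of_le_ne_top (ENNReal.natCast_ne_top n) (min_le_right _ _)
    have h1 : A ≤ ∑' x, F x * H x := by
      calc A ≤ ∑ x ∈ s, F x * H x := by
            refine Finset.sum_le_sum fun x hx => ?_
            simp only [hH, hx, if_true]
            calc (min (F x) n) ^ p = min (F x) n * (min (F x) n) ^ (p - 1) := by
                  have := ENNReal.rpow_add_of_nonneg (x := min (F x) n) 1 (p-1) zero_le_one hp1.le
                  rw [ENNReal.rpow_one] at this
                  rw [← this]; congr 1; ring
              _ ≤ _ := by gcongr; exact min_le_left _ _
        _ ≤ _ := ENNReal.sum_le_tsum s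
    have h2 : nr q H = A ^ q⁻¹ := by
      unfold nr
      congr 1
      rw [tsum_eq_sum (s := s)]
      · refine Finset.sum_congr rfl fun x hx => ?_
        simp only [hH, hx, if_true]
        rw [← ENNReal.rpow_mul]
        congr 1
        exact hpq.sub_one_mul_conj
      · intro x hx
        simp [hH, hx, ENNReal.zero_rpow_of_pos hq]
    have h3 : A ≤ K * A ^ q⁻¹ := by
      rw [← h2]; exact h1.trans (h H)
    by_cases hA0 : A = 0
    · rw [hA0]; exact zero_le
    have h4 : A ^ p⁻¹ ≤ K := by
      have hne : A ^ q⁻¹ ≠ 0 := by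
        simp [ENNReal.rpow_eq_zero_iff, hA0, hAfin]
      have hnt : A ^ q⁻¹ ≠ ⊤ := ENNReal.rpow_ne_top_of_nonneg (by positivity) hAfin
      have : A ^ p⁻¹ * A ^ q⁻¹ ≤ K * A ^ q⁻¹ := by
        rw [← ENNReal.rpow_add _ _ hA0 hAfin, hpq.inv_add_inv_eq_one, ENNReal.rpow_one]
        exact h3
      exact (ENNReal.mul_le_mul_iff_left hne hnt).1 this
    calc A = (A ^ p⁻¹) ^ p := by
          rw [← ENNReal.rpow_mul, inv_mul_cancel₀ hp.ne', ENNReal.rpow_one]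
      _ ≤ K ^ p := ENNReal.rpow_le_rpow h4 hp.le
  refine nr_le_of_tendsto hp (F := fun n x => min (F x) n) ?_ ?_
  · intro x
    have : Tendsto (fun n : ℕ => min (F x) (n:ℝ≥0∞)) atTop (nhds (min (F x) ⊤)) :=
      tendsto_const_nhds.min ENNReal.tendsto_nat_nhds_top
    simpa using this
  · intro n
    refine nr_le_of hp ?_
    rw [ENNReal.tsum_eq_iSup_sum]
    exact iSup_le fun s => key s n

/-! ### Marcinkiewicz interpolation -/

/-- The number of points where `F` exceeds `t`. -/
def lev {α : Type*} (F : α → ℝ≥0∞) (t : ℝ≥0∞) : ℝ≥0∞ :=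
  ∑' x, if t < F x then (1 : ℝ≥0∞) else 0

lemma lev_mono {α : Type*} {F G : α → ℝ≥0∞} {s t : ℝ≥0∞} (h : ∀ x, t < F x → s < G x) :
    lev F t ≤ lev G s := by
  refine ENNReal.tsum_le_tsum fun x => ?_
  by_cases hx : t < F x
  · simp [hx, h x hx]
  · simp [hx]

lemma lev_add_le {α : Type*} {F G H : α → ℝ≥0∞} {a b c : ℝ≥0∞} (h : ∀ x, F x ≤ G x + H x)
    (hc : b + c ≤ a) : lev F a ≤ lev G b + lev H c := by
  unfold lev
  rw [← ENNReal.tsum_add]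
  refine ENNReal.tsum_le_tsum fun x => ?_
  by_cases hx : a < F x
  · by_cases h1 : b < G x
    · simp [hx, h1]
    · by_cases h2 : c < H x
      · simp [hx, h2]
      · exfalso
        push Not at h1 h2
        exact absurd (hx.trans_le ((h x).trans ((add_le_add h1 h2).trans hc))) (lt_irrefl _)
  · simp [hx]

lemma mul_lev_rpow_le {α : Type*} (F : α → ℝ≥0∞) (t : ℝ≥0∞) {p : ℝ} (hp : 0 < p) :
    t ^ p * lev F t ≤ ∑' x, F x ^ p := by
  unfold lev
  rw [← ENNReal.tsum_mul_left]
  refine ENNReal.tsum_le_tsum fun x => ?_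
  by_cases hx : t < F x
  · simpa [hx] using ENNReal.rpow_le_rpow hx.le hp.le
  · simp [hx]

/-- Chebyshev's inequality. -/
lemma lev_le {α : Type*} (F : α → ℝ≥0∞) {t : ℝ} (ht : 0 < t) {p : ℝ} (hp : 0 < p) :
    lev F (ENNReal.ofReal t) ≤ ENNReal.ofReal (t ^ (-p)) * ∑' x, F x ^ p := by
  have h := mul_lev_rpow_le F (ENNReal.ofReal t) hp
  rw [ENNReal.ofReal_rpow_of_pos ht] at h
  have h1 : ENNReal.ofReal (t ^ (-p)) * ENNReal.ofReal (t ^ p) = 1 := by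
    rw [← ENNReal.ofReal_mul (by positivity), ← Real.rpow_add ht]; simp
  calc lev F (ENNReal.ofReal t) = ENNReal.ofReal (t ^ (-p)) * (ENNReal.ofReal (t ^ p) * lev F (ENNReal.ofReal t)) := by
        rw [← mul_assoc, h1, one_mul]
    _ ≤ _ := by gcongr

lemma lint_Ioo_rpow {a y : ℝ} (ha : 0 < a) (hy : 0 ≤ y) :
    ∫⁻ t in Set.Ioo 0 y, ENNReal.ofReal (t ^ (a - 1)) = ENNReal.ofReal (y ^ a / a) := by
  have hi : IntervalIntegrable (fun t : ℝ => t ^ (a - 1)) volume 0 y :=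
    intervalIntegral.intervalIntegrable_rpow' (by linarith)
  have hi2 : IntegrableOn (fun t : ℝ => t ^ (a - 1)) (Set.Ioo 0 y) :=
    ((intervalIntegrable_iff_integrableOn_Ioo_of_le hy).1 hi)
  rw [← ofReal_integral_eq_lintegral_ofReal hi2]
  · rw [← integral_Ioc_eq_integral_Ioo, ← intervalIntegral.integral_of_le hy,
      integral_rpow (Or.inl (by linarith))]
    simp [Real.zero_rpow ha.ne']
  · filter_upwards [ae_restrict_mem measurableSet_Ioo] with t ht
    exact Real.rpow_nonneg ht.1.le _

lemma lint_Ioi_rpow {b y : ℝ} (hb : 0 < b) (hy : 0 < y) :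
    ∫⁻ t in Set.Ioi y, ENNReal.ofReal (t ^ (-b - 1)) = ENNReal.ofReal (y ^ (-b) / b) := by
  have hi2 : IntegrableOn (fun t : ℝ => t ^ (-b - 1)) (Set.Ioi y) :=
    integrableOn_Ioi_rpow_of_lt (by linarith) hy
  rw [← ofReal_integral_eq_lintegral_ofReal hi2]
  · rw [integral_Ioi_rpow_of_lt (by linarith) hy]
    congr 1
    rw [show -b - 1 + 1 = -b by ring, neg_div_neg_eq]
  · filter_upwards [ae_restrict_mem measurableSet_Ioi] with t ht
    exact Real.rpow_nonneg (hy.le.trans (le_of_lt ht)) _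

/-- Layer-cake bound for a single value. -/
lemma rpow_le_layer {p : ℝ} (hp : 0 < p) (F : ℝ≥0∞) :
    F ^ p ≤ ENNReal.ofReal p * ∫⁻ t in Set.Ioi (0:ℝ), ENNReal.ofReal (t ^ (p - 1)) *
      (if ENNReal.ofReal t < F then 1 else 0) := by
  have key : ∀ y : ℝ, 0 ≤ y → ENNReal.ofReal y ≤ F → (ENNReal.ofReal y) ^ p ≤
      ENNReal.ofReal p * ∫⁻ t in Set.Ioi (0:ℝ), ENNReal.ofReal (t ^ (p - 1)) *
      (if ENNReal.ofReal t < F then 1 else 0) := by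
    intro y hy hF
    have h1 : ∫⁻ t in Set.Ioo 0 y, ENNReal.ofReal (t ^ (p - 1)) ≤
        ∫⁻ t in Set.Ioi (0:ℝ), ENNReal.ofReal (t ^ (p - 1)) *
      (if ENNReal.ofReal t < F then 1 else 0) := by
      calc _ = ∫⁻ t in Set.Ioo 0 y, ENNReal.ofReal (t ^ (p - 1)) *
            (if ENNReal.ofReal t < F then 1 else 0) := by
            refine setLIntegral_congr_fun measurableSet_Ioo fun t ht => ?_
            have : ENNReal.ofReal t < F :=
              lt_of_lt_of_le ((ENNReal.ofReal_lt_ofReal_iff_of_nonneg ht.1.le).2 ht.2) hF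
            simp [this]
        _ ≤ _ := lintegral_mono_set Set.Ioo_subset_Ioi_self
    rw [lint_Ioo_rpow hp hy] at h1
    calc (ENNReal.ofReal y) ^ p = ENNReal.ofReal p * ENNReal.ofReal (y ^ p / p) := by
          rw [← ENNReal.ofReal_mul hp.le, ENNReal.ofReal_rpow_of_nonneg hy hp.le]
          congr 1; field_simp
      _ ≤ _ := by gcongr
  by_cases hF : F = ⊤
  · have ht : Tendsto (fun n : ℕ => (ENNReal.ofReal (n:ℝ)) ^ p) atTop (nhds ((⊤:ℝ≥0∞) ^ p)) := by
      refine (ENNReal.continuous_rpow_const.tendsto _).comp ?_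
      simpa using ENNReal.tendsto_nat_nhds_top
    rw [← hF] at ht
    exact le_of_tendsto' ht fun n => key n (by positivity) (by simp [hF])
  · have := key F.toReal ENNReal.toReal_nonneg (by rw [ENNReal.ofReal_toReal hF])
    rwa [ENNReal.ofReal_toReal hF] at this

lemma tsum_rpow_le_layer {α : Type*} [Countable α] {p : ℝ} (hp : 0 < p) (F : α → ℝ≥0∞) :
    ∑' x, F x ^ p ≤ ENNReal.ofReal p *
      ∫⁻ t in Set.Ioi (0:ℝ), ENNReal.ofReal (t ^ (p - 1)) * lev F (ENNReal.ofReal t) := by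
  calc ∑' x, F x ^ p ≤ ∑' x, ENNReal.ofReal p * ∫⁻ t in Set.Ioi (0:ℝ),
        ENNReal.ofReal (t ^ (p - 1)) * (if ENNReal.ofReal t < F x then 1 else 0) :=
        ENNReal.tsum_le_tsum fun x => rpow_le_layer hp (F x)
    _ = _ := by
        rw [ENNReal.tsum_mul_left, ← lintegral_tsum]
        · simp_rw [ENNReal.tsum_mul_left]; rfl
        · intro x
          refine (Measurable.mul (by fun_prop) ?_).aemeasurable
          exact Measurable.ite (measurableSet_lt (by fun_prop) measurable_const) measurable_const
            measurable_const

/-- Marcinkiewicz interpolation for a subadditive operator, with the truncation parameter `τ`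
left free so that the dependence on the two weak-type constants can be optimised. -/
lemma marcinkiewicz {X : Type*} [Countable X] {q₀ p q₁ : ℝ} (h0 : 0 < q₀) (h1 : q₀ < p)
    (h2 : p < q₁) :
    ∃ K : ℝ, 0 < K ∧ ∀ (S : (X → ℂ) → X → ℝ≥0∞) (A B : ℝ≥0∞) (τ : ℝ), 0 < τ →
      (∀ f g x, S (f + g) x ≤ S f x + S g x) →
      (∀ f, ∀ t : ℝ, 0 < t → lev (S f) (ENNReal.ofReal t) ≤
        A * (ENNReal.ofReal (t ^ (-q₀)) * ∑' x, ‖f x‖ₑ ^ q₀)) →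
      (∀ f, ∀ t : ℝ, 0 < t → lev (S f) (ENNReal.ofReal t) ≤
        B * (ENNReal.ofReal (t ^ (-q₁)) * ∑' x, ‖f x‖ₑ ^ q₁)) →
      ∀ f, ∑' x, S f x ^ p ≤ ENNReal.ofReal K * (A * ENNReal.ofReal (τ ^ (-(p - q₀))) +
        B * ENNReal.ofReal (τ ^ (q₁ - p))) * ∑' x, ‖f x‖ₑ ^ p := by
  classical
  have hp : 0 < p := h0.trans h1
  refine ⟨p * (2 ^ q₀ / (p - q₀) + 2 ^ q₁ / (q₁ - p)), ?_, ?_⟩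
  · have := sub_pos.2 h1; have := sub_pos.2 h2; positivity
  intro S A B τ hτ hS hA hB f
  have d0 := sub_pos.2 h1
  have d1 := sub_pos.2 h2
  -- pointwise bound of the distribution function
  have hlev : ∀ t : ℝ, 0 < t → ENNReal.ofReal (t ^ (p - 1)) * lev (S f) (ENNReal.ofReal t) ≤
      A * ENNReal.ofReal (2 ^ q₀) * ∑' x, ENNReal.ofReal (‖f x‖ ^ q₀) *
        (ENNReal.ofReal (t ^ (p - q₀ - 1)) * if τ * t < ‖f x‖ then 1 else 0) +
      B * ENNReal.ofReal (2 ^ q₁) * ∑' x, ENNReal.ofReal (‖f x‖ ^ q₁) *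
        (ENNReal.ofReal (t ^ (-(q₁ - p) - 1)) * if τ * t < ‖f x‖ then 0 else 1) := by
    intro t ht
    set f₀ : X → ℂ := fun x => if τ * t < ‖f x‖ then f x else 0 with hf0
    set f₁ : X → ℂ := fun x => if τ * t < ‖f x‖ then 0 else f x with hf1
    have hf : f = f₀ + f₁ := by
      funext x; simp only [hf0, hf1, Pi.add_apply]; split_ifs <;> simp
    have e1 : lev (S f) (ENNReal.ofReal t) ≤ lev (S f₀) (ENNReal.ofReal (t/2)) +
        lev (S f₁) (ENNReal.ofReal (t/2)) := by
      refine lev_add_le (fun x => ?_) ?_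
      · conv_lhs => rw [hf]
        exact hS _ _ x
      · rw [← ENNReal.ofReal_add (by positivity) (by positivity)]; simp
    have e2 := hA f₀ (t/2) (by positivity)
    have e3 := hB f₁ (t/2) (by positivity)
    have g0 : ∀ x, ‖f₀ x‖ₑ ^ q₀ = ENNReal.ofReal (‖f x‖ ^ q₀) * if τ * t < ‖f x‖ then 1 else 0 := by
      intro x
      simp only [hf0]
      split_ifs
      · rw [← ofReal_norm, ENNReal.ofReal_rpow_of_nonneg (norm_nonneg _) h0.le, mul_one]
      · simp [ENNReal.zero_rpow_of_pos h0]
    have hq1 : 0 < q₁ := hp.trans h2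
    have g1 : ∀ x, ‖f₁ x‖ₑ ^ q₁ = ENNReal.ofReal (‖f x‖ ^ q₁) * if τ * t < ‖f x‖ then 0 else 1 := by
      intro x
      simp only [hf1]
      split_ifs
      · simp [ENNReal.zero_rpow_of_pos hq1]
      · rw [← ofReal_norm, ENNReal.ofReal_rpow_of_nonneg (norm_nonneg _) hq1.le, mul_one]
    simp_rw [g0] at e2
    simp_rw [g1] at e3
    have hpow : ∀ q : ℝ, ENNReal.ofReal (t ^ (p - 1)) * ENNReal.ofReal ((t/2) ^ (-q)) =
        ENNReal.ofReal (2 ^ q) * ENNReal.ofReal (t ^ (p - q - 1)) := by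
      intro q
      rw [← ENNReal.ofReal_mul (by positivity), ← ENNReal.ofReal_mul (by positivity)]
      congr 1
      rw [Real.div_rpow ht.le (by norm_num), show p - q - 1 = (p - 1) + (-q) by ring,
        Real.rpow_add ht, Real.rpow_neg (by norm_num : (0:ℝ) ≤ 2)]
      field_simp
    calc ENNReal.ofReal (t ^ (p - 1)) * lev (S f) (ENNReal.ofReal t)
        ≤ ENNReal.ofReal (t ^ (p - 1)) * (lev (S f₀) (ENNReal.ofReal (t/2)) +
        lev (S f₁) (ENNReal.ofReal (t/2))) := by gcongr
      _ ≤ _ := mul_le_mul_right (add_le_add e2 e3) _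
      _ = A * (ENNReal.ofReal (t ^ (p - 1)) * ENNReal.ofReal ((t/2) ^ (-q₀))) *
            (∑' x, ENNReal.ofReal (‖f x‖ ^ q₀) * if τ * t < ‖f x‖ then 1 else 0) +
          B * (ENNReal.ofReal (t ^ (p - 1)) * ENNReal.ofReal ((t/2) ^ (-q₁))) *
            (∑' x, ENNReal.ofReal (‖f x‖ ^ q₁) * if τ * t < ‖f x‖ then 0 else 1) := by ring
      _ = _ := by
          rw [hpow, hpow, show p - q₁ - 1 = -(q₁ - p) - 1 by ring]
          have c0 : ∀ (u v : X → ℝ≥0∞) (w : ℝ≥0∞), ∑' x, u x * (w * v x) =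
              w * ∑' x, u x * v x := by
            intro u v w
            rw [← ENNReal.tsum_mul_left]
            congr; funext x; ring
          rw [c0, c0]
          ring
  -- the two inner integrals
  have I0 : ∀ x, ∫⁻ t in Set.Ioi (0:ℝ), ENNReal.ofReal (‖f x‖ ^ q₀) *
        (ENNReal.ofReal (t ^ (p - q₀ - 1)) * if τ * t < ‖f x‖ then 1 else 0) ≤
      ENNReal.ofReal (1 / (p - q₀)) * ENNReal.ofReal (τ ^ (-(p - q₀))) * ‖f x‖ₑ ^ p := by
    intro x
    rw [lintegral_const_mul' _ _ ENNReal.ofReal_ne_top]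
    have : ∫⁻ t in Set.Ioi (0:ℝ), (ENNReal.ofReal (t ^ (p - q₀ - 1)) *
        if τ * t < ‖f x‖ then 1 else 0) ≤
        ∫⁻ t in Set.Ioo (0:ℝ) (‖f x‖ / τ), ENNReal.ofReal (t ^ (p - q₀ - 1)) := by
      rw [← lintegral_indicator measurableSet_Ioi, ← lintegral_indicator measurableSet_Ioo]
      refine lintegral_mono fun t => ?_
      by_cases h : 0 < t
      · by_cases h' : τ * t < ‖f x‖
        · have h3 : t ∈ Set.Ioo (0:ℝ) (‖f x‖ / τ) := ⟨h, by rw [lt_div_iff₀ hτ]; linarith⟩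
          rw [Set.indicator_of_mem (show t ∈ Set.Ioi (0:ℝ) from h), Set.indicator_of_mem h3]
          simp [h']
        · rw [Set.indicator_of_mem (show t ∈ Set.Ioi (0:ℝ) from h)]; simp [h']
      · rw [Set.indicator_of_notMem (by simpa using h)]; exact zero_le
    refine (mul_le_mul_right this _).trans ?_
    rw [lint_Ioo_rpow d0 (by positivity), ← ofReal_norm,
      ENNReal.ofReal_rpow_of_nonneg (norm_nonneg _) hp.le, ← ENNReal.ofReal_mul (by positivity),
      ← ENNReal.ofReal_mul (by positivity), ← ENNReal.ofReal_mul (by positivity)]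
    apply ENNReal.ofReal_le_ofReal
    rw [Real.div_rpow (norm_nonneg _) hτ.le, Real.rpow_neg hτ.le]
    have : ‖f x‖ ^ p = ‖f x‖ ^ q₀ * ‖f x‖ ^ (p - q₀) := by
      rw [← Real.rpow_add_of_nonneg (norm_nonneg _) h0.le d0.le]; congr 1; ring
    rw [this]
    apply le_of_eq
    field_simp
  have I1 : ∀ x, ∫⁻ t in Set.Ioi (0:ℝ), ENNReal.ofReal (‖f x‖ ^ q₁) *
        (ENNReal.ofReal (t ^ (-(q₁ - p) - 1)) * if τ * t < ‖f x‖ then 0 else 1) ≤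
      ENNReal.ofReal (1 / (q₁ - p)) * ENNReal.ofReal (τ ^ (q₁ - p)) * ‖f x‖ₑ ^ p := by
    intro x
    have hq1 : 0 < q₁ := hp.trans h2
    rcases (norm_nonneg (f x)).eq_or_lt with h | hpos
    · rw [← h]; simp [Real.zero_rpow hq1.ne']
    rw [lintegral_const_mul' _ _ ENNReal.ofReal_ne_top]
    have : ∫⁻ t in Set.Ioi (0:ℝ), (ENNReal.ofReal (t ^ (-(q₁ - p) - 1)) *
        if τ * t < ‖f x‖ then 0 else 1) ≤
        ∫⁻ t in Set.Ioi (‖f x‖ / τ), ENNReal.ofReal (t ^ (-(q₁ - p) - 1)) := by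
      rw [setLIntegral_congr (Ioi_ae_eq_Ici (a := ‖f x‖ / τ))]
      rw [← lintegral_indicator measurableSet_Ioi, ← lintegral_indicator measurableSet_Ici]
      refine lintegral_mono fun t => ?_
      by_cases h : 0 < t
      · by_cases h' : τ * t < ‖f x‖
        · rw [Set.indicator_of_mem (show t ∈ Set.Ioi (0:ℝ) from h)]; simp [h']
        · have h3 : t ∈ Set.Ici (‖f x‖ / τ) := by
            rw [Set.mem_Ici, div_le_iff₀ hτ]; linarith
          rw [Set.indicator_of_mem (show t ∈ Set.Ioi (0:ℝ) from h), Set.indicator_of_mem h3]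
          simp [h']
      · rw [Set.indicator_of_notMem (by simpa using h)]; exact zero_le
    refine (mul_le_mul_right this _).trans ?_
    rw [lint_Ioi_rpow d1 (by positivity), ← ofReal_norm,
      ENNReal.ofReal_rpow_of_nonneg (norm_nonneg _) hp.le, ← ENNReal.ofReal_mul (by positivity),
      ← ENNReal.ofReal_mul (by positivity), ← ENNReal.ofReal_mul (by positivity)]
    apply ENNReal.ofReal_le_ofReal
    rw [Real.div_rpow hpos.le hτ.le, Real.rpow_neg hτ.le]
    have : ‖f x‖ ^ p = ‖f x‖ ^ q₁ * ‖f x‖ ^ (-(q₁ - p)) := by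
      rw [← Real.rpow_add hpos]; congr 1; ring
    rw [this]
    apply le_of_eq
    field_simp
  have meas : ∀ (a : ℝ) (b : ℝ) (u v : ℝ≥0∞) (x : X), Measurable fun t : ℝ =>
      ENNReal.ofReal a * (ENNReal.ofReal (t ^ b) * if τ * t < ‖f x‖ then u else v) := by
    intro a b u v x
    refine Measurable.const_mul (Measurable.mul (by fun_prop) ?_) _
    exact Measurable.ite (measurableSet_lt (by fun_prop) measurable_const) measurable_const
            measurable_const
  calc ∑' x, S f x ^ p ≤ ENNReal.ofReal p *
      ∫⁻ t in Set.Ioi (0:ℝ), ENNReal.ofReal (t ^ (p - 1)) * lev (S f) (ENNReal.ofReal t) :=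
        tsum_rpow_le_layer hp _
    _ ≤ ENNReal.ofReal p * ∫⁻ t in Set.Ioi (0:ℝ), (
        A * ENNReal.ofReal (2 ^ q₀) * ∑' x, ENNReal.ofReal (‖f x‖ ^ q₀) *
        (ENNReal.ofReal (t ^ (p - q₀ - 1)) * if τ * t < ‖f x‖ then 1 else 0) +
      B * ENNReal.ofReal (2 ^ q₁) * ∑' x, ENNReal.ofReal (‖f x‖ ^ q₁) *
        (ENNReal.ofReal (t ^ (-(q₁ - p) - 1)) * if τ * t < ‖f x‖ then 0 else 1)) := by
        gcongr ENNReal.ofReal p * ?_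
        exact setLIntegral_mono' measurableSet_Ioi fun t ht => hlev t ht
    _ = ENNReal.ofReal p * (A * ENNReal.ofReal (2 ^ q₀) * (∑' x, ∫⁻ t in Set.Ioi (0:ℝ),
          ENNReal.ofReal (‖f x‖ ^ q₀) *
        (ENNReal.ofReal (t ^ (p - q₀ - 1)) * if τ * t < ‖f x‖ then 1 else 0)) +
      B * ENNReal.ofReal (2 ^ q₁) * ∑' x, ∫⁻ t in Set.Ioi (0:ℝ), ENNReal.ofReal (‖f x‖ ^ q₁) *
        (ENNReal.ofReal (t ^ (-(q₁ - p) - 1)) * if τ * t < ‖f x‖ then 0 else 1)) := by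
        have m0 := fun x => meas (‖f x‖ ^ q₀) (p - q₀ - 1) 1 0 x
        have m1 := fun x => meas (‖f x‖ ^ q₁) (-(q₁ - p) - 1) 0 1 x
        rw [lintegral_add_left ((Measurable.tsum m0).const_mul _),
          lintegral_const_mul _ (Measurable.tsum m0),
          lintegral_const_mul _ (Measurable.tsum m1),
          lintegral_tsum (fun x => (m0 x).aemeasurable),
          lintegral_tsum (fun x => (m1 x).aemeasurable)]
    _ ≤ ENNReal.ofReal p * (A * ENNReal.ofReal (2 ^ q₀) * (∑' x, ENNReal.ofReal (1 / (p - q₀)) * ENNReal.ofReal (τ ^ (-(p - q₀))) * ‖f x‖ₑ ^ p) +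
      B * ENNReal.ofReal (2 ^ q₁) * ∑' x, ENNReal.ofReal (1 / (q₁ - p)) * ENNReal.ofReal (τ ^ (q₁ - p)) * ‖f x‖ₑ ^ p) := by
        gcongr with x x
        · exact I0 x
        · exact I1 x
    _ = (ENNReal.ofReal (p * (2 ^ q₀ / (p - q₀))) * (A * ENNReal.ofReal (τ ^ (-(p - q₀)))) +
        ENNReal.ofReal (p * (2 ^ q₁ / (q₁ - p))) * (B * ENNReal.ofReal (τ ^ (q₁ - p)))) *
          ∑' x, ‖f x‖ₑ ^ p := by
        rw [ENNReal.tsum_mul_left, ENNReal.tsum_mul_left, ENNReal.ofReal_mul hp.le,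
          ENNReal.ofReal_mul hp.le, div_eq_mul_one_div (2 ^ q₀ : ℝ), div_eq_mul_one_div (2 ^ q₁ : ℝ),
          ENNReal.ofReal_mul (by positivity), ENNReal.ofReal_mul (by positivity)]
        ring
    _ ≤ _ := by
        rw [mul_add (ENNReal.ofReal _)]
        gcongr
        · have : 0 ≤ 2 ^ q₁ / (q₁ - p) := by positivity
          linarith
        · have : 0 ≤ 2 ^ q₀ / (p - q₀) := by positivity
          linarith

/-! ### Grids and conditional expectations -/

/-- A nested family of partitions of `X` into finite cells; all cells of level `k` have the same
cardinality `w k`, the cells of level `0` are points, and the cells grow by a bounded factor. -/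
structure Grid (X : Type*) where
  /-- the cell of level `k` containing a point -/
  cell : ℕ → X → Finset X
  /-- the common cardinality of the cells of level `k` -/
  w : ℕ → ℕ
  /-- the bound for the growth factor -/
  D : ℕ
  mem_self : ∀ k x, x ∈ cell k x
  eq_of_mem : ∀ k x y, y ∈ cell k x → cell k y = cell k x
  sub_succ : ∀ k x, cell k x ⊆ cell (k + 1) x
  card_cell : ∀ k x, (cell k x).card = w k
  w_succ : ∀ k, w (k + 1) ≤ D * w k
  cell_zero : ∀ x, cell 0 x = {x}
  w_tend : Tendsto w atTop atTop

namespace Grid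

variable {X : Type*} (G : Grid X)

/-- The conditional expectation of an extended nonnegative function on the cells of level `k`. -/
def P (k : ℕ) (F : X → ℝ≥0∞) (x : X) : ℝ≥0∞ := (G.w k : ℝ≥0∞)⁻¹ * ∑ y ∈ G.cell k x, F y

/-- The conditional expectation of a complex function on the cells of level `k`. -/
def E (k : ℕ) (f : X → ℂ) (x : X) : ℂ := (G.w k : ℂ)⁻¹ * ∑ y ∈ G.cell k x, f y

/-- The martingale difference between the levels `k` and `k + 1`. -/
def Dd (k : ℕ) (f : X → ℂ) (x : X) : ℂ := G.E k f x - G.E (k + 1) f x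

/-- The Doob maximal function. -/
def M (F : X → ℝ≥0∞) (x : X) : ℝ≥0∞ := ⨆ k, G.P k F x

/-- A function is adapted to level `k` if it is constant on the cells of level `k`. -/
def Ad {β : Type*} (k : ℕ) (F : X → β) : Prop := ∀ x y, y ∈ G.cell k x → F y = F x

lemma w_pos (x : X) (k : ℕ) : 0 < G.w k := by
  rw [← G.card_cell k x]; exact Finset.card_pos.2 ⟨x, G.mem_self k x⟩

lemma cell_mono {k l : ℕ} (h : k ≤ l) (x : X) : G.cell k x ⊆ G.cell l x := by
  induction h with
  | refl => exact subset_rfl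
  | step _ ih => exact ih.trans (G.sub_succ _ x)

lemma mem_symm {k : ℕ} {x y : X} (h : y ∈ G.cell k x) : x ∈ G.cell k y := by
  rw [G.eq_of_mem k x y h]; exact G.mem_self k x

lemma mem_iff {k : ℕ} {x y : X} : y ∈ G.cell k x ↔ x ∈ G.cell k y := ⟨G.mem_symm, G.mem_symm⟩

lemma mem_trans {k l : ℕ} (h : k ≤ l) {x y z : X} (hy : y ∈ G.cell l x) (hz : z ∈ G.cell k y) :
    z ∈ G.cell l x := by
  rw [← G.eq_of_mem l x y hy]; exact G.cell_mono h y hz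

variable {G}

lemma Ad.mono {β : Type*} {k l : ℕ} (h : k ≤ l) {F : X → β} (hF : G.Ad l F) : G.Ad k F :=
  fun x y hy => hF x y (G.cell_mono h x hy)

lemma Ad.map {β γ : Type*} {k : ℕ} {F : X → β} (hF : G.Ad k F) (φ : β → γ) :
    G.Ad k (fun x => φ (F x)) := fun x y hy => by simp only [hF x y hy]

lemma Ad.map₂ {β γ δ : Type*} {k : ℕ} {F : X → β} {H : X → γ} (hF : G.Ad k F) (hH : G.Ad k H)
    (φ : β → γ → δ) : G.Ad k (fun x => φ (F x) (H x)) := fun x y hy => by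
  simp only [hF x y hy, hH x y hy]

variable (G)

lemma P_ad (k : ℕ) (F : X → ℝ≥0∞) : G.Ad k (G.P k F) := fun x y hy => by
  simp only [P, G.eq_of_mem k x y hy]

lemma E_ad (k : ℕ) (f : X → ℂ) : G.Ad k (G.E k f) := fun x y hy => by
  simp only [E, G.eq_of_mem k x y hy]

lemma Dd_ad (k : ℕ) (f : X → ℂ) : G.Ad k (G.Dd k f) :=
  (G.E_ad k f).map₂ ((G.E_ad (k+1) f).mono (Nat.le_succ k)) (· - ·)

lemma sum_cell_sum {M : Type*} [AddCommMonoid M] {k l : ℕ} (h : k ≤ l) (x : X) (F : X → M) :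
    ∑ y ∈ G.cell l x, ∑ z ∈ G.cell k y, F z = G.w k • ∑ z ∈ G.cell l x, F z := by
  classical
  rw [Finset.sum_comm' (s' := fun z => G.cell k z) (t' := G.cell l x), Finset.smul_sum]
  · refine Finset.sum_congr rfl fun z _ => ?_
    rw [Finset.sum_const, G.card_cell]
  · intro y z
    constructor
    · rintro ⟨hy, hz⟩; exact ⟨G.mem_symm hz, G.mem_trans h hy hz⟩
    · rintro ⟨hy, hz⟩; exact ⟨G.mem_trans h hz hy, G.mem_symm hy⟩

lemma sum_cell_E {k l : ℕ} (h : k ≤ l) (x : X) (f : X → ℂ) :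
    ∑ y ∈ G.cell l x, G.E k f y = ∑ y ∈ G.cell l x, f y := by
  have := G.w_pos x k
  simp only [E]
  rw [← Finset.mul_sum, G.sum_cell_sum h, nsmul_eq_mul, ← mul_assoc, inv_mul_cancel₀ (Nat.cast_ne_zero.2 (G.w_pos x k).ne'),
    one_mul]

lemma wE_ne_zero (x : X) (k : ℕ) : (G.w k : ℝ≥0∞) ≠ 0 := by
  have := G.w_pos x k
  simpa using this.ne'

lemma sum_cell_P {k l : ℕ} (h : k ≤ l) (x : X) (F : X → ℝ≥0∞) :
    ∑ y ∈ G.cell l x, G.P k F y = ∑ y ∈ G.cell l x, F y := by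
  simp only [P]
  rw [← Finset.mul_sum, G.sum_cell_sum h, nsmul_eq_mul, ← mul_assoc,
    ENNReal.inv_mul_cancel (G.wE_ne_zero x k) (by simp), one_mul]

lemma E_tower {k l : ℕ} (h : k ≤ l) (f : X → ℂ) (x : X) : G.E l (G.E k f) x = G.E l f x := by
  rw [E, G.sum_cell_E h, E]

lemma P_tower {k l : ℕ} (h : k ≤ l) (F : X → ℝ≥0∞) (x : X) : G.P l (G.P k F) x = G.P l F x := by
  rw [P, G.sum_cell_P h, P]

lemma E_mul_ad {k : ℕ} {v : X → ℂ} (hv : G.Ad k v) (f : X → ℂ) (x : X) :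
    G.E k (fun y => v y * f y) x = v x * G.E k f x := by
  simp only [E]
  rw [Finset.sum_congr rfl fun y hy => by rw [hv x y hy], ← Finset.mul_sum]; ring

lemma P_mul_ad {k : ℕ} {v : X → ℝ≥0∞} (hv : G.Ad k v) (f : X → ℝ≥0∞) (x : X) :
    G.P k (fun y => v y * f y) x = v x * G.P k f x := by
  simp only [P]
  rw [Finset.sum_congr rfl fun y hy => by rw [hv x y hy], ← Finset.mul_sum]; ring

lemma P_const (k : ℕ) (c : ℝ≥0∞) (x : X) : G.P k (fun _ => c) x = c := by
  simp only [P]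
  rw [Finset.sum_const, G.card_cell, nsmul_eq_mul, ← mul_assoc,
    ENNReal.inv_mul_cancel (G.wE_ne_zero x k) (by simp), one_mul]

lemma P_of_ad {k : ℕ} {v : X → ℝ≥0∞} (hv : G.Ad k v) (x : X) : G.P k v x = v x := by
  have := G.P_mul_ad hv (fun _ => 1) x
  simpa [P_const] using this

lemma E_of_ad {k : ℕ} {v : X → ℂ} (hv : G.Ad k v) (x : X) : G.E k v x = v x := by
  have h := G.w_pos x k
  simp only [E]
  rw [Finset.sum_congr rfl fun y hy => hv x y hy, Finset.sum_const, G.card_cell, nsmul_eq_mul,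
    ← mul_assoc, inv_mul_cancel₀ (Nat.cast_ne_zero.2 (G.w_pos x k).ne'), one_mul]

lemma E_zero_level (f : X → ℂ) (x : X) : G.E 0 f x = f x := by
  refine G.E_of_ad (fun x y hy => ?_) x
  rw [G.cell_zero, Finset.mem_singleton] at hy; rw [hy]

lemma P_zero_level (f : X → ℝ≥0∞) (x : X) : G.P 0 f x = f x := by
  refine G.P_of_ad (fun x y hy => ?_) x
  rw [G.cell_zero, Finset.mem_singleton] at hy; rw [hy]

lemma le_M (F : X → ℝ≥0∞) (x : X) : F x ≤ G.M F x := by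
  rw [← G.P_zero_level F x]; exact le_iSup (fun k => G.P k F x) 0

lemma P_le_M (k : ℕ) (F : X → ℝ≥0∞) (x : X) : G.P k F x ≤ G.M F x := le_iSup (fun k => G.P k F x) k

lemma P_mono (k : ℕ) {F H : X → ℝ≥0∞} (h : ∀ x, F x ≤ H x) (x : X) : G.P k F x ≤ G.P k H x :=
  mul_le_mul_right (Finset.sum_le_sum fun y _ => h y) _

lemma P_add (k : ℕ) (F H : X → ℝ≥0∞) (x : X) :
    G.P k (fun y => F y + H y) x = G.P k F x + G.P k H x := by
  simp only [P, Finset.sum_add_distrib, mul_add]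

lemma P_const_mul (k : ℕ) (c : ℝ≥0∞) (F : X → ℝ≥0∞) (x : X) :
    G.P k (fun y => c * F y) x = c * G.P k F x :=
  G.P_mul_ad (fun _ _ _ => rfl) F x

lemma E_add (k : ℕ) (f g : X → ℂ) (x : X) : G.E k (f + g) x = G.E k f x + G.E k g x := by
  simp only [E, Pi.add_apply, Finset.sum_add_distrib, mul_add]

lemma E_sub (k : ℕ) (f g : X → ℂ) (x : X) : G.E k (f - g) x = G.E k f x - G.E k g x := by
  simp only [E, Pi.sub_apply, Finset.sum_sub_distrib, mul_sub]

lemma enorm_E_le (k : ℕ) (f : X → ℂ) (x : X) : ‖G.E k f x‖ₑ ≤ G.P k (fun y => ‖f y‖ₑ) x := by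
  have := G.w_pos x k
  simp only [E, P]
  rw [enorm_mul, enorm_inv (Nat.cast_ne_zero.2 (G.w_pos x k).ne')]
  have e : ‖(G.w k : ℂ)‖ₑ = (G.w k : ℝ≥0∞) := by
    rw [← ofReal_norm]; simp
  rw [e]
  exact mul_le_mul_right (enorm_sum_le _ _) _

lemma tsum_P_mul (k : ℕ) (F H : X → ℝ≥0∞) :
    ∑' x, G.P k F x * H x = ∑' x, F x * G.P k H x := by
  classical
  have h1 : ∀ (A B : X → ℝ≥0∞) x, G.P k A x * B x =
      ∑' y, (G.w k : ℝ≥0∞)⁻¹ * (if y ∈ G.cell k x then A y * B x else 0) := by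
    intro A B x
    rw [ENNReal.tsum_mul_left, tsum_eq_sum (s := G.cell k x) (fun y hy => by simp [hy]), P,
      Finset.sum_congr rfl (fun y hy => if_pos hy), ← Finset.sum_mul]; ring
  simp_rw [h1]
  rw [ENNReal.tsum_comm]
  refine tsum_congr fun y => ?_
  rw [mul_comm, h1]
  refine tsum_congr fun x => ?_
  simp only [G.mem_iff (x := x) (y := y), mul_comm]

lemma tsum_P (k : ℕ) (F : X → ℝ≥0∞) : ∑' x, G.P k F x = ∑' x, F x := by
  have := G.tsum_P_mul k F (fun _ => 1)
  simpa [P_const] using this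

lemma P_jensen (k : ℕ) {p : ℝ} (hp : 1 ≤ p) (F : X → ℝ≥0∞) (x : X) :
    G.P k F x ^ p ≤ G.P k (fun y => F y ^ p) x := by
  simp only [P, Finset.mul_sum]
  refine ENNReal.rpow_arith_mean_le_arith_mean_rpow _ _ _ ?_ hp
  rw [Finset.sum_const, G.card_cell, nsmul_eq_mul, ENNReal.mul_inv_cancel (G.wE_ne_zero x k) (by simp)]

/-- Averages over large cells are small. -/
lemma P_le_nr (k : ℕ) {p : ℝ} (hp : 1 ≤ p) (F : X → ℝ≥0∞) (x : X) :
    G.P k F x ≤ (G.w k : ℝ≥0∞)⁻¹ ^ p⁻¹ * nr p F := by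
  have h0 : 0 < p := by linarith
  have h := G.P_jensen k hp F x
  have h2 : G.P k (fun y => F y ^ p) x ≤ (G.w k : ℝ≥0∞)⁻¹ * nr p F ^ p := by
    rw [nr_rpow h0]
    exact mul_le_mul_right (ENNReal.sum_le_tsum _) _
  have h3 := ENNReal.rpow_le_rpow (h.trans h2) (by positivity : 0 ≤ p⁻¹)
  rwa [← ENNReal.rpow_mul, mul_inv_cancel₀ h0.ne', ENNReal.rpow_one,
    ENNReal.mul_rpow_of_nonneg _ _ (by positivity), ← ENNReal.rpow_mul, mul_inv_cancel₀ h0.ne',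
    ENNReal.rpow_one] at h3

lemma P_tendsto_bound {p : ℝ} (hp : 1 ≤ p) {K : ℝ≥0∞} (hK : K ≠ ⊤) :
    Tendsto (fun k => (G.w k : ℝ≥0∞)⁻¹ ^ p⁻¹ * K) atTop (nhds 0) := by
  have h0 : 0 < p := by linarith
  have h1 : Tendsto (fun k => (G.w k : ℝ≥0∞)⁻¹) atTop (nhds 0) :=
    ENNReal.tendsto_inv_nat_nhds_zero.comp G.w_tend
  have h2 := ((ENNReal.continuous_rpow_const (y := p⁻¹)).tendsto 0).comp h1
  rw [ENNReal.zero_rpow_of_pos (by positivity)] at h2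
  have := ENNReal.Tendsto.mul_const h2 (Or.inr hK)
  simpa using this

lemma P_tendsto {p : ℝ} (hp : 1 ≤ p) (F : X → ℝ≥0∞) (hF : nr p F ≠ ⊤) (x : X) :
    Tendsto (fun k => G.P k F x) atTop (nhds 0) :=
  tendsto_of_tendsto_of_tendsto_of_le_of_le tendsto_const_nhds (G.P_tendsto_bound hp hF)
    (fun _ => zero_le) (fun k => G.P_le_nr k hp F x)

/-! ### Orthogonality -/

lemma sum_cell_mul_E {k l : ℕ} (h : k ≤ l) {v : X → ℂ} (hv : G.Ad k v) (f : X → ℂ) (x : X) :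
    ∑ y ∈ G.cell l x, v y * G.E k f y = ∑ y ∈ G.cell l x, v y * f y := by
  rw [← G.sum_cell_E h x (fun y => v y * f y)]
  exact Finset.sum_congr rfl fun y _ => (G.E_mul_ad hv f y).symm

/-- Pythagoras on a cell. -/
lemma pythagoras {k l : ℕ} (h : k + 1 ≤ l) {b : X → ℂ} (hb : G.Ad (k + 1) b) (f : X → ℂ) (x : X) :
    ∑ y ∈ G.cell l x, ‖G.E k f y - b y‖ ^ 2 =
      ∑ y ∈ G.cell l x, ‖G.E (k + 1) f y - b y‖ ^ 2 + ∑ y ∈ G.cell l x, ‖G.Dd k f y‖ ^ 2 := by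
  set v : X → ℂ := fun y => (starRingEnd ℂ) (G.E (k + 1) f y - b y) with hv
  have hva : G.Ad (k + 1) v := (G.E_ad (k + 1) f).map₂ hb (fun s t => (starRingEnd ℂ) (s - t))
  have e1 := G.sum_cell_mul_E h hva f x
  have e2 := G.sum_cell_mul_E ((Nat.le_succ k).trans h) (hva.mono (Nat.le_succ k)) f x
  have e3 : ∑ y ∈ G.cell l x, (v y * G.Dd k f y).re = 0 := by
    rw [← Complex.re_sum]
    simp only [Dd, mul_sub, Finset.sum_sub_distrib, e1, e2, sub_self, Complex.zero_re]
  rw [← Finset.sum_add_distrib]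
  have e4 : ∀ y, ‖G.E k f y - b y‖ ^ 2 = ‖G.E (k + 1) f y - b y‖ ^ 2 + ‖G.Dd k f y‖ ^ 2 +
      2 * (v y * G.Dd k f y).re := by
    intro y
    have : G.E k f y - b y = G.Dd k f y + (G.E (k + 1) f y - b y) := by simp [Dd]
    rw [this, ← Complex.normSq_eq_norm_sq, ← Complex.normSq_eq_norm_sq, ← Complex.normSq_eq_norm_sq,
      Complex.normSq_add, hv, mul_comm (G.Dd k f y)]
    ring
  simp_rw [e4]
  rw [Finset.sum_add_distrib, ← Finset.mul_sum, e3, mul_zero, add_zero]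

/-- An adapted process `a` that projects onto the martingale of `f` has square integrable
increments on each cell. -/
lemma sum_anchor_le {j : ℕ} {a : ℕ → X → ℂ} (had : ∀ k ≤ j, G.Ad k (a k)) (f : X → ℂ) (x : X)
    (hstep : ∀ k < j, ∀ y, ‖G.E k f y - a k y‖ ^ 2 + ‖a k y - a (k + 1) y‖ ^ 2 ≤
      ‖G.E k f y - a (k + 1) y‖ ^ 2) :
    ∑ y ∈ G.cell j x, ∑ k ∈ range j, ‖a k y - a (k + 1) y‖ ^ 2 ≤
      ∑ y ∈ G.cell j x, (‖G.E j f y - a j y‖ ^ 2 + ‖f y‖ ^ 2) := by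
  have key : ∀ i ≤ j, ∑ y ∈ G.cell j x, ∑ k ∈ range i, ‖a k y - a (k + 1) y‖ ^ 2 +
      ∑ y ∈ G.cell j x, ‖G.E i f y‖ ^ 2 ≤
      ∑ y ∈ G.cell j x, ‖G.E i f y - a i y‖ ^ 2 + ∑ y ∈ G.cell j x, ‖f y‖ ^ 2 := by
    intro i
    induction i with
    | zero =>
      intro _
      simp only [range_zero, sum_empty, sum_const_zero, zero_add, E_zero_level]
      have : 0 ≤ ∑ y ∈ G.cell j x, ‖f y - a 0 y‖ ^ 2 := by positivity
      linarith
    | succ i ih =>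
      intro hi
      have h1 := ih (by omega)
      have h2 := G.pythagoras hi (had (i + 1) hi) f x
      have h3 := G.pythagoras hi (b := fun _ => 0) (fun _ _ _ => rfl) f x
      simp only [sub_zero] at h3
      have h4 : ∑ y ∈ G.cell j x, ‖G.E i f y - a i y‖ ^ 2 +
          ∑ y ∈ G.cell j x, ‖a i y - a (i + 1) y‖ ^ 2 ≤
          ∑ y ∈ G.cell j x, ‖G.E i f y - a (i + 1) y‖ ^ 2 := by
        rw [← Finset.sum_add_distrib]
        exact Finset.sum_le_sum fun y _ => hstep i (by omega) y
      simp_rw [Finset.sum_range_succ]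
      rw [Finset.sum_add_distrib]
      linarith
  have := key j le_rfl
  rw [Finset.sum_add_distrib]
  have h5 : 0 ≤ ∑ y ∈ G.cell j x, ‖G.E j f y‖ ^ 2 := by positivity
  linarith

end Grid

/-! ### Stopping levels, the Doob maximal function and the Calderón–Zygmund decomposition -/

namespace Grid

variable {X : Type*} (G : Grid X)

/-- `s` is the largest level at which the average of `F` around `x` exceeds `t`. -/
def Halt (F : X → ℝ≥0∞) (t : ℝ≥0∞) (s : ℕ) (x : X) : Prop :=
  t < G.P s F x ∧ ∀ k, s < k → G.P k F x ≤ t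

variable {G}

lemma Halt.unique {F : X → ℝ≥0∞} {t : ℝ≥0∞} {s s' : ℕ} {x : X} (h : G.Halt F t s x)
    (h' : G.Halt F t s' x) : s = s' := by
  rcases lt_trichotomy s s' with hl | hl | hl
  · exact absurd h'.1 (not_lt.2 (h.2 _ hl))
  · exact hl
  · exact absurd h.1 (not_lt.2 (h'.2 _ hl))

lemma Halt.of_mem {F : X → ℝ≥0∞} {t : ℝ≥0∞} {s : ℕ} {x y : X} (h : G.Halt F t s x)
    (hy : y ∈ G.cell s x) : G.Halt F t s y := by
  refine ⟨by rw [G.P_ad s F x y hy]; exact h.1, fun k hk => ?_⟩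
  rw [(G.P_ad k F).mono hk.le x y hy]; exact h.2 k hk

variable (G)

lemma halt_ad (F : X → ℝ≥0∞) (t : ℝ≥0∞) (s : ℕ) : G.Ad s (G.Halt F t s) := fun _ _ hy =>
  propext ⟨fun h => h.of_mem (G.mem_symm hy), fun h => h.of_mem hy⟩

lemma exists_halt {F : X → ℝ≥0∞} {t : ℝ≥0∞} {x : X} (hd : ∀ᶠ k in atTop, G.P k F x ≤ t) {k : ℕ}
    (hk : t < G.P k F x) : ∃ s, k ≤ s ∧ G.Halt F t s x := by
  classical
  obtain ⟨K, hK⟩ := eventually_atTop.1 hd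
  have hkK : k ≤ K := by
    by_contra h
    exact absurd hk (not_lt.2 (hK k (by omega)))
  refine ⟨Nat.findGreatest (fun j => t < G.P j F x) K, Nat.le_findGreatest hkK hk,
    Nat.findGreatest_spec (P := fun j => t < G.P j F x) hkK hk, fun j hj => ?_⟩
  by_cases hjK : j ≤ K
  · exact not_lt.1 (Nat.findGreatest_is_greatest hj hjK)
  · exact hK j (by omega)

lemma P_le_of_not_halt {F : X → ℝ≥0∞} {t : ℝ≥0∞} {x : X} (hd : ∀ᶠ k in atTop, G.P k F x ≤ t)
    (hn : ∀ s, ¬ G.Halt F t s x) (k : ℕ) : G.P k F x ≤ t := by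
  by_contra h
  obtain ⟨s, _, hs⟩ := G.exists_halt hd (not_le.1 h)
  exact hn s hs

lemma D_pos (x : X) : 1 ≤ G.D := by
  have h1 := G.w_succ 0
  have h2 := G.w_pos x 1
  by_contra h
  have : G.D = 0 := by omega
  simp [this] at h1
  omega

lemma P_le_D_mul (k : ℕ) (F : X → ℝ≥0∞) (x : X) : G.P k F x ≤ G.D * G.P (k + 1) F x := by
  unfold P
  have h1 : (G.w k : ℝ≥0∞)⁻¹ ≤ G.D * (G.w (k + 1) : ℝ≥0∞)⁻¹ := by
    rw [← div_eq_mul_inv, ENNReal.le_div_iff_mul_le (Or.inl (G.wE_ne_zero x _)) (Or.inl (by simp)),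
      mul_comm, ← div_eq_mul_inv, ENNReal.div_le_iff_le_mul (Or.inl (G.wE_ne_zero x _))
      (Or.inl (by simp))]
    exact_mod_cast G.w_succ k
  calc _ ≤ (G.D * (G.w (k + 1) : ℝ≥0∞)⁻¹) * ∑ y ∈ G.cell (k + 1) x, F y :=
        mul_le_mul' h1 (Finset.sum_le_sum_of_subset (G.sub_succ k x))
    _ = _ := by ring

open Classical in
/-- On the stopping set, averages at the stopping level have the same total mass as `F`. -/
lemma tsum_halt_P (F H : X → ℝ≥0∞) (t : ℝ≥0∞) (s : ℕ) :
    ∑' x, (if G.Halt F t s x then G.P s H x else 0) = ∑' x, if G.Halt F t s x then H x else 0 := by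
  have hA : G.Ad s (fun x => if G.Halt F t s x then (1 : ℝ≥0∞) else 0) :=
    (G.halt_ad F t s).map (fun q => if q then (1 : ℝ≥0∞) else 0)
  have h := G.tsum_P_mul s H (fun x => if G.Halt F t s x then (1 : ℝ≥0∞) else 0)
  simp_rw [G.P_of_ad hA] at h
  simpa using h

open Classical in
lemma tsum_halt_le (F : X → ℝ≥0∞) (t : ℝ≥0∞) (H : X → ℝ≥0∞) (x : X) :
    ∑' s, (if G.Halt F t s x then H x else 0) ≤ H x := by
  by_cases h : ∃ s, G.Halt F t s x
  · obtain ⟨s, hs⟩ := h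
    rw [tsum_eq_single s (fun s' hs' => if_neg fun h => hs' (h.unique hs))]
    simp [hs]
  · push Not at h
    simp [h]

open Classical in
/-- The mass of the stopping set. -/
lemma mul_halt_le (F : X → ℝ≥0∞) (t : ℝ≥0∞) :
    t * ∑' s, ∑' x, (if G.Halt F t s x then 1 else 0) ≤ ∑' x, F x := by
  calc t * ∑' s, ∑' x, (if G.Halt F t s x then 1 else 0)
      = ∑' s, ∑' x, (if G.Halt F t s x then t else 0) := by
        simp_rw [← ENNReal.tsum_mul_left]; simp
    _ ≤ ∑' s, ∑' x, (if G.Halt F t s x then G.P s F x else 0) := by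
        refine ENNReal.tsum_le_tsum fun s => ENNReal.tsum_le_tsum fun x => ?_
        split_ifs with h
        · exact h.1.le
        · exact le_rfl
    _ = ∑' x, ∑' s, (if G.Halt F t s x then F x else 0) := by
        simp_rw [G.tsum_halt_P]; rw [ENNReal.tsum_comm]
    _ ≤ ∑' x, F x := ENNReal.tsum_le_tsum fun x => G.tsum_halt_le F t F x

lemma lev_M_le {F : X → ℝ≥0∞} {t : ℝ≥0∞} (hd : ∀ x, ∀ᶠ k in atTop, G.P k F x ≤ t) :
    t * lev (G.M F) t ≤ ∑' x, F x := by
  classical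
  refine le_trans (mul_le_mul_right ?_ t) (G.mul_halt_le F t)
  rw [ENNReal.tsum_comm]
  refine ENNReal.tsum_le_tsum fun x => ?_
  split_ifs with h
  · obtain ⟨k, hk⟩ := lt_iSup_iff.1 h
    obtain ⟨s, _, hs⟩ := G.exists_halt (hd x) hk
    refine le_trans ?_ (ENNReal.le_tsum s)
    simp [hs]
  · exact zero_le

lemma eventually_P_le {p : ℝ} (hp : 1 ≤ p) {F : X → ℝ≥0∞} (hF : ∑' x, F x ^ p ≠ ⊤) {t : ℝ≥0∞}
    (ht : 0 < t) (x : X) : ∀ᶠ k in atTop, G.P k F x ≤ t := by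
  have : nr p F ≠ ⊤ := ENNReal.rpow_ne_top_of_nonneg (by positivity) hF
  exact (G.P_tendsto hp F this x).eventually_le_const ht

lemma doob_weak {q : ℝ} (hq : 1 ≤ q) (F : X → ℝ≥0∞) {t : ℝ} (ht : 0 < t) :
    lev (G.M F) (ENNReal.ofReal t) ≤ ENNReal.ofReal (t ^ (-q)) * ∑' x, F x ^ q := by
  have h0 : 0 < q := by linarith
  have htp : 0 < t ^ q := by positivity
  by_cases hF : ∑' x, F x ^ q = ⊤
  · rw [hF, ENNReal.mul_top (by simpa using by positivity)]; exact le_top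
  have h1 : lev (G.M F) (ENNReal.ofReal t) ≤
      lev (G.M (fun x => F x ^ q)) (ENNReal.ofReal (t ^ q)) := by
    refine lev_mono fun x hx => ?_
    obtain ⟨k, hk⟩ := lt_iSup_iff.1 hx
    refine lt_iSup_iff.2 ⟨k, lt_of_lt_of_le ?_ (G.P_jensen k hq F x)⟩
    rw [← ENNReal.ofReal_rpow_of_pos ht]
    exact ENNReal.rpow_lt_rpow hk h0
  have h2 := G.lev_M_le (F := fun x => F x ^ q) (t := ENNReal.ofReal (t ^ q))
    (fun x => G.eventually_P_le (p := 1) le_rfl (by simpa using hF) (by simpa using htp) x)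
  refine h1.trans ?_
  have h3 := mul_le_mul_right h2 (ENNReal.ofReal (t ^ (-q)))
  rwa [← mul_assoc, ← ENNReal.ofReal_mul (by positivity), ← Real.rpow_add ht, neg_add_cancel,
    Real.rpow_zero, ENNReal.ofReal_one, one_mul] at h3

lemma M_add_le (F H : X → ℝ≥0∞) (x : X) : G.M (fun y => F y + H y) x ≤ G.M F x + G.M H x := by
  refine iSup_le fun k => ?_
  rw [G.P_add]; exact add_le_add (G.P_le_M k F x) (G.P_le_M k H x)

lemma M_mono {F H : X → ℝ≥0∞} (h : ∀ x, F x ≤ H x) (x : X) : G.M F x ≤ G.M H x :=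
  iSup_mono fun k => G.P_mono k h x

/-- Doob's maximal inequality. -/
lemma doob [Countable X] {p : ℝ} (hp : 1 < p) : ∃ C : ℝ, 0 < C ∧ ∀ F : X → ℝ≥0∞,
    ∑' x, G.M F x ^ p ≤ ENNReal.ofReal C * ∑' x, F x ^ p := by
  obtain ⟨K, hK, h⟩ := marcinkiewicz (X := X) (q₀ := 1) (p := p) (q₁ := p + 1) one_pos hp (by linarith)
  refine ⟨K * 2, by positivity, fun F => ?_⟩
  by_cases hF : ∑' x, F x ^ p = ⊤
  · rw [hF, ENNReal.mul_top (by simpa using hK)]; exact le_top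
  have hfin : ∀ x, F x ≠ ⊤ := by
    intro x hx
    have := ENNReal.ne_top_of_tsum_ne_top hF x
    rw [hx, ENNReal.top_rpow_of_pos (by linarith)] at this
    exact this rfl
  have e : ∀ x, ‖((F x).toReal : ℂ)‖ₑ = F x := by
    intro x
    rw [← ofReal_norm, Complex.norm_real, Real.norm_eq_abs, abs_of_nonneg ENNReal.toReal_nonneg,
      ENNReal.ofReal_toReal (hfin x)]
  have := h (fun f x => G.M (fun y => ‖f y‖ₑ) x) 1 1 1 one_pos ?_ ?_ ?_
    (fun x => ((F x).toReal : ℂ))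
  · simp only [e] at this
    refine this.trans (le_of_eq ?_)
    rw [ENNReal.ofReal_mul hK.le]
    simp only [Real.one_rpow, ENNReal.ofReal_one, mul_one]
    norm_num
  · intro f g x
    exact (G.M_mono (fun y => enorm_add_le (f y) (g y)) x).trans (G.M_add_le _ _ x)
  · intro f t ht
    rw [one_mul]; exact G.doob_weak le_rfl _ ht
  · intro f t ht
    rw [one_mul]; exact G.doob_weak (by linarith) _ ht

lemma doob_nr [Countable X] {p : ℝ} (hp : 1 < p) : ∃ C : ℝ, 0 < C ∧ ∀ F : X → ℝ≥0∞,
    nr p (G.M F) ≤ ENNReal.ofReal C * nr p F := by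
  obtain ⟨C, hC, h⟩ := G.doob hp
  have h0 : 0 < p := by linarith
  refine ⟨C ^ p⁻¹, by positivity, fun F => nr_le_of h0 ?_⟩
  rw [ENNReal.mul_rpow_of_nonneg _ _ h0.le, nr_rpow h0, ENNReal.ofReal_rpow_of_pos (by positivity),
    ← Real.rpow_mul hC.le, inv_mul_cancel₀ h0.ne', Real.rpow_one]
  exact h F

open Classical in
/-- The bad part of the Calderón–Zygmund decomposition of `f` at height `t`. -/
def bad (f : X → ℂ) (t : ℝ≥0∞) (x : X) : ℂ :=
  if h : ∃ s, G.Halt (fun y => ‖f y‖ₑ) t s x then f x - G.E h.choose f x else 0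

/-- The good part of the Calderón–Zygmund decomposition of `f` at height `t`. -/
def good (f : X → ℂ) (t : ℝ≥0∞) (x : X) : ℂ := f x - G.bad f t x

variable {G}

lemma bad_of_halt {f : X → ℂ} {t : ℝ≥0∞} {s : ℕ} {x : X} (h : G.Halt (fun y => ‖f y‖ₑ) t s x) :
    G.bad f t x = f x - G.E s f x := by
  have h' : ∃ s, G.Halt (fun y => ‖f y‖ₑ) t s x := ⟨s, h⟩
  rw [bad, dif_pos h', h'.choose_spec.unique h]

lemma bad_of_not_halt {f : X → ℂ} {t : ℝ≥0∞} {x : X} (h : ∀ s, ¬ G.Halt (fun y => ‖f y‖ₑ) t s x) :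
    G.bad f t x = 0 := by
  rw [bad, dif_neg (by push Not; exact h)]

lemma good_of_halt {f : X → ℂ} {t : ℝ≥0∞} {s : ℕ} {x : X} (h : G.Halt (fun y => ‖f y‖ₑ) t s x) :
    G.good f t x = G.E s f x := by rw [good, bad_of_halt h]; ring

lemma good_of_not_halt {f : X → ℂ} {t : ℝ≥0∞} {x : X}
    (h : ∀ s, ¬ G.Halt (fun y => ‖f y‖ₑ) t s x) : G.good f t x = f x := by
  rw [good, bad_of_not_halt h, sub_zero]

variable (G)

lemma good_add_bad (f : X → ℂ) (t : ℝ≥0∞) : G.good f t + G.bad f t = f := by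
  funext x; simp [good]

lemma enorm_good_le {f : X → ℂ} {t : ℝ≥0∞} {x : X}
    (hd : ∀ᶠ k in atTop, G.P k (fun y => ‖f y‖ₑ) x ≤ t) : ‖G.good f t x‖ₑ ≤ G.D * t := by
  by_cases h : ∃ s, G.Halt (fun y => ‖f y‖ₑ) t s x
  · obtain ⟨s, hs⟩ := h
    rw [good_of_halt hs]
    exact (G.enorm_E_le s f x).trans ((G.P_le_D_mul s _ x).trans
      (mul_le_mul_right (hs.2 _ (Nat.lt_succ_self s)) _))
  · push Not at h
    rw [good_of_not_halt h]
    have h1 := G.P_le_of_not_halt hd h 0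
    rw [G.P_zero_level] at h1
    have h2 : (1 : ℝ≥0∞) ≤ G.D := by exact_mod_cast G.D_pos x
    calc _ ≤ 1 * t := by rwa [one_mul]
      _ ≤ _ := mul_le_mul_left h2 t

lemma enorm_good_le_M (f : X → ℂ) (t : ℝ≥0∞) (x : X) :
    ‖G.good f t x‖ₑ ≤ G.M (fun y => ‖f y‖ₑ) x := by
  by_cases h : ∃ s, G.Halt (fun y => ‖f y‖ₑ) t s x
  · obtain ⟨s, hs⟩ := h
    rw [good_of_halt hs]
    exact (G.enorm_E_le s f x).trans (G.P_le_M _ _ _)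
  · push Not at h
    rw [good_of_not_halt h]
    exact G.le_M (fun y => ‖f y‖ₑ) x

lemma tsum_good_le (f : X → ℂ) (t : ℝ≥0∞) : ∑' x, ‖G.good f t x‖ₑ ≤ ∑' x, ‖f x‖ₑ := by
  classical
  set F : X → ℝ≥0∞ := fun y => ‖f y‖ₑ with hF
  have h1 : ∀ x, ‖G.good f t x‖ₑ ≤ (if ∃ s, G.Halt F t s x then 0 else F x) +
      ∑' s, (if G.Halt F t s x then G.P s F x else 0) := by
    intro x
    by_cases h : ∃ s, G.Halt F t s x
    · obtain ⟨s, hs⟩ := h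
      rw [good_of_halt hs]
      refine le_trans ?_ (le_add_left (ENNReal.le_tsum s))
      rw [if_pos hs]; exact G.enorm_E_le s f x
    · rw [if_neg h]
      push Not at h
      rw [good_of_not_halt h]
      exact le_self_add
  refine (ENNReal.tsum_le_tsum h1).trans ?_
  rw [ENNReal.tsum_add, ENNReal.tsum_comm]
  simp_rw [G.tsum_halt_P F F t]
  rw [ENNReal.tsum_comm, ← ENNReal.tsum_add]
  refine ENNReal.tsum_le_tsum fun x => ?_
  by_cases h : ∃ s, G.Halt F t s x
  · rw [if_pos h, zero_add]; exact G.tsum_halt_le F t F x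
  · rw [if_neg h]
    push Not at h
    simp only [h, if_false, tsum_zero, add_zero]
    exact le_rfl

/-- The bad part has vanishing averages over every cell not contained in a larger stopping cell. -/
lemma E_bad_eq_zero {f : X → ℂ} {t : ℝ≥0∞} {k : ℕ} {x : X}
    (h : ∀ s, k < s → ¬ G.Halt (fun y => ‖f y‖ₑ) t s x) : G.E k (G.bad f t) x = 0 := by
  classical
  set F : X → ℝ≥0∞ := fun y => ‖f y‖ₑ with hF
  set bs : ℕ → X → ℂ := fun s y => (if G.Halt F t s y then 1 else 0) * (f y - G.E s f y) with hbs
  have hb0 : ∀ s, ∀ y, G.E s (bs s) y = 0 := by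
    intro s y
    have hA : G.Ad s (fun x => if G.Halt F t s x then (1 : ℂ) else 0) :=
      (G.halt_ad F t s).map (fun q => if q then (1 : ℂ) else 0)
    rw [hbs, G.E_mul_ad hA]
    have := G.E_sub s f (G.E s f) y
    rw [G.E_tower le_rfl, sub_self] at this
    have h2 : (fun y => f y - G.E s f y) = f - G.E s f := rfl
    rw [h2, this, mul_zero]
  have hk : ∀ s ≤ k, G.E k (bs s) x = 0 := by
    intro s hs
    rw [← G.E_tower hs]
    have : G.E s (bs s) = fun _ => 0 := funext (hb0 s)
    rw [this]; simp [E]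
  have hsum : ∀ y ∈ G.cell k x, G.bad f t y = ∑ s ∈ range (k + 1), bs s y := by
    intro y hy
    by_cases hst : ∃ s, G.Halt F t s y
    · obtain ⟨s, hs⟩ := hst
      have hsk : s ≤ k := by
        by_contra hlt
        push Not at hlt
        exact h s hlt (hs.of_mem (G.cell_mono hlt.le y (G.mem_symm hy)))
      rw [bad_of_halt hs, Finset.sum_eq_single s]
      · simp [hbs, hs]
      · intro s' _ hs'
        have : ¬ G.Halt F t s' y := fun h' => hs' (h'.unique hs)
        simp [hbs, this]
      · intro hn; exact absurd (mem_range.2 (by omega)) hn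
    · push Not at hst
      rw [bad_of_not_halt hst]
      simp [hbs, hst]
  rw [E, Finset.sum_congr rfl hsum, Finset.sum_comm, Finset.mul_sum]
  exact Finset.sum_eq_zero fun s hs => hk s (by have := mem_range.1 hs; omega)

lemma tsum_bad_le (f : X → ℂ) (t : ℝ≥0∞) : ∑' x, ‖G.bad f t x‖ₑ ≤ 2 * ∑' x, ‖f x‖ₑ := by
  have h : ∀ x, ‖G.bad f t x‖ₑ ≤ ‖f x‖ₑ + ‖G.good f t x‖ₑ := by
    intro x
    have : G.bad f t x = f x - G.good f t x := by simp [good]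
    rw [this]; exact enorm_sub_le
  refine (ENNReal.tsum_le_tsum h).trans ?_
  rw [ENNReal.tsum_add, two_mul]
  exact add_le_add le_rfl (G.tsum_good_le f t)

end Grid

/-! ### Square functions of adapted processes -/

lemma abel_sum (δ m : ℕ → ℝ≥0∞) (hm : ∀ k, m (k + 1) ≤ m k) (K : ℕ) :
    ∑ k ∈ range (K + 1), δ k * m k = m K * ∑ k ∈ range (K + 1), δ k +
      ∑ j ∈ range K, (m j - m (j + 1)) * ∑ k ∈ range (j + 1), δ k := by
  induction K with
  | zero => simp [mul_comm]
  | succ K ih =>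
    have e : m K = (m K - m (K + 1)) + m (K + 1) := (tsub_add_cancel_of_le (hm K)).symm
    rw [Finset.sum_range_succ, ih, Finset.sum_range_succ δ (K + 1),
      Finset.sum_range_succ (fun j => (m j - m (j + 1)) * ∑ k ∈ range (j + 1), δ k) K]
    generalize ∑ k ∈ range (K + 1), δ k = S
    generalize ∑ j ∈ range K, (m j - m (j + 1)) * ∑ k ∈ range (j + 1), δ k = R
    nth_rewrite 1 [e]
    ring

namespace Grid

variable {X : Type*} (G : Grid X)

/-- The Garsia–Neveu inequality in dual form. -/
lemma garsia {K : ℕ} {δ : ℕ → X → ℝ≥0∞} {Z : X → ℝ≥0∞} (had : ∀ k ≤ K, G.Ad k (δ k))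
    (hZ : ∀ j ≤ K, ∀ x, ∑ y ∈ G.cell j x, ∑ k ∈ range (j + 1), δ k y ≤ ∑ y ∈ G.cell j x, Z y)
    (h : X → ℝ≥0∞) :
    ∑' x, (∑ k ∈ range (K + 1), δ k x) * h x ≤ ∑' x, Z x * G.M h x := by
  set m : ℕ → X → ℝ≥0∞ := fun k x => ⨆ j, ⨆ _ : k ≤ j, G.P j h x with hm
  have hmad : ∀ k, G.Ad k (m k) := by
    intro k x y hy
    simp only [hm]
    refine iSup_congr fun j => iSup_congr fun hj => ?_
    exact (G.P_ad j h).mono hj x y hy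
  have hmm : ∀ x k, m (k + 1) x ≤ m k x := by
    intro x k
    refine iSup_le fun j => iSup_le fun hj => ?_
    exact le_iSup₂_of_le j (by omega) le_rfl
  have hm0 : ∀ x, m 0 x = G.M h x := by
    intro x; simp [hm, M]
  have hres : ∀ j ≤ K, ∀ v : X → ℝ≥0∞, G.Ad j v →
      ∑' x, v x * ∑ k ∈ range (j + 1), δ k x ≤ ∑' x, v x * Z x := by
    intro j hj v hv
    rw [← G.tsum_P j, ← G.tsum_P j (fun x => v x * Z x)]
    refine ENNReal.tsum_le_tsum fun x => ?_
    rw [G.P_mul_ad hv, G.P_mul_ad hv]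
    exact mul_le_mul_right (mul_le_mul_right (hZ j hj x) _) _
  calc ∑' x, (∑ k ∈ range (K + 1), δ k x) * h x
      = ∑ k ∈ range (K + 1), ∑' x, δ k x * h x := by
        simp_rw [Finset.sum_mul]
        rw [Summable.tsum_finsetSum (fun _ _ => ENNReal.summable)]
    _ ≤ ∑ k ∈ range (K + 1), ∑' x, δ k x * m k x := by
        refine Finset.sum_le_sum fun k hk => ?_
        rw [← G.tsum_P k]
        refine ENNReal.tsum_le_tsum fun x => ?_
        rw [G.P_mul_ad (had k (by have := mem_range.1 hk; omega))]
        have hle : G.P k h x ≤ m k x := le_iSup₂_of_le (f := fun j (_ : k ≤ j) => G.P j h x) k le_rfl le_rfl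
        exact mul_le_mul_right hle _
    _ = ∑' x, ∑ k ∈ range (K + 1), δ k x * m k x := by
        rw [Summable.tsum_finsetSum (fun _ _ => ENNReal.summable)]
    _ = ∑' x, m K x * ∑ k ∈ range (K + 1), δ k x +
          ∑ j ∈ range K, ∑' x, (m j x - m (j + 1) x) * ∑ k ∈ range (j + 1), δ k x := by
        rw [← Summable.tsum_finsetSum (fun _ _ => ENNReal.summable), ← ENNReal.tsum_add]
        exact tsum_congr fun x => abel_sum (fun k => δ k x) (fun k => m k x) (hmm x) K
    _ ≤ ∑' x, m K x * Z x + ∑ j ∈ range K, ∑' x, (m j x - m (j + 1) x) * Z x := by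
        refine add_le_add (hres K le_rfl _ (hmad K)) (Finset.sum_le_sum fun j hj => ?_)
        exact hres j (mem_range.1 hj).le _
          ((hmad j).map₂ ((hmad (j + 1)).mono (Nat.le_succ j)) (· - ·))
    _ = ∑' x, Z x * m 0 x := by
        rw [← Summable.tsum_finsetSum (fun _ _ => ENNReal.summable), ← ENNReal.tsum_add]
        refine tsum_congr fun x => ?_
        have e1 := abel_sum (fun k => if k = 0 then Z x else 0) (fun k => m k x) (hmm x) K
        have e2 : ∀ j, ∑ k ∈ range (j + 1), (if k = 0 then Z x else 0) = Z x := by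
          intro j; rw [Finset.sum_ite_eq' (range (j + 1)) 0]; simp
        simp_rw [e2] at e1
        rw [← e1]
        simp
    _ = _ := by simp_rw [hm0]

lemma sq_enorm (z : ℂ) : ‖z‖ₑ ^ (2 : ℝ) = ENNReal.ofReal (‖z‖ ^ 2) := by
  rw [← ofReal_norm, ENNReal.ofReal_rpow_of_nonneg (norm_nonneg _) (by norm_num)]
  norm_num

/-- Increments of processes that project onto a martingale are controlled, in every `ℓ^q` with
`q > 1`, by the maximal function. -/
lemma anchor_nr [Countable X] {q : ℝ} (hq : 1 < q) : ∃ C : ℝ, 0 < C ∧ ∀ (f : X → ℂ) (K : ℕ)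
    (a : ℕ → X → ℂ), (∀ k ≤ K, G.Ad k (a k)) →
    (∀ k ≤ K, ∀ x, ‖a k x‖ₑ ≤ G.M (fun y => ‖f y‖ₑ) x) →
    (∀ k < K, ∀ y, ‖G.E k f y - a k y‖ ^ 2 + ‖a k y - a (k + 1) y‖ ^ 2 ≤
      ‖G.E k f y - a (k + 1) y‖ ^ 2) →
    nr q (fun x => ∑ k ∈ range K, ‖a k x - a (k + 1) x‖ₑ ^ (2 : ℝ)) ≤
      ENNReal.ofReal C * nr q (fun x => G.M (fun y => ‖f y‖ₑ) x ^ (2 : ℝ)) := by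
  obtain ⟨C, hC, hD⟩ := G.doob_nr (Real.HolderConjugate.conjExponent hq).symm.lt
  refine ⟨C * 9, by positivity, fun f K a had hM hstep => ?_⟩
  rcases Nat.eq_zero_or_pos K with hK0 | hK0
  · subst hK0
    have : nr q (fun x : X => ∑ k ∈ range 0, ‖a k x - a (k + 1) x‖ₑ ^ (2 : ℝ)) = 0 := by
      have h0 : 0 < q := by linarith
      simp [nr, ENNReal.zero_rpow_of_pos h0, h0]
    rw [this]; exact zero_le
  set Mf := G.M (fun y => ‖f y‖ₑ) with hMf
  set δ : ℕ → X → ℝ≥0∞ := fun k x => ‖a k x - a (k + 1) x‖ₑ ^ (2 : ℝ) with hδ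
  have hsub : ∀ (u v : ℂ) (x : X), ‖u‖ₑ ≤ Mf x → ‖v‖ₑ ≤ Mf x →
      ‖u - v‖ₑ ^ (2:ℝ) ≤ 4 * Mf x ^ (2:ℝ) := by
    intro u v x hu hv
    have : ‖u - v‖ₑ ≤ 2 * Mf x := by
      rw [two_mul]; exact enorm_sub_le.trans (add_le_add hu hv)
    refine (ENNReal.rpow_le_rpow this (by norm_num)).trans (le_of_eq ?_)
    rw [ENNReal.mul_rpow_of_nonneg _ _ (by norm_num)]
    norm_num
  have hZ : ∀ j ≤ K - 1, ∀ x, ∑ y ∈ G.cell j x, ∑ k ∈ range (j + 1), δ k y ≤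
      ∑ y ∈ G.cell j x, 9 * Mf y ^ (2 : ℝ) := by
    intro j hj x
    have h1 := G.sum_anchor_le (j := j) (a := a) (fun k hk => had k (by omega)) f x
      (fun k hk => hstep k (by omega))
    have h2 := ENNReal.ofReal_le_ofReal h1
    rw [ENNReal.ofReal_sum_of_nonneg (fun _ _ => by positivity),
      ENNReal.ofReal_sum_of_nonneg (fun _ _ => by positivity)] at h2
    simp_rw [ENNReal.ofReal_add (sq_nonneg _) (sq_nonneg _),
      ENNReal.ofReal_sum_of_nonneg (fun _ _ => sq_nonneg _), ← sq_enorm] at h2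
    simp_rw [Finset.sum_range_succ]
    rw [Finset.sum_add_distrib]
    refine (add_le_add_left h2 _).trans ?_
    rw [← Finset.sum_add_distrib]
    refine Finset.sum_le_sum fun y _ => ?_
    have b1 := hsub (G.E j f y) (a j y) y ((G.enorm_E_le j f y).trans (G.P_le_M _ _ _))
      (hM j (by omega) y)
    have b2 := hsub (a j y) (a (j + 1) y) y (hM j (by omega) y) (hM (j + 1) (by omega) y)
    have b3 : ‖f y‖ₑ ^ (2:ℝ) ≤ Mf y ^ (2:ℝ) :=
      ENNReal.rpow_le_rpow (G.le_M (fun y => ‖f y‖ₑ) y) (by norm_num)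
    calc _ ≤ (4 * Mf y ^ (2:ℝ) + Mf y ^ (2:ℝ)) + 4 * Mf y ^ (2:ℝ) :=
          add_le_add (add_le_add b1 b3) b2
      _ = 9 * Mf y ^ (2:ℝ) := by ring
  have hadδ : ∀ k ≤ K - 1, G.Ad k (δ k) := fun k hk =>
    (had k (by omega)).map₂ ((had (k + 1) (by omega)).mono (Nat.le_succ k))
      (fun s t => ‖s - t‖ₑ ^ (2:ℝ))
  have hg := G.garsia hadδ hZ
  rw [Nat.sub_add_cancel hK0] at hg
  refine nr_le_of_dual (Real.HolderConjugate.conjExponent hq) _ _ fun h => ?_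
  refine (hg h).trans ?_
  refine (tsum_mul_le_nr (Real.HolderConjugate.conjExponent hq) _ _).trans ?_
  rw [nr_const_mul (by linarith)]
  refine (mul_le_mul_right (hD h) _).trans (le_of_eq ?_)
  rw [ENNReal.ofReal_mul hC.le]
  norm_num
  ring

end Grid

/-! ### Variation of sequences along monotone chains -/

/-- The supremum, over monotone chains in `D`, of the `r`-th power sums of the increments. Chains
are indexed by `ℕ` and allowed to be constant, which does not change the supremum. -/
def W {E : Type*} [NormedAddCommGroup E] (r : ℝ) (a : ℕ → E) (D : Set ℕ) : ℝ≥0∞ :=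
  ⨆ (J : ℕ) (v : ℕ → ℕ) (_ : Monotone v) (_ : ∀ j, v j ∈ D),
    ∑ j ∈ range J, ‖a (v (j + 1)) - a (v j)‖ₑ ^ r

lemma W_le {E : Type*} [NormedAddCommGroup E] {r : ℝ} {a : ℕ → E} {D : Set ℕ} {K : ℝ≥0∞}
    (h : ∀ (J : ℕ) (v : ℕ → ℕ), Monotone v → (∀ j, v j ∈ D) →
      ∑ j ∈ range J, ‖a (v (j + 1)) - a (v j)‖ₑ ^ r ≤ K) : W r a D ≤ K :=
  iSup_le fun J => iSup_le fun v => iSup_le fun hv => iSup_le fun hD => h J v hv hD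

lemma le_W {E : Type*} [NormedAddCommGroup E] (r : ℝ) (a : ℕ → E) {D : Set ℕ} (J : ℕ) {v : ℕ → ℕ}
    (hv : Monotone v) (hD : ∀ j, v j ∈ D) :
    ∑ j ∈ range J, ‖a (v (j + 1)) - a (v j)‖ₑ ^ r ≤ W r a D :=
  le_iSup_of_le J (le_iSup_of_le v (le_iSup_of_le hv (le_iSup_of_le hD le_rfl)))

lemma W_mono_set {E : Type*} [NormedAddCommGroup E] (r : ℝ) (a : ℕ → E) {D D' : Set ℕ}
    (h : D ⊆ D') : W r a D ≤ W r a D' :=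
  W_le fun J _ hv hD => le_W r a J hv fun j => h (hD j)

lemma W_add_le {E : Type*} [NormedAddCommGroup E] {r : ℝ} (hr : 1 ≤ r) (a b : ℕ → E) (D : Set ℕ) :
    W r (fun n => a n + b n) D ^ r⁻¹ ≤ W r a D ^ r⁻¹ + W r b D ^ r⁻¹ := by
  have h0 : 0 < r := by linarith
  have hinv : 0 < r⁻¹ := by positivity
  have key : W r (fun n => a n + b n) D ≤ (W r a D ^ r⁻¹ + W r b D ^ r⁻¹) ^ r := by
    refine W_le fun J v hv hD => ?_
    rw [← ENNReal.rpow_le_rpow_iff hinv, ← ENNReal.rpow_mul, mul_inv_cancel₀ h0.ne',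
      ENNReal.rpow_one]
    have h1 := ENNReal.Lp_add_le (range J) (fun j => ‖a (v (j + 1)) - a (v j)‖ₑ)
      (fun j => ‖b (v (j + 1)) - b (v j)‖ₑ) hr
    rw [one_div] at h1
    refine le_trans ?_ (h1.trans (add_le_add ?_ ?_))
    · refine ENNReal.rpow_le_rpow (Finset.sum_le_sum fun j _ => ?_) hinv.le
      refine ENNReal.rpow_le_rpow ?_ h0.le
      rw [add_sub_add_comm]; exact enorm_add_le _ _
    · exact ENNReal.rpow_le_rpow (le_W r a J hv hD) hinv.le
    · exact ENNReal.rpow_le_rpow (le_W r b J hv hD) hinv.le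
  have := ENNReal.rpow_le_rpow key hinv.le
  rwa [← ENNReal.rpow_mul, mul_inv_cancel₀ h0.ne', ENNReal.rpow_one] at this

lemma sum_chain_Ico {M : Type*} [AddCommMonoid M] (F : ℕ → M) {v : ℕ → ℕ} (hv : Monotone v)
    (J : ℕ) : ∑ j ∈ range J, ∑ k ∈ Ico (v j) (v (j + 1)), F k = ∑ k ∈ Ico (v 0) (v J), F k := by
  induction J with
  | zero => simp
  | succ J ih =>
    rw [Finset.sum_range_succ, ih,
      Finset.sum_Ico_consecutive F (hv (Nat.zero_le J)) (hv (Nat.le_succ J))]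

/-- The anchor process of a sequence `e`, started at `K` and run backwards: it moves to the current
value of `e` as soon as `e` is at distance more than `τ` from it. `ancB e τ K i` is its value at
`K - i`. -/
def ancB (e : ℕ → ℂ) (τ : ℝ) (K : ℕ) : ℕ → ℂ
  | 0 => e K
  | i + 1 => if τ < ‖e (K - (i + 1)) - ancB e τ K i‖ then e (K - (i + 1)) else ancB e τ K i

/-- The anchor process, indexed in the same way as the sequence. -/
def anc (e : ℕ → ℂ) (τ : ℝ) (K k : ℕ) : ℂ := ancB e τ K (K - k)

lemma anc_self (e : ℕ → ℂ) (τ : ℝ) (K : ℕ) : anc e τ K K = e K := by simp [anc, ancB]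

lemma anc_step (e : ℕ → ℂ) (τ : ℝ) {K k : ℕ} (h : k < K) :
    anc e τ K k = if τ < ‖e k - anc e τ K (k + 1)‖ then e k else anc e τ K (k + 1) := by
  have h1 : K - k = (K - (k + 1)) + 1 := by omega
  have h2 : K - (K - (k + 1) + 1) = k := by omega
  unfold anc
  rw [h1, ancB, h2]

lemma anc_dist (e : ℕ → ℂ) {τ : ℝ} (hτ : 0 ≤ τ) {K k : ℕ} (h : k ≤ K) :
    ‖e k - anc e τ K k‖ ≤ τ := by
  rcases h.eq_or_lt with h | h
  · subst h; simpa [anc_self] using hτ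
  · rw [anc_step e τ h]
    split_ifs with h'
    · simpa using hτ
    · exact not_lt.1 h'

lemma anc_mem (e : ℕ → ℂ) (τ : ℝ) (K k : ℕ) : ∃ l ≤ K, anc e τ K k = e l := by
  unfold anc
  generalize K - k = i
  induction i with
  | zero => exact ⟨K, le_rfl, rfl⟩
  | succ i ih =>
    rw [ancB]
    split_ifs
    · exact ⟨_, Nat.sub_le _ _, rfl⟩
    · exact ih

lemma anc_count (e : ℕ → ℂ) {τ : ℝ} (hτ : 0 < τ) {K s t : ℕ} (hst : s ≤ t) (ht : t ≤ K)
    (hd : 2 * τ < ‖e t - e s‖) :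
    ENNReal.ofReal (τ ^ 2) ≤
      ∑ k ∈ Ico s t, ‖anc e τ K k - anc e τ K (k + 1)‖ₑ ^ (2 : ℝ) := by
  have hex : ∃ k ∈ Ico s t, anc e τ K k ≠ anc e τ K (k + 1) := by
    by_contra hcon
    push Not at hcon
    have hconst : ∀ i, s + i ≤ t → anc e τ K s = anc e τ K (s + i) := by
      intro i
      induction i with
      | zero => intro _; rfl
      | succ i ih =>
        intro hi
        rw [ih (by omega)]
        exact hcon _ (mem_Ico.2 ⟨by omega, by omega⟩)
    have h1 := hconst (t - s) (by omega)
    rw [Nat.add_sub_cancel' hst] at h1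
    have h2 := anc_dist e hτ.le ht
    have h3 := anc_dist e hτ.le (hst.trans ht)
    rw [h1] at h3
    have h4 : ‖e t - e s‖ ≤ ‖e t - anc e τ K t‖ + ‖e s - anc e τ K t‖ := by
      have : e t - e s = (e t - anc e τ K t) - (e s - anc e τ K t) := by ring
      rw [this]; exact norm_sub_le _ _
    linarith
  obtain ⟨k, hk, hne⟩ := hex
  refine le_trans ?_ (Finset.single_le_sum (f := fun k => ‖anc e τ K k - anc e τ K (k + 1)‖ₑ ^ (2 : ℝ))
    (fun _ _ => zero_le) hk)
  have hkK : k < K := by have := mem_Ico.1 hk; omega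
  have hs := anc_step e τ hkK
  split_ifs at hs with hlt
  · rw [Grid.sq_enorm, hs]
    exact ENNReal.ofReal_le_ofReal (pow_le_pow_left₀ hτ.le hlt.le 2)
  · exact absurd hs hne

/-- The variation of a bounded sequence is controlled by its anchor processes at all dyadic
thresholds. -/
lemma W_le_anchor {r : ℝ} (hr : 0 < r) (e : ℕ → ℂ) {B : ℝ} (hB : 0 < B) {K : ℕ}
    (he : ∀ k ≤ K, ‖e k‖ ≤ B) :
    W r e (Set.Iic K) ≤ ∑' i : ℕ, ENNReal.ofReal ((4 * (B * 2⁻¹ ^ i)) ^ r * ((B * 2⁻¹ ^ i) ^ 2)⁻¹) *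
      ∑ k ∈ range K, ‖anc e (B * 2⁻¹ ^ i) K k - anc e (B * 2⁻¹ ^ i) K (k + 1)‖ₑ ^ (2 : ℝ) := by
  refine W_le fun J v hv hD => ?_
  set τ : ℕ → ℝ := fun i => B * 2⁻¹ ^ i with hτ
  have hτp : ∀ i, 0 < τ i := fun i => by positivity
  have hone : ∀ j, ‖e (v (j + 1)) - e (v j)‖ₑ ^ r ≤ ∑' i, ENNReal.ofReal ((4 * τ i) ^ r * (τ i ^ 2)⁻¹) *
      ∑ k ∈ Ico (v j) (v (j + 1)), ‖anc e (τ i) K k - anc e (τ i) K (k + 1)‖ₑ ^ (2 : ℝ) := by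
    intro j
    set d := ‖e (v (j + 1)) - e (v j)‖ with hd
    rw [← ofReal_norm, ← hd]
    rcases (norm_nonneg (e (v (j + 1)) - e (v j))).eq_or_lt with h0 | h0
    · rw [hd, ← h0]; simp [ENNReal.zero_rpow_of_pos hr]
    have hlim : ∃ i, 2 * τ i < d := by
      obtain ⟨i, hi⟩ := exists_pow_lt_of_lt_one (show 0 < d / (2 * B) by positivity)
        (show (2⁻¹ : ℝ) < 1 by norm_num)
      refine ⟨i, ?_⟩
      rw [lt_div_iff₀ (by positivity)] at hi
      simp only [hτ]; linarith
    classical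
    have hi := Nat.find_spec hlim
    set i := Nat.find hlim with hidef
    have hle : d ≤ 4 * τ i := by
      rcases Nat.eq_zero_or_pos i with hz | hz
      · rw [hz]
        have h1 := he _ (hD (j + 1))
        have h2 := he _ (hD j)
        have h3 : d ≤ ‖e (v (j + 1))‖ + ‖e (v j)‖ := norm_sub_le _ _
        simp only [hτ, pow_zero]; linarith
      · have h1 := Nat.find_min hlim (m := i - 1) (by omega)
        have h2 : τ (i - 1) = 2 * τ i := by
          simp only [hτ]
          have : (2⁻¹ : ℝ) ^ i = 2⁻¹ ^ (i - 1) * 2⁻¹ := by rw [← pow_succ, Nat.sub_add_cancel hz]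
          rw [this]; ring
        rw [h2] at h1; linarith [not_lt.1 h1]
    refine le_trans ?_ (ENNReal.le_tsum i)
    have h1 := anc_count e (hτp i) (hv (Nat.le_succ j)) (hD (j + 1)) hi
    refine le_trans ?_ (mul_le_mul_right h1 _)
    rw [← ENNReal.ofReal_mul (by have := hτp i; positivity),
      ENNReal.ofReal_rpow_of_nonneg h0.le hr.le]
    apply ENNReal.ofReal_le_ofReal
    have := hτp i
    rw [mul_assoc, inv_mul_cancel₀ (by positivity), mul_one]
    exact Real.rpow_le_rpow h0.le hle hr.le
  refine (Finset.sum_le_sum fun j _ => hone j).trans ?_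
  rw [← Summable.tsum_finsetSum (fun _ _ => ENNReal.summable)]
  refine ENNReal.tsum_le_tsum fun i => ?_
  rw [← Finset.mul_sum, sum_chain_Ico _ hv]
  refine mul_le_mul_right (Finset.sum_le_sum_of_subset fun k hk => ?_) _
  have := mem_Ico.1 hk
  have h3 := hD J
  simp only [Set.mem_Iic] at h3
  exact mem_range.2 (by omega)

/-! ### The variational inequality and the square function of a martingale -/

namespace Grid

variable {X : Type*} (G : Grid X)

lemma anc_ad (f : X → ℂ) (τ : ℝ) (K : ℕ) {k : ℕ} (hk : k ≤ K) :
    G.Ad k (fun x => anc (fun k => G.E k f x) τ K k) := by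
  obtain ⟨i, rfl⟩ : ∃ i, k = K - i := ⟨K - k, by omega⟩
  have key : ∀ i, i ≤ K → G.Ad (K - i) (fun x => anc (fun k => G.E k f x) τ K (K - i)) := by
    intro i
    induction i with
    | zero => intro _; simp only [anc_self, Nat.sub_zero]; exact G.E_ad K f
    | succ i ih =>
      intro hi x y hy
      have h1 : K - (i + 1) + 1 = K - i := by omega
      simp only [anc_step _ τ (show K - (i + 1) < K by omega), h1]
      have h2 := (ih (by omega)).mono (show K - (i + 1) ≤ K - i by omega) x y hy
      rw [h2, G.E_ad _ f x y hy]
  by_cases h : i ≤ K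
  · exact key i h
  · have : K - i = K - K := by omega
    rw [this]; exact key K le_rfl

/-- Variational bound for bounded functions. -/
lemma nr_W_bounded [Countable X] {q r : ℝ} (hq : 1 < q) (hr : 2 < r) : ∃ C : ℝ, 0 < C ∧
    ∀ (g : X → ℂ) (B : ℝ) (K : ℕ), 0 < B → (∀ x, ‖g x‖ₑ ≤ ENNReal.ofReal B) →
    nr q (fun x => W r (fun k => G.E k g x) (Set.Iic K)) ≤
      ENNReal.ofReal (C * B ^ (r - 2)) * nr q (fun x => G.M (fun y => ‖g y‖ₑ) x ^ (2 : ℝ)) := by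
  obtain ⟨C, hC, hA⟩ := G.anchor_nr hq
  set ρ : ℝ := 2⁻¹ ^ (r - 2) with hρ
  have hρ0 : 0 < ρ := by positivity
  have hρ1 : ρ < 1 := Real.rpow_lt_one (by norm_num) (by norm_num) (by linarith)
  have h1ρ : 0 < 1 - ρ := by linarith
  refine ⟨4 ^ r * C * (1 - ρ)⁻¹, by positivity, fun g B K hB hg => ?_⟩
  set τ : ℕ → ℝ := fun i => B * 2⁻¹ ^ i with hτ
  have hτp : ∀ i, 0 < τ i := fun i => by positivity
  have hgE : ∀ k x, ‖G.E k g x‖ ≤ B := by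
    intro k x
    have h1 := (G.enorm_E_le k g x).trans (G.P_mono k hg x)
    rw [G.P_const, ← ofReal_norm, ENNReal.ofReal_le_ofReal_iff hB.le] at h1
    exact h1
  have h1 : ∀ x, W r (fun k => G.E k g x) (Set.Iic K) ≤ _ := fun x =>
    W_le_anchor (by linarith) (fun k => G.E k g x) hB (K := K) (fun k _ => hgE k x)
  refine (nr_mono (by linarith) h1).trans ((nr_tsum_le hq.le _).trans ?_)
  simp_rw [nr_const_mul (show 0 < q by linarith)]
  have h2 : ∀ i, nr q (fun x => ∑ k ∈ range K, ‖anc (fun k => G.E k g x) (τ i) K k -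
      anc (fun k => G.E k g x) (τ i) K (k + 1)‖ₑ ^ (2 : ℝ)) ≤
      ENNReal.ofReal C * nr q (fun x => G.M (fun y => ‖g y‖ₑ) x ^ (2 : ℝ)) := by
    intro i
    refine hA g K (fun k x => anc (fun k => G.E k g x) (τ i) K k) (fun k hk => G.anc_ad g _ K hk)
      (fun k _ x => ?_) (fun k hk y => ?_)
    · obtain ⟨l, _, hl⟩ := anc_mem (fun k => G.E k g x) (τ i) K k
      simp only [hl]
      exact (G.enorm_E_le l g x).trans (G.P_le_M _ _ _)
    · simp only [anc_step (fun k => G.E k g y) (τ i) hk]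
      split_ifs <;> simp
  refine (ENNReal.tsum_le_tsum fun i => mul_le_mul_right (h2 i) _).trans ?_
  have h3 : ∀ i, (4 * τ i) ^ r * (τ i ^ 2)⁻¹ = 4 ^ r * B ^ (r - 2) * ρ ^ i := by
    intro i
    have := hτp i
    rw [Real.mul_rpow (by norm_num) this.le, mul_assoc, mul_assoc]
    congr 1
    have e1 : τ i ^ r = τ i ^ (r - 2) * τ i ^ 2 := by
      rw [← Real.rpow_natCast, ← Real.rpow_add this]; norm_num
    rw [e1, mul_assoc, mul_inv_cancel₀ (by positivity), mul_one, hτ]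
    simp only
    rw [Real.mul_rpow hB.le (by positivity), hρ, ← Real.rpow_natCast, ← Real.rpow_natCast,
      ← Real.rpow_mul (by norm_num), ← Real.rpow_mul (by norm_num), mul_comm (i : ℝ)]
  rw [ENNReal.tsum_mul_right]
  have h4 : ∑' i, ENNReal.ofReal ((4 * τ i) ^ r * (τ i ^ 2)⁻¹) =
      ENNReal.ofReal (4 ^ r * B ^ (r - 2) * (1 - ρ)⁻¹) := by
    simp_rw [h3]
    rw [← ENNReal.ofReal_tsum_of_nonneg (fun i => by positivity)
      ((summable_geometric_of_lt_one hρ0.le hρ1).mul_left _), tsum_mul_left,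
      tsum_geometric_of_lt_one hρ0.le hρ1]
  rw [h4, ← mul_assoc, ← ENNReal.ofReal_mul (by positivity)]
  apply le_of_eq
  congr 2
  ring

/-- Weak type bound at height `t` in terms of the good part. -/
lemma lev_W_le [Countable X] {q r : ℝ} (hq : 1 < q) (hr : 2 < r) : ∃ C : ℝ, 0 < C ∧
    ∀ (f : X → ℂ) (K : ℕ) (t : ℝ), 0 < t →
    (∀ x, ∀ᶠ k in atTop, G.P k (fun y => ‖f y‖ₑ) x ≤ ENNReal.ofReal t) →
    lev (fun x => W r (fun k => G.E k f x) (Set.Iic K) ^ r⁻¹) (ENNReal.ofReal t) ≤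
      lev (G.M (fun y => ‖f y‖ₑ)) (ENNReal.ofReal t) +
      ENNReal.ofReal (C * t ^ (-(2 * q))) * ∑' x, ‖G.good f (ENNReal.ofReal t) x‖ₑ ^ (2 * q) := by
  obtain ⟨C, hC, hW⟩ := G.nr_W_bounded hq hr
  obtain ⟨C', hC', hdoob⟩ := G.doob (show 1 < 2 * q by linarith)
  rcases isEmpty_or_nonempty X with hX | ⟨⟨x0⟩⟩
  · exact ⟨1, one_pos, fun f K t _ _ => by simp [lev]⟩
  have hD : 0 < (G.D : ℝ) := by exact_mod_cast G.D_pos x0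
  refine ⟨C ^ q * (G.D ^ (r - 2)) ^ q * C', by positivity, fun f K t ht hd => ?_⟩
  have h0 : 0 < q := by linarith
  have hr0 : 0 < r := by linarith
  set t' := ENNReal.ofReal t with ht'
  set g := G.good f t' with hg
  have step1 : lev (fun x => W r (fun k => G.E k f x) (Set.Iic K) ^ r⁻¹) t' ≤
      lev (G.M (fun y => ‖f y‖ₑ)) t' + lev (fun x => W r (fun k => G.E k g x) (Set.Iic K) ^ r⁻¹) t' := by
    unfold lev
    rw [← ENNReal.tsum_add]
    refine ENNReal.tsum_le_tsum fun x => ?_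
    by_cases hM : t' < G.M (fun y => ‖f y‖ₑ) x
    · rw [if_pos hM]
      refine le_trans ?_ le_self_add
      split_ifs <;> simp
    · have hns : ∀ s, ¬ G.Halt (fun y => ‖f y‖ₑ) t' s x := fun s hs =>
        hM (hs.1.trans_le (G.P_le_M _ _ _))
      have he : ∀ k, G.E k f x = G.E k g x := by
        intro k
        conv_lhs => rw [← G.good_add_bad f t']
        rw [G.E_add, G.E_bad_eq_zero (fun s _ => hns s), add_zero]
      simp_rw [he]
      exact le_add_self
  refine step1.trans (add_le_add le_rfl ?_)
  refine (lev_le _ ht (p := r * q) (by positivity)).trans ?_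
  have e1 : ∑' x, (W r (fun k => G.E k g x) (Set.Iic K) ^ r⁻¹) ^ (r * q) =
      nr q (fun x => W r (fun k => G.E k g x) (Set.Iic K)) ^ q := by
    rw [nr_rpow h0]
    refine tsum_congr fun x => ?_
    rw [← ENNReal.rpow_mul, ← mul_assoc, inv_mul_cancel₀ hr0.ne', one_mul]
  rw [e1]
  have hgB : ∀ x, ‖g x‖ₑ ≤ ENNReal.ofReal (G.D * t) := by
    intro x
    rw [ENNReal.ofReal_mul hD.le, ENNReal.ofReal_natCast]
    exact G.enorm_good_le (hd x)
  have h2 := ENNReal.rpow_le_rpow (hW g (G.D * t) K (by positivity) hgB) h0.le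
  refine (mul_le_mul_right h2 _).trans ?_
  rw [ENNReal.mul_rpow_of_nonneg _ _ h0.le, nr_rpow h0]
  have e2 : ∑' x, (G.M (fun y => ‖g y‖ₑ) x ^ (2:ℝ)) ^ q = ∑' x, G.M (fun y => ‖g y‖ₑ) x ^ (2 * q) := by
    refine tsum_congr fun x => ?_
    rw [← ENNReal.rpow_mul]
  rw [e2]
  refine (mul_le_mul_right (mul_le_mul_right (hdoob _) _) _).trans (le_of_eq ?_)
  rw [← mul_assoc, ← mul_assoc]
  congr 1
  rw [ENNReal.ofReal_rpow_of_pos (by positivity), ← ENNReal.ofReal_mul (by positivity),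
    ← ENNReal.ofReal_mul (by positivity)]
  congr 1
  rw [Real.mul_rpow hD.le ht.le, Real.mul_rpow hC.le (by positivity),
    Real.mul_rpow (by positivity) (by positivity), ← Real.rpow_mul ht.le,
    show -(2 * q) = -(r * q) + (r - 2) * q by ring, Real.rpow_add ht]
  ring

/-- The variational inequality for martingales on the grid. -/
lemma variation [Countable X] {p r : ℝ} (hp : 1 < p) (hr : 2 < r) : ∃ C : ℝ, 0 < C ∧
    ∀ f : X → ℂ, nr p (fun x => W r (fun k => G.E k f x) Set.univ ^ r⁻¹) ≤
      ENNReal.ofReal C * nr p (fun x => ‖f x‖ₑ) := by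
  obtain ⟨C, hC, hlev⟩ := G.lev_W_le (q := p) hp hr
  obtain ⟨C', hC', hdoob⟩ := G.doob (show 1 < 2 * p by linarith)
  obtain ⟨K₀, hK₀, hmar⟩ := marcinkiewicz (X := X) (q₀ := 1) (p := p) (q₁ := 2 * p) one_pos hp
    (by linarith)
  rcases isEmpty_or_nonempty X with hX | ⟨⟨x0⟩⟩
  · exact ⟨1, one_pos, fun f => by simp [nr, show 0 < p by linarith]⟩
  have hD : 0 < (G.D : ℝ) := by exact_mod_cast G.D_pos x0
  have hr0 : 0 < r := by linarith
  have hp0 : 0 < p := by linarith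
  set A : ℝ := 1 + C * G.D ^ (2 * p - 1) with hA
  set B : ℝ := 1 + C * C' with hB
  have hA0 : 0 < A := by positivity
  have hB0 : 0 < B := by positivity
  refine ⟨(K₀ * (A + B)) ^ p⁻¹, by positivity, fun f => ?_⟩
  have main : ∀ K, nr p (fun x => W r (fun k => G.E k f x) (Set.Iic K) ^ r⁻¹) ≤
      ENNReal.ofReal ((K₀ * (A + B)) ^ p⁻¹) * nr p (fun x => ‖f x‖ₑ) := by
    intro K
    refine nr_le_of hp0 ?_
    have := hmar (fun f x => W r (fun k => G.E k f x) (Set.Iic K) ^ r⁻¹) (ENNReal.ofReal A)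
      (ENNReal.ofReal B) 1 one_pos ?_ ?_ ?_ f
    · refine this.trans (le_of_eq ?_)
      rw [ENNReal.mul_rpow_of_nonneg _ _ hp0.le, nr_rpow hp0,
        ENNReal.ofReal_rpow_of_pos (by positivity), ← Real.rpow_mul (by positivity),
        inv_mul_cancel₀ hp0.ne', Real.rpow_one, ENNReal.ofReal_mul hK₀.le,
        ENNReal.ofReal_add hA0.le hB0.le]
      simp
    · intro f g x
      simp_rw [G.E_add]
      exact W_add_le (by linarith) _ _ _
    · intro f t ht
      have ht' : 0 < ENNReal.ofReal t := by simpa using ht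
      by_cases hf : ∑' x, ‖f x‖ₑ ^ (1 : ℝ) = ⊤
      · rw [hf, ENNReal.mul_top (by simpa using by positivity),
          ENNReal.mul_top (by simpa using hA0)]; exact le_top
      have hd := fun x => G.eventually_P_le (F := fun y => ‖f y‖ₑ) le_rfl hf ht' x
      refine (hlev f K t ht hd).trans ?_
      have hX : ∑' x, ‖G.good f (ENNReal.ofReal t) x‖ₑ ^ (2 * p) ≤
          ENNReal.ofReal ((G.D * t) ^ (2 * p - 1)) * ∑' x, ‖f x‖ₑ ^ (1 : ℝ) := by
        have hg : ∑' x, ‖G.good f (ENNReal.ofReal t) x‖ₑ ≤ ∑' x, ‖f x‖ₑ ^ (1 : ℝ) := by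
          simpa using G.tsum_good_le f (ENNReal.ofReal t)
        refine le_trans ?_ (mul_le_mul_right hg _)
        rw [← ENNReal.tsum_mul_left]
        refine ENNReal.tsum_le_tsum fun x => ?_
        have h1 : ‖G.good f (ENNReal.ofReal t) x‖ₑ ≤ ENNReal.ofReal (G.D * t) := by
          rw [ENNReal.ofReal_mul hD.le, ENNReal.ofReal_natCast]
          exact G.enorm_good_le (hd x)
        calc ‖G.good f (ENNReal.ofReal t) x‖ₑ ^ (2 * p)
            = ‖G.good f (ENNReal.ofReal t) x‖ₑ ^ (2 * p - 1) * ‖G.good f (ENNReal.ofReal t) x‖ₑ := by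
              have h3 := ENNReal.rpow_add_of_nonneg (x := ‖G.good f (ENNReal.ofReal t) x‖ₑ)
                (2 * p - 1) 1 (by linarith) one_pos.le
              rwa [ENNReal.rpow_one, sub_add_cancel] at h3
          _ ≤ _ := by
              refine mul_le_mul_left ?_ _
              rw [← ENNReal.ofReal_rpow_of_pos (by positivity)]
              exact ENNReal.rpow_le_rpow h1 (by linarith)
      refine (add_le_add (G.doob_weak le_rfl (fun y => ‖f y‖ₑ) ht) (mul_le_mul_right hX _)).trans ?_
      · rw [← mul_assoc, ← mul_assoc, ← add_mul]
        refine mul_le_mul_left ?_ _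
        rw [← ENNReal.ofReal_mul (by positivity), ← ENNReal.ofReal_add (by positivity) (by positivity),
          ← ENNReal.ofReal_mul hA0.le]
        apply ENNReal.ofReal_le_ofReal
        rw [Real.mul_rpow hD.le ht.le, hA, show (-1 : ℝ) = -(2 * p) + (2 * p - 1) by ring,
          Real.rpow_add ht]
        apply le_of_eq
        ring
    · intro f t ht
      have ht' : 0 < ENNReal.ofReal t := by simpa using ht
      by_cases hf : ∑' x, ‖f x‖ₑ ^ (2 * p) = ⊤
      · rw [hf, ENNReal.mul_top (by simpa using by positivity),
          ENNReal.mul_top (by simpa using hB0)]; exact le_top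
      have hd := fun x => G.eventually_P_le (F := fun y => ‖f y‖ₑ) (by linarith) hf ht' x
      refine (hlev f K t ht hd).trans ?_
      have hX : ∑' x, ‖G.good f (ENNReal.ofReal t) x‖ₑ ^ (2 * p) ≤
          ENNReal.ofReal C' * ∑' x, ‖f x‖ₑ ^ (2 * p) := by
        refine le_trans (ENNReal.tsum_le_tsum fun x => ?_) (hdoob _)
        exact ENNReal.rpow_le_rpow (G.enorm_good_le_M f _ x) (by linarith)
      refine (add_le_add (G.doob_weak (show 1 ≤ 2 * p by linarith) (fun y => ‖f y‖ₑ) ht)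
        (mul_le_mul_right hX _)).trans ?_
      · rw [← mul_assoc, ← mul_assoc, ← add_mul]
        refine mul_le_mul_left ?_ _
        rw [← ENNReal.ofReal_mul (by positivity), ← ENNReal.ofReal_add (by positivity) (by positivity),
          ← ENNReal.ofReal_mul hB0.le]
        apply ENNReal.ofReal_le_ofReal
        rw [hB]
        apply le_of_eq
        ring
  refine nr_le_of_tendsto hp0 (F := fun K x => W r (fun k => G.E k f x) (Set.Iic K) ^ r⁻¹)
    (fun x => ?_) main
  refine (ENNReal.continuous_rpow_const.tendsto _).comp ?_
  have hmono : Monotone fun K => W r (fun k => G.E k f x) (Set.Iic K) := fun K K' h =>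
    W_mono_set _ _ (Set.Iic_subset_Iic.2 h)
  have : W r (fun k => G.E k f x) Set.univ = ⨆ K, W r (fun k => G.E k f x) (Set.Iic K) := by
    refine le_antisymm (W_le fun J v hv _ => ?_) (iSup_le fun K => W_mono_set _ _ (Set.subset_univ _))
    refine le_iSup_of_le (v J) ?_
    -- freeze the chain after its last relevant index
    have := le_W r (fun k => G.E k f x) (D := Set.Iic (v J)) J (v := fun j => v (min j J))
      (fun a b hab => hv (min_le_min_right J hab)) (fun j => hv (min_le_right j J))
    refine le_trans (le_of_eq (Finset.sum_congr rfl fun j hj => ?_)) this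
    have hj' := mem_range.1 hj
    rw [min_eq_left (by omega), min_eq_left (by omega)]
  rw [this]
  exact tendsto_atTop_iSup hmono

/-- The square function is bounded on `ℓ²`. -/
lemma tsum_sq_Dd_le (f : X → ℂ) :
    ∑' k, ∑' x, ‖G.Dd k f x‖ₑ ^ (2 : ℝ) ≤ ∑' x, ‖f x‖ₑ ^ (2 : ℝ) := by
  rw [ENNReal.tsum_eq_iSup_nat]
  refine iSup_le fun K => ?_
  rw [← Summable.tsum_finsetSum (fun _ _ => ENNReal.summable), ← G.tsum_P K,
    ← G.tsum_P K (fun x => ‖f x‖ₑ ^ (2 : ℝ))]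
  refine ENNReal.tsum_le_tsum fun x => mul_le_mul_right ?_ _
  have h1 := G.sum_anchor_le (j := K) (a := fun k => G.E k f) (fun k _ => G.E_ad k f) f x
    (fun k _ y => by simp)
  have h2 := ENNReal.ofReal_le_ofReal h1
  rw [ENNReal.ofReal_sum_of_nonneg (fun _ _ => by positivity),
    ENNReal.ofReal_sum_of_nonneg (fun _ _ => by positivity)] at h2
  simp_rw [ENNReal.ofReal_add (sq_nonneg _) (sq_nonneg _),
    ENNReal.ofReal_sum_of_nonneg (fun _ _ => sq_nonneg _), ← sq_enorm] at h2
  simpa [Dd] using h2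

/-- The square of the square function is bounded on `ℓ^q`, `q > 1`. -/
lemma nr_sq_Dd_le [Countable X] {q : ℝ} (hq : 1 < q) : ∃ C : ℝ, 0 < C ∧ ∀ f : X → ℂ,
    nr q (fun x => ∑' k, ‖G.Dd k f x‖ₑ ^ (2 : ℝ)) ≤
      ENNReal.ofReal C * nr q (fun x => ‖f x‖ₑ ^ (2 : ℝ)) := by
  obtain ⟨C, hC, hA⟩ := G.anchor_nr hq
  obtain ⟨C', hC', hdoob⟩ := G.doob (show 1 < 2 * q by linarith)
  have h0 : 0 < q := by linarith
  refine ⟨C * C' ^ q⁻¹, by positivity, fun f => ?_⟩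
  have h2 : nr q (fun x => G.M (fun y => ‖f y‖ₑ) x ^ (2 : ℝ)) ≤
      ENNReal.ofReal (C' ^ q⁻¹) * nr q (fun x => ‖f x‖ₑ ^ (2 : ℝ)) := by
    refine nr_le_of h0 ?_
    rw [ENNReal.mul_rpow_of_nonneg _ _ h0.le, nr_rpow h0, ENNReal.ofReal_rpow_of_pos (by positivity),
      ← Real.rpow_mul hC'.le, inv_mul_cancel₀ h0.ne', Real.rpow_one]
    simp_rw [← ENNReal.rpow_mul]
    exact hdoob _
  refine nr_le_of_tendsto h0 (F := fun K x => ∑ k ∈ range K, ‖G.Dd k f x‖ₑ ^ (2 : ℝ))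
    (fun x => ENNReal.tendsto_nat_tsum _) fun K => ?_
  have h1 := hA f K (fun k => G.E k f) (fun k _ => G.E_ad k f)
    (fun k _ x => (G.enorm_E_le k f x).trans (G.P_le_M _ _ _)) (fun k _ y => by simp)
  refine h1.trans ((mul_le_mul_right h2 _).trans (le_of_eq ?_))
  rw [ENNReal.ofReal_mul hC.le, mul_assoc]

end Grid

/-! ### Families of sublinear operators adapted to a grid -/

/-- A family of sublinear operators `T k`, dominated by kernels `ker k` which are bounded on `ℓ¹`
and `ℓ^∞` and live at the scale of the cells of level `k`, such that `T k` is almost orthogonal to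
the martingale differences of level `i` when `|k - i|` is large. -/
structure Fam {X : Type*} (G : Grid X) where
  /-- the operators -/
  T : ℕ → (X → ℂ) → X → ℝ≥0∞
  /-- the dominating kernels -/
  ker : ℕ → X → X → ℝ≥0∞
  /-- the enlarged cells -/
  near : ℕ → X → Finset X
  /-- the constant -/
  B : ℝ
  /-- the rate of decay -/
  ρ : ℝ
  B_pos : 0 < B
  ρ_pos : 0 < ρ
  ρ_lt : ρ < 1
  sub : ∀ k f g x, T k (f + g) x ≤ T k f x + T k g x
  le_ker : ∀ k f x, T k f x ≤ ∑' y, ker k x y * ‖f y‖ₑ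
  row : ∀ k x, ∑' y, ker k x y ≤ ENNReal.ofReal B
  col : ∀ k y, ∑' x, ker k x y ≤ ENNReal.ofReal B
  near_ad : ∀ s y y', y' ∈ G.cell s y → near s y' = near s y
  near_card : ∀ s y, ((near s y).card : ℝ≥0∞) ≤ ENNReal.ofReal B * G.w s
  loc : ∀ k s x y, k ≤ s → ker k x y ≠ 0 → x ∈ near s y
  l2 : ∀ k i f, ∑' x, T k (G.Dd i f) x ^ (2 : ℝ) ≤
    ENNReal.ofReal (B * ρ ^ ((k - i) + (i - k))) * ∑' x, ‖G.Dd i f x‖ₑ ^ (2 : ℝ)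

lemma Grid.Dd_add {X : Type*} (G : Grid X) (i : ℕ) (f g : X → ℂ) :
    G.Dd i (f + g) = G.Dd i f + G.Dd i g := by
  funext x
  simp only [Grid.Dd, G.E_add, Pi.add_apply]
  ring

namespace Fam

variable {X : Type*} {G : Grid X} (Φ : Fam G)

/-- The square function formed with the operators `T k` acting on the differences of level `i`,
where `(k, i) = (j + a, j + b)`. -/
def S (a b : ℕ) (f : X → ℂ) (x : X) : ℝ≥0∞ := nr 2 (fun j : ℕ => Φ.T (j + a) (G.Dd (j + b) f) x)

lemma S_add_le (a b : ℕ) (f g : X → ℂ) (x : X) :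
    Φ.S a b (f + g) x ≤ Φ.S a b f x + Φ.S a b g x := by
  unfold S
  refine le_trans (nr_mono two_pos fun j => ?_) (nr_add_le one_le_two _ _)
  rw [G.Dd_add]
  exact Φ.sub _ _ _ _

lemma S_sq (a b : ℕ) (f : X → ℂ) (x : X) :
    Φ.S a b f x ^ (2 : ℝ) = ∑' j, Φ.T (j + a) (G.Dd (j + b) f) x ^ (2 : ℝ) := by
  rw [S, nr_rpow two_pos]

lemma S_l2 (a b : ℕ) (f : X → ℂ) : ∑' x, Φ.S a b f x ^ (2 : ℝ) ≤
    ENNReal.ofReal (Φ.B * Φ.ρ ^ ((a - b) + (b - a))) * ∑' x, ‖f x‖ₑ ^ (2 : ℝ) := by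
  simp_rw [S_sq]
  rw [ENNReal.tsum_comm]
  have h1 : ∀ j, ∑' x, Φ.T (j + a) (G.Dd (j + b) f) x ^ (2 : ℝ) ≤
      ENNReal.ofReal (Φ.B * Φ.ρ ^ ((a - b) + (b - a))) *
        ∑' x, ‖G.Dd (j + b) f x‖ₑ ^ (2 : ℝ) := by
    intro j
    have := Φ.l2 (j + a) (j + b) f
    rwa [Nat.add_sub_add_left, Nat.add_sub_add_left] at this
  refine (ENNReal.tsum_le_tsum h1).trans ?_
  rw [ENNReal.tsum_mul_left]
  refine mul_le_mul_right ?_ _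
  refine le_trans ?_ (G.tsum_sq_Dd_le f)
  exact ENNReal.tsum_comp_le_tsum_of_injective (add_left_injective b)
    (fun k => ∑' x, ‖G.Dd k f x‖ₑ ^ (2 : ℝ))

/-- The enlargement of the set where the Doob maximal function is large. -/
def Om (F : X → ℝ≥0∞) (t : ℝ≥0∞) (x : X) : Prop := ∃ s y, G.Halt F t s y ∧ x ∈ Φ.near s y

open Classical in
lemma tsum_Om_le (F : X → ℝ≥0∞) (t : ℝ≥0∞) :
    t * ∑' x, (if Φ.Om F t x then 1 else 0) ≤ ENNReal.ofReal Φ.B * ∑' x, F x := by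
  have h1 : ∀ x, (if Φ.Om F t x then (1 : ℝ≥0∞) else 0) ≤
      ∑' s, (G.w s : ℝ≥0∞)⁻¹ * ∑' y, (if G.Halt F t s y then
        (if x ∈ Φ.near s y then 1 else 0) else 0) := by
    intro x
    split_ifs with h
    swap
    · exact zero_le
    obtain ⟨s, y, hs, hx⟩ := h
    refine le_trans ?_ (ENNReal.le_tsum s)
    have h2 : (G.w s : ℝ≥0∞) ≤ ∑' y, (if G.Halt F t s y then
        (if x ∈ Φ.near s y then (1 : ℝ≥0∞) else 0) else 0) := by
      refine le_trans (le_of_eq ?_) (ENNReal.sum_le_tsum (G.cell s y))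
      rw [Finset.sum_congr rfl (g := fun _ => (1 : ℝ≥0∞))]
      · simp [G.card_cell]
      · intro y' hy'
        rw [if_pos (hs.of_mem hy'), if_pos (by rwa [Φ.near_ad s y y' hy'])]
    calc (1 : ℝ≥0∞) = (G.w s : ℝ≥0∞)⁻¹ * G.w s :=
          (ENNReal.inv_mul_cancel (G.wE_ne_zero x s) (ENNReal.natCast_ne_top _)).symm
      _ ≤ _ := mul_le_mul_right h2 _
  have h3 : ∑' x, (if Φ.Om F t x then (1 : ℝ≥0∞) else 0) ≤
      ENNReal.ofReal Φ.B * ∑' s, ∑' y, (if G.Halt F t s y then (1 : ℝ≥0∞) else 0) := by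
    refine (ENNReal.tsum_le_tsum h1).trans ?_
    rw [ENNReal.tsum_comm, ← ENNReal.tsum_mul_left]
    refine ENNReal.tsum_le_tsum fun s => ?_
    rw [ENNReal.tsum_mul_left, ENNReal.tsum_comm, ← ENNReal.tsum_mul_left, ← ENNReal.tsum_mul_left]
    refine ENNReal.tsum_le_tsum fun y => ?_
    split_ifs with h
    · rw [tsum_eq_sum (s := Φ.near s y) (fun x hx => by simp [hx])]
      rw [Finset.sum_congr rfl (g := fun _ => (1 : ℝ≥0∞)) (fun x hx => by simp [hx])]
      simp only [sum_const, nsmul_eq_mul, mul_one]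
      refine (mul_le_mul_right (Φ.near_card s y) _).trans (le_of_eq ?_)
      rw [mul_left_comm, ENNReal.inv_mul_cancel (G.wE_ne_zero y s) (ENNReal.natCast_ne_top _),
        mul_one]
    · simp
  calc t * ∑' x, (if Φ.Om F t x then (1 : ℝ≥0∞) else 0)
      ≤ t * (ENNReal.ofReal Φ.B * ∑' s, ∑' y, (if G.Halt F t s y then (1 : ℝ≥0∞) else 0)) :=
        mul_le_mul_right h3 _
    _ = ENNReal.ofReal Φ.B * (t * ∑' s, ∑' y, (if G.Halt F t s y then (1 : ℝ≥0∞) else 0)) := by ring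
    _ ≤ _ := mul_le_mul_right (G.mul_halt_le F t) _

lemma tsum_count_le (a b s : ℕ) : ∑' j : ℕ, (if j + b < s ∧ s < j + a then (1 : ℝ≥0∞) else 0) ≤
    ((a - b : ℕ) : ℝ≥0∞) := by
  rw [tsum_eq_sum (s := Finset.Ico (s + 1 - a) (s - b)) ?_]
  · refine (Finset.sum_le_card_nsmul _ _ 1 fun j _ => by split_ifs <;> simp).trans ?_
    simp only [nsmul_eq_mul, mul_one, Nat.card_Ico]
    exact_mod_cast (by omega : s - b - (s + 1 - a) ≤ a - b)
  · intro j hj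
    rw [if_neg]
    rintro ⟨h1, h2⟩
    apply hj
    rw [Finset.mem_Ico]
    omega

open Classical in
/-- Away from the exceptional set the bad part contributes little. -/
lemma tsum_S_bad_le (a b : ℕ) (f : X → ℂ) (t : ℝ≥0∞) :
    ∑' x, (if Φ.Om (fun y => ‖f y‖ₑ) t x then 0 else Φ.S a b (G.bad f t) x) ≤
      ENNReal.ofReal Φ.B * (a - b : ℕ) * 4 * ∑' x, ‖f x‖ₑ := by
  set F : X → ℝ≥0∞ := fun y => ‖f y‖ₑ with hF
  set g := G.bad f t with hg
  set Q : X → ℝ≥0∞ := fun y => ‖g y‖ₑ with hQ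
  have hS : ∀ x, Φ.S a b g x ≤ ∑' j, Φ.T (j + a) (G.Dd (j + b) g) x := by
    intro x
    unfold S
    refine nr_le_of two_pos ?_
    rw [ENNReal.rpow_two, sq, ← ENNReal.tsum_mul_right]
    refine ENNReal.tsum_le_tsum fun j => ?_
    rw [ENNReal.rpow_two, sq]
    exact mul_le_mul_right (ENNReal.le_tsum j) _
  have key : ∀ j x y, (if Φ.Om F t x then 0 else Φ.ker (j + a) x y * ‖G.Dd (j + b) g y‖ₑ) ≤
      Φ.ker (j + a) x y * ∑' s, (if j + b < s ∧ s < j + a then (if G.Halt F t s y then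
        (G.P (j + b) Q y + G.P (j + b + 1) Q y) else 0) else 0) := by
    intro j x y
    split_ifs with hx
    · exact zero_le
    by_cases hk : Φ.ker (j + a) x y = 0
    · simp [hk]
    by_cases hD : G.Dd (j + b) g y = 0
    · simp [hD]
    refine mul_le_mul_right ?_ _
    have hex : ∃ s, j + b < s ∧ G.Halt F t s y := by
      by_contra hno
      push Not at hno
      apply hD
      unfold Grid.Dd
      rw [hg, G.E_bad_eq_zero hno, G.E_bad_eq_zero (fun s hs => hno s (by omega)), sub_zero]
    obtain ⟨s, hs1, hs2⟩ := hex
    have hs3 : s < j + a := by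
      by_contra hle
      exact hx ⟨s, y, hs2, Φ.loc _ s x y (by omega) hk⟩
    refine le_trans ?_ (ENNReal.le_tsum s)
    rw [if_pos ⟨hs1, hs3⟩, if_pos hs2]
    unfold Grid.Dd
    exact (enorm_sub_le).trans (add_le_add (G.enorm_E_le _ _ _) (G.enorm_E_le _ _ _))
  calc ∑' x, (if Φ.Om F t x then 0 else Φ.S a b g x)
      ≤ ∑' x, ∑' j, ∑' y, (if Φ.Om F t x then 0 else Φ.ker (j + a) x y * ‖G.Dd (j + b) g y‖ₑ) := by
        refine ENNReal.tsum_le_tsum fun x => ?_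
        split_ifs with hx
        · simp
        · exact (hS x).trans (ENNReal.tsum_le_tsum fun j => Φ.le_ker _ _ _)
    _ ≤ ∑' x, ∑' j, ∑' y, Φ.ker (j + a) x y * ∑' s, (if j + b < s ∧ s < j + a then
          (if G.Halt F t s y then (G.P (j + b) Q y + G.P (j + b + 1) Q y) else 0) else 0) :=
        ENNReal.tsum_le_tsum fun x => ENNReal.tsum_le_tsum fun j => ENNReal.tsum_le_tsum fun y =>
          key j x y
    _ = ∑' j, ∑' y, (∑' x, Φ.ker (j + a) x y) * ∑' s, (if j + b < s ∧ s < j + a then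
          (if G.Halt F t s y then (G.P (j + b) Q y + G.P (j + b + 1) Q y) else 0) else 0) := by
        rw [ENNReal.tsum_comm]
        refine tsum_congr fun j => ?_
        rw [ENNReal.tsum_comm]
        refine tsum_congr fun y => ?_
        rw [ENNReal.tsum_mul_right]
    _ ≤ ∑' j, ∑' y, ENNReal.ofReal Φ.B * ∑' s, (if j + b < s ∧ s < j + a then
          (if G.Halt F t s y then (G.P (j + b) Q y + G.P (j + b + 1) Q y) else 0) else 0) :=
        ENNReal.tsum_le_tsum fun j => ENNReal.tsum_le_tsum fun y => mul_le_mul_left (Φ.col _ _) _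
    _ = ENNReal.ofReal Φ.B * ∑' s, ∑' j, (if j + b < s ∧ s < j + a then (1 : ℝ≥0∞) else 0) *
          (2 * ∑' y, (if G.Halt F t s y then Q y else 0)) := by
        simp_rw [ENNReal.tsum_mul_left]
        congr 1
        refine (tsum_congr fun j => ENNReal.tsum_comm).trans ?_
        rw [ENNReal.tsum_comm]
        have hP : ∀ s i, i ≤ s → ∑' y, (if G.Halt F t s y then G.P i Q y else 0) =
            ∑' y, (if G.Halt F t s y then Q y else 0) := by
          intro s i his
          have hA : G.Ad i (fun x => if G.Halt F t s x then (1 : ℝ≥0∞) else 0) :=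
            ((G.halt_ad F t s).mono his).map (fun q => if q then (1 : ℝ≥0∞) else 0)
          have h := G.tsum_P_mul i Q (fun x => if G.Halt F t s x then (1 : ℝ≥0∞) else 0)
          simp_rw [G.P_of_ad hA] at h
          simpa using h
        refine tsum_congr fun s => tsum_congr fun j => ?_
        split_ifs with h
        · rw [one_mul, two_mul]
          nth_rewrite 1 [← hP s (j + b) (by omega)]
          rw [← hP s (j + b + 1) (by omega), ← ENNReal.tsum_add]
          refine tsum_congr fun y => ?_
          split_ifs <;> simp
        · simp
    _ ≤ ENNReal.ofReal Φ.B * ∑' s, ((a - b : ℕ) : ℝ≥0∞) *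
          (2 * ∑' y, (if G.Halt F t s y then Q y else 0)) := by
        refine mul_le_mul_right (ENNReal.tsum_le_tsum fun s => ?_) _
        rw [ENNReal.tsum_mul_right]
        exact mul_le_mul_left (tsum_count_le a b s) _
    _ ≤ _ := by
        rw [ENNReal.tsum_mul_left, ENNReal.tsum_mul_left, ENNReal.tsum_comm]
        have h1 : ∑' y, ∑' s, (if G.Halt F t s y then Q y else 0) ≤ 2 * ∑' x, ‖f x‖ₑ :=
          (ENNReal.tsum_le_tsum fun y => G.tsum_halt_le F t Q y).trans (G.tsum_bad_le f t)
        calc _ ≤ ENNReal.ofReal Φ.B * ((a - b : ℕ) * (2 * (2 * ∑' x, ‖f x‖ₑ))) := by gcongr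
          _ = _ := by ring

end Fam

/-! ### Weak type bounds and interpolation for the square functions -/

namespace Fam

variable {X : Type*} {G : Grid X} (Φ : Fam G)

open Classical in
/-- The weak type `(1,1)` bound with a constant growing linearly in `|a - b|`. -/
lemma S_weak : ∃ C : ℝ, 0 < C ∧ ∀ (a b : ℕ) (f : X → ℂ) (t : ℝ), 0 < t →
    lev (Φ.S a b f) (ENNReal.ofReal t) ≤
      ENNReal.ofReal (C * (1 + ((a - b) + (b - a) : ℕ))) *
        (ENNReal.ofReal (t ^ (-1 : ℝ)) * ∑' x, ‖f x‖ₑ ^ (1 : ℝ)) := by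
  have hB := Φ.B_pos
  refine ⟨4 * Φ.B * G.D + Φ.B + 8 * Φ.B, by positivity, fun a b f t ht => ?_⟩
  set d : ℕ := (a - b) + (b - a) with hd
  have ht' : 0 < ENNReal.ofReal t := by simpa using ht
  have hcpos : 0 < (4 * Φ.B * G.D + Φ.B + 8 * Φ.B) * (1 + (d : ℝ)) := by positivity
  by_cases hf : ∑' x, ‖f x‖ₑ ^ (1 : ℝ) = ⊤
  · rw [hf, ENNReal.mul_top (by simpa using by positivity),
      ENNReal.mul_top (by simpa using hcpos)]; exact le_top
  have hev := fun x => G.eventually_P_le (F := fun y => ‖f y‖ₑ) le_rfl hf ht' x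
  simp only [ENNReal.rpow_one] at hf ⊢
  set I := ∑' x, ‖f x‖ₑ with hI
  set g := G.good f (ENNReal.ofReal t) with hg
  set h := G.bad f (ENNReal.ofReal t) with hh
  have hsum : g + h = f := G.good_add_bad f _
  have ht2 : 0 < t / 2 := by positivity
  have h1 : lev (Φ.S a b f) (ENNReal.ofReal t) ≤
      lev (Φ.S a b g) (ENNReal.ofReal (t / 2)) + lev (Φ.S a b h) (ENNReal.ofReal (t / 2)) := by
    refine lev_add_le (fun x => ?_) ?_
    · conv_lhs => rw [← hsum]
      exact Φ.S_add_le a b g h x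
    · rw [← ENNReal.ofReal_add ht2.le ht2.le]; simp
  have hgood : ∑' x, ‖g x‖ₑ ^ (2 : ℝ) ≤ ENNReal.ofReal (G.D * t) * I := by
    refine le_trans ?_ (mul_le_mul_right (G.tsum_good_le f (ENNReal.ofReal t)) _)
    rw [← ENNReal.tsum_mul_left]
    refine ENNReal.tsum_le_tsum fun x => ?_
    rw [ENNReal.rpow_two, sq]
    refine mul_le_mul_left ?_ _
    rw [ENNReal.ofReal_mul (by positivity), ENNReal.ofReal_natCast]
    exact G.enorm_good_le (hev x)
  have h2 : lev (Φ.S a b g) (ENNReal.ofReal (t / 2)) ≤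
      ENNReal.ofReal (4 * Φ.B * G.D * t⁻¹) * I := by
    have hρ : Φ.B * Φ.ρ ^ d ≤ Φ.B := by
      have := pow_le_one₀ (n := d) Φ.ρ_pos.le Φ.ρ_lt.le
      nlinarith
    refine (lev_le _ ht2 two_pos).trans ?_
    have h3 := (Φ.S_l2 a b g).trans (mul_le_mul_right hgood _)
    have h4 := h3.trans (mul_le_mul_left (ENNReal.ofReal_le_ofReal hρ) _)
    refine (mul_le_mul_right h4 _).trans (le_of_eq ?_)
    rw [← mul_assoc, ← mul_assoc, ← ENNReal.ofReal_mul (by positivity),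
      ← ENNReal.ofReal_mul (by positivity)]
    congr 2
    rw [Real.rpow_neg ht2.le, Real.rpow_two]
    field_simp
    ring
  have h5 : lev (Φ.S a b h) (ENNReal.ofReal (t / 2)) ≤
      ∑' x, (if Φ.Om (fun y => ‖f y‖ₑ) (ENNReal.ofReal t) x then 1 else 0) +
      lev (fun x => if Φ.Om (fun y => ‖f y‖ₑ) (ENNReal.ofReal t) x then 0 else Φ.S a b h x)
        (ENNReal.ofReal (t / 2)) := by
    unfold lev
    rw [← ENNReal.tsum_add]
    refine ENNReal.tsum_le_tsum fun x => ?_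
    by_cases hx : Φ.Om (fun y => ‖f y‖ₑ) (ENNReal.ofReal t) x
    · simp only [hx, if_true]
      refine le_trans ?_ le_self_add
      split_ifs <;> simp
    · simp [hx]
  have h6 : ∑' x, (if Φ.Om (fun y => ‖f y‖ₑ) (ENNReal.ofReal t) x then (1 : ℝ≥0∞) else 0) ≤
      ENNReal.ofReal (Φ.B * t⁻¹) * I := by
    have := Φ.tsum_Om_le (fun y => ‖f y‖ₑ) (ENNReal.ofReal t)
    rw [mul_comm Φ.B, ENNReal.ofReal_mul (by positivity), mul_assoc]
    refine le_trans (le_of_eq ?_) (mul_le_mul_right this _)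
    rw [← mul_assoc, ← ENNReal.ofReal_mul (by positivity), inv_mul_cancel₀ ht.ne',
      ENNReal.ofReal_one, one_mul]
  have h7 : lev (fun x => if Φ.Om (fun y => ‖f y‖ₑ) (ENNReal.ofReal t) x then 0 else Φ.S a b h x)
        (ENNReal.ofReal (t / 2)) ≤ ENNReal.ofReal (8 * Φ.B * d * t⁻¹) * I := by
    refine (lev_le _ ht2 one_pos).trans ?_
    simp only [ENNReal.rpow_one]
    refine (mul_le_mul_right (Φ.tsum_S_bad_le a b f _) _).trans ?_
    rw [← mul_assoc]
    refine mul_le_mul_left ?_ _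
    rw [← ENNReal.ofReal_natCast, ← ENNReal.ofReal_mul hB.le,
      show (4 : ℝ≥0∞) = ENNReal.ofReal 4 by simp, ← ENNReal.ofReal_mul (by positivity),
      ← ENNReal.ofReal_mul (by positivity)]
    apply ENNReal.ofReal_le_ofReal
    rw [Real.rpow_neg ht2.le, Real.rpow_one]
    have h8 : ((a - b : ℕ) : ℝ) ≤ d := by exact_mod_cast (by omega : a - b ≤ d)
    calc (t / 2)⁻¹ * (Φ.B * ((a - b : ℕ) : ℝ) * 4) ≤ (t / 2)⁻¹ * (Φ.B * d * 4) := by gcongr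
      _ = _ := by field_simp; ring
  refine (h1.trans (add_le_add h2 (h5.trans (add_le_add h6 h7)))).trans ?_
  rw [← add_mul, ← add_mul, ← ENNReal.ofReal_add (by positivity) (by positivity),
    ← ENNReal.ofReal_add (by positivity) (by positivity), ← mul_assoc,
    ← ENNReal.ofReal_mul hcpos.le]
  refine mul_le_mul_left (ENNReal.ofReal_le_ofReal ?_) _
  rw [Real.rpow_neg ht.le, Real.rpow_one, ← add_mul, ← add_mul]
  refine mul_le_mul_of_nonneg_right ?_ (by positivity)
  have : 0 ≤ (4 * Φ.B * G.D + Φ.B) * d := by positivity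
  nlinarith

/-- The bound for the square functions, with geometric decay in `|a - b|`. -/
def Good (p : ℝ) : Prop := ∃ C θ : ℝ, 0 < C ∧ 0 < θ ∧ θ < 1 ∧ ∀ (a b : ℕ) (f : X → ℂ),
  ∑' x, Φ.S a b f x ^ p ≤ ENNReal.ofReal (C * (1 + ((a - b) + (b - a) : ℕ)) *
    θ ^ ((a - b) + (b - a))) * ∑' x, ‖f x‖ₑ ^ p

lemma good_two : Φ.Good 2 := by
  have hB := Φ.B_pos
  have hρ := Φ.ρ_pos
  refine ⟨Φ.B, Φ.ρ, hB, hρ, Φ.ρ_lt, fun a b f => (Φ.S_l2 a b f).trans ?_⟩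
  refine mul_le_mul_left (ENNReal.ofReal_le_ofReal ?_) _
  set d : ℕ := (a - b) + (b - a) with hd
  have : 0 ≤ Φ.B * Φ.ρ ^ d * d := by positivity
  nlinarith

lemma good_lt [Countable X] {p : ℝ} (hp : 1 < p) (hp2 : p < 2) : Φ.Good p := by
  obtain ⟨C, hC, hw⟩ := Φ.S_weak
  obtain ⟨K, hK, hm⟩ := marcinkiewicz (X := X) one_pos hp hp2
  have hB := Φ.B_pos
  have hρ := Φ.ρ_pos
  have hρ1 := Φ.ρ_lt
  refine ⟨K * (C + Φ.B), Φ.ρ ^ ((p - 1) / 2), by positivity, by positivity,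
    Real.rpow_lt_one hρ.le hρ1 (by linarith), fun a b f => ?_⟩
  have hwk := hw a b
  have hl2 := Φ.S_l2 a b
  set d : ℕ := (a - b) + (b - a) with hd
  refine (hm (Φ.S a b) _ (ENNReal.ofReal (Φ.B * Φ.ρ ^ d)) (Φ.ρ ^ (-(d : ℝ) / 2)) (by positivity)
    (Φ.S_add_le a b) hwk (fun f t ht => ?_) f).trans ?_
  · refine (lev_le _ ht two_pos).trans ((mul_le_mul_right (hl2 f) _).trans (le_of_eq ?_))
    ring
  refine mul_le_mul_left ?_ _
  rw [← ENNReal.ofReal_mul (by positivity), ← ENNReal.ofReal_mul (by positivity),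
    ← ENNReal.ofReal_add (by positivity) (by positivity), ← ENNReal.ofReal_mul (by positivity)]
  apply ENNReal.ofReal_le_ofReal
  rw [← Real.rpow_mul hρ.le, ← Real.rpow_mul hρ.le, mul_assoc Φ.B, ← Real.rpow_natCast Φ.ρ d,
    ← Real.rpow_add hρ, mul_assoc K, mul_assoc K, ← Real.rpow_natCast, ← Real.rpow_mul hρ.le]
  refine mul_le_mul_of_nonneg_left ?_ hK.le
  have e1 : -(d : ℝ) / 2 * -(p - 1) = (p - 1) / 2 * d := by ring
  rw [e1]
  have e2 : Φ.ρ ^ ((d : ℝ) + -(d : ℝ) / 2 * (2 - p)) ≤ Φ.ρ ^ ((p - 1) / 2 * d) := by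
    apply Real.rpow_le_rpow_of_exponent_ge hρ hρ1.le
    have : (0 : ℝ) ≤ d := by positivity
    nlinarith
  set z := Φ.ρ ^ ((p - 1) / 2 * d)
  have hz : 0 < z := by positivity
  have : 0 ≤ Φ.B * z * d := by positivity
  nlinarith [mul_le_mul_of_nonneg_left e2 hB.le]

/-- The maximal bound for the adjoint kernels on `ℓ^q`. -/
def AdjMax (q : ℝ) : Prop := ∃ C : ℝ, 0 < C ∧ ∀ H : X → ℝ≥0∞,
  nr q (fun y => ⨆ k, ∑' x, Φ.ker k x y * H x) ≤ ENNReal.ofReal C * nr q H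

lemma tsum_mul_sq_le (K F : X → ℝ≥0∞) :
    (∑' y, K y * F y) ^ (2 : ℝ) ≤ (∑' y, K y) * ∑' y, K y * F y ^ (2 : ℝ) := by
  have h := tsum_mul_le_nr (p := 2) (q := 2) Real.HolderConjugate.two_two
    (fun y => K y ^ (2⁻¹ : ℝ)) (fun y => K y ^ (2⁻¹ : ℝ) * F y)
  have e : ∀ y, K y ^ (2⁻¹ : ℝ) * (K y ^ (2⁻¹ : ℝ) * F y) = K y * F y := by
    intro y
    rw [← mul_assoc, ← ENNReal.rpow_add_of_nonneg _ _ (by norm_num) (by norm_num)]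
    norm_num
  simp_rw [e] at h
  have h2 := ENNReal.rpow_le_rpow h (z := (2 : ℝ)) (by norm_num)
  refine h2.trans (le_of_eq ?_)
  rw [ENNReal.mul_rpow_of_nonneg _ _ (by norm_num), nr_rpow two_pos, nr_rpow two_pos]
  congr 1
  · refine tsum_congr fun y => ?_
    rw [← ENNReal.rpow_mul]; norm_num
  · refine tsum_congr fun y => ?_
    rw [ENNReal.mul_rpow_of_nonneg _ _ (by norm_num), ← ENNReal.rpow_mul]; norm_num

/-- For large exponents the square functions are bounded uniformly in `a`, `b`, by duality. -/
lemma S_large [Countable X] {q q' : ℝ} (hqq : q.HolderConjugate q') (hA : Φ.AdjMax q') :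
    ∃ C : ℝ, 0 < C ∧ ∀ (a b : ℕ) (f : X → ℂ),
    ∑' x, Φ.S a b f x ^ (2 * q) ≤ ENNReal.ofReal C * ∑' x, ‖f x‖ₑ ^ (2 * q) := by
  obtain ⟨C₁, hC₁, h1⟩ := hA
  obtain ⟨C₂, hC₂, h2⟩ := G.nr_sq_Dd_le hqq.lt
  have hB := Φ.B_pos
  have hq := hqq.pos
  refine ⟨(Φ.B * C₁ * C₂) ^ q, by positivity, fun a b f => ?_⟩
  have key : nr q (fun x => Φ.S a b f x ^ (2 : ℝ)) ≤
      ENNReal.ofReal (Φ.B * C₁ * C₂) * nr q (fun x => ‖f x‖ₑ ^ (2 : ℝ)) := by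
    refine nr_le_of_dual hqq _ _ fun H => ?_
    calc ∑' x, Φ.S a b f x ^ (2 : ℝ) * H x
        ≤ ∑' x, ∑' j, ENNReal.ofReal Φ.B *
            ∑' y, Φ.ker (j + a) x y * ‖G.Dd (j + b) f y‖ₑ ^ (2 : ℝ) * H x := by
          refine ENNReal.tsum_le_tsum fun x => ?_
          rw [S_sq, ← ENNReal.tsum_mul_right]
          refine ENNReal.tsum_le_tsum fun j => ?_
          rw [ENNReal.tsum_mul_right, ← mul_assoc]
          refine mul_le_mul_left ?_ _
          refine (ENNReal.rpow_le_rpow (Φ.le_ker _ _ _) (by norm_num)).trans ?_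
          exact (tsum_mul_sq_le _ _).trans (mul_le_mul_left (Φ.row _ _) _)
      _ = ENNReal.ofReal Φ.B * ∑' y, ∑' j, ‖G.Dd (j + b) f y‖ₑ ^ (2 : ℝ) *
            ∑' x, Φ.ker (j + a) x y * H x := by
          simp_rw [ENNReal.tsum_mul_left]
          congr 1
          rw [ENNReal.tsum_comm]
          conv_rhs => rw [ENNReal.tsum_comm]
          refine tsum_congr fun j => ?_
          rw [ENNReal.tsum_comm]
          refine tsum_congr fun y => ?_
          rw [← ENNReal.tsum_mul_left]
          refine tsum_congr fun x => ?_
          ring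
      _ ≤ ENNReal.ofReal Φ.B * ∑' y, (∑' j, ‖G.Dd j f y‖ₑ ^ (2 : ℝ)) *
            ⨆ k, ∑' x, Φ.ker k x y * H x := by
          refine mul_le_mul_right (ENNReal.tsum_le_tsum fun y => ?_) _
          have h3 : ∑' j, ‖G.Dd (j + b) f y‖ₑ ^ (2 : ℝ) ≤ ∑' j, ‖G.Dd j f y‖ₑ ^ (2 : ℝ) :=
            ENNReal.tsum_comp_le_tsum_of_injective (add_left_injective b)
              (fun k => ‖G.Dd k f y‖ₑ ^ (2 : ℝ))
          refine le_trans ?_ (mul_le_mul_left h3 _)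
          rw [← ENNReal.tsum_mul_right]
          refine ENNReal.tsum_le_tsum fun j => mul_le_mul_right ?_ _
          exact le_iSup (fun k => ∑' x, Φ.ker k x y * H x) (j + a)
      _ ≤ ENNReal.ofReal Φ.B * ((ENNReal.ofReal C₂ * nr q (fun x => ‖f x‖ₑ ^ (2 : ℝ))) *
            (ENNReal.ofReal C₁ * nr q' H)) :=
          mul_le_mul_right ((tsum_mul_le_nr hqq _ _).trans (mul_le_mul' (h2 f) (h1 H))) _
      _ = _ := by
          rw [ENNReal.ofReal_mul (by positivity), ENNReal.ofReal_mul hB.le]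
          ring
  have h4 := ENNReal.rpow_le_rpow key hq.le
  rw [ENNReal.mul_rpow_of_nonneg _ _ hq.le, nr_rpow hq, nr_rpow hq,
    ENNReal.ofReal_rpow_of_pos (by positivity)] at h4
  simp_rw [← ENNReal.rpow_mul] at h4
  exact h4

lemma good_gt [Countable X] {p : ℝ} (hp : 2 < p) (hA : ∀ q, 1 < q → q < 2 → Φ.AdjMax q) :
    Φ.Good p := by
  -- interpolate between `2` and `2 * q`, where `q > p / 2` and `q > 2`
  set q : ℝ := p + 1 with hq
  have hqq : q.HolderConjugate q.conjExponent := Real.HolderConjugate.conjExponent (by linarith)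
  have hq2 : q.conjExponent < 2 := by
    unfold Real.conjExponent
    rw [div_lt_iff₀ (by linarith)]
    linarith
  obtain ⟨C, hC, hS⟩ := Φ.S_large hqq (hA _ hqq.symm.lt hq2)
  obtain ⟨K, hK, hm⟩ := marcinkiewicz (X := X) two_pos hp (show p < 2 * q by linarith)
  have hB := Φ.B_pos
  have hρ := Φ.ρ_pos
  have hρ1 := Φ.ρ_lt
  set s : ℝ := 1 / (2 * (p - 2)) with hs
  have hs0 : 0 < s := by have : 0 < p - 2 := by linarith
                         positivity
  set e : ℝ := min (1 / 2) (s * (2 * q - p)) with he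
  have he0 : 0 < e := lt_min (by norm_num) (mul_pos hs0 (by linarith))
  refine ⟨K * (Φ.B + C), Φ.ρ ^ e, by positivity, by positivity,
    Real.rpow_lt_one hρ.le hρ1 he0, fun a b f => ?_⟩
  have hl2 := Φ.S_l2 a b
  have hlq := hS a b
  set d : ℕ := (a - b) + (b - a) with hd
  have hd0 : (0 : ℝ) ≤ d := by positivity
  refine (hm (Φ.S a b) (ENNReal.ofReal (Φ.B * Φ.ρ ^ d)) (ENNReal.ofReal C) (Φ.ρ ^ (s * d))
    (by positivity) (Φ.S_add_le a b) (fun f t ht => ?_) (fun f t ht => ?_) f).trans ?_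
  · refine (lev_le _ ht two_pos).trans ((mul_le_mul_right (hl2 f) _).trans (le_of_eq ?_))
    ring
  · refine (lev_le _ ht (by linarith)).trans ((mul_le_mul_right (hlq f) _).trans (le_of_eq ?_))
    ring
  refine mul_le_mul_left ?_ _
  rw [← ENNReal.ofReal_mul (by positivity), ← ENNReal.ofReal_mul (by positivity),
    ← ENNReal.ofReal_add (by positivity) (by positivity), ← ENNReal.ofReal_mul (by positivity)]
  apply ENNReal.ofReal_le_ofReal
  rw [← Real.rpow_mul hρ.le, ← Real.rpow_mul hρ.le, mul_assoc Φ.B, ← Real.rpow_natCast Φ.ρ d,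
    ← Real.rpow_add hρ, mul_assoc K, mul_assoc K, ← Real.rpow_natCast, ← Real.rpow_mul hρ.le]
  refine mul_le_mul_of_nonneg_left ?_ hK.le
  have e1 : Φ.ρ ^ ((d : ℝ) + s * d * -(p - 2)) ≤ Φ.ρ ^ (e * d) := by
    apply Real.rpow_le_rpow_of_exponent_ge hρ hρ1.le
    have h5 : s * (p - 2) = 1 / 2 := by
      rw [hs]; have : p - 2 ≠ 0 := by linarith
      field_simp
    have h6 : e ≤ 1 / 2 := min_le_left _ _
    have : (d : ℝ) + s * d * -(p - 2) = 1 / 2 * d := by linear_combination (-(d : ℝ)) * h5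
    rw [this]
    gcongr
  have e2 : Φ.ρ ^ (s * d * (2 * q - p)) ≤ Φ.ρ ^ (e * d) := by
    apply Real.rpow_le_rpow_of_exponent_ge hρ hρ1.le
    have h6 : e ≤ s * (2 * q - p) := min_le_right _ _
    nlinarith
  set z := Φ.ρ ^ (e * d)
  have hz : 0 < z := by positivity
  have : 0 ≤ (Φ.B + C) * z * d := by positivity
  nlinarith [mul_le_mul_of_nonneg_left e1 hB.le, mul_le_mul_of_nonneg_left e2 hC.le]

end Fam

/-! ### Summation over the martingale differences -/

namespace Fam

variable {X : Type*} {G : Grid X} (Φ : Fam G)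

lemma T_telescope (k J : ℕ) (f : X → ℂ) (x : X) :
    Φ.T k f x ≤ ∑ i ∈ range J, Φ.T k (G.Dd i f) x + Φ.T k (G.E J f) x := by
  induction J with
  | zero =>
    have : G.E 0 f = f := funext (G.E_zero_level f)
    simp [this]
  | succ J ih =>
    have e : G.E J f = G.Dd J f + G.E (J + 1) f := by
      funext y; simp [Grid.Dd]
    rw [sum_range_succ]
    refine ih.trans ?_
    rw [add_assoc, e]
    refine add_le_add le_rfl ?_
    rw [← e]
    exact (congrArg (fun g => Φ.T k g x) e).trans_le (Φ.sub _ _ _ _)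

/-- Each operator is controlled by its action on the martingale differences. -/
lemma T_le_tsum {p : ℝ} (hp : 1 ≤ p) (f : X → ℂ) (hf : nr p (fun x => ‖f x‖ₑ) ≠ ⊤) (k : ℕ) (x : X) :
    Φ.T k f x ≤ ∑' i, Φ.T k (G.Dd i f) x := by
  have h1 : ∀ J, Φ.T k f x ≤ ∑' i, Φ.T k (G.Dd i f) x + ENNReal.ofReal Φ.B *
      ((G.w J : ℝ≥0∞)⁻¹ ^ p⁻¹ * nr p (fun x => ‖f x‖ₑ)) := by
    intro J
    refine (Φ.T_telescope k J f x).trans (add_le_add (ENNReal.sum_le_tsum _) ?_)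
    refine (Φ.le_ker _ _ _).trans ?_
    refine le_trans ?_ (mul_le_mul_left (Φ.row k x) _)
    rw [← ENNReal.tsum_mul_right]
    refine ENNReal.tsum_le_tsum fun y => mul_le_mul_right ?_ _
    exact (G.enorm_E_le J f y).trans (G.P_le_nr J hp _ y)
  have h2 : Tendsto (fun J => ∑' i, Φ.T k (G.Dd i f) x + ENNReal.ofReal Φ.B *
      ((G.w J : ℝ≥0∞)⁻¹ ^ p⁻¹ * nr p (fun x => ‖f x‖ₑ))) atTop
      (nhds (∑' i, Φ.T k (G.Dd i f) x + ENNReal.ofReal Φ.B * 0)) :=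
    tendsto_const_nhds.add (ENNReal.Tendsto.const_mul (G.P_tendsto_bound hp hf)
      (Or.inr ENNReal.ofReal_ne_top))
  have := ge_of_tendsto' h2 h1
  simpa using this

lemma tsum_split_le (a : ℕ → ℝ≥0∞) (k : ℕ) :
    ∑' i, a i ≤ ∑' d, a (k + d) + ∑' d, (if d + 1 ≤ k then a (k - (d + 1)) else 0) := by
  rw [← Summable.sum_add_tsum_nat_add' (k := k) ENNReal.summable, add_comm]
  refine add_le_add (le_of_eq (tsum_congr fun d => by rw [add_comm])) ?_
  rw [← sum_range_reflect]
  refine le_trans (le_of_eq (sum_congr rfl fun d hd => ?_)) (ENNReal.sum_le_tsum (range k))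
  rw [mem_range] at hd
  rw [if_pos (by omega)]
  congr 1
  omega

lemma sq_le_S {p : ℝ} (hp : 1 ≤ p) (f : X → ℂ) (hf : nr p (fun x => ‖f x‖ₑ) ≠ ⊤) (x : X) :
    nr 2 (fun k => Φ.T k f x) ≤ ∑' d, Φ.S 0 d f x + ∑' d, Φ.S (d + 1) 0 f x := by
  have h1 : ∀ k, Φ.T k f x ≤ ∑' d, Φ.T k (G.Dd (k + d) f) x +
      ∑' d, (if d + 1 ≤ k then Φ.T k (G.Dd (k - (d + 1)) f) x else 0) := fun k =>
    (Φ.T_le_tsum hp f hf k x).trans (tsum_split_le (fun i => Φ.T k (G.Dd i f) x) k)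
  refine (nr_mono two_pos h1).trans ((nr_add_le one_le_two _ _).trans (add_le_add ?_ ?_))
  · exact nr_tsum_le one_le_two _
  · refine (nr_tsum_le one_le_two _).trans (ENNReal.tsum_le_tsum fun d => ?_)
    unfold S
    refine nr_le_of two_pos ?_
    rw [nr_rpow two_pos, ← Summable.sum_add_tsum_nat_add' (k := d + 1) ENNReal.summable]
    rw [Finset.sum_eq_zero, zero_add]
    · refine ENNReal.tsum_le_tsum fun j => ?_
      rw [if_pos (by omega)]
      simp
    · intro k hk
      rw [mem_range] at hk
      rw [if_neg (by omega)]
      simp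

/-- The square function of the family is bounded on `ℓ^p`. -/
lemma square {p : ℝ} (hp : 1 ≤ p) (h : Φ.Good p) : ∃ C : ℝ, 0 < C ∧ ∀ f : X → ℂ,
    nr p (fun x => ‖f x‖ₑ) ≠ ⊤ → nr p (fun x => nr 2 (fun k => Φ.T k f x)) ≤
      ENNReal.ofReal C * nr p (fun x => ‖f x‖ₑ) := by
  obtain ⟨C, θ, hC, hθ, hθ1, hS⟩ := h
  have h0 : 0 < p := by linarith
  set η : ℝ := θ ^ p⁻¹ with hη
  have hη0 : 0 < η := by positivity
  have hη1 : η < 1 := Real.rpow_lt_one hθ.le hθ1 (by positivity)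
  have hsum : Summable fun d : ℕ => C ^ p⁻¹ * ((1 + (d : ℝ)) * η ^ d) := by
    have h1 := summable_pow_mul_geometric_of_norm_lt_one 1 (r := η)
      (by rwa [Real.norm_of_nonneg hη0.le])
    have h2 := summable_geometric_of_lt_one hη0.le hη1
    refine Summable.mul_left _ ((h2.add h1).congr fun d => ?_)
    ring
  have hd0 : ∀ d : ℕ, 0 ≤ C ^ p⁻¹ * ((1 + (d : ℝ)) * η ^ d) := fun d => by positivity
  have key : ∀ (a b : ℕ) f, nr p (Φ.S a b f) ≤ ENNReal.ofReal (C ^ p⁻¹ *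
      ((1 + (((a - b) + (b - a) : ℕ) : ℝ)) * η ^ ((a - b) + (b - a)))) * nr p (fun x => ‖f x‖ₑ) := by
    intro a b f
    refine nr_le_of h0 ((hS a b f).trans ?_)
    rw [ENNReal.mul_rpow_of_nonneg _ _ h0.le, nr_rpow h0]
    refine mul_le_mul_left ?_ _
    set d : ℕ := (a - b) + (b - a) with hd
    rw [ENNReal.ofReal_rpow_of_nonneg (hd0 d) h0.le]
    apply ENNReal.ofReal_le_ofReal
    rw [Real.mul_rpow (by positivity) (by positivity), Real.mul_rpow (by positivity) (by positivity),
      ← Real.rpow_mul hC.le, inv_mul_cancel₀ h0.ne', Real.rpow_one, hη, ← Real.rpow_natCast,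
      ← Real.rpow_natCast, ← Real.rpow_mul hθ.le, ← Real.rpow_mul hθ.le, mul_assoc C]
    have e : p⁻¹ * d * p = d := by field_simp
    rw [e]
    gcongr
    have := Real.rpow_le_rpow_of_exponent_le (x := 1 + (d : ℝ)) (by
      have : (0 : ℝ) ≤ d := by positivity
      linarith) hp
    rwa [Real.rpow_one] at this
  refine ⟨2 * ∑' d : ℕ, C ^ p⁻¹ * ((1 + (d : ℝ)) * η ^ d), ?_, fun f hf => ?_⟩
  · have := hsum.tsum_pos hd0 0 (by positivity)
    positivity
  refine (nr_mono h0 (Φ.sq_le_S hp f hf)).trans ((nr_add_le hp _ _).trans ?_)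
  rw [ENNReal.ofReal_mul two_pos.le, ENNReal.ofReal_tsum_of_nonneg hd0 hsum,
    show ENNReal.ofReal 2 = 2 by simp, two_mul, add_mul]
  refine add_le_add ?_ ?_
  · refine (nr_tsum_le hp _).trans ?_
    rw [← ENNReal.tsum_mul_right]
    refine ENNReal.tsum_le_tsum fun d => ?_
    simpa using key 0 d f
  · refine (nr_tsum_le hp _).trans ?_
    rw [← ENNReal.tsum_mul_right]
    refine le_trans (ENNReal.tsum_le_tsum fun d => ?_)
      (ENNReal.tsum_comp_le_tsum_of_injective (add_left_injective 1) _)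
    simpa using key (d + 1) 0 f

end Fam

/-! ### Weyl sums -/

/-- The additive character `t ↦ exp(2πit)`. -/
def ee (t : ℝ) : ℂ := Complex.exp ((2 * Real.pi * t : ℝ) * Complex.I)

lemma norm_ee (t : ℝ) : ‖ee t‖ = 1 := Complex.norm_exp_ofReal_mul_I _

lemma ee_add (s t : ℝ) : ee (s + t) = ee s * ee t := by
  rw [ee, ee, ee, ← Complex.exp_add]; congr 1; push_cast; ring

lemma ee_zero : ee 0 = 1 := by simp [ee]

lemma conj_ee (t : ℝ) : (starRingEnd ℂ) (ee t) = ee (-t) := by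
  rw [ee, ee, ← Complex.exp_conj]
  congr 1
  rw [map_mul, Complex.conj_ofReal, Complex.conj_I]
  push_cast; ring

lemma ee_int (n : ℤ) : ee n = 1 := by
  rw [ee, Complex.exp_eq_one_iff]
  exact ⟨n, by push_cast; ring⟩

lemma ee_add_int (t : ℝ) (n : ℤ) : ee (t + n) = ee t := by rw [ee_add, ee_int, mul_one]

lemma ee_nat_mul (n : ℕ) (t : ℝ) : ee (n * t) = ee t ^ n := by
  rw [ee, ee, ← Complex.exp_nat_mul]; congr 1; push_cast; ring

lemma ee_sum {ι : Type*} (s : Finset ι) (f : ι → ℝ) : ee (∑ i ∈ s, f i) = ∏ i ∈ s, ee (f i) := by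
  classical
  induction s using Finset.induction_on with
  | empty => simp [ee_zero]
  | insert a s ha ih => rw [sum_insert ha, prod_insert ha, ee_add, ih]

lemma norm_one_sub_ee (t : ℝ) : ‖1 - ee t‖ = 2 * |Real.sin (Real.pi * t)| := by
  have h : ‖1 - ee t‖ = ‖Complex.exp ((2 * Real.pi * t : ℝ) * Complex.I) - 1‖ := by
    rw [ee, norm_sub_rev]
  rw [h, mul_comm, Complex.norm_exp_I_mul_ofReal_sub_one, norm_mul, Real.norm_eq_abs,
    Real.norm_eq_abs, abs_two]
  congr 3; ring

lemma norm_one_sub_ee_le (t : ℝ) : ‖1 - ee t‖ ≤ 2 * Real.pi * |t| := by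
  rw [norm_one_sub_ee]
  have := Real.abs_sin_le_abs (x := Real.pi * t)
  rw [abs_mul, abs_of_pos Real.pi_pos] at this
  linarith

lemma norm_ee_sub_le (s t : ℝ) : ‖ee s - ee t‖ ≤ 2 * Real.pi * |s - t| := by
  have : ee s - ee t = -(ee t * (1 - ee (s - t))) := by
    rw [mul_sub, ← ee_add, mul_one]; simp
  rw [this, norm_neg, norm_mul, norm_ee, one_mul]
  exact norm_one_sub_ee_le _

lemma four_mul_le_norm_one_sub_ee {t : ℝ} (ht : |t| ≤ 1 / 2) : 4 * |t| ≤ ‖1 - ee t‖ := by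
  have h : ∀ s : ℝ, 0 ≤ s → s ≤ 1 / 2 → 4 * s ≤ 2 * |Real.sin (Real.pi * s)| := by
    intro s h0 h1
    have h2 := Real.mul_le_sin (x := Real.pi * s) (by positivity) (by nlinarith [Real.pi_pos])
    have h3 : 2 / Real.pi * (Real.pi * s) = 2 * s := by field_simp
    rw [h3] at h2
    have := le_abs_self (Real.sin (Real.pi * s))
    linarith
  rw [norm_one_sub_ee]
  rcases le_total 0 t with h0 | h0
  · rw [abs_of_nonneg h0] at *
    exact h t h0 ht
  · rw [abs_of_nonpos h0] at *
    have := h (-t) (by linarith) ht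
    rwa [show Real.pi * -t = -(Real.pi * t) by ring, Real.sin_neg, abs_neg] at this

lemma geom_ee_le {t : ℝ} {H : ℕ} (ht : |t| ≤ 1 / 2) :
    ‖∑ n ∈ range H, ee (n * t)‖ * (2 * |t|) ≤ 1 := by
  have h1 : (∑ n ∈ range H, ee (n * t)) * (1 - ee t) = 1 - ee t ^ H := by
    simp_rw [ee_nat_mul]
    have := geom_sum_mul (ee t) H
    linear_combination -this
  have h2 : ‖∑ n ∈ range H, ee (n * t)‖ * ‖1 - ee t‖ ≤ 2 := by
    rw [← norm_mul, h1]
    refine (norm_sub_le _ _).trans ?_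
    rw [norm_pow, norm_ee, norm_one, one_pow]; norm_num
  have h3 := four_mul_le_norm_one_sub_ee ht
  nlinarith [norm_nonneg (∑ n ∈ range H, ee (n * t))]

lemma norm_sum_ee_le {ι : Type*} (s : Finset ι) (f : ι → ℝ) : ‖∑ i ∈ s, ee (f i)‖ ≤ s.card := by
  refine (norm_sum_le _ _).trans ?_
  simp [norm_ee]

/-- Weyl differencing. -/
lemma weyl_diff (z : ℕ → ℂ) (hz : ∀ n, ‖z n‖ = 1) (N : ℕ) :
    ‖∑ n ∈ range N, z n‖ ^ 2 ≤ N + 2 * ∑ h ∈ range N,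
      ‖∑ n ∈ range (N - (h + 1)), z (n + (h + 1)) * (starRingEnd ℂ) (z n)‖ := by
  have h1 : ∀ M : ℕ, ‖∑ n ∈ range M, z n‖ ^ 2 =
      M + 2 * (∑ k ∈ range M, ∑ n ∈ range k, z k * (starRingEnd ℂ) (z n)).re := by
    intro M
    induction M with
    | zero => simp
    | succ M ih =>
      rw [sum_range_succ, sum_range_succ, ← Complex.normSq_eq_norm_sq, Complex.normSq_add,
        Complex.normSq_eq_norm_sq, Complex.normSq_eq_norm_sq, ih, hz, Complex.add_re,
        ← mul_sum, ← map_sum]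
      have : ((∑ n ∈ range M, z n) * (starRingEnd ℂ) (z M)).re =
          (z M * (starRingEnd ℂ) (∑ n ∈ range M, z n)).re := by
        simp only [Complex.mul_re, Complex.conj_re, Complex.conj_im]; ring
      rw [this]; push_cast; ring
  have h2 : ∀ (M : ℕ) (g : ℕ → ℕ → ℂ), ∑ k ∈ range M, ∑ n ∈ range k, g k n =
      ∑ h ∈ range M, ∑ n ∈ range (M - (h + 1)), g (n + (h + 1)) n := by
    intro M g
    rw [sum_sigma', sum_sigma']
    refine sum_bij' (fun p _ => ⟨p.1 - p.2 - 1, p.2⟩) (fun p _ => ⟨p.2 + (p.1 + 1), p.2⟩)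
      ?_ ?_ ?_ ?_ ?_
    · rintro ⟨a, b⟩ h; simp only [mem_sigma, mem_range] at *; omega
    · rintro ⟨a, b⟩ h; simp only [mem_sigma, mem_range] at *; omega
    · rintro ⟨a, b⟩ h; simp only [mem_sigma, mem_range] at *; ext <;> simp; omega
    · rintro ⟨a, b⟩ h; simp only [mem_sigma, mem_range] at *; ext <;> simp
    · rintro ⟨a, b⟩ h
      simp only [mem_sigma, mem_range] at *
      congr 1; omega
  rw [h1, h2]
  gcongr
  refine (Complex.re_le_norm _).trans (norm_sum_le _ _)

/-- The class of polynomials of degree at most `k + 1` with leading coefficient `α`, described by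
finite differences. -/
def PolyCls : ℕ → ℝ → (ℕ → ℝ) → Prop
  | 0, α, p => ∃ β : ℝ, ∀ n : ℕ, p n = n * α + β
  | k + 1, α, p => ∀ h : ℕ, PolyCls k ((k + 2) * α * h) (fun n => p (n + h) - p n)

lemma PolyCls.add {k : ℕ} : ∀ {α β : ℝ} {p q : ℕ → ℝ}, PolyCls k α p → PolyCls k β q →
    PolyCls k (α + β) (fun n => p n + q n) := by
  induction k with
  | zero =>
    rintro α β p q ⟨a, ha⟩ ⟨b, hb⟩
    exact ⟨a + b, fun n => by simp only [ha, hb]; ring⟩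
  | succ k ih =>
    intro α β p q hp hq h
    have := ih (hp h) (hq h)
    convert this using 1
    · ring
    · funext n; ring

lemma PolyCls.const_mul {k : ℕ} (c : ℝ) : ∀ {α : ℝ} {p : ℕ → ℝ}, PolyCls k α p →
    PolyCls k (c * α) (fun n => c * p n) := by
  induction k with
  | zero =>
    rintro α p ⟨a, ha⟩
    exact ⟨c * a, fun n => by simp only [ha]; ring⟩
  | succ k ih =>
    intro α p hp h
    have := ih (hp h)
    convert this using 1
    · ring
    · funext n; ring

lemma PolyCls.zero (k : ℕ) : PolyCls k 0 (fun _ => 0) := by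
  induction k with
  | zero => exact ⟨0, fun n => by simp⟩
  | succ k ih => intro h; simpa using ih

lemma PolyCls.sum {ι : Type*} {k : ℕ} (s : Finset ι) (α : ι → ℝ) (p : ι → ℕ → ℝ)
    (h : ∀ i ∈ s, PolyCls k (α i) (p i)) : PolyCls k (∑ i ∈ s, α i) (fun n => ∑ i ∈ s, p i n) := by
  classical
  induction s using Finset.induction_on with
  | empty => simpa using PolyCls.zero k
  | insert a s ha ih =>
    simp only [sum_insert ha]
    exact (h a (mem_insert_self a s)).add (ih fun i hi => h i (mem_insert_of_mem hi))

lemma PolyCls.monomial (k : ℕ) : ∀ j ≤ k + 1,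
    PolyCls k (if j = k + 1 then 1 else 0) (fun n => (n : ℝ) ^ j) := by
  induction k with
  | zero =>
    intro j hj
    interval_cases j
    · exact ⟨1, fun n => by simp⟩
    · exact ⟨0, fun n => by simp⟩
  | succ k ih =>
    intro j hj h
    have h1 := PolyCls.sum (k := k) (range j)
      (fun i => ((j.choose i : ℝ) * (h : ℝ) ^ (j - i)) * (if i = k + 1 then 1 else 0))
      (fun i n => ((j.choose i : ℝ) * (h : ℝ) ^ (j - i)) * (n : ℝ) ^ i)
      (fun i hi => (ih i (by rw [mem_range] at hi; omega)).const_mul _)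
    convert h1 using 1
    · split_ifs with hjk
      · subst hjk
        rw [sum_eq_single (k + 1)]
        · simp; left; ring
        · intro b _ hb; simp [hb]
        · intro hh; simp at hh
      · rw [sum_eq_zero]
        · simp
        · intro i hi
          rw [mem_range] at hi
          rw [if_neg (by omega), mul_zero]
    · funext n
      push_cast
      rw [add_pow, sum_range_succ]
      simp only [Nat.sub_self, pow_zero, Nat.choose_self, Nat.cast_one, mul_one, add_sub_cancel_right]
      exact sum_congr rfl fun i _ => by ring

lemma polyCls_poly (k : ℕ) (a : ℕ → ℝ) :
    PolyCls k (a (k + 1)) (fun n => ∑ j ∈ range (k + 2), a j * (n : ℝ) ^ j) := by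
  have h := PolyCls.sum (k := k) (range (k + 2)) (fun j => a j * (if j = k + 1 then 1 else 0))
    (fun j n => a j * (n : ℝ) ^ j)
    (fun j hj => (PolyCls.monomial k j (by rw [mem_range] at hj; omega)).const_mul _)
  convert h using 1
  rw [sum_eq_single (k + 1)]
  · simp
  · intro b _ hb; simp [hb]
  · intro hh; simp at hh

lemma sum_inv_sqrt_le (H : ℕ) : ∑ h ∈ range H, (Real.sqrt (h + 1))⁻¹ ≤ 2 * Real.sqrt H := by
  induction H with
  | zero => simp
  | succ n ih =>
    rw [sum_range_succ]
    have h1 : 0 < Real.sqrt (n + 1) := by positivity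
    have h2 : 0 ≤ Real.sqrt n := by positivity
    have h3 : Real.sqrt (n + 1) ^ 2 = n + 1 := Real.sq_sqrt (by positivity)
    have h4 : Real.sqrt n ^ 2 = n := Real.sq_sqrt (by positivity)
    have h5 : (Real.sqrt (n + 1))⁻¹ ≤ 2 * Real.sqrt (n + 1) - 2 * Real.sqrt n := by
      rw [inv_le_iff_one_le_mul₀ h1]
      nlinarith [sq_nonneg (Real.sqrt (n + 1) - Real.sqrt n)]
    push_cast
    linarith

/-- Weyl's inequality with a power saving. -/
lemma weyl (k : ℕ) : ∃ C : ℝ, 1 ≤ C ∧ ∀ (α : ℝ) (p : ℕ → ℝ) (H H' : ℕ), PolyCls k α p → 1 ≤ H →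
    H' ≤ H → (k + 1).factorial * |α| * (H : ℝ) ^ k ≤ 1 / 2 →
    ‖∑ n ∈ range H', ee (p n)‖ * (|α| * (H : ℝ) ^ (k + 1)) ^ ((1 / 2 : ℝ) ^ (k + 1)) ≤ C * H := by
  induction k with
  | zero =>
    refine ⟨1, le_rfl, ?_⟩
    rintro α p H H' ⟨β, hβ⟩ hH hH' hα
    simp only [zero_add, Nat.factorial_one, Nat.cast_one, one_mul, pow_zero, mul_one, pow_one] at *
    have e : ∑ n ∈ range H', ee (p n) = (∑ n ∈ range H', ee (n * α)) * ee β := by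
      rw [sum_mul]; exact sum_congr rfl fun n _ => by rw [hβ, ee_add]
    rw [e, norm_mul, norm_ee, mul_one, ← Real.sqrt_eq_rpow]
    have h1 := geom_ee_le (H := H') hα
    have h2 := norm_sum_ee_le (range H') (fun n => (n : ℝ) * α)
    rw [card_range] at h2
    have h3 : (H' : ℝ) ≤ H := by exact_mod_cast hH'
    set S := ‖∑ n ∈ range H', ee (n * α)‖
    have hS : 0 ≤ S := norm_nonneg _
    apply abs_le_of_sq_le_sq' _ (by positivity) |>.2
    rw [mul_pow, Real.sq_sqrt (by positivity)]
    calc S ^ 2 * (|α| * H) = (S * |α|) * (S * H) := by ring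
      _ ≤ 1 * (H * H) := by
        gcongr
        · nlinarith [abs_nonneg α]
        · linarith
      _ = _ := by ring
  | succ k ih =>
    obtain ⟨C, hC, ih⟩ := ih
    refine ⟨1 + 4 * C, by linarith, ?_⟩
    intro α p H H' hp hH hH' hα
    have hHr : (1 : ℝ) ≤ H := by exact_mod_cast hH
    have hH0 : (0 : ℝ) < H := by linarith
    have hH'r : (H' : ℝ) ≤ H := by exact_mod_cast hH'
    set δ : ℝ := (1 / 2 : ℝ) ^ (k + 1) with hδ
    have hδ0 : 0 < δ := by positivity
    have hδ1 : δ ≤ 1 / 2 := by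
      rw [hδ, pow_succ]
      have : (1 / 2 : ℝ) ^ k ≤ 1 := pow_le_one₀ (by norm_num) (by norm_num)
      linarith
    set Q : ℝ := |α| * (H : ℝ) ^ (k + 1 + 1) with hQ
    have hQ0 : 0 ≤ Q := by positivity
    have hfac : (1 : ℝ) ≤ ((k + 1 + 1).factorial : ℝ) := by
      exact_mod_cast Nat.succ_le_of_lt (Nat.factorial_pos _)
    have hQH : Q ≤ H := by
      have h1 : |α| * (H : ℝ) ^ (k + 1) ≤ 1 / 2 := by
        refine le_trans ?_ hα
        have : 0 ≤ |α| * (H : ℝ) ^ (k + 1) := by positivity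
        nlinarith
      rw [hQ, pow_succ, ← mul_assoc]
      nlinarith
    have hQδ : Q ^ δ ≤ H := by
      rcases le_total Q 1 with h | h
      · exact (Real.rpow_le_one hQ0 h hδ0.le).trans hHr
      · calc Q ^ δ ≤ Q ^ (1 : ℝ) := Real.rpow_le_rpow_of_exponent_le h (by linarith)
          _ = Q := Real.rpow_one _
          _ ≤ H := hQH
    have hterm : ∀ h ∈ range H', ‖∑ n ∈ range (H' - (h + 1)), ee (p (n + (h + 1))) *
        (starRingEnd ℂ) (ee (p n))‖ * Q ^ δ ≤ C * H * (Real.sqrt H * (Real.sqrt (h + 1))⁻¹) := by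
      intro h hh
      rw [mem_range] at hh
      have hhr : ((h + 1 : ℕ) : ℝ) ≤ H := by exact_mod_cast (by omega : h + 1 ≤ H)
      have e : ∀ n, ee (p (n + (h + 1))) * (starRingEnd ℂ) (ee (p n)) =
          ee (p (n + (h + 1)) - p n) := fun n => by rw [conj_ee, ← ee_add]; rfl
      simp_rw [e]
      have h1 := ih ((k + 2) * α * (h + 1 : ℕ)) (fun n => p (n + (h + 1)) - p n) H (H' - (h + 1))
        (hp (h + 1)) hH (by omega) (by
          rw [abs_mul, abs_mul, Nat.abs_cast, abs_of_pos (by positivity : (0 : ℝ) < k + 2)]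
          refine le_trans ?_ hα
          rw [Nat.factorial_succ (k + 1), pow_succ]
          push_cast
          calc ((k + 1).factorial : ℝ) * ((k + 2) * |α| * (h + 1)) * H ^ k
              = (((k : ℝ) + 1 + 1) * (k + 1).factorial) * |α| * (H ^ k * (h + 1)) := by ring
            _ ≤ _ := by
              push_cast at hhr
              gcongr)
      rw [abs_mul, abs_mul, Nat.abs_cast, abs_of_pos (by positivity : (0 : ℝ) < k + 2)] at h1
      have h2 : Q * (((h + 1 : ℕ) : ℝ) / H) ≤
          (k + 2) * |α| * ((h + 1 : ℕ) : ℝ) * (H : ℝ) ^ (k + 1) := by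
        have e3 : Q * (((h + 1 : ℕ) : ℝ) / H) = 1 * (|α| * ((h + 1 : ℕ) : ℝ) * (H : ℝ) ^ (k + 1)) := by
          rw [hQ, pow_succ]; field_simp
        have e4 : (k + 2) * |α| * ((h + 1 : ℕ) : ℝ) * (H : ℝ) ^ (k + 1) =
          (k + 2) * (|α| * ((h + 1 : ℕ) : ℝ) * (H : ℝ) ^ (k + 1)) := by ring
        rw [e3, e4]
        gcongr
        have : (0 : ℝ) ≤ k := by positivity
        linarith
      set S := ‖∑ n ∈ range (H' - (h + 1)), ee (p (n + (h + 1)) - p n)‖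
      have hS : 0 ≤ S := norm_nonneg _
      have h3 : S * (Q ^ δ * (((h + 1 : ℕ) : ℝ) / H) ^ δ) ≤ C * H := by
        rw [← Real.mul_rpow hQ0 (by positivity)]
        refine le_trans ?_ h1
        gcongr
      have h4 : Real.sqrt (((h + 1 : ℕ) : ℝ) / H) ≤ (((h + 1 : ℕ) : ℝ) / H) ^ δ := by
        rw [Real.sqrt_eq_rpow]
        apply Real.rpow_le_rpow_of_exponent_ge (by positivity) _ hδ1
        rw [div_le_one hH0]; exact hhr
      have h5 : S * Q ^ δ * Real.sqrt (((h + 1 : ℕ) : ℝ) / H) ≤ C * H := by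
        refine le_trans ?_ h3
        rw [mul_assoc]
        gcongr
      rw [Real.sqrt_div (by positivity), Nat.cast_add, Nat.cast_one] at h5
      have h6 : 0 < Real.sqrt ((h : ℝ) + 1) := by positivity
      have h7 : 0 < Real.sqrt H := by positivity
      calc S * Q ^ δ = S * Q ^ δ * (Real.sqrt (h + 1) / Real.sqrt H) *
            (Real.sqrt H * (Real.sqrt (h + 1))⁻¹) := by field_simp
        _ ≤ _ := by gcongr
    have hmain := weyl_diff (fun n => ee (p n)) (fun n => norm_ee _) H'
    set S := ‖∑ n ∈ range H', ee (p n)‖ with hSd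
    have hS : 0 ≤ S := norm_nonneg _
    have h8 : S ^ 2 * Q ^ δ ≤ (1 + 4 * C) * H ^ 2 := by
      calc S ^ 2 * Q ^ δ ≤ _ := mul_le_mul_of_nonneg_right hmain (by positivity)
        _ = H' * Q ^ δ + 2 * ∑ h ∈ range H', ‖∑ n ∈ range (H' - (h + 1)), ee (p (n + (h + 1))) *
          (starRingEnd ℂ) (ee (p n))‖ * Q ^ δ := by rw [← sum_mul]; ring
        _ ≤ H * H + 2 * ∑ h ∈ range H', C * H * (Real.sqrt H * (Real.sqrt (h + 1))⁻¹) := by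
          have := sum_le_sum hterm
          gcongr ?_ + 2 * ?_
          gcongr
        _ = H * H + 2 * (C * H * (Real.sqrt H * ∑ h ∈ range H', (Real.sqrt (h + 1))⁻¹)) := by
          rw [← mul_sum, ← mul_sum]
        _ ≤ H * H + 2 * (C * H * (Real.sqrt H * (2 * Real.sqrt H))) := by
          gcongr
          refine (sum_inv_sqrt_le H').trans ?_
          gcongr
        _ = _ := by
          have := Real.mul_self_sqrt hH0.le
          linear_combination 4 * C * H * this
    apply abs_le_of_sq_le_sq' _ (by positivity) |>.2
    have e5 : (Q ^ ((1 / 2 : ℝ) ^ (k + 1 + 1))) ^ 2 = Q ^ δ := by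
      rw [← Real.rpow_natCast, ← Real.rpow_mul hQ0]
      congr 1
      rw [hδ, pow_succ (1 / 2 : ℝ) (k + 1)]
      push_cast; ring
    rw [mul_pow, e5]
    refine h8.trans ?_
    nlinarith [sq_nonneg (H : ℝ)]

/-! ### Binomial coefficients of non-integer exponents -/

/-- The generalized binomial coefficient `c (c - 1) ⋯ (c - K + 1) / K!`. -/
def bc (K : ℕ) (c : ℝ) : ℝ := (descPochhammer ℝ K).eval c / K.factorial

/-- The vectors of binomial coefficients of consecutive orders are linearly independent
(Vandermonde), quantitatively. -/
lemma bc_nondeg {m : ℕ} (c : Fin m → ℝ) (hinj : Function.Injective c)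
    (hint : ∀ i, ∀ k : ℕ, c i ≠ (k : ℝ)) (k0 : ℕ) :
    ∃ κ : ℝ, 0 < κ ∧ ∀ x : Fin m → ℝ, ∀ i : Fin m, ∃ t : ℕ, t < m ∧
      κ * |x i| ≤ |∑ i, x i * bc (k0 + t) (c i)| := by
  let L : (Fin m → ℝ) →ₗ[ℝ] (Fin m → ℝ) :=
    { toFun := fun x t => ∑ i, x i * bc (k0 + t) (c i)
      map_add' := by
        intro x y; funext t
        simp only [Pi.add_apply, add_mul, sum_add_distrib]
      map_smul' := by
        intro a x; funext t
        simp only [Pi.smul_apply, smul_eq_mul, RingHom.id_apply, mul_sum, mul_assoc] }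
  have hker : LinearMap.ker L = ⊥ := by
    rw [LinearMap.ker_eq_bot']
    intro x hx
    have hdet : (Matrix.of (fun i j : Fin m =>
        ((descPochhammer ℝ (j : ℕ)).eval (c i - k0)))).det ≠ 0 := by
      rw [← Matrix.det_eval_matrixOfPolynomials_eq_det_vandermonde (fun i => c i - k0)
        (fun j : Fin m => descPochhammer ℝ (j : ℕ)) (fun i => descPochhammer_natDegree ℝ _)
        (fun i => monic_descPochhammer ℝ _), Matrix.det_vandermonde_ne_zero_iff]
      intro a b hab
      exact hinj (by simpa using hab)
    have hy := Matrix.eq_zero_of_vecMul_eq_zero hdet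
      (v := fun i => x i * (descPochhammer ℝ k0).eval (c i)) (by
        funext t
        have h1 : ∑ i, x i * bc (k0 + t) (c i) = 0 := congrFun hx t
        have h2 : ∑ i, x i * (descPochhammer ℝ k0).eval (c i) *
            (descPochhammer ℝ (t : ℕ)).eval (c i - k0) =
            ((k0 + t).factorial : ℝ) * ∑ i, x i * bc (k0 + t) (c i) := by
          rw [mul_sum]
          refine sum_congr rfl fun i _ => ?_
          have : ((k0 + t).factorial : ℝ) ≠ 0 := Nat.cast_ne_zero.2 (Nat.factorial_pos _).ne'
          rw [bc, ← descPochhammer_mul]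
          simp only [Polynomial.eval_mul, Polynomial.eval_comp, Polynomial.eval_sub,
            Polynomial.eval_X, Polynomial.eval_natCast]
          field_simp
        rw [h1, mul_zero] at h2
        simpa [Matrix.vecMul, dotProduct] using h2)
    funext i
    have h3 : x i * (descPochhammer ℝ k0).eval (c i) = 0 := congrFun hy i
    rcases mul_eq_zero.1 h3 with h | h
    · exact h
    · rw [descPochhammer_eval_eq_prod_range, prod_eq_zero_iff] at h
      obtain ⟨j, _, hj⟩ := h
      exact absurd (sub_eq_zero.1 hj) (hint i j)
  obtain ⟨K, hK, hL⟩ := L.exists_antilipschitzWith hker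
  refine ⟨(K : ℝ)⁻¹, by positivity, fun x i => ?_⟩
  have h1 : ‖x‖ ≤ K * ‖L x‖ := by
    have := hL.le_mul_dist x 0
    simpa [dist_eq_norm] using this
  have hKp : (0 : ℝ) < K := by exact_mod_cast hK
  haveI : Nonempty (Fin m) := ⟨i⟩
  obtain ⟨t, ht⟩ : ∃ t, ‖L x t‖ = ‖L x‖ := by
    obtain ⟨t, _, ht⟩ := exists_max_image univ (fun t => ‖L x t‖) univ_nonempty
    exact ⟨t, le_antisymm (norm_le_pi_norm _ _)
      ((pi_norm_le_iff_of_nonneg (norm_nonneg _)).2 fun s => ht s (mem_univ _))⟩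
  refine ⟨t, t.2, ?_⟩
  have h2 : |x i| ≤ ‖x‖ := norm_le_pi_norm x i
  have h3 : |∑ i, x i * bc (k0 + t) (c i)| = ‖L x‖ := ht
  rw [h3, inv_mul_le_iff₀ hKp]
  exact h2.trans h1

lemma taylor_rpow (c : ℝ) (K : ℕ) : ∃ C : ℝ, 0 ≤ C ∧ ∀ x : ℝ, 0 ≤ x → x ≤ 1 →
    |(1 + x) ^ c - ∑ j ∈ range (K + 1), bc j c * x ^ j| ≤ C * x ^ (K + 1) := by
  have hcd : ∀ (n : ℕ) (y : ℝ), 1 ≤ y → ContDiffAt ℝ n (fun x : ℝ => x ^ c) y := fun n y hy =>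
    Real.contDiffAt_rpow_const (Or.inl (by linarith))
  obtain ⟨C, hC⟩ := exists_taylor_mean_remainder_bound (f := fun x : ℝ => x ^ c) (a := 1) (b := 2)
    (n := K) (by norm_num) (fun y hy => by
      have := hcd (K + 1) y hy.1
      exact_mod_cast this.contDiffWithinAt)
  have hder : ∀ k, iteratedDerivWithin k (fun x : ℝ => x ^ c) (Set.Icc 1 2) 1 =
      (descPochhammer ℝ k).eval c := by
    intro k
    rw [iteratedDerivWithin_eq_iteratedDeriv (uniqueDiffOn_Icc (by norm_num)) (hcd k 1 le_rfl)
      (by simp), iteratedDeriv_eq_iterate, Real.iter_deriv_rpow_const]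
    simp
  refine ⟨|C|, abs_nonneg _, fun x h0 h1 => ?_⟩
  have h2 := hC (1 + x) ⟨by linarith, by linarith⟩
  rw [taylor_within_apply] at h2
  simp only [hder, add_sub_cancel_left, smul_eq_mul] at h2
  rw [Real.norm_eq_abs] at h2
  have h3 : ∑ j ∈ range (K + 1), bc j c * x ^ j =
      ∑ j ∈ range (K + 1), (j.factorial : ℝ)⁻¹ * x ^ j * (descPochhammer ℝ j).eval c :=
    sum_congr rfl fun j _ => by rw [bc]; ring
  rw [h3]
  refine h2.trans ?_
  gcongr
  exact le_abs_self C

/-! ### Exponential sums with fractional powers -/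

/-- The power saving obtained from Weyl's inequality of degree `K`. -/
def dK (K : ℕ) : ℝ := (1 / 2 : ℝ) ^ K / (2 * K + 1)

lemma dK_pos (K : ℕ) : 0 < dK K := by unfold dK; positivity

lemma dK_anti {K K' : ℕ} (h : K ≤ K') : dK K' ≤ dK K := by
  unfold dK
  apply div_le_div₀ (by positivity) _ (by positivity) _
  · exact pow_le_pow_of_le_one (by norm_num) (by norm_num) h
  · have : (K : ℝ) ≤ K' := by exact_mod_cast h
    linarith

set_option maxHeartbeats 1000000 in
/-- On a short block `[a, a + H)` the phase is a polynomial of degree `k + 1` up to a small error, so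
Weyl's inequality applies. -/
lemma block {m : ℕ} (c : Fin m → ℝ) (hpos : ∀ i, 0 < c i) (D : ℝ) (k : ℕ)
    (hk : 3 * D ≤ k + 1) {κ : ℝ} (hκ : 0 < κ) :
    ∃ C : ℝ, 1 ≤ C ∧ ∀ (N : ℕ) (θ : Fin m → ℝ) (Y : ℝ), 1 ≤ N → 1 ≤ Y → Y ≤ (N : ℝ) ^ D →
      (∀ i, (N : ℝ) ^ c i * |θ i| ≤ Y) → ∀ a : ℕ, N < 2 * a → a ≤ N →
      κ * Y ≤ |∑ i, θ i * (a : ℝ) ^ c i * bc (k + 1) (c i)| →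
      ∃ H : ℕ, 1 ≤ H ∧ H ≤ N ∧ ∀ H' ≤ H,
        ‖∑ u ∈ range H', ee (∑ i, θ i * ((a + u : ℕ) : ℝ) ^ c i)‖ * Y ^ dK (k + 1) ≤ C * H := by
  obtain ⟨Cw, hCw, hweyl⟩ := weyl k
  choose Ct hCt0 hCt using fun i => taylor_rpow (c i) (k + 1)
  set B : ℝ := ∑ i, |bc (k + 1) (c i)| with hB
  have hB0 : 0 ≤ B := sum_nonneg fun _ _ => abs_nonneg _
  set T : ℝ := ∑ i, Ct i with hT
  have hT0 : 0 ≤ T := sum_nonneg fun i _ => hCt0 i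
  set y0 : ℝ := 2 + 2 * ((k + 1).factorial * (B * 4 ^ (k + 1))) with hy0
  have hy02 : 2 ≤ y0 := by
    have : 0 ≤ 2 * ((k + 1).factorial * (B * 4 ^ (k + 1))) := by positivity
    linarith
  set d : ℝ := (1 / 2 : ℝ) ^ (k + 1) with hd
  have hd0 : 0 < d := by positivity
  have hd1 : d ≤ 1 := pow_le_one₀ (by norm_num) (by norm_num)
  have hκd : 0 < κ ^ d := by positivity
  have hpi := Real.pi_pos
  refine ⟨y0 + Cw / κ ^ d + 2 * Real.pi * (T * 4 ^ (k + 2)), ?_, ?_⟩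
  · have : 0 ≤ Cw / κ ^ d + 2 * Real.pi * (T * 4 ^ (k + 2)) := by positivity
    linarith
  intro N θ Y hN hY hYN hθ a ha haN hlow
  have hNr : (1 : ℝ) ≤ N := by exact_mod_cast hN
  have hN0 : (0 : ℝ) < N := by linarith
  -- all quantities are expressed through `y = Y ^ (1 / (2K + 1))`
  set y : ℝ := Y ^ ((2 * (k + 1 : ℕ) + 1 : ℝ)⁻¹) with hy
  have hY0 : 0 ≤ Y := by linarith
  have hy1 : 1 ≤ y := Real.one_le_rpow hY (by positivity)
  have hyp : 0 < y := by linarith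
  have hyY : y ^ (2 * (k + 1) + 1) = Y := by
    rw [hy, ← Real.rpow_natCast, ← Real.rpow_mul hY0]
    push_cast
    rw [inv_mul_cancel₀ (by positivity), Real.rpow_one]
  have hyd : Y ^ dK (k + 1) = y ^ d := by
    rw [hy, ← Real.rpow_mul hY0, dK]
    congr 1
    rw [hd]; field_simp
  have hyd1 : y ^ d ≤ y := by
    calc y ^ d ≤ y ^ (1 : ℝ) := Real.rpow_le_rpow_of_exponent_le hy1 hd1
      _ = y := Real.rpow_one _
  have hyd0 : 0 < y ^ d := by positivity
  have hy6 : y ^ 6 ≤ N := by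
    have h1 : (y ^ 6) ^ (2 * (k + 1) + 1) ≤ (N : ℝ) ^ (2 * (k + 1) + 1) := by
      rw [← pow_mul, mul_comm, pow_mul, hyY]
      calc Y ^ 6 ≤ ((N : ℝ) ^ D) ^ 6 := by gcongr
        _ = (N : ℝ) ^ (D * 6) := by
          rw [← Real.rpow_natCast, ← Real.rpow_mul hN0.le]; norm_num
        _ ≤ (N : ℝ) ^ ((2 * (k + 1) + 1 : ℕ) : ℝ) := by
          apply Real.rpow_le_rpow_of_exponent_le hNr
          push_cast; linarith
        _ = _ := Real.rpow_natCast _ _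
    exact le_of_pow_le_pow_left₀ (by omega) hN0.le h1
  rw [hyd]
  rcases lt_or_ge y y0 with hsmall | hbig
  · refine ⟨1, le_rfl, hN, fun H' hH' => ?_⟩
    have h1 := norm_sum_ee_le (range H') (fun u => ∑ i, θ i * ((a + u : ℕ) : ℝ) ^ c i)
    rw [card_range] at h1
    have h2 : (H' : ℝ) ≤ 1 := by exact_mod_cast hH'
    have h3 : 0 ≤ Cw / κ ^ d + 2 * Real.pi * (T * 4 ^ (k + 2)) := by positivity
    calc _ ≤ 1 * y0 := by
          gcongr
          · exact h1.trans h2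
          · exact hyd1.trans hsmall.le
      _ ≤ _ := by push_cast; linarith
  have hy2 : 2 ≤ y := hy02.trans hbig
  have ha0 : (0 : ℝ) < a := by exact_mod_cast (by omega : 0 < a)
  have haN' : (a : ℝ) ≤ N := by exact_mod_cast haN
  have ha2 : (N : ℝ) ≤ 2 * a := by exact_mod_cast ha.le
  set H : ℕ := ⌈(N : ℝ) / y ^ 2⌉₊ with hH
  have hz1 : 1 ≤ (N : ℝ) / y ^ 2 := by
    rw [le_div_iff₀ (by positivity), one_mul]
    refine le_trans ?_ hy6
    exact pow_le_pow_right₀ hy1 (by norm_num)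
  have hHlow : (N : ℝ) / y ^ 2 ≤ H := Nat.le_ceil _
  have hHup : (H : ℝ) ≤ 2 * (N / y ^ 2) := by
    have := Nat.ceil_lt_add_one (by linarith : 0 ≤ (N : ℝ) / y ^ 2)
    rw [← hH] at this
    linarith
  have hH1r : (1 : ℝ) ≤ H := hz1.trans hHlow
  have hH1 : 1 ≤ H := by exact_mod_cast hH1r
  have hHN : H ≤ N := by
    rw [hH, Nat.ceil_le]
    apply div_le_self hN0.le
    exact one_le_pow₀ hy1
  refine ⟨H, hH1, hHN, fun H' hH' => ?_⟩
  have hHr' : (H' : ℝ) ≤ H := by exact_mod_cast hH'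
  set A : ℕ → ℝ := fun j => (∑ i, θ i * (a : ℝ) ^ c i * bc j (c i)) / (a : ℝ) ^ j with hA
  have hθa : ∀ i, |θ i * (a : ℝ) ^ c i| ≤ Y := by
    intro i
    rw [abs_mul, abs_of_pos (by positivity : 0 < (a : ℝ) ^ c i), mul_comm]
    refine le_trans ?_ (hθ i)
    have := (hpos i).le
    gcongr
  have hαup : |A (k + 1)| ≤ (2 / N) ^ (k + 1) * (Y * B) := by
    simp only [hA]
    rw [abs_div, abs_of_pos (by positivity : 0 < (a : ℝ) ^ (k + 1)), div_eq_inv_mul, ← inv_pow]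
    have h1 : (a : ℝ)⁻¹ ≤ 2 / N := by
      rw [inv_le_iff_one_le_mul₀ ha0, div_mul_eq_mul_div, le_div_iff₀ hN0]
      linarith
    gcongr
    rw [hB, mul_sum]
    refine (abs_sum_le_sum_abs _ _).trans (sum_le_sum fun i _ => ?_)
    rw [abs_mul]
    exact mul_le_mul_of_nonneg_right (hθa i) (abs_nonneg _)
  have hαlow : κ * y ≤ |A (k + 1)| * (H : ℝ) ^ (k + 1) := by
    simp only [hA]
    rw [abs_div, abs_of_pos (by positivity : 0 < (a : ℝ) ^ (k + 1))]
    have h1 : κ * Y / (N : ℝ) ^ (k + 1) ≤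
        |∑ i, θ i * (a : ℝ) ^ c i * bc (k + 1) (c i)| / (a : ℝ) ^ (k + 1) := by gcongr
    calc κ * y = κ * Y / (N : ℝ) ^ (k + 1) * ((N : ℝ) / y ^ 2) ^ (k + 1) := by
          rw [← hyY, div_pow, ← pow_mul, pow_succ y (2 * (k + 1))]
          field_simp
      _ ≤ _ := by gcongr
  have hcond : ((k + 1).factorial : ℝ) * |A (k + 1)| * (H : ℝ) ^ k ≤ 1 / 2 := by
    calc ((k + 1).factorial : ℝ) * |A (k + 1)| * (H : ℝ) ^ k
        ≤ (k + 1).factorial * ((2 / N) ^ (k + 1) * (Y * B)) * (2 * (N / y ^ 2)) ^ k := by gcongr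
      _ = (k + 1).factorial * (B * (2 ^ (k + 1) * 2 ^ k)) * (y ^ 3 / N) := by
          rw [← hyY, mul_pow, div_pow, div_pow, pow_succ (N : ℝ) k, ← pow_mul,
            show 2 * (k + 1) + 1 = 2 * k + 3 by ring, pow_add]
          field_simp
          ring
      _ ≤ (k + 1).factorial * (B * (2 ^ (k + 1) * 2 ^ (k + 1))) * (1 / y) := by
          have h3 : y ^ 3 / N ≤ 1 / y := by
            rw [div_le_div_iff₀ hN0 hyp, one_mul, ← pow_succ]
            exact (pow_le_pow_right₀ hy1 (by norm_num)).trans hy6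
          have h4 : (2 : ℝ) ^ k ≤ 2 ^ (k + 1) := pow_le_pow_right₀ (by norm_num) (by omega)
          gcongr _ * (_ * (_ * ?_)) * ?_
      _ = (k + 1).factorial * (B * 4 ^ (k + 1)) / y := by rw [← mul_pow]; norm_num; ring
      _ ≤ 1 / 2 := by
          rw [div_le_iff₀ hyp]
          linarith
  have hW := hweyl (A (k + 1)) _ H H' (polyCls_poly k A) hH1 hH' hcond
  set P : ℕ → ℝ := fun n => ∑ j ∈ range (k + 2), A j * (n : ℝ) ^ j with hP
  have hW2 : ‖∑ n ∈ range H', ee (P n)‖ * y ^ d ≤ Cw / κ ^ d * H := by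
    rw [div_mul_eq_mul_div, le_div_iff₀ hκd, mul_assoc, ← Real.mul_rpow hyp.le hκ.le, mul_comm y]
    refine le_trans ?_ hW
    gcongr
  have herr : ∀ u ∈ range H', ‖ee (∑ i, θ i * ((a + u : ℕ) : ℝ) ^ c i) - ee (P u)‖ ≤
      2 * Real.pi * (T * 4 ^ (k + 2)) / y := by
    intro u hu
    rw [mem_range] at hu
    have hur : (u : ℝ) ≤ H := by exact_mod_cast (by omega : u ≤ H)
    set x : ℝ := u / a with hx
    have hx0 : 0 ≤ x := by positivity
    have hx4 : x ≤ 4 / y ^ 2 := by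
      rw [hx, div_le_div_iff₀ ha0 (by positivity)]
      have : (u : ℝ) ≤ 2 * (N / y ^ 2) := hur.trans hHup
      have h1 : (u : ℝ) * y ^ 2 ≤ 2 * (N / y ^ 2) * y ^ 2 :=
        mul_le_mul_of_nonneg_right this (by positivity)
      have h2 : 2 * ((N : ℝ) / y ^ 2) * y ^ 2 = 2 * N := by field_simp
      linarith
    have hx1 : x ≤ 1 := by
      refine hx4.trans ?_
      rw [div_le_one (by positivity)]
      nlinarith
    have e1 : (∑ i, θ i * ((a + u : ℕ) : ℝ) ^ c i) - P u = ∑ i, θ i * (a : ℝ) ^ c i *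
        ((1 + x) ^ c i - ∑ j ∈ range (k + 1 + 1), bc j (c i) * x ^ j) := by
      have e2 : P u = ∑ i, θ i * (a : ℝ) ^ c i * ∑ j ∈ range (k + 1 + 1), bc j (c i) * x ^ j := by
        simp only [hP, hA, hx, mul_sum, sum_div, sum_mul]
        rw [sum_comm]
        refine sum_congr rfl fun i _ => sum_congr rfl fun j _ => ?_
        rw [div_pow]; ring
      rw [e2, ← sum_sub_distrib]
      refine sum_congr rfl fun i _ => ?_
      have e3 : ((a + u : ℕ) : ℝ) = a * (1 + x) := by rw [hx]; push_cast; field_simp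
      rw [e3, Real.mul_rpow ha0.le (by linarith)]
      ring
    refine (norm_ee_sub_le _ _).trans ?_
    rw [mul_div_assoc, e1]
    have hfin : Y * (T * (4 / y ^ 2) ^ (k + 2)) = T * 4 ^ (k + 2) / y := by
      rw [← hyY, div_pow, ← pow_mul, show 2 * (k + 2) = (2 * (k + 1) + 1) + 1 by ring,
        pow_succ y (2 * (k + 1) + 1)]
      field_simp
    rw [← hfin]
    gcongr
    rw [hT, sum_mul, mul_sum]
    refine (abs_sum_le_sum_abs _ _).trans (sum_le_sum fun i _ => ?_)
    rw [abs_mul]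
    refine mul_le_mul (hθa i) ((hCt i x hx0 hx1).trans ?_) (abs_nonneg _) hY0
    have := hCt0 i
    gcongr
  have hE : ‖∑ u ∈ range H', ee (∑ i, θ i * ((a + u : ℕ) : ℝ) ^ c i)‖ ≤
      ‖∑ n ∈ range H', ee (P n)‖ + H' * (2 * Real.pi * (T * 4 ^ (k + 2)) / y) := by
    have h1 : ∑ u ∈ range H', ee (∑ i, θ i * ((a + u : ℕ) : ℝ) ^ c i) =
        ∑ n ∈ range H', ee (P n) +
          ∑ u ∈ range H', (ee (∑ i, θ i * ((a + u : ℕ) : ℝ) ^ c i) - ee (P u)) := by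
      rw [sum_sub_distrib]; ring
    rw [h1]
    refine (norm_add_le _ _).trans ?_
    gcongr
    refine (norm_sum_le _ _).trans ?_
    refine (sum_le_sum herr).trans ?_
    rw [sum_const, card_range, nsmul_eq_mul]
  calc _ ≤ (‖∑ n ∈ range H', ee (P n)‖ + H' * (2 * Real.pi * (T * 4 ^ (k + 2)) / y)) * y ^ d := by
        gcongr
    _ = ‖∑ n ∈ range H', ee (P n)‖ * y ^ d +
        H' * (2 * Real.pi * (T * 4 ^ (k + 2))) * (y ^ d / y) := by ring
    _ ≤ Cw / κ ^ d * H + H * (2 * Real.pi * (T * 4 ^ (k + 2))) * 1 := by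
        gcongr
        rw [div_le_one hyp]; exact hyd1
    _ ≤ _ := by
        have : 0 ≤ y0 * H := by positivity
        linarith

/-- Power saving for exponential sums with phase `∑ θ_i n ^ c_i`. -/
lemma expsum {m : ℕ} (c : Fin m → ℝ) (hpos : ∀ i, 0 < c i) (hinj : Function.Injective c)
    (hint : ∀ i, ∀ k : ℕ, c i ≠ (k : ℝ)) :
    ∃ C δ : ℝ, 1 ≤ C ∧ 0 < δ ∧ ∀ (N : ℕ) (θ : Fin m → ℝ), 1 ≤ N → (∀ i, |θ i| ≤ N) →
      ∀ i₀, ‖∑ n ∈ Ioc (N / 2) N, ee (∑ i, θ i * (n : ℝ) ^ c i)‖ *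
        ((N : ℝ) ^ c i₀ * |θ i₀|) ^ δ ≤ C * N := by
  set D : ℝ := 1 + ∑ i, c i with hD
  have hcD : ∀ i, c i + 1 ≤ D := fun i => by
    have := single_le_sum (f := c) (fun j _ => (hpos j).le) (mem_univ i)
    linarith
  obtain ⟨k0, hk0⟩ := exists_nat_ge (3 * D)
  obtain ⟨κ, hκ, hnd⟩ := bc_nondeg c hinj hint (k0 + 1)
  have hκ' : 0 < κ * (1 / 2 : ℝ) ^ D := by positivity
  choose Cb hCb1 hCb using fun t : ℕ => block c hpos D (k0 + t) (by push_cast; linarith [(Nat.cast_nonneg t : (0 : ℝ) ≤ t)]) hκ'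
  set C : ℝ := 1 + ∑ t ∈ range m, Cb t with hC
  have hCle : ∀ t, t < m → Cb t ≤ C := fun t ht => by
    have := single_le_sum (f := Cb) (fun j _ => (by linarith [hCb1 j] : 0 ≤ Cb j)) (mem_range.2 ht)
    linarith
  have hC1 : 1 ≤ C := by
    have : 0 ≤ ∑ t ∈ range m, Cb t := sum_nonneg fun j _ => by linarith [hCb1 j]
    linarith
  set δ : ℝ := dK (k0 + m) with hδ
  have hδ0 : 0 < δ := dK_pos _
  refine ⟨2 * C, δ, by linarith, hδ0, ?_⟩
  intro N θ hN hθ i₀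
  have hNr : (1 : ℝ) ≤ N := by exact_mod_cast hN
  have hN0 : (0 : ℝ) < N := by linarith
  obtain ⟨b, _, hb⟩ := exists_max_image univ (fun i => (N : ℝ) ^ c i * |θ i|) ⟨i₀, mem_univ _⟩
  set Y : ℝ := (N : ℝ) ^ c b * |θ b| with hY
  have hY0 : 0 ≤ Y := by positivity
  have hle : ((N : ℝ) ^ c i₀ * |θ i₀|) ^ δ ≤ Y ^ δ := by
    have := hb i₀ (mem_univ _)
    gcongr
  refine (mul_le_mul_of_nonneg_left hle (norm_nonneg _)).trans ?_
  rcases lt_or_ge Y 1 with hY1 | hY1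
  · have h1 := norm_sum_ee_le (Ioc (N / 2) N) (fun n => ∑ i, θ i * (n : ℝ) ^ c i)
    have h2 : ((Ioc (N / 2) N).card : ℝ) ≤ N := by
      rw [Nat.card_Ioc]; exact_mod_cast Nat.sub_le _ _
    have h3 : Y ^ δ ≤ 1 := Real.rpow_le_one hY0 hY1.le hδ0.le
    calc _ ≤ (N : ℝ) * 1 := mul_le_mul (h1.trans h2) h3 (by positivity) (by positivity)
      _ ≤ _ := by nlinarith
  have hYN : Y ≤ (N : ℝ) ^ D := by
    calc Y ≤ (N : ℝ) ^ c b * N := mul_le_mul_of_nonneg_left (hθ b) (by positivity)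
      _ = (N : ℝ) ^ (c b + 1) := by rw [Real.rpow_add hN0, Real.rpow_one]
      _ ≤ _ := Real.rpow_le_rpow_of_exponent_le hNr (hcD b)
  have hblock : ∀ a : ℕ, N < 2 * a → a ≤ N → ∃ H : ℕ, 1 ≤ H ∧ H ≤ N ∧ ∀ H' ≤ H,
      ‖∑ u ∈ range H', ee (∑ i, θ i * ((a + u : ℕ) : ℝ) ^ c i)‖ * Y ^ δ ≤ C * H := by
    intro a ha haN
    have ha0 : (0 : ℝ) < a := by exact_mod_cast (by omega : 0 < a)
    have ha2 : (N : ℝ) ≤ 2 * a := by exact_mod_cast ha.le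
    obtain ⟨t, ht, h1⟩ := hnd (fun i => θ i * (a : ℝ) ^ c i) b
    have h2 : κ * (1 / 2 : ℝ) ^ D * Y ≤ κ * |θ b * (a : ℝ) ^ c b| := by
      rw [mul_assoc, abs_mul, abs_of_pos (by positivity : 0 < (a : ℝ) ^ c b)]
      have h3 : (1 / 2 : ℝ) ^ D * (N : ℝ) ^ c b ≤ (a : ℝ) ^ c b := by
        calc (1 / 2 : ℝ) ^ D * (N : ℝ) ^ c b ≤ (1 / 2 : ℝ) ^ c b * (N : ℝ) ^ c b := by
              have : (1 / 2 : ℝ) ^ D ≤ (1 / 2 : ℝ) ^ c b :=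
                Real.rpow_le_rpow_of_exponent_ge (by norm_num) (by norm_num) (by linarith [hcD b])
              gcongr
          _ = (1 / 2 * (N : ℝ)) ^ c b := by rw [Real.mul_rpow (by norm_num) hN0.le]
          _ ≤ _ := by
            have := (hpos b).le
            gcongr
            linarith
      have h4 : (1 / 2 : ℝ) ^ D * Y ≤ |θ b| * (a : ℝ) ^ c b := by
        rw [hY]
        have := mul_le_mul_of_nonneg_right h3 (abs_nonneg (θ b))
        linarith
      exact mul_le_mul_of_nonneg_left h4 hκ.le
    have h5 := h2.trans h1
    rw [show k0 + 1 + t = k0 + t + 1 by ring] at h5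
    obtain ⟨H, hH1, hHN, hH⟩ := hCb t N θ Y hN hY1 hYN (fun i => hb i (mem_univ _)) a ha haN h5
    refine ⟨H, hH1, hHN, fun H' hH' => ?_⟩
    have h6 : Y ^ δ ≤ Y ^ dK (k0 + t + 1) :=
      Real.rpow_le_rpow_of_exponent_le hY1 (dK_anti (by omega))
    calc _ ≤ _ := mul_le_mul_of_nonneg_left h6 (norm_nonneg _)
      _ ≤ _ := hH H' hH'
      _ ≤ _ := mul_le_mul_of_nonneg_right (hCle t ht) (by positivity)
  -- the interval is cut greedily into blocks
  have hgreedy : ∀ (l a : ℕ), N < 2 * a → a + l ≤ N + 1 →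
      ‖∑ u ∈ range l, ee (∑ i, θ i * ((a + u : ℕ) : ℝ) ^ c i)‖ * Y ^ δ ≤ C * (l + N) := by
    intro l
    induction l using Nat.strong_induction_on with
    | _ l ih =>
      intro a ha hal
      rcases Nat.eq_zero_or_pos l with rfl | hl
      · simp; positivity
      obtain ⟨H, hH1, hHN, hH⟩ := hblock a ha (by omega)
      rcases le_total l H with h | h
      · refine (hH l h).trans ?_
        have : (H : ℝ) ≤ N := by exact_mod_cast hHN
        have : (0 : ℝ) ≤ l := by positivity
        apply mul_le_mul_of_nonneg_left _ (by linarith)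
        linarith
      · have h1 := hH H le_rfl
        have h2 := ih (l - H) (by omega) (a + H) (by omega) (by omega)
        obtain ⟨q, rfl⟩ := Nat.exists_eq_add_of_le h
        rw [Nat.add_sub_cancel_left] at h2
        rw [sum_range_add]
        simp only [← add_assoc]
        push_cast at h1 h2 ⊢
        calc _ ≤ _ := mul_le_mul_of_nonneg_right (norm_add_le _ _) (by positivity)
          _ ≤ _ := by rw [add_mul]; linarith
  have hfin := hgreedy (N - N / 2) (N / 2 + 1) (by omega) (by omega)
  have e : ∑ n ∈ Ioc (N / 2) N, ee (∑ i, θ i * (n : ℝ) ^ c i) =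
      ∑ u ∈ range (N - N / 2), ee (∑ i, θ i * ((N / 2 + 1 + u : ℕ) : ℝ) ^ c i) := by
    have : Ioc (N / 2) N = Ico (N / 2 + 1) (N + 1) := by ext; simp only [mem_Ioc, mem_Ico]; omega
    rw [this, sum_Ico_eq_sum_range]
    congr 2; omega
  rw [e]
  refine hfin.trans ?_
  have : ((N - N / 2 : ℕ) : ℝ) ≤ N := by exact_mod_cast Nat.sub_le _ _
  nlinarith

/-! ### Removing the integer parts -/

lemma prod_sub_prod_norm_le {ι : Type*} (s : Finset ι) (f g : ι → ℂ) (hf : ∀ i, ‖f i‖ ≤ 1)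
    (hg : ∀ i, ‖g i‖ ≤ 1) : ‖∏ i ∈ s, f i - ∏ i ∈ s, g i‖ ≤ ∑ i ∈ s, ‖f i - g i‖ := by
  classical
  induction s using Finset.induction_on with
  | empty => simp
  | insert a s ha ih =>
    rw [prod_insert ha, prod_insert ha, sum_insert ha]
    have e : f a * ∏ i ∈ s, f i - g a * ∏ i ∈ s, g i =
        (f a - g a) * ∏ i ∈ s, f i + g a * (∏ i ∈ s, f i - ∏ i ∈ s, g i) := by ring
    rw [e]
    refine (norm_add_le _ _).trans ?_
    rw [norm_mul, norm_mul]
    have h1 : ‖∏ i ∈ s, f i‖ ≤ 1 := by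
      rw [norm_prod]; exact prod_le_one (fun _ _ => norm_nonneg _) fun i _ => hf i
    have h2 := mul_le_mul_of_nonneg_left h1 (norm_nonneg (f a - g a))
    have h3 := mul_le_mul (hg a) ih (norm_nonneg _) zero_le_one
    linarith

lemma geom_ee_le' {t η : ℝ} {L : ℕ} (hη : 0 ≤ η) (h1 : η ≤ |t|) (h2 : |t| ≤ 1 - η) :
    ‖∑ j ∈ range L, ee (j * t)‖ * (2 * η) ≤ 1 := by
  have key : ∀ s : ℝ, (∃ z : ℤ, s = t + z) → |s| ≤ 1 / 2 → η ≤ |s| →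
      ‖∑ j ∈ range L, ee (j * t)‖ * (2 * η) ≤ 1 := by
    rintro s ⟨z, rfl⟩ hs hηs
    have h := geom_ee_le (H := L) hs
    have e : ∑ j ∈ range L, ee (j * (t + z)) = ∑ j ∈ range L, ee (j * t) := by
      refine sum_congr rfl fun j _ => ?_
      have := ee_add_int (j * t) (j * z)
      push_cast at this
      rw [← this, mul_add]
    rw [e] at h
    refine le_trans ?_ h
    gcongr
  rcases le_or_gt |t| (1 / 2) with h | h
  · exact key t ⟨0, by simp⟩ h h1
  rcases le_total 0 t with h0 | h0
  · rw [abs_of_nonneg h0] at *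
    refine key (t - 1) ⟨-1, by push_cast; ring⟩ ?_ ?_ <;> rw [abs_of_nonpos (by linarith)] <;> linarith
  · rw [abs_of_nonpos h0] at *
    refine key (t + 1) ⟨1, by push_cast; ring⟩ ?_ ?_ <;> rw [abs_of_nonneg (by linarith)] <;> linarith

/-- The Fejér-type weight centred at `a / L`. -/
def fej (L a : ℕ) (y : ℝ) : ℂ := ∑ j ∈ range L, ∑ j' ∈ range L,
  ((L : ℂ) ^ 2)⁻¹ * ee (((j : ℝ) - j') * (y - a / L))

lemma fej_eq (L a : ℕ) (y : ℝ) :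
    fej L a y = (((L : ℝ) ^ 2)⁻¹ * ‖∑ j ∈ range L, ee (j * (y - a / L))‖ ^ 2 : ℝ) := by
  have h : ((‖∑ j ∈ range L, ee (j * (y - a / L))‖ ^ 2 : ℝ) : ℂ) =
      ∑ j ∈ range L, ∑ j' ∈ range L, ee (((j : ℝ) - j') * (y - a / L)) := by
    push_cast
    rw [← Complex.mul_conj', map_sum, sum_mul_sum]
    refine sum_congr rfl fun j _ => sum_congr rfl fun j' _ => ?_
    rw [conj_ee, ← ee_add]; congr 1; ring
  rw [Complex.ofReal_mul, h, fej]
  simp only [mul_sum]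
  push_cast; rfl

lemma sum_fej {L : ℕ} (hL : 1 ≤ L) (y : ℝ) : ∑ a ∈ range L, fej L a y = 1 := by
  have hL0 : (L : ℂ) ≠ 0 := Nat.cast_ne_zero.2 (by omega)
  have hLr : (L : ℝ) ≠ 0 := Nat.cast_ne_zero.2 (by omega)
  have hchar : ∀ j ∈ range L, ∀ j' ∈ range L,
      ∑ a ∈ range L, ((L : ℂ) ^ 2)⁻¹ * ee (((j : ℝ) - j') * (y - a / L)) =
        if j = j' then (L : ℂ)⁻¹ else 0 := by
    intro j hj j' hj'
    rw [mem_range] at hj hj'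
    split_ifs with h
    · subst h
      simp [ee_zero]
      field_simp
    · rw [← mul_sum]
      have e : ∀ a : ℕ, ee (((j : ℝ) - j') * (y - a / L)) =
          ee (((j : ℝ) - j') * y) * ee (a * (-(((j : ℝ) - j') / L))) := by
        intro a; rw [← ee_add]; congr 1; ring
      simp_rw [e, ee_nat_mul]
      rw [← mul_sum]
      have hne : ee (-(((j : ℝ) - j') / L)) ≠ 1 := by
        intro h1
        have hjr : (j : ℝ) - j' ≠ 0 := sub_ne_zero.2 (by exact_mod_cast h)
        rw [ee, Complex.exp_eq_one_iff] at h1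
        obtain ⟨n, hn⟩ := h1
        have h2 : (((2 * Real.pi * -(((j : ℝ) - j') / L) : ℝ) : ℂ) * Complex.I) =
            (((2 * Real.pi * n : ℝ) : ℂ) * Complex.I) := by rw [hn]; push_cast; ring
        have h3 := mul_right_cancel₀ Complex.I_ne_zero h2
        have h4 : 2 * Real.pi * -(((j : ℝ) - j') / L) = 2 * Real.pi * n := by exact_mod_cast h3
        have h5 := mul_left_cancel₀ (by positivity : 2 * Real.pi ≠ 0) h4
        have h6 : (j' : ℝ) - j = n * L := by field_simp at h5; linarith
        have h7 : (j' : ℤ) - j = n * L := by exact_mod_cast h6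
        have h8 : |(j' : ℤ) - j| < L := by rw [abs_lt]; omega
        rw [h7, abs_mul, Nat.abs_cast] at h8
        have h9 : |n| < 1 := by
          by_contra hh
          push Not at hh
          nlinarith
        rw [Int.abs_lt_one_iff] at h9
        rw [h9] at h7; omega
      have hg := geom_sum_mul (ee (-(((j : ℝ) - j') / L))) L
      have h1 : ee (-(((j : ℝ) - j') / L)) ^ L = 1 := by
        rw [← ee_nat_mul]
        have : (L : ℝ) * -(((j : ℝ) - j') / L) = ((j' - j : ℤ) : ℝ) := by
          push_cast; field_simp; ring
        rw [this, ee_int]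
      rw [h1, sub_self, mul_eq_zero] at hg
      rcases hg with hg | hg
      · rw [hg]; simp
      · exact absurd (sub_eq_zero.1 hg) hne
  unfold fej
  rw [sum_comm]
  calc _ = ∑ j ∈ range L, ∑ j' ∈ range L, if j = j' then (L : ℂ)⁻¹ else 0 := by
        refine sum_congr rfl fun j hj => ?_
        rw [sum_comm]
        exact sum_congr rfl fun j' hj' => hchar j hj j' hj'
    _ = ∑ j ∈ range L, (L : ℂ)⁻¹ := by
        refine sum_congr rfl fun j hj => ?_
        rw [sum_ite_eq, if_pos hj]
    _ = 1 := by simp [hL0]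

lemma sum_norm_fej {L : ℕ} (hL : 1 ≤ L) (y : ℝ) : ∑ a ∈ range L, ‖fej L a y‖ = 1 := by
  have h := sum_fej hL y
  have h1 : ∀ a, fej L a y = (‖fej L a y‖ : ℂ) := by
    intro a
    rw [fej_eq, Complex.norm_real, Real.norm_of_nonneg (by positivity)]
  have h2 : ((∑ a ∈ range L, ‖fej L a y‖ : ℝ) : ℂ) = 1 := by
    push_cast
    rw [← h]
    exact sum_congr rfl fun a _ => (h1 a).symm
  exact_mod_cast h2

/-- Trigonometric approximation of `y ↦ e(-ξ {y})` away from the integers. -/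
lemma frac_approx {R : ℕ} (hR : 1 ≤ R) {ξ : ℝ} (hξ : |ξ| ≤ 1 / 2) :
    ∃ co : ℤ → ℂ, (∀ h, ‖co h‖ ≤ 1) ∧
      (∀ y : ℝ, ‖∑ h ∈ Icc (-(R : ℤ) ^ 3) (R ^ 3), co h * ee (h * y)‖ ≤ 1) ∧
      ∀ y : ℝ, 1 / (16 * R) ≤ Int.fract y → Int.fract y ≤ 1 - 1 / (16 * R) →
        ‖ee (-ξ * Int.fract y) - ∑ h ∈ Icc (-(R : ℤ) ^ 3) (R ^ 3), co h * ee (h * y)‖ ≤ 129 / R := by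
  classical
  set L : ℕ := R ^ 3 with hLdef
  have hL : 1 ≤ L := Nat.one_le_pow _ _ hR
  have hL0 : (0 : ℝ) < L := by exact_mod_cast hL
  have hR0 : (0 : ℝ) < R := by exact_mod_cast hR
  have hLR : (L : ℝ) = R ^ 3 := by rw [hLdef]; push_cast; rfl
  set I : Finset (ℕ × ℕ × ℕ) := range L ×ˢ range L ×ˢ range L with hI
  set w : ℕ × ℕ × ℕ → ℂ := fun t => ee (-ξ * (t.1 / L)) * (((L : ℂ) ^ 2)⁻¹ *
    ee (-(((t.2.1 : ℝ) - t.2.2) * (t.1 / L)))) with hw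
  have hwn : ∀ t, ‖w t‖ = ((L : ℝ) ^ 2)⁻¹ := by
    intro t; simp [hw, norm_ee]
  set hh : ℕ × ℕ × ℕ → ℤ := fun t => (t.2.1 : ℤ) - t.2.2 with hhd
  set co : ℤ → ℂ := fun h => ∑ t ∈ I with hh t = h, w t with hco
  have hG : ∀ y : ℝ, ∑ h ∈ Icc (-(R : ℤ) ^ 3) (R ^ 3), co h * ee (h * y) =
      ∑ a ∈ range L, ee (-ξ * (a / L)) * fej L a y := by
    intro y
    have e1 : ∑ t ∈ I, w t * ee (hh t * y) = ∑ a ∈ range L, ee (-ξ * (a / L)) * fej L a y := by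
      rw [hI, sum_product]
      refine sum_congr rfl fun a _ => ?_
      rw [sum_product, fej]
      simp only [mul_sum]
      refine sum_congr rfl fun j _ => sum_congr rfl fun j' _ => ?_
      simp only [hw, hhd]
      have : ee (((j : ℝ) - j') * (y - a / L)) =
          ee (-(((j : ℝ) - j') * (a / L))) * ee ((((j : ℤ) - j' : ℤ) : ℝ) * y) := by
        rw [← ee_add]; congr 1; push_cast; ring
      rw [this]; ring
    rw [← e1, ← sum_fiberwise_of_maps_to (s := I) (t := Icc (-(R : ℤ) ^ 3) (R ^ 3)) (g := hh)]
    · refine sum_congr rfl fun h _ => ?_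
      rw [hco, sum_mul]
      refine sum_congr rfl fun t ht => ?_
      rw [(mem_filter.1 ht).2]
    · intro t ht
      simp only [hI, mem_product, mem_range] at ht
      have : ((R : ℤ) ^ 3) = (L : ℤ) := by rw [hLdef]; push_cast; rfl
      simp only [hhd, mem_Icc, this]
      omega
  refine ⟨co, ?_, ?_, ?_⟩
  · intro h
    have hcard : (#{t ∈ I | hh t = h} : ℝ) ≤ (L : ℝ) ^ 2 := by
      have : #{t ∈ I | hh t = h} ≤ #(range L ×ˢ range L) := by
        refine card_le_card_of_injOn (fun t => (t.1, t.2.1)) ?_ ?_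
        · intro t ht
          simp only [hI, coe_filter, mem_product, Set.mem_ofPred_eq] at ht
          simp only [coe_product, Set.mem_prod, mem_coe]
          exact ⟨ht.1.1, ht.1.2.1⟩
        · rintro ⟨a, j, j'⟩ ht ⟨b, k, k'⟩ hs hts
          simp only [hhd, coe_filter, Set.mem_ofPred_eq] at ht hs
          simp only [Prod.mk.injEq] at hts ⊢
          omega
      rw [card_product, card_range] at this
      rw [sq]; exact_mod_cast this
    rw [hco]
    refine (norm_sum_le _ _).trans ?_
    simp only [hwn, sum_const, nsmul_eq_mul]
    rw [mul_inv_le_iff₀ (by positivity), one_mul]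
    exact hcard
  · intro y
    rw [hG]
    refine (norm_sum_le _ _).trans ?_
    rw [← sum_norm_fej hL y]
    refine sum_le_sum fun a _ => ?_
    rw [norm_mul, norm_ee, one_mul]
  · intro y hy1 hy2
    set η : ℝ := 1 / (16 * R) with hη
    have hη0 : 0 < η := by positivity
    rw [hG]
    have e1 : ee (-ξ * Int.fract y) = ∑ a ∈ range L, ee (-ξ * Int.fract y) * fej L a y := by
      rw [← mul_sum, sum_fej hL, mul_one]
    rw [e1, ← sum_sub_distrib]
    have hterm : ∀ a ∈ range L, ‖ee (-ξ * Int.fract y) * fej L a y -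
        ee (-ξ * (a / L)) * fej L a y‖ ≤ 1 / R * ‖fej L a y‖ + 128 / R * (L : ℝ)⁻¹ := by
      intro a ha
      rw [mem_range] at ha
      have har : (a : ℝ) / L < 1 := by rw [div_lt_one hL0]; exact_mod_cast ha
      have har0 : 0 ≤ (a : ℝ) / L := by positivity
      rw [← sub_mul, norm_mul]
      rcases le_total |Int.fract y - a / L| η with hc | hc
      · have h1 := norm_ee_sub_le (-ξ * Int.fract y) (-ξ * (a / L))
        rw [← mul_sub, abs_mul, abs_neg] at h1
        have h2 : 2 * Real.pi * (|ξ| * |Int.fract y - a / L|) ≤ 1 / R := by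
          calc 2 * Real.pi * (|ξ| * |Int.fract y - a / L|) ≤ 2 * 4 * (1 / 2 * η) := by
                gcongr
                exact Real.pi_le_four
            _ = 1 / R * (1 / 4) := by rw [hη]; field_simp; norm_num
            _ ≤ 1 / R := by
              have : 0 < 1 / (R : ℝ) := by positivity
              linarith
        have h3 : 0 ≤ 128 / R * (L : ℝ)⁻¹ := by positivity
        have h4 := mul_le_mul_of_nonneg_right (h1.trans h2) (norm_nonneg (fej L a y))
        linarith
      · have h1 : ‖fej L a y‖ ≤ 64 / R * (L : ℝ)⁻¹ := by
          rw [fej_eq, Complex.norm_real, Real.norm_of_nonneg (by positivity)]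
          have e2 : ∑ j ∈ range L, ee (j * (y - a / L)) =
              ∑ j ∈ range L, ee (j * (Int.fract y - a / L)) := by
            refine sum_congr rfl fun j _ => ?_
            have := ee_add_int (j * (Int.fract y - a / L)) (j * ⌊y⌋)
            rw [← this]; congr 1
            push_cast
            rw [Int.fract]; ring
          rw [e2]
          have h2 := geom_ee_le' (L := L) (t := Int.fract y - a / L) hη0.le hc (by
            rw [abs_le]; constructor <;> linarith)
          set S := ‖∑ j ∈ range L, ee (j * (Int.fract y - a / L))‖
          have hS0 : 0 ≤ S := norm_nonneg _
          have h3 : S ≤ 8 * R := by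
            rw [← le_div_iff₀ (by positivity)] at h2
            refine h2.trans (le_of_eq ?_)
            rw [hη]; field_simp; norm_num
          calc ((L : ℝ) ^ 2)⁻¹ * S ^ 2 ≤ ((L : ℝ) ^ 2)⁻¹ * (8 * R) ^ 2 := by gcongr
            _ = 64 * R ^ 2 / L * (L : ℝ)⁻¹ := by field_simp; norm_num
            _ = _ := by rw [hLR]; field_simp
        have h4 : ‖ee (-ξ * Int.fract y) - ee (-ξ * (a / L))‖ ≤ 2 := by
          refine (norm_sub_le _ _).trans ?_
          rw [norm_ee, norm_ee]; norm_num
        have h5 : 0 ≤ 1 / R * ‖fej L a y‖ := by positivity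
        have h6 := mul_le_mul h4 h1 (norm_nonneg _) (by norm_num)
        have h7 : 2 * (64 / R * (L : ℝ)⁻¹) = 128 / R * (L : ℝ)⁻¹ := by ring
        linarith
    refine (norm_sum_le _ _).trans ((sum_le_sum hterm).trans ?_)
    rw [sum_add_distrib, ← mul_sum, sum_norm_fej hL, sum_const, card_range, nsmul_eq_mul]
    apply le_of_eq
    field_simp; norm_num

/-- Few points lie close to an integer, when the exponential sums are small. -/
lemma bad_count {R : ℕ} (hR : 1 ≤ R) (s : Finset ℕ) (y : ℕ → ℝ) {B : ℝ}
    (hB : ∀ h : ℤ, h ≠ 0 → |h| ≤ R → ‖∑ n ∈ s, ee (h * y n)‖ ≤ B) :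
    (#{n ∈ s | ¬ (1 / (16 * R) ≤ Int.fract (y n) ∧ Int.fract (y n) ≤ 1 - 1 / (16 * R))} : ℝ) ≤
      4 * (#s / R + B) := by
  classical
  have hR0 : (0 : ℝ) < R := by exact_mod_cast hR
  have hB0 : 0 ≤ B := (norm_nonneg _).trans (hB 1 one_ne_zero (by simpa using hR))
  set bad := {n ∈ s | ¬ (1 / (16 * R) ≤ Int.fract (y n) ∧ Int.fract (y n) ≤ 1 - 1 / (16 * R))}
  have hlow : ∀ n ∈ bad, (R : ℝ) ^ 2 / 4 ≤ ‖∑ j ∈ range R, ee (j * y n)‖ ^ 2 := by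
    intro n hn
    have hn' := (mem_filter.1 hn).2
    obtain ⟨t, ⟨z, hz⟩, ht⟩ : ∃ t : ℝ, (∃ z : ℤ, y n = t + z) ∧ |t| ≤ 1 / (16 * R) := by
      rw [not_and_or] at hn'
      rcases hn' with h | h
      · exact ⟨Int.fract (y n), ⟨⌊y n⌋, by rw [Int.fract]; ring⟩, by
          rw [abs_of_nonneg (Int.fract_nonneg _)]; linarith⟩
      · refine ⟨Int.fract (y n) - 1, ⟨⌊y n⌋ + 1, by rw [Int.fract]; push_cast; ring⟩, ?_⟩
        have := Int.fract_lt_one (y n)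
        rw [abs_of_nonpos (by linarith)]; linarith
    have h1 : ‖∑ j ∈ range R, ee (j * y n) - R‖ ≤ R / 2 := by
      have e : ∑ j ∈ range R, ee (j * y n) - R = ∑ j ∈ range R, (ee (j * t) - ee 0) := by
        rw [sum_sub_distrib, ee_zero, sum_const, card_range, nsmul_eq_mul, mul_one]
        congr 1
        refine sum_congr rfl fun j _ => ?_
        have := ee_add_int (j * t) (j * z)
        rw [← this, hz]; congr 1; push_cast; ring
      rw [e]
      refine (norm_sum_le _ _).trans ?_
      have : ∀ j ∈ range R, ‖ee (j * t) - ee 0‖ ≤ 1 / 2 := by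
        intro j hj
        rw [mem_range] at hj
        have hjr : (j : ℝ) ≤ R := by exact_mod_cast hj.le
        refine (norm_ee_sub_le _ _).trans ?_
        rw [sub_zero, abs_mul, Nat.abs_cast]
        calc 2 * Real.pi * (j * |t|) ≤ 2 * 4 * (R * (1 / (16 * R))) := by
              gcongr
              exact Real.pi_le_four
          _ = 1 / 2 := by field_simp; norm_num
      refine (sum_le_sum this).trans ?_
      rw [sum_const, card_range, nsmul_eq_mul]
      linarith
    have h2 : (R : ℝ) / 2 ≤ ‖∑ j ∈ range R, ee (j * y n)‖ := by
      have h3 := norm_sub_norm_le (R : ℂ) (∑ j ∈ range R, ee (j * y n))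
      rw [norm_sub_rev, Complex.norm_natCast] at h3
      linarith
    calc (R : ℝ) ^ 2 / 4 = (R / 2) ^ 2 := by ring
      _ ≤ _ := by gcongr
  have hup : ∑ n ∈ s, ‖∑ j ∈ range R, ee (j * y n)‖ ^ 2 ≤ R * #s + R ^ 2 * B := by
    have e : ((∑ n ∈ s, ‖∑ j ∈ range R, ee (j * y n)‖ ^ 2 : ℝ) : ℂ) =
        ∑ j ∈ range R, ∑ j' ∈ range R, ∑ n ∈ s, ee ((((j : ℤ) - j' : ℤ) : ℝ) * y n) := by
      push_cast
      have : ∀ n ∈ s, ((‖∑ j ∈ range R, ee (j * y n)‖ : ℂ)) ^ 2 =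
          ∑ j ∈ range R, ∑ j' ∈ range R, ee (((j : ℝ) - j') * y n) := by
        intro n _
        rw [← Complex.mul_conj', map_sum, sum_mul_sum]
        refine sum_congr rfl fun j _ => sum_congr rfl fun j' _ => ?_
        rw [conj_ee, ← ee_add]; congr 1; ring
      rw [sum_congr rfl this, sum_comm]
      exact sum_congr rfl fun j _ => sum_comm
    have h1 : ∑ n ∈ s, ‖∑ j ∈ range R, ee (j * y n)‖ ^ 2 ≤
        ∑ j ∈ range R, ∑ j' ∈ range R, ((if j = j' then (#s : ℝ) else 0) + B) := by
      have h2 : ∑ n ∈ s, ‖∑ j ∈ range R, ee (j * y n)‖ ^ 2 =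
          ‖((∑ n ∈ s, ‖∑ j ∈ range R, ee (j * y n)‖ ^ 2 : ℝ) : ℂ)‖ := by
        rw [Complex.norm_real, Real.norm_of_nonneg (sum_nonneg fun _ _ => by positivity)]
      rw [h2, e]
      refine (norm_sum_le _ _).trans (sum_le_sum fun j hj => ?_)
      refine (norm_sum_le _ _).trans (sum_le_sum fun j' hj' => ?_)
      rw [mem_range] at hj hj'
      split_ifs with hjj
      · have := norm_sum_ee_le s (fun n => (((j : ℤ) - j' : ℤ) : ℝ) * y n)
        linarith
      · rw [zero_add]
        exact hB _ (by omega) (by rw [abs_le]; omega)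
    refine h1.trans (le_of_eq ?_)
    simp only [sum_add_distrib, sum_ite_eq, sum_const, card_range, nsmul_eq_mul]
    rw [sum_congr rfl (fun j hj => if_pos hj), sum_const, card_range, nsmul_eq_mul]
    ring
  have h3 : (#bad : ℝ) * (R ^ 2 / 4) ≤ R * #s + R ^ 2 * B := by
    calc (#bad : ℝ) * (R ^ 2 / 4) = ∑ n ∈ bad, (R : ℝ) ^ 2 / 4 := by rw [sum_const, nsmul_eq_mul]
      _ ≤ ∑ n ∈ bad, ‖∑ j ∈ range R, ee (j * y n)‖ ^ 2 := sum_le_sum hlow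
      _ ≤ ∑ n ∈ s, ‖∑ j ∈ range R, ee (j * y n)‖ ^ 2 :=
        sum_le_sum_of_subset_of_nonneg (filter_subset _ _) fun _ _ _ => by positivity
      _ ≤ _ := hup
  calc (#bad : ℝ) = (#bad : ℝ) * (R ^ 2 / 4) * (4 / R ^ 2) := by field_simp
    _ ≤ (R * #s + R ^ 2 * B) * (4 / R ^ 2) := by gcongr
    _ = _ := by field_simp

/-- Exponential sums with integer parts are controlled by those without. -/
lemma floor_removal {m R : ℕ} (hR : 1 ≤ R) (s : Finset ℕ) (y : ℕ → Fin m → ℝ) {B : ℝ}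
    (hB : ∀ θ : Fin m → ℝ, (∀ i, |θ i| ≤ 2 * R ^ 3) → (∃ i, 1 / 2 ≤ |θ i|) →
      ‖∑ n ∈ s, ee (∑ i, θ i * y n i)‖ ≤ B) (hB0 : 0 ≤ B) (ξ : Fin m → ℝ) (hξ : ∀ i, |ξ i| ≤ 1 / 2) :
    ‖∑ n ∈ s, ee (∑ i, ξ i * ⌊y n i⌋)‖ ≤ ‖∑ n ∈ s, ee (∑ i, ξ i * y n i)‖ +
      ((3 * R ^ 3 : ℝ) ^ m + 8 * m) * B + 137 * m * (#s / R) := by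
  classical
  have hR0 : (0 : ℝ) < R := by exact_mod_cast hR
  have hR1 : (1 : ℝ) ≤ R := by exact_mod_cast hR
  have hR31 : (1 : ℝ) ≤ R ^ 3 := one_le_pow₀ hR1
  have hRR3 : (R : ℝ) ≤ R ^ 3 := le_self_pow₀ hR1 (by norm_num)
  choose co hco1 hcoG hcoa using fun i => frac_approx hR (hξ i)
  set I : Finset ℤ := Icc (-(R : ℤ) ^ 3) (R ^ 3) with hI
  set G : Fin m → ℝ → ℂ := fun i t => ∑ h ∈ I, co i h * ee (h * t) with hG
  have e1 : ∀ n, ee (∑ i, ξ i * ⌊y n i⌋) =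
      ee (∑ i, ξ i * y n i) * ∏ i, ee (-ξ i * Int.fract (y n i)) := by
    intro n
    rw [← ee_sum, ← ee_add, ← sum_add_distrib]
    congr 1
    refine sum_congr rfl fun i _ => ?_
    rw [Int.fract]; ring
  set main : ℂ := ∑ n ∈ s, ee (∑ i, ξ i * y n i) * ∏ i, G i (y n i) with hmain
  have herr : ‖∑ n ∈ s, ee (∑ i, ξ i * ⌊y n i⌋) - main‖ ≤ 8 * m * B + 137 * m * (#s / R) := by
    rw [hmain, ← sum_sub_distrib]
    refine (norm_sum_le _ _).trans ?_
    have h1 : ∀ n ∈ s, ‖ee (∑ i, ξ i * ⌊y n i⌋) - ee (∑ i, ξ i * y n i) * ∏ i, G i (y n i)‖ ≤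
        ∑ i, ‖ee (-ξ i * Int.fract (y n i)) - G i (y n i)‖ := by
      intro n _
      rw [e1, ← mul_sub, norm_mul, norm_ee, one_mul]
      exact prod_sub_prod_norm_le _ _ _ (fun i => (norm_ee _).le) (fun i => hcoG i _)
    refine (sum_le_sum h1).trans ?_
    rw [sum_comm]
    have h2 : ∀ i : Fin m, ∑ n ∈ s, ‖ee (-ξ i * Int.fract (y n i)) - G i (y n i)‖ ≤
        8 * B + 137 * (#s / R) := by
      intro i
      set P : ℕ → Prop := fun n => ¬ (1 / (16 * R) ≤ Int.fract (y n i) ∧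
        Int.fract (y n i) ≤ 1 - 1 / (16 * R)) with hP
      have h3 : ∀ n ∈ s, ‖ee (-ξ i * Int.fract (y n i)) - G i (y n i)‖ ≤
          129 / R + if P n then 2 else 0 := by
        intro n _
        split_ifs with h
        · have h4 := norm_sub_le (ee (-ξ i * Int.fract (y n i))) (G i (y n i))
          rw [norm_ee] at h4
          have h5 := hcoG i (y n i)
          have h6 : (0 : ℝ) ≤ 129 / R := by positivity
          have h7 : ‖G i (y n i)‖ ≤ 1 := h5
          linarith
        · rw [hP] at h
          push Not at h
          rw [add_zero]
          exact hcoa i _ h.1 h.2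
      refine (sum_le_sum h3).trans ?_
      have h4 := bad_count hR s (fun n => y n i) (B := B) (by
        intro h hh0 hhR
        have hhr : |(h : ℝ)| ≤ R := by exact_mod_cast hhR
        have hh1 : (1 : ℝ) ≤ |(h : ℝ)| := by exact_mod_cast Int.one_le_abs hh0
        have := hB (fun j => if j = i then (h : ℝ) else 0) (by
          intro j
          split_ifs
          · linarith
          · simp) ⟨i, by simp; linarith⟩
        simpa using this)
      rw [sum_add_distrib, sum_const, nsmul_eq_mul, ← sum_filter, sum_const, nsmul_eq_mul]
      have h5 : (#s : ℝ) * (129 / R) = 129 * (#s / R) := by ring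
      linarith
    refine (sum_le_sum fun i _ => h2 i).trans ?_
    rw [sum_const, card_univ, Fintype.card_fin, nsmul_eq_mul]
    linarith
  have hmain2 : main = ∑ h ∈ Fintype.piFinset (fun _ : Fin m => I), (∏ i, co i (h i)) *
      ∑ n ∈ s, ee (∑ i, (ξ i + h i) * y n i) := by
    simp only [hmain, hG, prod_univ_sum, mul_sum]
    rw [sum_comm]
    refine sum_congr rfl fun h _ => sum_congr rfl fun n _ => ?_
    rw [prod_mul_distrib, ← ee_sum, mul_left_comm, ← ee_add, ← sum_add_distrib]
    congr 3
    funext i; ring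
  have hcop : ∀ h : Fin m → ℤ, ‖∏ i, co i (h i)‖ ≤ 1 := by
    intro h
    rw [norm_prod]; exact prod_le_one (fun _ _ => norm_nonneg _) fun i _ => hco1 i _
  have hmainle : ‖main‖ ≤ ‖∑ n ∈ s, ee (∑ i, ξ i * y n i)‖ + (3 * R ^ 3 : ℝ) ^ m * B := by
    rw [hmain2]
    refine (norm_sum_le _ _).trans ?_
    have h1 : ∀ h ∈ Fintype.piFinset (fun _ : Fin m => I),
        ‖(∏ i, co i (h i)) * ∑ n ∈ s, ee (∑ i, (ξ i + h i) * y n i)‖ ≤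
        (if h = 0 then ‖∑ n ∈ s, ee (∑ i, ξ i * y n i)‖ else 0) + B := by
      intro h hh
      rw [norm_mul]
      have h2 := mul_le_mul_of_nonneg_right (hcop h)
        (norm_nonneg (∑ n ∈ s, ee (∑ i, (ξ i + h i) * y n i)))
      refine h2.trans ?_
      rw [one_mul]
      split_ifs with h0
      · subst h0
        simp [hB0]
      · rw [zero_add]
        apply hB
        · intro i
          have h3 := (Fintype.mem_piFinset.1 hh) i
          rw [hI, mem_Icc] at h3
          have h4 : |(h i : ℝ)| ≤ R ^ 3 := by
            rw [abs_le]; exact ⟨by exact_mod_cast h3.1, by exact_mod_cast h3.2⟩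
          have := abs_add_le (ξ i) (h i)
          have := hξ i
          linarith
        · obtain ⟨i, hi⟩ := Function.ne_iff.1 h0
          refine ⟨i, ?_⟩
          have h3 : (1 : ℝ) ≤ |(h i : ℝ)| := by exact_mod_cast Int.one_le_abs hi
          have h4 := abs_sub_abs_le_abs_sub (h i : ℝ) (-ξ i)
          rw [abs_neg, sub_neg_eq_add, add_comm] at h4
          have := hξ i
          rw [add_comm] at h4
          rw [add_comm]
          linarith
    refine (sum_le_sum h1).trans ?_
    rw [sum_add_distrib, sum_const, nsmul_eq_mul, Fintype.card_piFinset, prod_const, card_univ,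
      Fintype.card_fin, sum_ite_eq' , if_pos]
    · have h5 : (#I : ℝ) ≤ 3 * R ^ 3 := by
        rw [hI, Int.card_Icc]
        have : ((R : ℤ) ^ 3 + 1 - -(R : ℤ) ^ 3).toNat = 2 * R ^ 3 + 1 := by
          have : ((R : ℤ) ^ 3) = ((R ^ 3 : ℕ) : ℤ) := by push_cast; rfl
          rw [this]; omega
        rw [this]; push_cast; linarith
      push_cast
      gcongr
    · rw [Fintype.mem_piFinset]
      intro i
      rw [hI, mem_Icc]
      simp only [Pi.zero_apply]
      constructor
      · have : (0 : ℤ) ≤ (R : ℤ) ^ 3 := by positivity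
        linarith
      · positivity
  have hfin := norm_add_le (∑ n ∈ s, ee (∑ i, ξ i * ⌊y n i⌋) - main) main
  rw [sub_add_cancel] at hfin
  linarith

set_option maxHeartbeats 1000000 in
/-- Decay of the multiplier of the averages along `⌊n ^ c⌋`. -/
lemma mult_decay {m : ℕ} (c : Fin m → ℝ) (hpos : ∀ i, 0 < c i) (hinj : Function.Injective c)
    (hint : ∀ i, ∀ k : ℕ, c i ≠ (k : ℝ)) :
    ∃ C δ : ℝ, 1 ≤ C ∧ 0 < δ ∧ δ ≤ 1 ∧ ∀ (N : ℕ) (ξ : Fin m → ℝ), 1 ≤ N → (∀ i, |ξ i| ≤ 1 / 2) →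
      ∀ i₀, ‖∑ n ∈ Ioc (N / 2) N, ee (∑ i, ξ i * ⌊(n : ℝ) ^ c i⌋)‖ *
        ((N : ℝ) ^ c i₀ * |ξ i₀|) ^ δ ≤ C * N := by
  obtain ⟨C1, δ1, hC1, hδ1, hE⟩ := expsum c hpos hinj hint
  obtain ⟨cm, hcm0, hcm⟩ : ∃ cm : ℝ, 0 < cm ∧ ∀ i, cm ≤ c i := by
    rcases (univ : Finset (Fin m)).eq_empty_or_nonempty with h | h
    · exact ⟨1, one_pos, fun i => absurd (mem_univ i) (by simp [h])⟩
    · obtain ⟨b, _, hb⟩ := exists_min_image univ c h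
      exact ⟨c b, hpos b, fun i => hb i (mem_univ i)⟩
  set D : ℝ := 1 + ∑ i, c i with hD
  have hcD : ∀ i, c i ≤ D := fun i => by
    have := single_le_sum (f := c) (fun j _ => (hpos j).le) (mem_univ i)
    linarith
  have hD1 : 1 ≤ D := by
    have : 0 ≤ ∑ i, c i := sum_nonneg fun i _ => (hpos i).le
    linarith
  set ε : ℝ := min (1 / 6) (cm * δ1 / (3 * m + 1)) with hε
  have hε0 : 0 < ε := by
    apply lt_min (by norm_num); positivity
  have hε6 : ε ≤ 1 / 6 := min_le_left _ _
  have hεm : ε * (3 * m + 1) ≤ cm * δ1 := by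
    have := min_le_right (1 / 6) (cm * δ1 / (3 * m + 1))
    rwa [le_div_iff₀ (by positivity)] at this
  set δ : ℝ := min δ1 (ε / D) with hδ
  have hδ0 : 0 < δ := lt_min hδ1 (by positivity)
  have hδε : δ * D ≤ ε := by
    have := min_le_right δ1 (ε / D)
    rwa [le_div_iff₀ (by positivity)] at this
  have hδle1 : δ ≤ 1 := by nlinarith
  set C2 : ℝ := ((3 : ℝ) ^ m + 8 * m) * (C1 * 2 ^ δ1) + 274 * m with hC2
  have hC20 : 0 ≤ C2 := by positivity
  set C3 : ℝ := ((4 : ℝ) ^ D) ^ δ with hC3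
  have hC30 : 0 ≤ C3 := by positivity
  refine ⟨C1 + C2 + C3, δ, by linarith, hδ0, hδle1, ?_⟩
  intro N ξ hN hξ i₀
  have hNr : (1 : ℝ) ≤ N := by exact_mod_cast hN
  have hN0 : (0 : ℝ) < N := by linarith
  set Z : ℝ := (N : ℝ) ^ c i₀ * |ξ i₀| with hZ
  have hZ0 : 0 ≤ Z := by positivity
  have hZN : Z ≤ (N : ℝ) ^ D := by
    calc Z ≤ (N : ℝ) ^ c i₀ * 1 := mul_le_mul_of_nonneg_left (by linarith [hξ i₀]) (by positivity)
      _ ≤ _ := by rw [mul_one]; exact Real.rpow_le_rpow_of_exponent_le hNr (hcD i₀)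
  have hcard : (#(Ioc (N / 2) N) : ℝ) ≤ N := by
    rw [Nat.card_Ioc]; exact_mod_cast Nat.sub_le _ _
  have htriv : ‖∑ n ∈ Ioc (N / 2) N, ee (∑ i, ξ i * ⌊(n : ℝ) ^ c i⌋)‖ ≤ N :=
    (norm_sum_ee_le _ _).trans hcard
  set S := ‖∑ n ∈ Ioc (N / 2) N, ee (∑ i, ξ i * ⌊(n : ℝ) ^ c i⌋)‖ with hS
  have hS0 : 0 ≤ S := norm_nonneg _
  rcases lt_or_ge Z 1 with hZ1 | hZ1
  · calc S * Z ^ δ ≤ N * 1 :=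
        mul_le_mul htriv (Real.rpow_le_one hZ0 hZ1.le hδ0.le) (by positivity) (by positivity)
      _ ≤ _ := by nlinarith
  rcases lt_or_ge N 4 with hN4 | hN4
  · have h4 : (N : ℝ) ≤ 4 := by exact_mod_cast hN4.le
    have : Z ^ δ ≤ C3 := by
      rw [hC3]
      refine Real.rpow_le_rpow hZ0 (hZN.trans ?_) hδ0.le
      exact Real.rpow_le_rpow hN0.le h4 (by linarith)
    calc S * Z ^ δ ≤ N * C3 := mul_le_mul htriv this (by positivity) (by positivity)
      _ ≤ _ := by nlinarith
  have hN4r : (4 : ℝ) ≤ N := by exact_mod_cast hN4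
  set R : ℕ := ⌊(N : ℝ) ^ ε⌋₊ with hR
  have hNε1 : 1 ≤ (N : ℝ) ^ ε := Real.one_le_rpow hNr hε0.le
  have hR1 : 1 ≤ R := by rw [hR, Nat.one_le_floor_iff]; exact hNε1
  have hR1r : (1 : ℝ) ≤ R := by exact_mod_cast hR1
  have hRle : (R : ℝ) ≤ (N : ℝ) ^ ε := Nat.floor_le (by positivity)
  have hRge : (N : ℝ) ^ ε ≤ 2 * R := by
    have := Nat.lt_floor_add_one ((N : ℝ) ^ ε)
    rw [← hR] at this
    linarith
  have hR3 : (R : ℝ) ^ 3 ≤ (N : ℝ) ^ (3 * ε) := by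
    calc (R : ℝ) ^ 3 ≤ ((N : ℝ) ^ ε) ^ 3 := by gcongr
      _ = _ := by rw [← Real.rpow_natCast, ← Real.rpow_mul hN0.le]; congr 1; push_cast; ring
  have hR3N : 2 * (R : ℝ) ^ 3 ≤ N := by
    have h1 : (N : ℝ) ^ (3 * ε) ≤ Real.sqrt N := by
      rw [Real.sqrt_eq_rpow]
      exact Real.rpow_le_rpow_of_exponent_le hNr (by linarith)
    have h2 : 2 ≤ Real.sqrt N := Real.le_sqrt_of_sq_le (by linarith)
    have h3 := Real.mul_self_sqrt hN0.le
    nlinarith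
  set W : ℝ := (N : ℝ) ^ (-ε) with hW
  have hW0 : 0 < W := by positivity
  set V : ℝ := (N : ℝ) ^ (-(cm * δ1)) with hV
  have hV0 : 0 < V := by positivity
  have hVW : V ≤ W := by
    apply Real.rpow_le_rpow_of_exponent_le hNr
    have : 0 ≤ ε * (3 * m) := by positivity
    linarith
  set B : ℝ := C1 * 2 ^ δ1 * N * V with hB
  have hB0 : 0 ≤ B := by positivity
  have hfr := floor_removal hR1 (Ioc (N / 2) N) (fun n i => (n : ℝ) ^ c i) (B := B) (by
    rintro θ hθ ⟨i, hi⟩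
    have h1 := hE N θ hN (fun i => (hθ i).trans hR3N) i
    have h2 : ((N : ℝ) ^ cm * (1 / 2)) ^ δ1 ≤ ((N : ℝ) ^ c i * |θ i|) ^ δ1 := by
      have h3 := Real.rpow_le_rpow_of_exponent_le hNr (hcm i)
      gcongr
    have h4 : ((N : ℝ) ^ cm * (1 / 2)) ^ δ1 * (2 ^ δ1 * V) = 1 := by
      rw [Real.mul_rpow (by positivity) (by norm_num), ← Real.rpow_mul hN0.le, hV]
      rw [show (N : ℝ) ^ (cm * δ1) * (1 / 2) ^ δ1 * (2 ^ δ1 * (N : ℝ) ^ (-(cm * δ1))) =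
        ((N : ℝ) ^ (cm * δ1) * (N : ℝ) ^ (-(cm * δ1))) * ((1 / 2) ^ δ1 * 2 ^ δ1) by ring,
        ← Real.rpow_add hN0, ← Real.mul_rpow (by norm_num) (by norm_num)]
      norm_num
    set E := ‖∑ n ∈ Ioc (N / 2) N, ee (∑ i, θ i * (n : ℝ) ^ c i)‖
    have hE0 : 0 ≤ E := norm_nonneg _
    calc E = E * ((N : ℝ) ^ cm * (1 / 2)) ^ δ1 * (2 ^ δ1 * V) := by rw [mul_assoc, h4, mul_one]
      _ ≤ C1 * N * (2 ^ δ1 * V) :=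
        mul_le_mul_of_nonneg_right ((mul_le_mul_of_nonneg_left h2 hE0).trans h1) (by positivity)
      _ = _ := by rw [hB]; ring) hB0 ξ hξ
  rw [← hS] at hfr
  have hE1 := hE N ξ hN (fun i => (hξ i).trans (by linarith)) i₀
  set E := ‖∑ n ∈ Ioc (N / 2) N, ee (∑ i, ξ i * (n : ℝ) ^ c i)‖ with hEd
  have hE0 : 0 ≤ E := norm_nonneg _
  have hNV : (3 * (R : ℝ) ^ 3) ^ m * V ≤ 3 ^ m * W := by
    calc (3 * (R : ℝ) ^ 3) ^ m * V ≤ (3 * (N : ℝ) ^ (3 * ε)) ^ m * V := by gcongr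
      _ = 3 ^ m * ((N : ℝ) ^ (3 * ε * m) * V) := by
        rw [mul_pow, ← Real.rpow_natCast ((N : ℝ) ^ (3 * ε)), ← Real.rpow_mul hN0.le]; ring
      _ ≤ 3 ^ m * W := by
        rw [hV, ← Real.rpow_add hN0]
        have : (N : ℝ) ^ (3 * ε * m + -(cm * δ1)) ≤ W :=
          Real.rpow_le_rpow_of_exponent_le hNr (by linarith)
        gcongr
  have hinvR : (1 : ℝ) / R ≤ 2 * W := by
    rw [div_le_iff₀ (by linarith), hW, Real.rpow_neg hN0.le]
    have h0 : 0 < (N : ℝ) ^ ε := by positivity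
    calc (1 : ℝ) = ((N : ℝ) ^ ε)⁻¹ * (N : ℝ) ^ ε := by field_simp
      _ ≤ ((N : ℝ) ^ ε)⁻¹ * (2 * R) := by gcongr
      _ = _ := by ring
  have hSle : S ≤ E + C2 * N * W := by
    refine hfr.trans ?_
    have h1 : ((3 * (R : ℝ) ^ 3) ^ m + 8 * m) * B ≤ ((3 : ℝ) ^ m + 8 * m) * (C1 * 2 ^ δ1) * N * W := by
      calc ((3 * (R : ℝ) ^ 3) ^ m + 8 * m) * B
          = ((3 * (R : ℝ) ^ 3) ^ m * V + 8 * m * V) * (C1 * 2 ^ δ1 * N) := by rw [hB]; ring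
        _ ≤ (3 ^ m * W + 8 * m * W) * (C1 * 2 ^ δ1 * N) := by gcongr
        _ = _ := by ring
    have h2 : 137 * m * (#(Ioc (N / 2) N) / (R : ℝ)) ≤ 274 * m * N * W := by
      calc 137 * m * (#(Ioc (N / 2) N) / (R : ℝ)) ≤ 137 * m * (N / (R : ℝ)) := by gcongr
        _ = 137 * m * N * (1 / R) := by ring
        _ ≤ 137 * m * N * (2 * W) := by gcongr
        _ = _ := by ring
    rw [hC2]
    linarith
  have hEZ : E * Z ^ δ ≤ C1 * N := by
    refine le_trans (mul_le_mul_of_nonneg_left ?_ hE0) hE1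
    exact Real.rpow_le_rpow_of_exponent_le hZ1 (min_le_left _ _)
  have hWZ : W * Z ^ δ ≤ 1 := by
    calc W * Z ^ δ ≤ W * ((N : ℝ) ^ D) ^ δ := by gcongr
      _ = (N : ℝ) ^ (-ε + D * δ) := by
        rw [← Real.rpow_mul hN0.le, hW, ← Real.rpow_add hN0]
      _ ≤ 1 := Real.rpow_le_one_of_one_le_of_nonpos hNr (by linarith)
  calc S * Z ^ δ ≤ (E + C2 * N * W) * Z ^ δ := mul_le_mul_of_nonneg_right hSle (by positivity)
    _ = E * Z ^ δ + C2 * N * (W * Z ^ δ) := by ring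
    _ ≤ C1 * N + C2 * N * 1 := by gcongr
    _ ≤ _ := by nlinarith

/-! ### Fourier multipliers on the lattice -/

lemma exists_torus_measure (m : ℕ) : ∃ (μ : Measure (UnitAddTorus (Fin m))) (_ : IsFiniteMeasure μ),
    Orthonormal ℂ (fun n : Fin m → ℤ =>
      ContinuousMap.toLp (E := ℂ) 2 μ ℂ (UnitAddTorus.mFourier n)) := by
  letI : MeasureSpace UnitAddCircle := ⟨AddCircle.haarAddCircle⟩
  haveI : Measure.IsAddHaarMeasure (volume : Measure UnitAddCircle) :=
    inferInstanceAs (Measure.IsAddHaarMeasure AddCircle.haarAddCircle)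
  haveI : IsProbabilityMeasure (volume : Measure UnitAddCircle) :=
    inferInstanceAs (IsProbabilityMeasure AddCircle.haarAddCircle)
  exact ⟨volume, inferInstance, UnitAddTorus.orthonormal_mFourier⟩

lemma exists_torus_rep {m : ℕ} (t : UnitAddTorus (Fin m)) :
    ∃ ξ : Fin m → ℝ, (∀ i, |ξ i| ≤ 1 / 2) ∧
      ∀ n : Fin m → ℤ, UnitAddTorus.mFourier n t = ee (∑ i, ξ i * n i) := by
  have h : ∀ i, ∃ s : ℝ, |s| ≤ 1 / 2 ∧ (s : UnitAddCircle) = t i := by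
    intro i
    obtain ⟨s, hs⟩ := QuotientAddGroup.mk_surjective (t i)
    refine ⟨s - round s, abs_sub_round s, ?_⟩
    rw [← hs]
    have : ((round s : ℝ) : UnitAddCircle) = 0 := by
      rw [AddCircle.coe_eq_zero_iff]; exact ⟨round s, by simp⟩
    rw [AddCircle.coe_sub, this, sub_zero]
  choose ξ h1 h2 using h
  refine ⟨ξ, h1, fun n => ?_⟩
  simp only [UnitAddTorus.mFourier, ContinuousMap.coe_mk]
  rw [ee_sum]
  refine prod_congr rfl fun i _ => ?_
  rw [← h2 i, fourier_coe_apply, ee]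
  congr 1
  push_cast
  ring

/-- Bessel's identity for trigonometric polynomials. -/
lemma norm_sq_trig {m : ℕ} (μ : Measure (UnitAddTorus (Fin m))) [IsFiniteMeasure μ]
    (ho : Orthonormal ℂ (fun n : Fin m → ℤ =>
      ContinuousMap.toLp (E := ℂ) 2 μ ℂ (UnitAddTorus.mFourier n)))
    (T : Finset (Fin m → ℤ)) (a : (Fin m → ℤ) → ℂ) :
    ‖ContinuousMap.toLp (E := ℂ) 2 μ ℂ (∑ n ∈ T, a n • UnitAddTorus.mFourier n)‖ ^ 2 =
      ∑ n ∈ T, ‖a n‖ ^ 2 := by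
  rw [map_sum]
  simp_rw [map_smul]
  rw [← inner_self_eq_norm_sq (𝕜 := ℂ), ho.inner_sum]
  rw [map_sum]
  refine sum_congr rfl fun n _ => ?_
  rw [Complex.conj_mul']
  norm_cast

/-- A convolution operator with finitely supported kernel is bounded on `ℓ²` by the supremum of
its multiplier. -/
lemma mult_l2 {ι : Type*} {m : ℕ} (S : Finset ι) (w : ι → ℂ) (z : ι → Fin m → ℤ) {K : ℝ}
    (hK0 : 0 ≤ K) (hK : ∀ ξ : Fin m → ℝ, (∀ i, |ξ i| ≤ 1 / 2) →
      ‖∑ n ∈ S, w n * ee (∑ i, ξ i * z n i)‖ ≤ K) (h : (Fin m → ℤ) → ℂ) :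
    nr 2 (fun x => ‖∑ n ∈ S, w n * h (x - z n)‖ₑ) ≤ ENNReal.ofReal K * nr 2 (fun x => ‖h x‖ₑ) := by
  classical
  obtain ⟨μ, _, ho⟩ := exists_torus_measure m
  refine nr_le_of_finset two_pos fun U => ?_
  -- only the values of `h` on the finite set `T` matter
  set T : Finset (Fin m → ℤ) := S.biUnion fun n => U.image fun x => x - z n with hT
  set h' : (Fin m → ℤ) → ℂ := fun x => if x ∈ T then h x else 0 with hh'
  set V : Finset (Fin m → ℤ) := U ∪ S.biUnion fun n => T.image fun x => x + z n with hV
  set g : (Fin m → ℤ) → ℂ := fun x => ∑ n ∈ S, w n * h' (x - z n) with hg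
  have hgU : ∀ x ∈ U, ∑ n ∈ S, w n * h (x - z n) = g x := by
    intro x hx
    refine sum_congr rfl fun n hn => ?_
    have : x - z n ∈ T := mem_biUnion.2 ⟨n, hn, mem_image.2 ⟨x, hx, rfl⟩⟩
    simp only [hh', this, if_true]
  have hpoly : ∀ t, (∑ x ∈ V, g x • UnitAddTorus.mFourier x : C(UnitAddTorus (Fin m), ℂ)) t =
      (∑ n ∈ S, w n * UnitAddTorus.mFourier (z n) t) *
        (∑ x ∈ T, h' x • UnitAddTorus.mFourier x : C(UnitAddTorus (Fin m), ℂ)) t := by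
    intro t
    simp only [ContinuousMap.coe_sum, Finset.sum_apply, ContinuousMap.coe_smul, Pi.smul_apply,
      smul_eq_mul, hg, sum_mul]
    rw [sum_comm]
    refine sum_congr rfl fun n hn => ?_
    rw [mul_sum]
    have e1 : ∀ x ∈ T, w n * UnitAddTorus.mFourier (z n) t * (h' x * UnitAddTorus.mFourier x t) =
        w n * h' (x + z n - z n) * UnitAddTorus.mFourier (x + z n) t := by
      intro x _
      rw [UnitAddTorus.mFourier_add, add_sub_cancel_right]; ring
    rw [sum_congr rfl e1, ← sum_image (f := fun y => w n * h' (y - z n) * UnitAddTorus.mFourier y t)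
      (g := fun x => x + z n) (fun a _ b _ hab => add_right_cancel hab)]
    symm
    refine sum_subset ?_ ?_
    · exact (subset_biUnion_of_mem (fun n => T.image fun x => x + z n) hn).trans subset_union_right
    · intro y _ hy
      have : y - z n ∉ T := fun hc => hy (mem_image.2 ⟨y - z n, hc, by simp⟩)
      simp [hh', this]
  have hreal : (∑ x ∈ V, ‖g x‖ ^ 2 : ℝ) ≤ K ^ 2 * ∑ x ∈ T, ‖h' x‖ ^ 2 := by
    rw [← norm_sq_trig μ ho, ← norm_sq_trig μ ho, ← mul_pow]
    refine pow_le_pow_left₀ (norm_nonneg _) ?_ 2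
    refine Lp.norm_le_mul_norm_of_ae_le_mul ?_
    filter_upwards [ContinuousMap.coeFn_toLp (p := 2) (𝕜 := ℂ) μ (∑ x ∈ V, g x • UnitAddTorus.mFourier x),
      ContinuousMap.coeFn_toLp (p := 2) (𝕜 := ℂ) μ (∑ x ∈ T, h' x • UnitAddTorus.mFourier x)] with t h1 h2
    rw [h1, h2, hpoly t, norm_mul]
    refine mul_le_mul_of_nonneg_right ?_ (norm_nonneg _)
    obtain ⟨ξ, hξ, he⟩ := exists_torus_rep t
    simp only [he]
    exact hK ξ hξ
  have hcv : ∀ (A : Finset (Fin m → ℤ)) (φ : (Fin m → ℤ) → ℂ),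
      ∑ x ∈ A, ‖φ x‖ₑ ^ (2:ℝ) = ENNReal.ofReal (∑ x ∈ A, ‖φ x‖ ^ 2) := by
    intro A φ
    rw [ENNReal.ofReal_sum_of_nonneg fun _ _ => by positivity]
    refine sum_congr rfl fun x _ => ?_
    rw [← ofReal_norm, ENNReal.ofReal_rpow_of_nonneg (norm_nonneg _) (by norm_num)]
    norm_cast
  rw [ENNReal.rpow_inv_le_iff two_pos, ENNReal.mul_rpow_of_nonneg _ _ two_pos.le, nr_rpow two_pos]
  calc ∑ x ∈ U, ‖∑ n ∈ S, w n * h (x - z n)‖ₑ ^ (2:ℝ) = ∑ x ∈ U, ‖g x‖ₑ ^ (2:ℝ) :=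
        sum_congr rfl fun x hx => by rw [hgU x hx]
    _ ≤ ∑ x ∈ V, ‖g x‖ₑ ^ (2:ℝ) := sum_le_sum_of_subset subset_union_left
    _ ≤ ENNReal.ofReal (K ^ 2 * ∑ x ∈ T, ‖h' x‖ ^ 2) := by
        rw [hcv]; exact ENNReal.ofReal_le_ofReal hreal
    _ = ENNReal.ofReal K ^ (2:ℝ) * ∑ x ∈ T, ‖h' x‖ₑ ^ (2:ℝ) := by
        rw [ENNReal.ofReal_mul (by positivity), hcv, ENNReal.ofReal_rpow_of_nonneg hK0 (by norm_num)]
        norm_cast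
    _ = ENNReal.ofReal K ^ (2:ℝ) * ∑ x ∈ T, ‖h x‖ₑ ^ (2:ℝ) := by
        congr 1
        refine sum_congr rfl fun x hx => ?_
        simp only [hh', hx, if_true]
    _ ≤ ENNReal.ofReal K ^ (2:ℝ) * ∑' x, ‖h x‖ₑ ^ (2:ℝ) :=
        mul_le_mul_right (ENNReal.sum_le_tsum T) _

/-! ### The anisotropic dyadic grid -/

/-- The dyadic exponent `⌊k c_i⌋` of the `i`-th side of the boxes of level `k`. -/
def bdy {m : ℕ} (c : Fin m → ℝ) (i : Fin m) (k : ℕ) : ℕ := ⌊(k : ℝ) * c i⌋₊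

/-- The length of the `i`-th side of the boxes of level `k`. -/
def side {m : ℕ} (c : Fin m → ℝ) (i : Fin m) (k : ℕ) : ℤ := 2 ^ bdy c i k

/-- The dyadic box of level `k` containing `x`. -/
def dbox {m : ℕ} (c : Fin m → ℝ) (k : ℕ) (x : Fin m → ℤ) : Finset (Fin m → ℤ) :=
  Fintype.piFinset fun i => Ico (side c i k * (x i / side c i k))
    (side c i k * (x i / side c i k) + side c i k)

lemma side_pos {m : ℕ} (c : Fin m → ℝ) (i : Fin m) (k : ℕ) : 0 < side c i k := by
  unfold side; positivity

lemma mem_Ico_iff_ediv {L q y : ℤ} (hL : 0 < L) : y ∈ Ico (L * q) (L * q + L) ↔ y / L = q := by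
  rw [mem_Ico]
  constructor
  · rintro ⟨h1, h2⟩
    apply le_antisymm
    · have : y / L < q + 1 := Int.ediv_lt_of_lt_mul hL (by linarith)
      omega
    · exact (Int.le_ediv_iff_mul_le hL).2 (by linarith)
  · rintro rfl
    have h1 := Int.mul_ediv_add_emod y L
    have h2 := Int.emod_nonneg y hL.ne'
    have h3 := Int.emod_lt_of_pos y hL
    constructor <;> linarith

lemma mem_dbox {m : ℕ} {c : Fin m → ℝ} {k : ℕ} {x y : Fin m → ℤ} :
    y ∈ dbox c k x ↔ ∀ i, y i / side c i k = x i / side c i k := by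
  simp only [dbox, Fintype.mem_piFinset]
  exact forall_congr' fun i => mem_Ico_iff_ediv (side_pos c i k)

lemma dbox_congr {m : ℕ} {c : Fin m → ℝ} {k : ℕ} {x y : Fin m → ℤ} (h : y ∈ dbox c k x) :
    dbox c k y = dbox c k x := by
  rw [mem_dbox] at h
  unfold dbox
  simp only [h]

lemma bdy_le {m : ℕ} {c : Fin m → ℝ} (hpos : ∀ i, 0 < c i) (i : Fin m) (k : ℕ) :
    (bdy c i k : ℝ) ≤ k * c i := Nat.floor_le (by have := hpos i; positivity)

lemma lt_bdy {m : ℕ} (c : Fin m → ℝ) (i : Fin m) (k : ℕ) :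
    (k : ℝ) * c i < bdy c i k + 1 := Nat.lt_floor_add_one _

lemma bdy_mono {m : ℕ} {c : Fin m → ℝ} (hpos : ∀ i, 0 < c i) (i : Fin m) : Monotone (bdy c i) :=
  fun a b hab => Nat.floor_mono (by have := hpos i; gcongr)

lemma bdy_succ {m : ℕ} {c : Fin m → ℝ} (hpos : ∀ i, 0 < c i) (i : Fin m) (k : ℕ) :
    bdy c i (k + 1) ≤ bdy c i k + (⌈c i⌉₊ + 1) := by
  have h1 := bdy_le hpos i (k + 1)
  have h2 := lt_bdy c i k
  have h3 := Nat.le_ceil (c i)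
  have : (bdy c i (k + 1) : ℝ) ≤ bdy c i k + (⌈c i⌉₊ + 1) := by
    push_cast at h1; linarith
  exact_mod_cast this

lemma card_dbox {m : ℕ} (c : Fin m → ℝ) (k : ℕ) (x : Fin m → ℤ) :
    (dbox c k x).card = ∏ i, 2 ^ bdy c i k := by
  simp only [dbox, Fintype.card_piFinset, Int.card_Ico, add_sub_cancel_left]
  refine prod_congr rfl fun i _ => ?_
  have : side c i k = ((2 ^ bdy c i k : ℕ) : ℤ) := by simp [side]
  rw [this, Int.toNat_natCast]

/-- The grid of anisotropic dyadic boxes, with sides comparable to `2 ^ (k c_i)`. -/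
def dboxGrid {m : ℕ} (hm : 0 < m) (c : Fin m → ℝ) (hpos : ∀ i, 0 < c i) : Grid (Fin m → ℤ) where
  cell := dbox c
  w k := ∏ i, 2 ^ bdy c i k
  D := ∏ i, 2 ^ (⌈c i⌉₊ + 1)
  mem_self k x := mem_dbox.2 fun _ => rfl
  eq_of_mem k x y h := dbox_congr h
  sub_succ k x := by
    intro y hy
    rw [mem_dbox] at hy ⊢
    intro i
    have e : side c i (k + 1) = side c i k * 2 ^ (bdy c i (k + 1) - bdy c i k) := by
      unfold side
      rw [← pow_add, Nat.add_sub_cancel' (bdy_mono hpos i (Nat.le_succ k))]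
    rw [e, ← Int.ediv_ediv_of_nonneg (side_pos c i k).le, hy i, Int.ediv_ediv_of_nonneg (side_pos c i k).le]
  card_cell := card_dbox c
  w_succ k := by
    rw [← prod_mul_distrib]
    refine prod_le_prod' fun i _ => ?_
    rw [← pow_add]
    refine Nat.pow_le_pow_right two_pos ?_
    have := bdy_succ hpos i k
    omega
  cell_zero x := by
    ext y
    rw [mem_dbox, mem_singleton]
    simp [side, bdy, funext_iff]
  w_tend := by
    have h1 : Tendsto (bdy c ⟨0, hm⟩) atTop atTop := by
      unfold bdy
      exact tendsto_nat_floor_atTop.comp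
        (tendsto_natCast_atTop_atTop.atTop_mul_const (hpos _))
    refine tendsto_atTop_mono (fun k => ?_) h1
    calc bdy c ⟨0, hm⟩ k ≤ 2 ^ bdy c ⟨0, hm⟩ k := Nat.lt_two_pow_self.le
      _ ≤ ∏ i, 2 ^ bdy c i k :=
        single_le_prod' (f := fun i => 2 ^ bdy c i k) (fun i _ => Nat.one_le_two_pow) (mem_univ _)

/-- The enlarged box of level `s` around `y`. -/
def nearBox {m : ℕ} (c : Fin m → ℝ) (K : ℕ) (s : ℕ) (y : Fin m → ℤ) : Finset (Fin m → ℤ) :=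
  Fintype.piFinset fun i => Ico (side c i s * (y i / side c i s) - K * side c i s)
    (side c i s * (y i / side c i s) + (K + 2) * side c i s)

lemma nearBox_congr {m : ℕ} {c : Fin m → ℝ} (K : ℕ) {s : ℕ} {y y' : Fin m → ℤ}
    (h : y' ∈ dbox c s y) : nearBox c K s y' = nearBox c K s y := by
  rw [mem_dbox] at h
  unfold nearBox
  simp only [h]

lemma card_nearBox {m : ℕ} (c : Fin m → ℝ) (K s : ℕ) (y : Fin m → ℤ) :
    (nearBox c K s y).card = (2 * K + 2) ^ m * ∏ i, 2 ^ bdy c i s := by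
  have e : ∀ i, (side c i s * (y i / side c i s) + (K + 2) * side c i s -
      (side c i s * (y i / side c i s) - K * side c i s)).toNat = (2 * K + 2) * 2 ^ bdy c i s := by
    intro i
    have : side c i s * (y i / side c i s) + (K + 2) * side c i s -
      (side c i s * (y i / side c i s) - K * side c i s) =
        (((2 * K + 2) * 2 ^ bdy c i s : ℕ) : ℤ) := by
      push_cast [side]; ring
    rw [this, Int.toNat_natCast]
  simp only [nearBox, Fintype.card_piFinset, Int.card_Ico, e, prod_mul_distrib]
  simp

lemma mem_nearBox {m : ℕ} {c : Fin m → ℝ} {K s : ℕ} {x y : Fin m → ℤ}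
    (h : ∀ i, |x i - y i| ≤ K * side c i s) : x ∈ nearBox c K s y := by
  simp only [nearBox, Fintype.mem_piFinset, mem_Ico]
  intro i
  have h0 := side_pos c i s
  have h1 := Int.mul_ediv_add_emod (y i) (side c i s)
  have h2 := Int.emod_nonneg (y i) h0.ne'
  have h3 := Int.emod_lt_of_pos (y i) h0
  have h4 := abs_le.1 (h i)
  constructor <;> nlinarith

lemma box_sub_nearBox {m : ℕ} {c : Fin m → ℝ} (K s : ℕ) (y : Fin m → ℤ) :
    dbox c s y ⊆ nearBox c K s y := by
  intro x hx
  simp only [dbox, nearBox, Fintype.mem_piFinset, mem_Ico] at hx ⊢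
  intro i
  have h0 := side_pos c i s
  have := hx i
  constructor <;> nlinarith

/-! ### Short variations -/

lemma enorm_sub_le_sum_Ico (b : ℕ → ℂ) {u v : ℕ} (h : u ≤ v) :
    ‖b v - b u‖ₑ ≤ ∑ n ∈ Ico u v, ‖b (n + 1) - b n‖ₑ := by
  rw [← sum_Ico_sub b h]
  exact enorm_sum_le _ _

lemma chain_le_sum_Ico (b : ℕ → ℂ) {A e : ℕ} (J : ℕ) {v : ℕ → ℕ} (hv : Monotone v)
    (hD : ∀ j, v j ∈ Set.Icc A e) :
    ∑ j ∈ range J, ‖b (v (j + 1)) - b (v j)‖ₑ ≤ ∑ n ∈ Ico A e, ‖b (n + 1) - b n‖ₑ := by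
  have h : ∀ J, ∑ j ∈ range J, ‖b (v (j + 1)) - b (v j)‖ₑ ≤
      ∑ n ∈ Ico (v 0) (v J), ‖b (n + 1) - b n‖ₑ := by
    intro J
    induction J with
    | zero => simp
    | succ J ih =>
      rw [sum_range_succ, ← sum_Ico_consecutive _ (hv (Nat.zero_le J)) (hv (Nat.le_succ J))]
      exact add_le_add ih (enorm_sub_le_sum_Ico b (hv (Nat.le_succ J)))
  refine (h J).trans (sum_le_sum_of_subset ?_)
  exact Ico_subset_Ico (hD 0).1 (hD J).2

/-- The variation of `b` over the dyadic block `[2^k, 2^(k+1)]`. -/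
def shortV1 (b : ℕ → ℂ) (k : ℕ) : ℝ≥0∞ := ∑ n ∈ Ico (2 ^ k) (2 ^ (k + 1)), ‖b (n + 1) - b n‖ₑ

/-- The `2`-variation norm of `b` over the dyadic block `[2^k, 2^(k+1)]`. -/
def shortV (b : ℕ → ℂ) (k : ℕ) : ℝ≥0∞ :=
  W 2 b (Set.Icc (2 ^ k) (2 ^ (k + 1))) ^ (2 : ℝ)⁻¹ + ‖b (2 ^ k)‖ₑ

lemma shortV_add_le (b b' : ℕ → ℂ) (k : ℕ) :
    shortV (fun n => b n + b' n) k ≤ shortV b k + shortV b' k := by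
  unfold shortV
  calc _ ≤ (W 2 b (Set.Icc (2 ^ k) (2 ^ (k + 1))) ^ (2 : ℝ)⁻¹ +
        W 2 b' (Set.Icc (2 ^ k) (2 ^ (k + 1))) ^ (2 : ℝ)⁻¹) + (‖b (2 ^ k)‖ₑ + ‖b' (2 ^ k)‖ₑ) :=
        add_le_add (W_add_le one_le_two b b' _) (enorm_add_le _ _)
    _ = _ := by ring

lemma ennreal_rpow_two (a : ℝ≥0∞) : a ^ (2:ℝ) = a * a := by
  rw [← pow_two]; exact_mod_cast ENNReal.rpow_natCast a 2

lemma W_two_le (b : ℕ → ℂ) (k : ℕ) {M : ℝ≥0∞}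
    (hM : ∀ u ∈ Set.Icc (2 ^ k) (2 ^ (k + 1)), ∀ v ∈ Set.Icc (2 ^ k) (2 ^ (k + 1)),
      ‖b v - b u‖ₑ ≤ M) : W 2 b (Set.Icc (2 ^ k) (2 ^ (k + 1))) ≤ M * shortV1 b k := by
  refine W_le fun J v hv hD => ?_
  calc ∑ j ∈ range J, ‖b (v (j + 1)) - b (v j)‖ₑ ^ (2:ℝ)
      ≤ ∑ j ∈ range J, M * ‖b (v (j + 1)) - b (v j)‖ₑ := by
        refine sum_le_sum fun j _ => ?_
        rw [ennreal_rpow_two]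
        exact mul_le_mul_left (hM _ (hD j) _ (hD (j + 1))) _
    _ = M * ∑ j ∈ range J, ‖b (v (j + 1)) - b (v j)‖ₑ := by rw [mul_sum]
    _ ≤ _ := mul_le_mul_right (chain_le_sum_Ico b J hv hD) _

lemma W_two_le_shortV1 (b : ℕ → ℂ) (k : ℕ) :
    W 2 b (Set.Icc (2 ^ k) (2 ^ (k + 1))) ^ (2:ℝ)⁻¹ ≤ shortV1 b k := by
  rw [ENNReal.rpow_inv_le_iff two_pos, ennreal_rpow_two]
  have key : ∀ u ∈ Set.Icc (2 ^ k) (2 ^ (k + 1)), ∀ v ∈ Set.Icc (2 ^ k) (2 ^ (k + 1)), u ≤ v →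
      ‖b v - b u‖ₑ ≤ shortV1 b k := fun u hu v hv huv =>
    (enorm_sub_le_sum_Ico b huv).trans (sum_le_sum_of_subset (Ico_subset_Ico hu.1 hv.2))
  refine W_two_le b k fun u hu v hv => ?_
  rcases le_total u v with h | h
  · exact key u hu v hv h
  · rw [enorm_sub_rev]; exact key v hv u hu h

lemma enorm_le_shortV (b : ℕ → ℂ) (k : ℕ) {N : ℕ} (hN : N ∈ Set.Icc (2 ^ k) (2 ^ (k + 1))) :
    ‖b N‖ₑ ≤ shortV b k := by
  have h1 : ‖b N‖ₑ ≤ ‖b N - b (2 ^ k)‖ₑ + ‖b (2 ^ k)‖ₑ := by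
    calc ‖b N‖ₑ = ‖(b N - b (2 ^ k)) + b (2 ^ k)‖ₑ := by rw [sub_add_cancel]
      _ ≤ _ := enorm_add_le _ _
  refine h1.trans (add_le_add_left ?_ _)
  rw [ENNReal.le_rpow_inv_iff two_pos]
  have hk : 2 ^ k ≤ 2 ^ (k + 1) := Nat.pow_le_pow_right two_pos (Nat.le_succ k)
  have := le_W 2 b (D := Set.Icc (2 ^ k) (2 ^ (k + 1))) 1 (v := fun j => if j = 0 then 2 ^ k else N)
    (by
      intro i j hij
      dsimp only
      split_ifs with h1 h2
      · exact le_rfl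
      · exact hN.1
      · omega
      · exact le_rfl)
    (by
      intro j
      split_ifs
      · exact ⟨le_rfl, hk⟩
      · exact hN)
  simpa using this

lemma ennreal_add_sq_le (a b : ℝ≥0∞) : (a + b) ^ (2:ℝ) ≤ 2 * (a ^ (2:ℝ) + b ^ (2:ℝ)) := by
  have := ENNReal.rpow_add_le_mul_rpow_add_rpow a b (one_le_two : (1:ℝ) ≤ 2)
  norm_num at this ⊢
  exact this

/-- A pointwise bound for the maximum over a dyadic block, by sampling at spacing `L`. -/
def sampleMax (b : ℕ → ℂ) (k L : ℕ) : ℝ≥0∞ :=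
  2 * (∑ t ∈ range (2 ^ k / L + 1), ‖b (2 ^ k + L * t)‖ₑ ^ (2:ℝ) +
    ∑ t ∈ range (2 ^ k / L + 1), (∑ u ∈ range (L - 1),
      ‖b (2 ^ k + L * t + u + 1) - b (2 ^ k + L * t + u)‖ₑ) ^ (2:ℝ))

lemma enorm_le_sampleMax (b : ℕ → ℂ) (k : ℕ) {L : ℕ} (hL : 0 < L) {N : ℕ}
    (hN : N ∈ Set.Icc (2 ^ k) (2 ^ (k + 1))) : ‖b N‖ₑ ^ (2:ℝ) ≤ sampleMax b k L := by
  obtain ⟨h1, h2⟩ := hN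
  set t := (N - 2 ^ k) / L with ht
  set q := (N - 2 ^ k) % L with hq
  have hdiv : L * t + q = N - 2 ^ k := Nat.div_add_mod _ _
  have hqL : q < L := Nat.mod_lt _ hL
  have htr : t ∈ range (2 ^ k / L + 1) := by
    rw [mem_range, Nat.lt_succ_iff]
    exact Nat.div_le_div_right (by rw [pow_succ] at h2; omega)
  have hNe : N = 2 ^ k + L * t + q := by omega
  have h3 : ‖b N‖ₑ ≤ ‖b (2 ^ k + L * t)‖ₑ + ∑ u ∈ range (L - 1),
      ‖b (2 ^ k + L * t + u + 1) - b (2 ^ k + L * t + u)‖ₑ := by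
    calc ‖b N‖ₑ = ‖b (2 ^ k + L * t) + (b N - b (2 ^ k + L * t))‖ₑ := by rw [add_sub_cancel]
      _ ≤ ‖b (2 ^ k + L * t)‖ₑ + ‖b N - b (2 ^ k + L * t)‖ₑ := enorm_add_le _ _
      _ ≤ _ := by
        refine add_le_add_right ?_ _
        refine (enorm_sub_le_sum_Ico b (by omega)).trans ?_
        rw [sum_Ico_eq_sum_range, hNe]
        refine sum_le_sum_of_subset ?_
        intro u hu
        rw [mem_range] at hu ⊢
        omega
  refine (ENNReal.rpow_le_rpow h3 two_pos.le).trans ((ennreal_add_sq_le _ _).trans ?_)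
  unfold sampleMax
  refine mul_le_mul_right (add_le_add ?_ ?_) _
  · exact single_le_sum (f := fun t => ‖b (2 ^ k + L * t)‖ₑ ^ (2:ℝ)) (fun _ _ => zero_le) htr
  · exact single_le_sum (f := fun t => (∑ u ∈ range (L - 1),
      ‖b (2 ^ k + L * t + u + 1) - b (2 ^ k + L * t + u)‖ₑ) ^ (2:ℝ)) (fun _ _ => zero_le) htr

set_option maxHeartbeats 1000000 in
/-- If the functions `b N` are small in `ℓ²` and vary slowly with `N`, then their `2`-variation
norm over a dyadic block is small in `ℓ²`. -/
lemma short_var {X : Type*} (b : ℕ → X → ℂ) (k : ℕ) {a e : ℝ} (ha : 0 < a) (he : 0 < e)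
    (he1 : e ≤ 1) (q : ℝ≥0∞)
    (h1 : ∀ N ∈ Set.Icc (2 ^ k) (2 ^ (k + 1)), nr 2 (fun x => ‖b N x‖ₑ) ≤ ENNReal.ofReal (a * e ^ 2) * q)
    (h2 : ∀ N, 2 ^ k ≤ N → nr 2 (fun x => ‖b (N + 1) x - b N x‖ₑ) ≤ ENNReal.ofReal (a / 2 ^ k) * q) :
    ∑' x, shortV (fun N => b N x) k ^ (2:ℝ) ≤ ENNReal.ofReal (30 * a ^ 2 * e) * q ^ (2:ℝ) := by
  have hk : 2 ^ k ≤ 2 ^ (k + 1) := Nat.pow_le_pow_right two_pos (Nat.le_succ k)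
  have hkp : (0:ℝ) < 2 ^ k := by positivity
  set L : ℕ := ⌊e ^ 2 * 2 ^ k⌋₊ + 1 with hL
  have hL0 : 0 < L := Nat.succ_pos _
  have hL1 : ((L - 1 : ℕ) : ℝ) ≤ e ^ 2 * 2 ^ k := by
    rw [hL, Nat.add_sub_cancel]; exact Nat.floor_le (by positivity)
  have hL2 : e ^ 2 * 2 ^ k ≤ L := by
    rw [hL]; push_cast; exact (Nat.lt_floor_add_one _).le
  have hcnt : ((2 ^ k / L + 1 : ℕ) : ℝ) ≤ 2 / e ^ 2 := by
    have h3 : ((2 ^ k / L : ℕ) : ℝ) ≤ 1 / e ^ 2 := by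
      refine Nat.cast_div_le.trans ?_
      rw [div_le_div_iff₀ (by positivity) (by positivity)]
      push_cast; linarith
    have h4 : 1 ≤ 1 / e ^ 2 := by
      rw [le_div_iff₀ (by positivity)]; nlinarith
    push_cast
    have : 2 / e ^ 2 = 1 / e ^ 2 + 1 / e ^ 2 := by ring
    linarith
  have hV1 : nr 2 (fun x => shortV1 (fun N => b N x) k) ≤ ENNReal.ofReal a * q := by
    unfold shortV1
    refine (nr_finset_sum_le one_le_two _ _).trans ?_
    calc ∑ n ∈ Ico (2 ^ k) (2 ^ (k + 1)), nr 2 (fun x => ‖b (n + 1) x - b n x‖ₑ)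
        ≤ ∑ n ∈ Ico (2 ^ k) (2 ^ (k + 1)), ENNReal.ofReal (a / 2 ^ k) * q :=
          sum_le_sum fun n hn => h2 n (mem_Ico.1 hn).1
      _ = ENNReal.ofReal a * q := by
          rw [sum_const, Nat.card_Ico, nsmul_eq_mul, ← mul_assoc]
          congr 1
          have : 2 ^ (k + 1) - 2 ^ k = 2 ^ k := by rw [pow_succ]; omega
          rw [this, ← ENNReal.ofReal_natCast, ← ENNReal.ofReal_mul (by positivity)]
          congr 1
          push_cast
          field_simp
  have hM : ∑' x, sampleMax (fun N => b N x) k L ≤ (ENNReal.ofReal (3 * a * e) * q) ^ (2:ℝ) := by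
    unfold sampleMax
    rw [ENNReal.tsum_mul_left, ENNReal.tsum_add, Summable.tsum_finsetSum (fun _ _ => ENNReal.summable),
      Summable.tsum_finsetSum (fun _ _ => ENNReal.summable)]
    have hb1 : ∀ t ∈ range (2 ^ k / L + 1), ∑' x, ‖b (2 ^ k + L * t) x‖ₑ ^ (2:ℝ) ≤
        ENNReal.ofReal (a * e ^ 2) ^ (2:ℝ) * q ^ (2:ℝ) := by
      intro t ht
      rw [← nr_rpow two_pos, ← ENNReal.mul_rpow_of_nonneg _ _ two_pos.le]
      refine ENNReal.rpow_le_rpow (h1 _ ⟨Nat.le_add_right _ _, ?_⟩) two_pos.le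
      rw [mem_range, Nat.lt_succ_iff] at ht
      have := (Nat.mul_le_mul_left L ht).trans (Nat.mul_div_le (2 ^ k) L)
      rw [pow_succ]; omega
    have hb2 : ∀ t ∈ range (2 ^ k / L + 1), ∑' x, (∑ u ∈ range (L - 1),
        ‖b (2 ^ k + L * t + u + 1) x - b (2 ^ k + L * t + u) x‖ₑ) ^ (2:ℝ) ≤
        ENNReal.ofReal (a * e ^ 2) ^ (2:ℝ) * q ^ (2:ℝ) := by
      intro t _
      rw [← nr_rpow two_pos, ← ENNReal.mul_rpow_of_nonneg _ _ two_pos.le]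
      refine ENNReal.rpow_le_rpow ?_ two_pos.le
      refine (nr_finset_sum_le one_le_two _ _).trans ?_
      calc ∑ u ∈ range (L - 1), nr 2 (fun x => ‖b (2 ^ k + L * t + u + 1) x - b (2 ^ k + L * t + u) x‖ₑ)
          ≤ ∑ u ∈ range (L - 1), ENNReal.ofReal (a / 2 ^ k) * q :=
            sum_le_sum fun u _ => h2 _ (by omega)
        _ ≤ _ := by
            rw [sum_const, card_range, nsmul_eq_mul, ← mul_assoc, ← ENNReal.ofReal_natCast,
              ← ENNReal.ofReal_mul (by positivity)]
            refine mul_le_mul_left (ENNReal.ofReal_le_ofReal ?_) _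
            calc ((L - 1 : ℕ) : ℝ) * (a / 2 ^ k) ≤ (e ^ 2 * 2 ^ k) * (a / 2 ^ k) := by gcongr
              _ = a * e ^ 2 := by field_simp
    have hs := add_le_add (sum_le_sum hb1) (sum_le_sum hb2)
    refine (mul_le_mul_right hs 2).trans ?_
    rw [sum_const, card_range, nsmul_eq_mul, ENNReal.mul_rpow_of_nonneg _ _ two_pos.le]
    have e1 : ∀ y : ℝ≥0∞, 2 * (((2 ^ k / L + 1 : ℕ) : ℝ≥0∞) * (y * q ^ (2:ℝ)) +
      ((2 ^ k / L + 1 : ℕ) : ℝ≥0∞) * (y * q ^ (2:ℝ))) = (4 * ((2 ^ k / L + 1 : ℕ) : ℝ≥0∞) * y) * q ^ (2:ℝ) := by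
      intro y; ring
    rw [e1]
    refine mul_le_mul_left ?_ _
    rw [ennreal_rpow_two, ennreal_rpow_two, ← ENNReal.ofReal_natCast, ← ENNReal.ofReal_mul (by positivity),
      ← ENNReal.ofReal_mul (by positivity), show (4 : ℝ≥0∞) = ENNReal.ofReal 4 by norm_num,
      ← ENNReal.ofReal_mul (by norm_num), ← ENNReal.ofReal_mul (by positivity)]
    refine ENNReal.ofReal_le_ofReal ?_
    calc 4 * ((2 ^ k / L + 1 : ℕ) : ℝ) * (a * e ^ 2 * (a * e ^ 2)) ≤ 4 * (2 / e ^ 2) * (a * e ^ 2 * (a * e ^ 2)) := by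
          gcongr
      _ = 8 * a ^ 2 * e ^ 2 := by field_simp; ring
      _ ≤ 3 * a * e * (3 * a * e) := by nlinarith [sq_nonneg (a * e)]
  set M : X → ℝ≥0∞ := fun x => sampleMax (fun N => b N x) k L ^ (2:ℝ)⁻¹ with hMd
  have hM2 : ∀ x, M x ^ (2:ℝ) = sampleMax (fun N => b N x) k L := fun x => by
    rw [hMd, ← ENNReal.rpow_mul, inv_mul_cancel₀ two_ne_zero, ENNReal.rpow_one]
  have hMn : nr 2 M ≤ ENNReal.ofReal (3 * a * e) * q := nr_le_of two_pos (by simpa only [hM2] using hM)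
  have hbM : ∀ x, ∀ N ∈ Set.Icc (2 ^ k) (2 ^ (k + 1)), ‖b N x‖ₑ ≤ M x := fun x N hN =>
    (ENNReal.le_rpow_inv_iff two_pos).2 (enorm_le_sampleMax (fun N => b N x) k hL0 hN)
  have hpt : ∀ x, shortV (fun N => b N x) k ^ (2:ℝ) ≤
      4 * (M x * shortV1 (fun N => b N x) k) + 2 * M x ^ (2:ℝ) := by
    intro x
    unfold shortV
    refine (ennreal_add_sq_le _ _).trans ?_
    rw [← ENNReal.rpow_mul, inv_mul_cancel₀ two_ne_zero, ENNReal.rpow_one, mul_add]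
    have hw := W_two_le (fun N => b N x) k (M := 2 * M x) (fun u hu v hv => by
      refine (enorm_sub_le).trans ?_
      rw [two_mul]; exact add_le_add (hbM x v hv) (hbM x u hu))
    refine add_le_add ?_ ?_
    · refine (mul_le_mul_right hw 2).trans (le_of_eq ?_)
      ring
    · exact mul_le_mul_right (ENNReal.rpow_le_rpow (hbM x _ ⟨le_rfl, hk⟩) two_pos.le) _
  have h22 : (2:ℝ).HolderConjugate 2 := Real.HolderConjugate.two_two
  calc ∑' x, shortV (fun N => b N x) k ^ (2:ℝ)
      ≤ ∑' x, (4 * (M x * shortV1 (fun N => b N x) k) + 2 * M x ^ (2:ℝ)) := ENNReal.tsum_le_tsum hpt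
    _ = 4 * ∑' x, M x * shortV1 (fun N => b N x) k + 2 * nr 2 M ^ (2:ℝ) := by
        rw [ENNReal.tsum_add, ENNReal.tsum_mul_left, ENNReal.tsum_mul_left, nr_rpow two_pos]
    _ ≤ 4 * ((ENNReal.ofReal (3 * a * e) * q) * (ENNReal.ofReal a * q)) +
        2 * (ENNReal.ofReal (3 * a * e) * q) ^ (2:ℝ) := by
        refine add_le_add (mul_le_mul_right ?_ _) (mul_le_mul_right (ENNReal.rpow_le_rpow hMn two_pos.le) _)
        exact (tsum_mul_le_nr h22 _ _).trans (mul_le_mul' hMn hV1)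
    _ = (4 * (ENNReal.ofReal (3 * a * e) * ENNReal.ofReal a) +
        2 * (ENNReal.ofReal (3 * a * e) * ENNReal.ofReal (3 * a * e))) * q ^ (2:ℝ) := by
        rw [ennreal_rpow_two, ennreal_rpow_two]; ring
    _ ≤ _ := by
        refine mul_le_mul_left ?_ _
        rw [← ENNReal.ofReal_mul (by positivity), ← ENNReal.ofReal_mul (by positivity),
          show (4 : ℝ≥0∞) = ENNReal.ofReal 4 by norm_num, show (2 : ℝ≥0∞) = ENNReal.ofReal 2 by norm_num,
          ← ENNReal.ofReal_mul (by norm_num), ← ENNReal.ofReal_mul (by norm_num),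
          ← ENNReal.ofReal_add (by positivity) (by positivity)]
        refine ENNReal.ofReal_le_ofReal ?_
        have : a ^ 2 * e ^ 2 ≤ a ^ 2 * e := by
          have : e ^ 2 ≤ e := by nlinarith
          gcongr
        nlinarith

/-! ### Upper-half averages -/

/-- The upper-half average of a sequence. -/
def avg (N : ℕ) (s : ℕ → ℂ) : ℂ := (N : ℂ)⁻¹ * ∑ n ∈ Ioc (N / 2) N, s n

lemma avg_add (N : ℕ) (s t : ℕ → ℂ) : avg N (fun n => s n + t n) = avg N s + avg N t := by
  simp only [avg, sum_add_distrib, mul_add]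

lemma enorm_natCast_inv {N : ℕ} (hN : 1 ≤ N) : ‖(N : ℂ)⁻¹‖ₑ = (N : ℝ≥0∞)⁻¹ := by
  rw [enorm_inv (Nat.cast_ne_zero.2 (by omega))]
  congr 1
  rw [← ofReal_norm]; simp

lemma enorm_avg_le {N : ℕ} (hN : 1 ≤ N) (s : ℕ → ℂ) :
    ‖avg N s‖ₑ ≤ (N : ℝ≥0∞)⁻¹ * ∑ n ∈ Ioc (N / 2) N, ‖s n‖ₑ := by
  rw [avg, enorm_mul, enorm_natCast_inv hN]
  exact mul_le_mul_right (enorm_sum_le _ _) _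

lemma sum_Ioc_half_succ (N : ℕ) (s : ℕ → ℂ) : ∑ n ∈ Ioc ((N + 1) / 2) (N + 1), s n =
    ∑ n ∈ Ioc (N / 2) N, s n + s (N + 1) - (if N % 2 = 1 then s ((N + 1) / 2) else 0) := by
  rw [sum_Ioc_succ_top (by omega)]
  split_ifs with h
  · have e : (N + 1) / 2 = N / 2 + 1 := by omega
    rw [e, ← sum_Ioc_consecutive s (Nat.le_succ (N / 2)) (show N / 2 + 1 ≤ N by omega)]
    simp
    ring
  · have e : (N + 1) / 2 = N / 2 := by omega
    rw [e, sub_zero]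

lemma avg_succ_sub_le {N : ℕ} (hN : 1 ≤ N) (s : ℕ → ℂ) : ‖avg (N + 1) s - avg N s‖ₑ ≤
    (N : ℝ≥0∞)⁻¹ * (‖s (N + 1)‖ₑ + ‖s ((N + 1) / 2)‖ₑ +
      (N : ℝ≥0∞)⁻¹ * ∑ n ∈ Ioc (N / 2) N, ‖s n‖ₑ) := by
  set t : ℂ := if N % 2 = 1 then s ((N + 1) / 2) else 0 with ht
  have h0 : (N : ℂ) ≠ 0 := Nat.cast_ne_zero.2 (by omega)
  have h1 : ((N : ℂ) + 1) ≠ 0 := by exact_mod_cast (Nat.succ_ne_zero N)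
  have e : avg (N + 1) s - avg N s = ((N + 1 : ℕ) : ℂ)⁻¹ * (s (N + 1) - t - avg N s) := by
    rw [avg, sum_Ioc_half_succ, ← ht, avg]
    push_cast
    field_simp
    ring
  have hle : ((N + 1 : ℕ) : ℝ≥0∞)⁻¹ ≤ (N : ℝ≥0∞)⁻¹ :=
    ENNReal.inv_le_inv.2 (by exact_mod_cast Nat.le_succ N)
  have htn : ‖t‖ₑ ≤ ‖s ((N + 1) / 2)‖ₑ := by
    rw [ht]; split_ifs <;> simp
  rw [e, enorm_mul, enorm_natCast_inv (by omega)]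
  refine mul_le_mul' hle ?_
  refine (enorm_sub_le).trans (add_le_add ?_ (enorm_avg_le hN s))
  exact (enorm_sub_le).trans (add_le_add_right htn _)

lemma sum_half_le (F : ℕ → ℝ≥0∞) (M : ℕ) :
    ∑ N ∈ range (2 * M), F ((N + 1) / 2) ≤ 2 * ∑ n ∈ range (M + 1), F n := by
  have h : ∀ M, ∑ N ∈ range (2 * M), F ((N + 1) / 2) + F M ≤ 2 * ∑ n ∈ range (M + 1), F n := by
    intro M
    induction M with
    | zero => simp [two_mul]
    | succ M ih =>
      have e1 : (2 * M + 1) / 2 = M := by omega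
      have e2 : (2 * M + 1 + 1) / 2 = M + 1 := by omega
      rw [show 2 * (M + 1) = 2 * M + 1 + 1 by ring, sum_range_succ, sum_range_succ, e1, e2,
        sum_range_succ, mul_add]
      calc _ = (∑ N ∈ range (2 * M), F ((N + 1) / 2) + F M) + 2 * F (M + 1) := by ring
        _ ≤ _ := add_le_add_left ih _
  exact le_self_add.trans (h M)

lemma shortV1_avg_le (s : ℕ → ℂ) (k : ℕ) : shortV1 (fun N => avg N s) k ≤
    4 * ((2 ^ k : ℕ) : ℝ≥0∞)⁻¹ * ∑ n ∈ range (2 ^ (k + 1) + 1), ‖s n‖ₑ := by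
  set Q := ∑ n ∈ range (2 ^ (k + 1) + 1), ‖s n‖ₑ with hQ
  set κ := ((2 ^ k : ℕ) : ℝ≥0∞)⁻¹ with hκ
  have hk0 : 0 < 2 ^ k := by positivity
  have hk2 : 2 ^ (k + 1) = 2 ^ k + 2 ^ k := by rw [pow_succ]; omega
  have hκ1 : ((2 ^ k : ℕ) : ℝ≥0∞) * κ = 1 :=
    ENNReal.mul_inv_cancel (Nat.cast_ne_zero.2 hk0.ne') (ENNReal.natCast_ne_top _)
  have hstep : ∀ N ∈ Ico (2 ^ k) (2 ^ (k + 1)), ‖avg (N + 1) s - avg N s‖ₑ ≤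
      κ * (‖s (N + 1)‖ₑ + ‖s ((N + 1) / 2)‖ₑ + κ * Q) := by
    intro N hN
    rw [mem_Ico] at hN
    have hle : (N : ℝ≥0∞)⁻¹ ≤ κ := ENNReal.inv_le_inv.2 (by exact_mod_cast hN.1)
    refine (avg_succ_sub_le (by omega) s).trans ?_
    refine mul_le_mul' hle (add_le_add_right (mul_le_mul' hle ?_) _)
    refine sum_le_sum_of_subset fun n hn => ?_
    rw [mem_Ioc] at hn
    rw [mem_range]; omega
  have h1 : ∑ N ∈ Ico (2 ^ k) (2 ^ (k + 1)), ‖s (N + 1)‖ₑ ≤ Q := by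
    rw [sum_Ico_add' (fun n => ‖s n‖ₑ)]
    refine sum_le_sum_of_subset fun n hn => ?_
    rw [mem_Ico] at hn
    rw [mem_range]; omega
  have h2 : ∑ N ∈ Ico (2 ^ k) (2 ^ (k + 1)), ‖s ((N + 1) / 2)‖ₑ ≤ 2 * Q := by
    calc ∑ N ∈ Ico (2 ^ k) (2 ^ (k + 1)), ‖s ((N + 1) / 2)‖ₑ
        ≤ ∑ N ∈ range (2 * 2 ^ k), ‖s ((N + 1) / 2)‖ₑ := by
          refine sum_le_sum_of_subset fun n hn => ?_
          rw [mem_Ico] at hn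
          rw [mem_range]; omega
      _ ≤ _ := sum_half_le (fun n => ‖s n‖ₑ) _
      _ ≤ _ := by
        refine mul_le_mul_right (sum_le_sum_of_subset fun n hn => ?_) _
        rw [mem_range] at hn ⊢; omega
  calc shortV1 (fun N => avg N s) k
      ≤ ∑ N ∈ Ico (2 ^ k) (2 ^ (k + 1)), κ * (‖s (N + 1)‖ₑ + ‖s ((N + 1) / 2)‖ₑ + κ * Q) :=
        sum_le_sum hstep
    _ = κ * (∑ N ∈ Ico (2 ^ k) (2 ^ (k + 1)), ‖s (N + 1)‖ₑ +
        ∑ N ∈ Ico (2 ^ k) (2 ^ (k + 1)), ‖s ((N + 1) / 2)‖ₑ + ((2 ^ k : ℕ) : ℝ≥0∞) * κ * Q) := by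
        rw [← mul_sum, sum_add_distrib, sum_add_distrib, sum_const, Nat.card_Ico,
          show 2 ^ (k + 1) - 2 ^ k = 2 ^ k by omega, nsmul_eq_mul, mul_assoc]
    _ ≤ κ * (Q + 2 * Q + 1 * Q) := by
        rw [hκ1]
        exact mul_le_mul_right (add_le_add_left (add_le_add h1 h2) _) _
    _ = _ := by ring

lemma shortV_avg_le (s : ℕ → ℂ) (k : ℕ) : shortV (fun N => avg N s) k ≤
    5 * ((2 ^ k : ℕ) : ℝ≥0∞)⁻¹ * ∑ n ∈ range (2 ^ (k + 1) + 1), ‖s n‖ₑ := by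
  have hk0 : 0 < 2 ^ k := by positivity
  have hk2 : 2 ^ (k + 1) = 2 ^ k + 2 ^ k := by rw [pow_succ]; omega
  have h1 : ‖avg (2 ^ k) s‖ₑ ≤ ((2 ^ k : ℕ) : ℝ≥0∞)⁻¹ * ∑ n ∈ range (2 ^ (k + 1) + 1), ‖s n‖ₑ := by
    refine (enorm_avg_le hk0 s).trans (mul_le_mul_right (sum_le_sum_of_subset fun n hn => ?_) _)
    rw [mem_Ioc] at hn
    rw [mem_range]; omega
  unfold shortV
  refine (add_le_add ((W_two_le_shortV1 _ k).trans (shortV1_avg_le s k)) h1).trans (le_of_eq ?_)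
  ring

lemma nr_P_le {X : Type*} (G : Grid X) {p : ℝ} (hp : 1 ≤ p) (k : ℕ) (F : X → ℝ≥0∞) : nr p (G.P k F) ≤ nr p F := by
  have h0 : 0 < p := by linarith
  refine nr_le_of h0 ?_
  rw [nr_rpow h0, ← G.tsum_P k (fun x => F x ^ p)]
  exact ENNReal.tsum_le_tsum fun x => G.P_jensen k hp F x

/-! ### The operators on a dyadic block -/

section ops

variable {X : Type*} [AddCommGroup X] (G : Grid X) (z : ℕ → X)

/-- The average along the orbit `z`, with the conditional expectation of level `k` removed. -/
def bop (k N : ℕ) (f : X → ℂ) (x : X) : ℂ := avg N (fun n => f (x - z n) - G.E k f x)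

lemma bop_add (k N : ℕ) (f g : X → ℂ) (x : X) :
    bop G z k N (f + g) x = bop G z k N f x + bop G z k N g x := by
  unfold bop
  rw [← avg_add]
  congr 1
  funext n
  rw [G.E_add, Pi.add_apply]; ring

/-- The `2`-variation of the operators `bop` over the dyadic block of level `k`. -/
def blockV (k : ℕ) (f : X → ℂ) (x : X) : ℝ≥0∞ := shortV (fun N => bop G z k N f x) k

lemma blockV_sub (k : ℕ) (f g : X → ℂ) (x : X) :
    blockV G z k (f + g) x ≤ blockV G z k f x + blockV G z k g x := by
  unfold blockV
  simp only [bop_add]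
  exact shortV_add_le _ _ k

open Classical in
/-- The kernel dominating `blockV`. -/
def bker (k : ℕ) (x y : X) : ℝ≥0∞ :=
  5 * ((2 ^ k : ℕ) : ℝ≥0∞)⁻¹ * (∑ n ∈ range (2 ^ (k + 1) + 1), if y = x - z n then 1 else 0) +
    15 * ((G.w k : ℝ≥0∞)⁻¹ * if y ∈ G.cell k x then 1 else 0)

lemma tsum_bker (k : ℕ) (F : X → ℝ≥0∞) (x : X) : ∑' y, bker G z k x y * F y =
    5 * ((2 ^ k : ℕ) : ℝ≥0∞)⁻¹ * ∑ n ∈ range (2 ^ (k + 1) + 1), F (x - z n) + 15 * G.P k F x := by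
  classical
  simp only [bker, add_mul, mul_assoc, sum_mul]
  rw [ENNReal.tsum_add]
  simp only [ENNReal.tsum_mul_left]
  rw [Summable.tsum_finsetSum (fun _ _ => ENNReal.summable)]
  simp only [ite_mul, one_mul, zero_mul, tsum_ite_eq, Grid.P]
  congr 3
  rw [tsum_eq_sum (s := G.cell k x) (fun y hy => by simp [hy])]
  exact sum_congr rfl fun y hy => by simp [hy]

lemma tsum_bker' (k : ℕ) (F : X → ℝ≥0∞) (y : X) : ∑' x, bker G z k x y * F x =
    5 * ((2 ^ k : ℕ) : ℝ≥0∞)⁻¹ * ∑ n ∈ range (2 ^ (k + 1) + 1), F (y + z n) + 15 * G.P k F y := by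
  classical
  have e : ∀ x n, (y = x - z n) = (x = y + z n) := fun x n => by
    rw [eq_iff_iff, eq_sub_iff_add_eq, eq_comm]
  have e2 : ∀ x, (y ∈ G.cell k x) = (x ∈ G.cell k y) := fun x => by rw [eq_iff_iff, G.mem_iff]
  simp only [bker, add_mul, mul_assoc, sum_mul, e, e2]
  rw [ENNReal.tsum_add]
  simp only [ENNReal.tsum_mul_left]
  rw [Summable.tsum_finsetSum (fun _ _ => ENNReal.summable)]
  simp only [ite_mul, one_mul, zero_mul, tsum_ite_eq, Grid.P]
  congr 3
  rw [tsum_eq_sum (s := G.cell k y) (fun y hy => by simp [hy])]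
  exact sum_congr rfl fun y hy => by simp [hy]

lemma three_bound (k : ℕ) : ((2 ^ k : ℕ) : ℝ≥0∞)⁻¹ * ((2 ^ (k + 1) + 1 : ℕ) : ℝ≥0∞) ≤ 3 := by
  have hk0 : 0 < 2 ^ k := by positivity
  have h : 2 ^ (k + 1) + 1 ≤ 2 ^ k * 3 := by rw [pow_succ]; omega
  calc ((2 ^ k : ℕ) : ℝ≥0∞)⁻¹ * ((2 ^ (k + 1) + 1 : ℕ) : ℝ≥0∞)
      ≤ ((2 ^ k : ℕ) : ℝ≥0∞)⁻¹ * ((2 ^ k * 3 : ℕ) : ℝ≥0∞) :=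
        mul_le_mul_right (by exact_mod_cast h) _
    _ = 3 := by
        rw [Nat.cast_mul, ← mul_assoc, ENNReal.inv_mul_cancel (Nat.cast_ne_zero.2 hk0.ne')
          (ENNReal.natCast_ne_top _), one_mul]
        norm_num

lemma bker_row (k : ℕ) (x : X) : ∑' y, bker G z k x y ≤ ENNReal.ofReal 30 := by
  have h := tsum_bker G z k (fun _ => 1) x
  simp only [mul_one, sum_const, card_range, nsmul_eq_mul, G.P_const] at h
  rw [h]
  calc _ = 5 * (((2 ^ k : ℕ) : ℝ≥0∞)⁻¹ * ((2 ^ (k + 1) + 1 : ℕ) : ℝ≥0∞)) + 15 := by rw [mul_assoc]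
    _ ≤ 5 * 3 + 15 := add_le_add_left (mul_le_mul_right (three_bound k) _) _
    _ = _ := by norm_num

lemma bker_col (k : ℕ) (y : X) : ∑' x, bker G z k x y ≤ ENNReal.ofReal 30 := by
  have h := tsum_bker' G z k (fun _ => 1) y
  simp only [mul_one, sum_const, card_range, nsmul_eq_mul, G.P_const] at h
  rw [h]
  calc _ = 5 * (((2 ^ k : ℕ) : ℝ≥0∞)⁻¹ * ((2 ^ (k + 1) + 1 : ℕ) : ℝ≥0∞)) + 15 := by rw [mul_assoc]
    _ ≤ 5 * 3 + 15 := add_le_add_left (mul_le_mul_right (three_bound k) _) _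
    _ = _ := by norm_num

lemma blockV_le_ker (k : ℕ) (f : X → ℂ) (x : X) :
    blockV G z k f x ≤ ∑' y, bker G z k x y * ‖f y‖ₑ := by
  rw [tsum_bker]
  unfold blockV bop
  refine (shortV_avg_le _ k).trans ?_
  set κ := ((2 ^ k : ℕ) : ℝ≥0∞)⁻¹ with hκ
  have h1 : ∑ n ∈ range (2 ^ (k + 1) + 1), ‖f (x - z n) - G.E k f x‖ₑ ≤
      ∑ n ∈ range (2 ^ (k + 1) + 1), ‖f (x - z n)‖ₑ +
        ((2 ^ (k + 1) + 1 : ℕ) : ℝ≥0∞) * G.P k (fun y => ‖f y‖ₑ) x := by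
    calc _ ≤ ∑ n ∈ range (2 ^ (k + 1) + 1), (‖f (x - z n)‖ₑ + G.P k (fun y => ‖f y‖ₑ) x) :=
          sum_le_sum fun n _ => (enorm_sub_le).trans (add_le_add_right (G.enorm_E_le k f x) _)
      _ = _ := by rw [sum_add_distrib, sum_const, card_range, nsmul_eq_mul]
  refine (mul_le_mul_right h1 _).trans ?_
  rw [mul_add]
  refine add_le_add_right ?_ _
  calc 5 * κ * (((2 ^ (k + 1) + 1 : ℕ) : ℝ≥0∞) * G.P k (fun y => ‖f y‖ₑ) x)
      = 5 * (κ * ((2 ^ (k + 1) + 1 : ℕ) : ℝ≥0∞)) * G.P k (fun y => ‖f y‖ₑ) x := by ring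
    _ ≤ 5 * 3 * G.P k (fun y => ‖f y‖ₑ) x :=
        mul_le_mul_left (mul_le_mul_right (three_bound k) _) _
    _ = _ := by norm_num

lemma nr_translate (p : ℝ) (F : X → ℝ≥0∞) (u : X) : nr p (fun x => F (x - u)) = nr p F := by
  unfold nr
  congr 1
  exact (Equiv.subRight u).tsum_eq (fun x => F x ^ p)

lemma nr_sub_E_le (k : ℕ) (f : X → ℂ) (u : X) :
    nr 2 (fun x => ‖f (x - u) - G.E k f x‖ₑ) ≤ 2 * nr 2 (fun x => ‖f x‖ₑ) := by
  calc nr 2 (fun x => ‖f (x - u) - G.E k f x‖ₑ)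
      ≤ nr 2 (fun x => ‖f (x - u)‖ₑ + G.P k (fun y => ‖f y‖ₑ) x) :=
        nr_mono two_pos fun x => (enorm_sub_le).trans (add_le_add_right (G.enorm_E_le k f x) _)
    _ ≤ _ := nr_add_le one_le_two _ _
    _ ≤ nr 2 (fun x => ‖f x‖ₑ) + nr 2 (fun x => ‖f x‖ₑ) :=
        add_le_add (nr_translate 2 (fun x => ‖f x‖ₑ) u).le (nr_P_le G one_le_two k _)
    _ = _ := by ring

lemma bop_step (k : ℕ) (f : X → ℂ) (N : ℕ) (hN : 2 ^ k ≤ N) :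
    nr 2 (fun x => ‖bop G z k (N + 1) f x - bop G z k N f x‖ₑ) ≤
      ENNReal.ofReal (8 / 2 ^ k) * nr 2 (fun x => ‖f x‖ₑ) := by
  set q := nr 2 (fun x => ‖f x‖ₑ) with hq
  have hk0 : 0 < 2 ^ k := by positivity
  have hN1 : 1 ≤ N := by omega
  have hs : ∀ n, nr 2 (fun x => ‖f (x - z n) - G.E k f x‖ₑ) ≤ 2 * q := fun n => nr_sub_E_le G k f _
  have hcard : (N : ℝ≥0∞)⁻¹ * ((#(Ioc (N / 2) N) : ℕ) : ℝ≥0∞) ≤ 1 := by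
    rw [Nat.card_Ioc]
    calc (N : ℝ≥0∞)⁻¹ * ((N - N / 2 : ℕ) : ℝ≥0∞) ≤ (N : ℝ≥0∞)⁻¹ * (N : ℝ≥0∞) :=
          mul_le_mul_right (by exact_mod_cast Nat.sub_le _ _) _
      _ ≤ 1 := ENNReal.inv_mul_le_one _
  have hsum : nr 2 (fun x => ∑ n ∈ Ioc (N / 2) N, ‖f (x - z n) - G.E k f x‖ₑ) ≤
      ((#(Ioc (N / 2) N) : ℕ) : ℝ≥0∞) * (2 * q) := by
    refine (nr_finset_sum_le one_le_two _ _).trans ?_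
    refine (sum_le_sum fun n _ => hs n).trans ?_
    rw [sum_const, nsmul_eq_mul]
  calc nr 2 (fun x => ‖bop G z k (N + 1) f x - bop G z k N f x‖ₑ)
      ≤ nr 2 (fun x => (N : ℝ≥0∞)⁻¹ * ((‖f (x - z (N + 1)) - G.E k f x‖ₑ +
          ‖f (x - z ((N + 1) / 2)) - G.E k f x‖ₑ) +
          (N : ℝ≥0∞)⁻¹ * ∑ n ∈ Ioc (N / 2) N, ‖f (x - z n) - G.E k f x‖ₑ)) :=
        nr_mono two_pos fun x => avg_succ_sub_le hN1 _
    _ ≤ (N : ℝ≥0∞)⁻¹ * ((2 * q + 2 * q) + (N : ℝ≥0∞)⁻¹ * (((#(Ioc (N / 2) N) : ℕ) : ℝ≥0∞) * (2 * q))) := by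
        rw [nr_const_mul two_pos]
        refine mul_le_mul_right ?_ _
        refine (nr_add_le one_le_two _ _).trans (add_le_add ?_ ?_)
        · exact (nr_add_le one_le_two _ _).trans (add_le_add (hs _) (hs _))
        · rw [nr_const_mul two_pos]
          exact mul_le_mul_right hsum _
    _ = (N : ℝ≥0∞)⁻¹ * ((2 * q + 2 * q) + ((N : ℝ≥0∞)⁻¹ * ((#(Ioc (N / 2) N) : ℕ) : ℝ≥0∞)) * (2 * q)) := by
        rw [mul_assoc (N : ℝ≥0∞)⁻¹]
    _ ≤ (N : ℝ≥0∞)⁻¹ * ((2 * q + 2 * q) + 1 * (2 * q)) :=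
        mul_le_mul_right (add_le_add_right (mul_le_mul_left hcard _) _) _
    _ = (6 * (N : ℝ≥0∞)⁻¹) * q := by ring
    _ ≤ _ := by
        refine mul_le_mul_left ?_ _
        rw [ENNReal.ofReal_div_of_pos (by positivity), ENNReal.div_eq_inv_mul, mul_comm]
        refine mul_le_mul' (ENNReal.inv_le_inv.2 ?_) (by norm_num)
        rw [ENNReal.ofReal_pow (by norm_num)]
        simp only [ENNReal.ofReal_ofNat]
        exact_mod_cast hN

end ops

/-! ### Translations of functions constant on boxes -/

lemma card_shift_bad {L : ℤ} (hL : 0 < L) (q v : ℤ) :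
    #{t ∈ Ico (L * q) (L * q + L) | (t - v) / L ≠ t / L} ≤ v.natAbs := by
  rcases le_total 0 v with hv | hv
  · refine (card_le_card (t := Ico (L * q) (L * q + v)) ?_).trans ?_
    · intro t ht
      rw [mem_filter] at ht
      obtain ⟨h1, h2⟩ := ht
      rw [(mem_Ico_iff_ediv hL).1 h1, Ne, ← mem_Ico_iff_ediv hL, mem_Ico] at h2
      rw [mem_Ico] at h1 ⊢
      omega
    · rw [Int.card_Ico]; omega
  · refine (card_le_card (t := Ico (L * q + L + v) (L * q + L)) ?_).trans ?_
    · intro t ht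
      rw [mem_filter] at ht
      obtain ⟨h1, h2⟩ := ht
      rw [(mem_Ico_iff_ediv hL).1 h1, Ne, ← mem_Ico_iff_ediv hL, mem_Ico] at h2
      rw [mem_Ico] at h1 ⊢
      omega
    · rw [Int.card_Ico]; omega

lemma card_box_bad {m : ℕ} (c : Fin m → ℝ) (j : ℕ) (u x : Fin m → ℤ) (i : Fin m) :
    2 ^ bdy c i j * #{y ∈ dbox c j x | (y i - u i) / side c i j ≠ y i / side c i j} ≤
      (u i).natAbs * ∏ i', 2 ^ bdy c i' j := by
  classical
  set Bd := {t ∈ Ico (side c i j * (x i / side c i j)) (side c i j * (x i / side c i j) + side c i j) |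
    (t - u i) / side c i j ≠ t / side c i j} with hBd
  have hsub : {y ∈ dbox c j x | (y i - u i) / side c i j ≠ y i / side c i j} ⊆
      Fintype.piFinset fun i' => if i' = i then Bd else Ico (side c i' j * (x i' / side c i' j))
        (side c i' j * (x i' / side c i' j) + side c i' j) := by
    intro y hy
    rw [mem_filter, dbox, Fintype.mem_piFinset] at hy
    rw [Fintype.mem_piFinset]
    intro i'
    split_ifs with h
    · subst h
      exact mem_filter.2 ⟨hy.1 i', hy.2⟩
    · exact hy.1 i'
  have hcard := card_le_card hsub
  rw [Fintype.card_piFinset, ← mul_prod_erase univ _ (mem_univ i)] at hcard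
  simp only [if_true] at hcard
  have e : ∏ i' ∈ univ.erase i, #(if i' = i then Bd else Ico (side c i' j * (x i' / side c i' j))
        (side c i' j * (x i' / side c i' j) + side c i' j)) = ∏ i' ∈ univ.erase i, 2 ^ bdy c i' j := by
    refine prod_congr rfl fun i' hi' => ?_
    rw [if_neg (ne_of_mem_erase hi'), Int.card_Ico, add_sub_cancel_left]
    have : side c i' j = ((2 ^ bdy c i' j : ℕ) : ℤ) := by simp [side]
    rw [this, Int.toNat_natCast]
  rw [e] at hcard
  rw [← mul_prod_erase univ (fun i' => 2 ^ bdy c i' j) (mem_univ i)]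
  calc _ ≤ 2 ^ bdy c i j * (#Bd * ∏ i' ∈ univ.erase i, 2 ^ bdy c i' j) := Nat.mul_le_mul_left _ hcard
    _ ≤ 2 ^ bdy c i j * ((u i).natAbs * ∏ i' ∈ univ.erase i, 2 ^ bdy c i' j) :=
        Nat.mul_le_mul_left _ (Nat.mul_le_mul_right _ (card_shift_bad (side_pos c i j) _ _))
    _ = _ := by ring

section transl

variable {m : ℕ} (hm : 0 < m) (c : Fin m → ℝ) (hpos : ∀ i, 0 < c i)

open Classical in
/-- The proportion of the points of a box moved out of it by a translation. -/
lemma P_bad_le (j : ℕ) (u x : Fin m → ℤ) :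
    (dboxGrid hm c hpos).P j (fun y => if y - u ∈ dbox c j y then 0 else 1) x ≤
      ∑ i, ((u i).natAbs : ℝ≥0∞) * ((2 ^ bdy c i j : ℕ) : ℝ≥0∞)⁻¹ := by
  have hw0 : (((dboxGrid hm c hpos).w j : ℕ) : ℝ≥0∞) ≠ 0 := (dboxGrid hm c hpos).wE_ne_zero x j
  have hwt : (((dboxGrid hm c hpos).w j : ℕ) : ℝ≥0∞) ≠ ⊤ := ENNReal.natCast_ne_top _
  have h1 : ∑ y ∈ dbox c j x, (if y - u ∈ dbox c j y then (0:ℝ≥0∞) else 1) ≤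
      ∑ i, (#{y ∈ dbox c j x | (y i - u i) / side c i j ≠ y i / side c i j} : ℝ≥0∞) := by
    calc ∑ y ∈ dbox c j x, (if y - u ∈ dbox c j y then (0:ℝ≥0∞) else 1)
        ≤ ∑ y ∈ dbox c j x, ∑ i, (if (y i - u i) / side c i j ≠ y i / side c i j then (1:ℝ≥0∞) else 0) := by
          refine sum_le_sum fun y _ => ?_
          split_ifs with h
          · exact zero_le
          · rw [mem_dbox] at h
            push Not at h
            obtain ⟨i, hi⟩ := h
            refine le_trans ?_ (single_le_sum (f := fun i => if (y i - u i) / side c i j ≠ y i / side c i j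
              then (1:ℝ≥0∞) else 0) (fun _ _ => zero_le) (mem_univ i))
            rw [Pi.sub_apply] at hi
            simp [hi]
      _ = _ := by
          rw [sum_comm]
          refine sum_congr rfl fun i _ => ?_
          rw [sum_boole]
  unfold Grid.P
  refine (mul_le_mul_right h1 _).trans ?_
  rw [mul_sum]
  refine sum_le_sum fun i _ => ?_
  have h2 := card_box_bad c j u x i
  have hb0 : ((2 ^ bdy c i j : ℕ) : ℝ≥0∞) ≠ 0 := Nat.cast_ne_zero.2 (by positivity)
  have h3 : (((2 ^ bdy c i j * #{y ∈ dbox c j x | (y i - u i) / side c i j ≠ y i / side c i j} : ℕ)) : ℝ≥0∞) ≤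
    (((u i).natAbs * ∏ i', 2 ^ bdy c i' j : ℕ) : ℝ≥0∞) := by exact_mod_cast h2
  rw [Nat.cast_mul, Nat.cast_mul] at h3
  have hbt : ((2 ^ bdy c i j : ℕ) : ℝ≥0∞) ≠ ⊤ := ENNReal.natCast_ne_top _
  rw [← ENNReal.div_eq_inv_mul, ENNReal.div_le_iff hw0 hwt]
  calc _ = ((2 ^ bdy c i j : ℕ) : ℝ≥0∞)⁻¹ * (((2 ^ bdy c i j : ℕ) : ℝ≥0∞) *
        (#{y ∈ dbox c j x | (y i - u i) / side c i j ≠ y i / side c i j} : ℝ≥0∞)) := by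
        rw [← mul_assoc, ENNReal.inv_mul_cancel hb0 hbt, one_mul]
    _ ≤ ((2 ^ bdy c i j : ℕ) : ℝ≥0∞)⁻¹ * (((u i).natAbs : ℝ≥0∞) *
        (((dboxGrid hm c hpos).w j : ℕ) : ℝ≥0∞)) := mul_le_mul_right h3 _
    _ = _ := by ring

lemma translation_le (j : ℕ) (g : (Fin m → ℤ) → ℂ) (hg : (dboxGrid hm c hpos).Ad j g)
    (u : Fin m → ℤ) {τ : ℝ≥0∞} (hτ : ∑ i, ((u i).natAbs : ℝ≥0∞) * ((2 ^ bdy c i j : ℕ) : ℝ≥0∞)⁻¹ ≤ τ) :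
    ∑' x, ‖g (x - u) - g x‖ₑ ^ (2:ℝ) ≤ 4 * τ * ∑' x, ‖g x‖ₑ ^ (2:ℝ) := by
  classical
  set G := dboxGrid hm c hpos with hG
  set bad : (Fin m → ℤ) → (Fin m → ℤ) → ℝ≥0∞ := fun v y => if y - v ∈ dbox c j y then 0 else 1 with hbad
  have hF : G.Ad j (fun x => ‖g x‖ₑ ^ (2:ℝ)) := hg.map (fun t => ‖t‖ₑ ^ (2:ℝ))
  have key : ∀ v : Fin m → ℤ, (∑ i, ((v i).natAbs : ℝ≥0∞) * ((2 ^ bdy c i j : ℕ) : ℝ≥0∞)⁻¹ ≤ τ) →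
      ∑' x, ‖g x‖ₑ ^ (2:ℝ) * bad v x ≤ τ * ∑' x, ‖g x‖ₑ ^ (2:ℝ) := by
    intro v hv
    rw [← G.tsum_P j, ← ENNReal.tsum_mul_left]
    refine ENNReal.tsum_le_tsum fun x => ?_
    rw [G.P_mul_ad hF, mul_comm]
    exact mul_le_mul_left ((P_bad_le hm c hpos j v x).trans hv) _
  have hpt : ∀ x, ‖g (x - u) - g x‖ₑ ^ (2:ℝ) ≤
      2 * (‖g (x - u)‖ₑ ^ (2:ℝ) * bad (-u) (x - u)) + 2 * (‖g x‖ₑ ^ (2:ℝ) * bad u x) := by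
    intro x
    by_cases h : x - u ∈ dbox c j x
    · rw [hg x (x - u) h]; simp
    · have h' : x - u - -u ∉ dbox c j (x - u) := by
        rw [sub_neg_eq_add, sub_add_cancel]
        exact fun hc => h (G.mem_symm hc)
      simp only [hbad, h, h', if_false, mul_one]
      refine (ENNReal.rpow_le_rpow (enorm_sub_le) two_pos.le).trans ((ennreal_add_sq_le _ _).trans ?_)
      rw [mul_add]
  calc ∑' x, ‖g (x - u) - g x‖ₑ ^ (2:ℝ)
      ≤ ∑' x, (2 * (‖g (x - u)‖ₑ ^ (2:ℝ) * bad (-u) (x - u)) + 2 * (‖g x‖ₑ ^ (2:ℝ) * bad u x)) :=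
        ENNReal.tsum_le_tsum hpt
    _ = 2 * ∑' x, ‖g x‖ₑ ^ (2:ℝ) * bad (-u) x + 2 * ∑' x, ‖g x‖ₑ ^ (2:ℝ) * bad u x := by
        have e := (Equiv.subRight u).tsum_eq (fun x => ‖g x‖ₑ ^ (2:ℝ) * bad (-u) x)
        simp only [Equiv.subRight_apply] at e
        rw [ENNReal.tsum_add, ENNReal.tsum_mul_left, ENNReal.tsum_mul_left, e]
    _ ≤ 2 * (τ * ∑' x, ‖g x‖ₑ ^ (2:ℝ)) + 2 * (τ * ∑' x, ‖g x‖ₑ ^ (2:ℝ)) := by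
        refine add_le_add (mul_le_mul_right (key _ ?_) _) (mul_le_mul_right (key _ hτ) _)
        simpa using hτ
    _ = _ := by ring

/-- The operators `bop` are small on functions which are constant on much larger boxes. -/
lemma bop_coarse (z : ℕ → Fin m → ℤ) {k j N : ℕ} (hkj : k ≤ j) (hN : 1 ≤ N)
    (g : (Fin m → ℤ) → ℂ) (hg : (dboxGrid hm c hpos).Ad j g) {τ : ℝ} (hτ0 : 0 ≤ τ)
    (hτ : ∀ n ≤ N, ∑ i, ((z n i).natAbs : ℝ≥0∞) * ((2 ^ bdy c i j : ℕ) : ℝ≥0∞)⁻¹ ≤ ENNReal.ofReal (τ ^ 2)) :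
    nr 2 (fun x => ‖bop (dboxGrid hm c hpos) z k N g x‖ₑ) ≤
      ENNReal.ofReal (2 * τ) * nr 2 (fun x => ‖g x‖ₑ) := by
  set G := dboxGrid hm c hpos with hG
  set q := nr 2 (fun x => ‖g x‖ₑ) with hq
  have hE : ∀ x, G.E k g x = g x := fun x => G.E_of_ad (hg.mono hkj) x
  have h1 : ∀ n ≤ N, nr 2 (fun x => ‖g (x - z n) - g x‖ₑ) ≤ ENNReal.ofReal (2 * τ) * q := by
    intro n hn
    refine nr_le_of two_pos ((translation_le hm c hpos j g hg (z n) (hτ n hn)).trans (le_of_eq ?_))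
    rw [ENNReal.mul_rpow_of_nonneg _ _ two_pos.le, nr_rpow two_pos, ennreal_rpow_two (ENNReal.ofReal (2 * τ)),
      ← ENNReal.ofReal_mul (by positivity), show (4 : ℝ≥0∞) = ENNReal.ofReal 4 by norm_num,
      ← ENNReal.ofReal_mul (by norm_num)]
    congr 2
    ring
  calc nr 2 (fun x => ‖bop G z k N g x‖ₑ)
      ≤ nr 2 (fun x => (N : ℝ≥0∞)⁻¹ * ∑ n ∈ Ioc (N / 2) N, ‖g (x - z n) - g x‖ₑ) := by
        refine nr_mono two_pos fun x => ?_
        unfold bop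
        refine (enorm_avg_le hN _).trans (le_of_eq ?_)
        rw [hE]
    _ ≤ (N : ℝ≥0∞)⁻¹ * ∑ n ∈ Ioc (N / 2) N, ENNReal.ofReal (2 * τ) * q := by
        rw [nr_const_mul two_pos]
        refine mul_le_mul_right ((nr_finset_sum_le one_le_two _ _).trans (sum_le_sum fun n hn => ?_)) _
        exact h1 n (mem_Ioc.1 hn).2
    _ ≤ (N : ℝ≥0∞)⁻¹ * ((N : ℝ≥0∞) * (ENNReal.ofReal (2 * τ) * q)) := by
        rw [sum_const, nsmul_eq_mul, Nat.card_Ioc]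
        exact mul_le_mul_right (mul_le_mul_left (by exact_mod_cast Nat.sub_le _ _) _) _
    _ = _ := by
        rw [← mul_assoc, ENNReal.inv_mul_cancel (Nat.cast_ne_zero.2 (by omega)) (ENNReal.natCast_ne_top _), one_mul]

end transl

/-! ### Averages of functions with mean zero on boxes -/

section fine

variable {m : ℕ} (hm : 0 < m) (c : Fin m → ℝ) (hpos : ∀ i, 0 < c i)

lemma Grid.sum_E_of_closed {X : Type*} (G : Grid X) (l : ℕ) (V : Finset X)
    (hV : ∀ x ∈ V, G.cell l x ⊆ V) (h : X → ℂ) : ∑ y ∈ V, G.E l h y = ∑ y ∈ V, h y := by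
  rcases V.eq_empty_or_nonempty with rfl | ⟨x₀, _⟩
  · simp
  simp only [Grid.E]
  rw [← mul_sum, sum_comm' (s' := fun z => G.cell l z) (t' := V)]
  · simp only [sum_const, G.card_cell, nsmul_eq_mul]
    rw [← mul_sum, ← mul_assoc, inv_mul_cancel₀ (Nat.cast_ne_zero.2 (G.w_pos x₀ l).ne'), one_mul]
  · intro x y
    exact ⟨fun h => ⟨G.mem_symm h.2, hV x h.1 h.2⟩, fun h => ⟨hV y h.2 h.1, G.mem_symm h.1⟩⟩

/-- The displacements inside a box of level `l`. -/
def disp (c : Fin m → ℝ) (l : ℕ) : Finset (Fin m → ℤ) :=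
  Fintype.piFinset fun i => Ioo (-side c i l) (side c i l)

lemma card_disp (l : ℕ) : #(disp c l) ≤ 2 ^ m * ∏ i, 2 ^ bdy c i l := by
  have e : 2 ^ m * ∏ i, 2 ^ bdy c i l = ∏ i : Fin m, 2 * 2 ^ bdy c i l := by
    rw [prod_mul_distrib]; simp
  rw [disp, Fintype.card_piFinset, e]
  refine prod_le_prod' fun i _ => ?_
  rw [Int.card_Ioo]
  have : side c i l = ((2 ^ bdy c i l : ℕ) : ℤ) := by simp [side]
  rw [this]; omega

lemma sub_mem_disp {l : ℕ} {x y : Fin m → ℤ} (h : y ∈ dbox c l x) : y - x ∈ disp c l := by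
  rw [disp, Fintype.mem_piFinset]
  intro i
  have hy := (mem_dbox.1 h) i
  have hs := side_pos c i l
  have h1 := (mem_Ico_iff_ediv hs).2 hy
  have h2 := (mem_Ico_iff_ediv hs (y := x i)).2 rfl
  rw [mem_Ico] at h1 h2
  rw [mem_Ioo, Pi.sub_apply]
  constructor <;> omega

/-- The mean oscillation over boxes is controlled by translations. -/
lemma nr_osc_le (l : ℕ) (F : (Fin m → ℤ) → ℂ) {K : ℝ≥0∞}
    (hK : ∀ u ∈ disp c l, nr 2 (fun x => ‖F x - F (x + u)‖ₑ) ≤ K) :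
    nr 2 (fun x => ‖F x - (dboxGrid hm c hpos).E l F x‖ₑ) ≤ 2 ^ m * K := by
  set G := dboxGrid hm c hpos with hG
  have hw0 : ((G.w l : ℕ) : ℝ≥0∞) ≠ 0 := G.wE_ne_zero 0 l
  have hwt : ((G.w l : ℕ) : ℝ≥0∞) ≠ ⊤ := ENNReal.natCast_ne_top _
  have hpt : ∀ x, ‖F x - G.E l F x‖ₑ ^ (2:ℝ) ≤
      (G.w l : ℝ≥0∞)⁻¹ * ∑ u ∈ disp c l, ‖F x - F (x + u)‖ₑ ^ (2:ℝ) := by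
    intro x
    have e : F x - G.E l F x = G.E l (fun y => F x - F y) x := by
      have := G.E_sub l (fun _ => F x) F x
      rw [G.E_of_ad (v := fun _ => F x) (fun _ _ _ => rfl)] at this
      exact this.symm
    rw [e]
    refine (ENNReal.rpow_le_rpow (G.enorm_E_le l _ x) two_pos.le).trans ((G.P_jensen l one_le_two _ x).trans ?_)
    unfold Grid.P
    refine mul_le_mul_right ?_ _
    have hinj : Set.InjOn (fun y => y - x) (G.cell l x : Set (Fin m → ℤ)) := fun a _ b _ h => sub_left_injective h
    calc ∑ y ∈ G.cell l x, ‖F x - F y‖ₑ ^ (2:ℝ)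
        = ∑ u ∈ (G.cell l x).image (fun y => y - x), ‖F x - F (x + u)‖ₑ ^ (2:ℝ) := by
          rw [sum_image hinj]
          refine sum_congr rfl fun y _ => ?_
          rw [add_sub_cancel]
      _ ≤ _ := by
          refine sum_le_sum_of_subset fun u hu => ?_
          obtain ⟨y, hy, rfl⟩ := mem_image.1 hu
          exact sub_mem_disp c hy
  refine nr_le_of two_pos ?_
  calc ∑' x, ‖F x - G.E l F x‖ₑ ^ (2:ℝ)
      ≤ ∑' x, (G.w l : ℝ≥0∞)⁻¹ * ∑ u ∈ disp c l, ‖F x - F (x + u)‖ₑ ^ (2:ℝ) := ENNReal.tsum_le_tsum hpt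
    _ = (G.w l : ℝ≥0∞)⁻¹ * ∑ u ∈ disp c l, ∑' x, ‖F x - F (x + u)‖ₑ ^ (2:ℝ) := by
        rw [ENNReal.tsum_mul_left, Summable.tsum_finsetSum (fun _ _ => ENNReal.summable)]
    _ ≤ (G.w l : ℝ≥0∞)⁻¹ * ∑ u ∈ disp c l, K ^ (2:ℝ) := by
        refine mul_le_mul_right (sum_le_sum fun u hu => ?_) _
        rw [← nr_rpow two_pos]
        exact ENNReal.rpow_le_rpow (hK u hu) two_pos.le
    _ ≤ (G.w l : ℝ≥0∞)⁻¹ * ((2 ^ m * (G.w l : ℝ≥0∞)) * K ^ (2:ℝ)) := by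
        rw [sum_const, nsmul_eq_mul]
        refine mul_le_mul_right (mul_le_mul_left ?_ _) _
        exact_mod_cast card_disp c l
    _ = 2 ^ m * K ^ (2:ℝ) := by
        rw [show (2 ^ m * (G.w l : ℝ≥0∞)) * K ^ (2:ℝ) = (G.w l : ℝ≥0∞) * (2 ^ m * K ^ (2:ℝ)) by ring,
          ← mul_assoc, ENNReal.inv_mul_cancel hw0 hwt, one_mul]
    _ ≤ (2 ^ m * K) ^ (2:ℝ) := by
        rw [ENNReal.mul_rpow_of_nonneg _ _ two_pos.le, ennreal_rpow_two (2 ^ m)]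
        refine mul_le_mul_left ?_ _
        have : (1:ℝ≥0∞) ≤ 2 ^ m := one_le_pow₀ one_le_two
        calc (2:ℝ≥0∞) ^ m = 2 ^ m * 1 := by rw [mul_one]
          _ ≤ _ := mul_le_mul_right this _

set_option maxHeartbeats 1000000 in
/-- Averages of functions with mean zero on the boxes of level `l`. By duality, the decay of the
multiplier is tested only against displacements inside these boxes. -/
lemma fine_l2 {ι : Type*} (S : Finset ι) (w : ι → ℂ) (z : ι → Fin m → ℤ) (l : ℕ) {ε : ℝ} (hε : 0 ≤ ε)
    (hK : ∀ ξ : Fin m → ℝ, (∀ i, |ξ i| ≤ 1 / 2) → ∀ u ∈ disp c l,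
      ‖∑ n ∈ S, w n * ee (∑ i, ξ i * z n i)‖ * ‖1 - ee (∑ i, ξ i * u i)‖ ≤ ε)
    (g : (Fin m → ℤ) → ℂ) (hg : ∀ x, (dboxGrid hm c hpos).E l g x = 0) :
    nr 2 (fun x => ‖∑ n ∈ S, w n * g (x - z n)‖ₑ) ≤
      2 ^ m * ENNReal.ofReal ε * nr 2 (fun x => ‖g x‖ₑ) := by
  classical
  set G := dboxGrid hm c hpos with hG
  refine nr_le_of_finset two_pos fun U => ?_
  set A : (Fin m → ℤ) → ℂ := fun x => ∑ n ∈ S, w n * g (x - z n) with hA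
  set φ : (Fin m → ℤ) → ℂ := fun x => if x ∈ U then (starRingEnd ℂ) (A x) else 0 with hφ
  set F : (Fin m → ℤ) → ℂ := fun y => ∑ n ∈ S, w n * φ (y + z n) with hF
  set V : Finset (Fin m → ℤ) := S.biUnion fun n => U.biUnion fun x => G.cell l (x - z n) with hV
  have hVc : ∀ x ∈ V, G.cell l x ⊆ V := by
    intro x hx y hy
    simp only [hV, mem_biUnion] at hx ⊢
    obtain ⟨n, hn, a, ha, hxa⟩ := hx
    exact ⟨n, hn, a, ha, G.mem_trans le_rfl hxa hy⟩
  set Q : ℝ≥0∞ := ∑ x ∈ U, ‖A x‖ₑ ^ (2:ℝ) with hQ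
  have hQt : Q ≠ ⊤ := by
    rw [hQ, ENNReal.sum_ne_top]
    intro x _
    exact ENNReal.rpow_ne_top_of_nonneg two_pos.le enorm_ne_top
  have hφn : nr 2 (fun x => ‖φ x‖ₑ) = Q ^ (2:ℝ)⁻¹ := by
    unfold nr
    rw [tsum_eq_sum (s := U)]
    · congr 1
      refine sum_congr rfl fun x hx => ?_
      simp only [hφ, hx, if_true]
      rw [← ofReal_norm, ← ofReal_norm, Complex.norm_conj]
    · intro x hx
      simp [hφ, hx]
  -- the duality identity
  have hdual : ∑ x ∈ U, φ x * A x = ∑ y ∈ V, g y * F y := by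
    calc ∑ x ∈ U, φ x * A x = ∑ n ∈ S, ∑ x ∈ U, w n * (φ x * g (x - z n)) := by
          rw [sum_comm]
          refine sum_congr rfl fun x _ => ?_
          rw [hA, mul_sum]
          refine sum_congr rfl fun n _ => by ring
      _ = ∑ n ∈ S, ∑ y ∈ V, w n * (φ (y + z n) * g y) := by
          refine sum_congr rfl fun n hn => ?_
          have hinj : Set.InjOn (fun x => x - z n) (U : Set (Fin m → ℤ)) := fun a _ b _ h => sub_left_injective h
          have hsub : U.image (fun x => x - z n) ⊆ V := by
            intro y hy
            obtain ⟨x, hx, rfl⟩ := mem_image.1 hy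
            simp only [hV, mem_biUnion]
            exact ⟨n, hn, x, hx, G.mem_self l _⟩
          rw [← sum_subset hsub, sum_image hinj]
          · refine sum_congr rfl fun x _ => ?_
            rw [sub_add_cancel]
          · intro y _ hy
            have : y + z n ∉ U := fun h => hy (mem_image.2 ⟨_, h, by rw [add_sub_cancel_right]⟩)
            simp [hφ, this]
      _ = _ := by
          rw [sum_comm]
          refine sum_congr rfl fun y _ => ?_
          rw [hF, mul_sum]
          refine sum_congr rfl fun n _ => by ring
  have hzero : ∑ y ∈ V, g y * G.E l F y = 0 := by
    have h1 := G.sum_E_of_closed l V hVc (fun y => G.E l F y * g y)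
    have h2 : ∀ y, G.E l (fun y => G.E l F y * g y) y = 0 := fun y => by
      rw [G.E_mul_ad (G.E_ad l F), hg, mul_zero]
    simp only [h2, sum_const_zero] at h1
    rw [h1]
    exact sum_congr rfl fun y _ => mul_comm _ _
  have hosc : nr 2 (fun x => ‖F x - G.E l F x‖ₑ) ≤ 2 ^ m * (ENNReal.ofReal ε * Q ^ (2:ℝ)⁻¹) := by
    refine nr_osc_le hm c hpos l F fun u hu => ?_
    rw [← hφn]
    have h := mult_l2 (S ×ˢ (univ : Finset Bool)) (fun q => if q.2 then - w q.1 else w q.1)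
      (fun q => if q.2 then - z q.1 - u else - z q.1) hε ?_ φ
    · refine le_trans (le_of_eq ?_) h
      congr 1
      funext x
      rw [sum_product, hF, ← sum_sub_distrib]
      congr 1
      refine sum_congr rfl fun n _ => ?_
      rw [Fintype.sum_bool]
      simp only [if_true, Bool.false_eq_true, if_false]
      rw [show x - (-z n - u) = x + u + z n by abel, show x - -z n = x + z n by abel]
      ring
    · intro ξ hξ
      have h := hK (fun i => - ξ i) (fun i => by rw [abs_neg]; exact hξ i) u hu
      rw [← norm_mul] at h
      refine le_trans (le_of_eq ?_) h
      congr 1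
      rw [sum_product, sum_mul]
      refine sum_congr rfl fun n _ => ?_
      rw [Fintype.sum_bool]
      simp only [if_true, Bool.false_eq_true, if_false, Pi.sub_apply, Pi.neg_apply]
      have e1 : ∑ i, ξ i * (((-z n i - u i : ℤ)) : ℝ) = ∑ i, -ξ i * (z n i : ℝ) + ∑ i, -ξ i * (u i : ℝ) := by
        rw [← sum_add_distrib]
        refine sum_congr rfl fun i _ => ?_
        push_cast; ring
      have e2 : ∑ i, ξ i * (((-z n i : ℤ)) : ℝ) = ∑ i, -ξ i * (z n i : ℝ) := by
        refine sum_congr rfl fun i _ => ?_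
        push_cast; ring
      rw [e1, e2, ee_add]
      ring
  set q := nr 2 (fun x => ‖g x‖ₑ) with hq
  have hmain : Q ≤ q * (2 ^ m * (ENNReal.ofReal ε * Q ^ (2:ℝ)⁻¹)) := by
    have e1 : Q = ‖∑ x ∈ U, φ x * A x‖ₑ := by
      have : ∑ x ∈ U, φ x * A x = ((∑ x ∈ U, ‖A x‖ ^ 2 : ℝ) : ℂ) := by
        push_cast
        refine sum_congr rfl fun x hx => ?_
        simp only [hφ, hx, if_true]
        rw [Complex.conj_mul']
      rw [this, ← ofReal_norm, Complex.norm_of_nonneg (sum_nonneg fun _ _ => by positivity),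
        ENNReal.ofReal_sum_of_nonneg (fun _ _ => by positivity)]
      refine sum_congr rfl fun x _ => ?_
      rw [← ofReal_norm, ENNReal.ofReal_rpow_of_nonneg (norm_nonneg _) two_pos.le, Real.rpow_two]
    have e2 : ∑ y ∈ V, g y * F y = ∑ y ∈ V, g y * (F y - G.E l F y) := by
      simp only [mul_sub, sum_sub_distrib, hzero, sub_zero]
    calc Q = ‖∑ y ∈ V, g y * (F y - G.E l F y)‖ₑ := by rw [e1, hdual, e2]
      _ ≤ ∑ y ∈ V, ‖g y‖ₑ * ‖F y - G.E l F y‖ₑ := by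
          refine (enorm_sum_le _ _).trans (le_of_eq (sum_congr rfl fun y _ => enorm_mul _ _))
      _ ≤ ∑' y, ‖g y‖ₑ * ‖F y - G.E l F y‖ₑ := ENNReal.sum_le_tsum _
      _ ≤ q * nr 2 (fun x => ‖F x - G.E l F x‖ₑ) := tsum_mul_le_nr Real.HolderConjugate.two_two _ _
      _ ≤ _ := mul_le_mul_right hosc _
  rcases eq_or_ne Q 0 with h0 | h0
  · rw [h0, ENNReal.zero_rpow_of_pos (by norm_num)]; exact zero_le
  have hs0 : Q ^ (2:ℝ)⁻¹ ≠ 0 := by simp [h0, hQt]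
  have hst : Q ^ (2:ℝ)⁻¹ ≠ ⊤ := ENNReal.rpow_ne_top_of_nonneg (by norm_num) hQt
  have hQs : Q = Q ^ (2:ℝ)⁻¹ * Q ^ (2:ℝ)⁻¹ := by
    rw [← ennreal_rpow_two, ← ENNReal.rpow_mul, inv_mul_cancel₀ two_ne_zero, ENNReal.rpow_one]
  rw [← ENNReal.mul_le_mul_iff_left hs0 hst, ← hQs]
  refine hmain.trans (le_of_eq (by ring))

end fine

/-! ### The averages along fractional powers form an admissible family -/

/-- The curve of the problem, for `σ = 1`, and its reflection, for `σ = -1`. -/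
def zf {m : ℕ} (c : Fin m → ℝ) (σ : ℤ) (n : ℕ) : Fin m → ℤ := fun i => σ * ⌊(n : ℝ) ^ c i⌋

section fam

variable {m : ℕ} (hm : 0 < m) (c : Fin m → ℝ) (hpos : ∀ i, 0 < c i)

lemma natAbs_zf_le (hpos : ∀ i, 0 < c i) {σ : ℤ} (hσ : σ = 1 ∨ σ = -1) {n k : ℕ} (hn : n ≤ 2 ^ (k + 1)) (i : Fin m) :
    ((zf c σ n i).natAbs : ℝ) ≤ (2:ℝ) ^ c i * (2:ℝ) ^ (k * c i) := by
  have h1 : (zf c σ n i).natAbs = (⌊(n : ℝ) ^ c i⌋).natAbs := by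
    rcases hσ with rfl | rfl <;> simp [zf]
  have h0 : (0:ℝ) ≤ (n : ℝ) ^ c i := by positivity
  have h2 : (((⌊(n : ℝ) ^ c i⌋).natAbs : ℤ) : ℝ) = ((⌊(n : ℝ) ^ c i⌋ : ℤ) : ℝ) := by
    rw [Int.natAbs_of_nonneg (Int.floor_nonneg.2 h0)]
  rw [h1, ← Int.cast_natCast, h2]
  calc ((⌊(n : ℝ) ^ c i⌋ : ℤ) : ℝ) ≤ (n : ℝ) ^ c i := Int.floor_le _
    _ ≤ ((2:ℝ) ^ (k + 1)) ^ c i := by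
        refine Real.rpow_le_rpow (by positivity) ?_ (hpos i).le
        exact_mod_cast hn
    _ = _ := by
        rw [← Real.rpow_natCast, ← Real.rpow_mul (by norm_num), ← Real.rpow_add (by norm_num)]
        congr 1
        push_cast; ring

lemma two_rpow_le_side (i : Fin m) (j : ℕ) : (2:ℝ) ^ (j * c i) ≤ 2 * 2 ^ bdy c i j := by
  calc (2:ℝ) ^ (j * c i) ≤ (2:ℝ) ^ ((bdy c i j : ℝ) + 1) :=
        Real.rpow_le_rpow_of_exponent_le one_le_two (lt_bdy c i j).le
    _ = _ := by rw [Real.rpow_add two_pos, Real.rpow_natCast, Real.rpow_one]; ring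

lemma side_le_two_rpow (hpos : ∀ i, 0 < c i) (i : Fin m) (j : ℕ) : (2:ℝ) ^ bdy c i j ≤ (2:ℝ) ^ (j * c i) := by
  rw [← Real.rpow_natCast]
  exact Real.rpow_le_rpow_of_exponent_le one_le_two (bdy_le hpos i j)

/-- The constant collecting the side ratios of the boxes. -/
def cA (c : Fin m → ℝ) : ℝ := ∑ i, 2 * (2:ℝ) ^ c i

lemma le_cA (i : Fin m) : 2 * (2:ℝ) ^ c i ≤ cA c :=
  single_le_sum (f := fun i => 2 * (2:ℝ) ^ c i) (fun _ _ => by positivity) (mem_univ i)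

lemma cA_nonneg : 0 ≤ cA c := sum_nonneg fun _ _ => by positivity

lemma two_rpow_decay {c₀ : ℝ} (h : ∀ i, c₀ ≤ c i) (i : Fin m) {k j : ℕ} (hkj : k ≤ j) :
    (2:ℝ) ^ (k * c i) ≤ ((2:ℝ) ^ (-c₀)) ^ (j - k) * (2:ℝ) ^ (j * c i) := by
  rw [← Real.rpow_natCast, ← Real.rpow_mul two_pos.le, ← Real.rpow_add two_pos]
  refine Real.rpow_le_rpow_of_exponent_le one_le_two ?_
  rw [Nat.cast_sub hkj]
  have h1 : (k:ℝ) ≤ j := by exact_mod_cast hkj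
  nlinarith [h i]

lemma coarse_sum_le (hpos : ∀ i, 0 < c i) {c₀ : ℝ} (h : ∀ i, c₀ ≤ c i) {σ : ℤ} (hσ : σ = 1 ∨ σ = -1) {n k j : ℕ}
    (hkj : k ≤ j) (hn : n ≤ 2 ^ (k + 1)) :
    ∑ i, ((zf c σ n i).natAbs : ℝ≥0∞) * ((2 ^ bdy c i j : ℕ) : ℝ≥0∞)⁻¹ ≤
      ENNReal.ofReal (cA c * ((2:ℝ) ^ (-c₀)) ^ (j - k)) := by
  have hb : (0:ℝ) < (2:ℝ) ^ (-c₀) := by positivity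
  rw [cA, sum_mul, ENNReal.ofReal_sum_of_nonneg (fun _ _ => by positivity)]
  refine sum_le_sum fun i _ => ?_
  rw [← ENNReal.div_eq_inv_mul.trans (mul_comm _ _)]
  refine ENNReal.div_le_of_le_mul ?_
  rw [← ENNReal.ofReal_natCast, ← ENNReal.ofReal_natCast, ← ENNReal.ofReal_mul (by positivity)]
  refine ENNReal.ofReal_le_ofReal ((natAbs_zf_le c hpos hσ hn i).trans ?_)
  push_cast
  calc (2:ℝ) ^ c i * (2:ℝ) ^ (k * c i)
      ≤ (2:ℝ) ^ c i * (((2:ℝ) ^ (-c₀)) ^ (j - k) * (2 * 2 ^ bdy c i j)) := by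
        refine mul_le_mul_of_nonneg_left ((two_rpow_decay c h i hkj).trans ?_) (by positivity)
        exact mul_le_mul_of_nonneg_left (two_rpow_le_side c i j) (by positivity)
    _ = _ := by ring

lemma norm_one_sub_ee_le_rpow {δ : ℝ} (hδ : 0 < δ) (hδ1 : δ ≤ 1) (t : ℝ) :
    ‖1 - ee t‖ ≤ 2 * Real.pi * |t| ^ δ := by
  have hp := Real.pi_gt_three
  rcases le_total |t| 1 with h | h
  · refine (norm_one_sub_ee_le t).trans (mul_le_mul_of_nonneg_left ?_ (by positivity))
    rcases eq_or_lt_of_le (abs_nonneg t) with h0 | h0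
    · rw [← h0, Real.zero_rpow hδ.ne']
    · calc |t| = |t| ^ (1:ℝ) := (Real.rpow_one _).symm
        _ ≤ _ := Real.rpow_le_rpow_of_exponent_ge h0 h hδ1
  · have h1 : 1 ≤ |t| ^ δ := Real.one_le_rpow h hδ.le
    calc ‖1 - ee t‖ ≤ ‖(1:ℂ)‖ + ‖ee t‖ := norm_sub_le _ _
      _ = 2 := by rw [norm_ee, norm_one]; norm_num
      _ ≤ _ := by nlinarith

lemma norm_one_sub_ee_sum_le {ι : Type*} (s : Finset ι) (t : ι → ℝ) :
    ‖1 - ee (∑ i ∈ s, t i)‖ ≤ ∑ i ∈ s, ‖1 - ee (t i)‖ := by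
  classical
  induction s using Finset.induction_on with
  | empty => simp [ee_zero]
  | insert a s ha ih =>
    rw [sum_insert ha, sum_insert ha, ee_add]
    calc ‖1 - ee (t a) * ee (∑ i ∈ s, t i)‖
        = ‖(1 - ee (t a)) + ee (t a) * (1 - ee (∑ i ∈ s, t i))‖ := by congr 1; ring
      _ ≤ ‖1 - ee (t a)‖ + ‖ee (t a) * (1 - ee (∑ i ∈ s, t i))‖ := norm_add_le _ _
      _ ≤ _ := by rw [norm_mul, norm_ee, one_mul]; exact add_le_add_right ih _

/-- The decay of the multiplier against displacements inside smaller boxes. -/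
lemma fine_mult (hpos : ∀ i, 0 < c i) {C δ c₀ : ℝ} (hC : 1 ≤ C) (hδ : 0 < δ) (hδ1 : δ ≤ 1) (h : ∀ i, c₀ ≤ c i)
    (hdec : ∀ (N : ℕ) (ξ : Fin m → ℝ), 1 ≤ N → (∀ i, |ξ i| ≤ 1 / 2) →
      ∀ i₀, ‖∑ n ∈ Ioc (N / 2) N, ee (∑ i, ξ i * ⌊(n : ℝ) ^ c i⌋)‖ *
        ((N : ℝ) ^ c i₀ * |ξ i₀|) ^ δ ≤ C * N)
    {σ : ℤ} (hσ : σ = 1 ∨ σ = -1) {k l N : ℕ} (hl : l < k) (hN : 2 ^ k ≤ N)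
    (ξ : Fin m → ℝ) (hξ : ∀ i, |ξ i| ≤ 1 / 2) (u : Fin m → ℤ) (hu : u ∈ disp c (l + 1)) :
    ‖∑ n ∈ Ioc (N / 2) N, (N : ℂ)⁻¹ * ee (∑ i, ξ i * zf c σ n i)‖ * ‖1 - ee (∑ i, ξ i * u i)‖ ≤
      2 * Real.pi * C * cA c * (((2:ℝ) ^ (-c₀)) ^ δ) ^ (k - l) := by
  have hN1 : 1 ≤ N := le_trans Nat.one_le_two_pow hN
  have hN0 : (0:ℝ) < N := by exact_mod_cast hN1
  set b : ℝ := (2:ℝ) ^ (-c₀) with hb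
  have hb0 : 0 < b := by positivity
  -- changing the sign of the frequency reduces to `σ = 1`
  obtain ⟨η, hη, hηξ, hS⟩ : ∃ η : Fin m → ℝ, (∀ i, |η i| ≤ 1 / 2) ∧ (∀ i, |η i| = |ξ i|) ∧
      ∀ n : ℕ, ∑ i, ξ i * (zf c σ n i : ℝ) = ∑ i, η i * ⌊(n : ℝ) ^ c i⌋ := by
    refine ⟨fun i => σ * ξ i, ?_, ?_, ?_⟩
    · rcases hσ with rfl | rfl <;> simpa using hξ
    · rcases hσ with rfl | rfl <;> simp
    · intro n
      refine sum_congr rfl fun i _ => ?_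
      simp only [zf]; push_cast; ring
  simp only [hS]
  set S := ‖∑ n ∈ Ioc (N / 2) N, ee (∑ i, η i * ⌊(n : ℝ) ^ c i⌋)‖ with hSd
  have e1 : ‖∑ n ∈ Ioc (N / 2) N, (N : ℂ)⁻¹ * ee (∑ i, η i * ⌊(n : ℝ) ^ c i⌋)‖ = (N:ℝ)⁻¹ * S := by
    rw [← mul_sum, norm_mul, norm_inv, Complex.norm_natCast]
  rw [e1]
  have hterm : ∀ i, (N:ℝ)⁻¹ * S * ‖1 - ee (ξ i * u i)‖ ≤
      2 * Real.pi * C * (2 * (2:ℝ) ^ c i) * (b ^ δ) ^ (k - l) := by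
    intro i
    have hNc : (0:ℝ) < (N:ℝ) ^ c i := by positivity
    have hu1 : |(u i : ℝ)| ≤ (2:ℝ) ^ c i * b ^ (k - l) * (N:ℝ) ^ c i := by
      have h1 : |(u i : ℝ)| ≤ (2:ℝ) ^ bdy c i (l + 1) := by
        rw [disp, Fintype.mem_piFinset] at hu
        have := mem_Ioo.1 (hu i)
        have h2 : |u i| ≤ side c i (l + 1) := abs_le.2 ⟨this.1.le, this.2.le⟩
        have h3 : ((|u i| : ℤ) : ℝ) ≤ ((side c i (l + 1) : ℤ) : ℝ) := by exact_mod_cast h2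
        rw [side] at h3
        push_cast at h3
        exact h3
      calc |(u i : ℝ)| ≤ (2:ℝ) ^ (((l + 1 : ℕ) : ℝ) * c i) := h1.trans (side_le_two_rpow c hpos i (l + 1))
        _ = (2:ℝ) ^ c i * (2:ℝ) ^ (l * c i) := by
            rw [← Real.rpow_add two_pos]; congr 1; push_cast; ring
        _ ≤ (2:ℝ) ^ c i * (b ^ (k - l) * (2:ℝ) ^ (k * c i)) :=
            mul_le_mul_of_nonneg_left (two_rpow_decay c h i hl.le) (by positivity)
        _ ≤ (2:ℝ) ^ c i * (b ^ (k - l) * (N:ℝ) ^ c i) := by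
            have : (2:ℝ) ^ (k * c i) ≤ (N:ℝ) ^ c i := by
              rw [Real.rpow_mul two_pos.le, Real.rpow_natCast]
              refine Real.rpow_le_rpow (by positivity) ?_ (hpos i).le
              exact_mod_cast hN
            gcongr
        _ = _ := by ring
    have hd := hdec N η hN1 hη i
    rw [hηξ i] at hd
    have hprod : |ξ i * u i| ≤ (N:ℝ) ^ c i * |ξ i| * ((2:ℝ) ^ c i * b ^ (k - l)) := by
      rw [abs_mul]
      calc |ξ i| * |(u i : ℝ)| ≤ |ξ i| * ((2:ℝ) ^ c i * b ^ (k - l) * (N:ℝ) ^ c i) :=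
            mul_le_mul_of_nonneg_left hu1 (abs_nonneg _)
        _ = _ := by ring
    have hpow : ((2:ℝ) ^ c i * b ^ (k - l)) ^ δ ≤ 2 * (2:ℝ) ^ c i * (b ^ δ) ^ (k - l) := by
      rw [Real.mul_rpow (by positivity) (by positivity)]
      have h1 : ((2:ℝ) ^ c i) ^ δ ≤ 2 * (2:ℝ) ^ c i := by
        have h2 : (1:ℝ) ≤ (2:ℝ) ^ c i := Real.one_le_rpow one_le_two (hpos i).le
        calc ((2:ℝ) ^ c i) ^ δ ≤ ((2:ℝ) ^ c i) ^ (1:ℝ) := Real.rpow_le_rpow_of_exponent_le h2 hδ1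
          _ = (2:ℝ) ^ c i := Real.rpow_one _
          _ ≤ _ := by linarith
      have h3 : (b ^ (k - l)) ^ δ = (b ^ δ) ^ (k - l) := by
        rw [← Real.rpow_natCast, ← Real.rpow_natCast, ← Real.rpow_mul hb0.le, ← Real.rpow_mul hb0.le, mul_comm]
      rw [h3]
      gcongr
    calc (N:ℝ)⁻¹ * S * ‖1 - ee (ξ i * u i)‖
        ≤ (N:ℝ)⁻¹ * S * (2 * Real.pi * (((N:ℝ) ^ c i * |ξ i|) ^ δ * (2 * (2:ℝ) ^ c i * (b ^ δ) ^ (k - l)))) := by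
          refine mul_le_mul_of_nonneg_left ?_ (by positivity)
          refine (norm_one_sub_ee_le_rpow hδ hδ1 _).trans (mul_le_mul_of_nonneg_left ?_ (by positivity))
          refine (Real.rpow_le_rpow (abs_nonneg _) hprod hδ.le).trans ?_
          rw [Real.mul_rpow (by positivity) (by positivity)]
          gcongr
      _ = (N:ℝ)⁻¹ * (S * ((N:ℝ) ^ c i * |ξ i|) ^ δ) * (2 * Real.pi * (2 * (2:ℝ) ^ c i * (b ^ δ) ^ (k - l))) := by
          ring
      _ ≤ (N:ℝ)⁻¹ * (C * N) * (2 * Real.pi * (2 * (2:ℝ) ^ c i * (b ^ δ) ^ (k - l))) := by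
          have := Real.pi_pos
          gcongr
      _ = _ := by field_simp
  calc (N:ℝ)⁻¹ * S * ‖1 - ee (∑ i, ξ i * u i)‖
      ≤ (N:ℝ)⁻¹ * S * ∑ i, ‖1 - ee (ξ i * u i)‖ :=
        mul_le_mul_of_nonneg_left (norm_one_sub_ee_sum_le _ _) (by positivity)
    _ = ∑ i, (N:ℝ)⁻¹ * S * ‖1 - ee (ξ i * u i)‖ := mul_sum _ _ _
    _ ≤ ∑ i, 2 * Real.pi * C * (2 * (2:ℝ) ^ c i) * (b ^ δ) ^ (k - l) := sum_le_sum fun i _ => hterm i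
    _ = _ := by rw [cA, ← sum_mul, ← mul_sum]

set_option maxHeartbeats 1000000 in
/-- The almost orthogonality of the short variations and the martingale differences. -/
lemma blockV_l2 {C δ c₀ : ℝ} (hC : 1 ≤ C) (hδ : 0 < δ) (hδ1 : δ ≤ 1) (hc₀ : 0 < c₀) (h : ∀ i, c₀ ≤ c i)
    (hdec : ∀ (N : ℕ) (ξ : Fin m → ℝ), 1 ≤ N → (∀ i, |ξ i| ≤ 1 / 2) →
      ∀ i₀, ‖∑ n ∈ Ioc (N / 2) N, ee (∑ i, ξ i * ⌊(n : ℝ) ^ c i⌋)‖ *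
        ((N : ℝ) ^ c i₀ * |ξ i₀|) ^ δ ≤ C * N)
    {σ : ℤ} (hσ : σ = 1 ∨ σ = -1) {ρ a : ℝ} (hρ0 : 0 < ρ) (hρ1 : ρ ≤ 1)
    (hρ : ρ ^ 4 = ((2:ℝ) ^ (-c₀)) ^ δ)
    (ha : a = 8 + 2 * √(cA c) + 2 ^ m * (2 * Real.pi * C * cA c)) (k i : ℕ) (f : (Fin m → ℤ) → ℂ) :
    ∑' x, blockV (dboxGrid hm c hpos) (zf c σ) k ((dboxGrid hm c hpos).Dd i f) x ^ (2 : ℝ) ≤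
      ENNReal.ofReal (30 * a ^ 2 * ρ ^ ((k - i) + (i - k))) *
        ∑' x, ‖(dboxGrid hm c hpos).Dd i f x‖ₑ ^ (2 : ℝ) := by
  set G := dboxGrid hm c hpos with hG
  set g := G.Dd i f with hg
  set d := (k - i) + (i - k) with hd
  set b : ℝ := (2:ℝ) ^ (-c₀) with hb
  have hb0 : 0 < b := by positivity
  have hb1 : b ≤ 1 := Real.rpow_le_one_of_one_le_of_nonpos one_le_two (by linarith)
  have hA := cA_nonneg c
  have hpi := Real.pi_pos
  have hx : 0 ≤ 2 ^ m * (2 * Real.pi * C * cA c) := by positivity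
  have hsA : 0 ≤ √(cA c) := Real.sqrt_nonneg _
  have ha0 : 0 < a := by rw [ha]; linarith
  have he0 : 0 < ρ ^ d := by positivity
  have he1 : ρ ^ d ≤ 1 := pow_le_one₀ hρ0.le hρ1
  rw [← nr_rpow two_pos (fun x => ‖g x‖ₑ)]
  refine short_var (fun N x => bop G (zf c σ) k N g x) k ha0 he0 he1 _ ?_ ?_
  · intro N hN
    have hN1 : 1 ≤ N := le_trans Nat.one_le_two_pow hN.1
    rcases le_or_gt k i with hki | hki
    · refine (bop_coarse hm c hpos (zf c σ) hki hN1 g (G.Dd_ad i f) (τ := √(cA c) * (ρ ^ d) ^ 2)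
        (by positivity) fun n hn => ?_).trans (mul_le_mul_left (ENNReal.ofReal_le_ofReal ?_) _)
      · refine (coarse_sum_le c hpos h hσ hki (hn.trans hN.2)).trans (ENNReal.ofReal_le_ofReal ?_)
        have hdk : d = i - k := by omega
        rw [mul_pow, Real.sq_sqrt hA, ← hdk]
        refine mul_le_mul_of_nonneg_left ?_ hA
        calc b ^ d ≤ (b ^ δ) ^ d := by
              refine pow_le_pow_left₀ hb0.le ?_ d
              calc b = b ^ (1:ℝ) := (Real.rpow_one b).symm
                _ ≤ _ := Real.rpow_le_rpow_of_exponent_ge hb0 hb1 hδ1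
          _ = _ := by rw [← hρ]; ring
      · calc 2 * (√(cA c) * (ρ ^ d) ^ 2) = (2 * √(cA c)) * (ρ ^ d) ^ 2 := by ring
          _ ≤ _ := by
            refine mul_le_mul_of_nonneg_right ?_ (by positivity)
            rw [ha]; linarith
    · have hE1 : ∀ x, G.E (i + 1) g x = 0 := by
        intro x
        have e : g = G.E i f - G.E (i + 1) f := by funext y; rfl
        rw [e, G.E_sub, G.E_tower (Nat.le_succ i), G.E_tower le_rfl, sub_self]
      have hEk : ∀ x, G.E k g x = 0 := by
        intro x
        rw [← G.E_tower (Nat.succ_le_of_lt hki) g x]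
        have : G.E (i + 1) g = fun _ => 0 := funext hE1
        rw [Nat.succ_eq_add_one, this]
        exact G.E_of_ad (v := fun _ => (0:ℂ)) (fun _ _ _ => rfl) x
      have hfine := fine_l2 hm c hpos (Ioc (N / 2) N) (fun _ => (N:ℂ)⁻¹) (zf c σ) (i + 1)
        (ε := 2 * Real.pi * C * cA c * (b ^ δ) ^ (k - i)) (by positivity)
        (fun ξ hξ u hu => fine_mult c hpos hC hδ hδ1 h hdec hσ hki hN.1 ξ hξ u hu) g hE1
      have e : ∀ x, bop G (zf c σ) k N g x = ∑ n ∈ Ioc (N / 2) N, (N:ℂ)⁻¹ * g (x - zf c σ n) := by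
        intro x
        simp only [bop, avg, hEk, sub_zero, mul_sum]
      simp only [e]
      refine hfine.trans (mul_le_mul_left ?_ _)
      have e2 : (2:ℝ≥0∞) ^ m = ENNReal.ofReal (2 ^ m) := by
        rw [ENNReal.ofReal_pow two_pos.le]; norm_num
      rw [e2, ← ENNReal.ofReal_mul (by positivity)]
      refine ENNReal.ofReal_le_ofReal ?_
      have hdk : k - i = d := by omega
      rw [hdk, ← hρ]
      calc 2 ^ m * (2 * Real.pi * C * cA c * (ρ ^ 4) ^ d)
          = (2 ^ m * (2 * Real.pi * C * cA c)) * ((ρ ^ d) ^ 2 * (ρ ^ d) ^ 2) := by ring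
        _ ≤ a * ((ρ ^ d) ^ 2 * 1) := by
            refine mul_le_mul ?_ ?_ (by positivity) ha0.le
            · rw [ha]; linarith
            · exact mul_le_mul_of_nonneg_left (pow_le_one₀ he0.le he1) (by positivity)
        _ = _ := by ring
  · intro N hN
    refine (bop_step G (zf c σ) k g N hN).trans (mul_le_mul_left (ENNReal.ofReal_le_ofReal ?_) _)
    refine div_le_div_of_nonneg_right ?_ (by positivity)
    rw [ha]; linarith

set_option maxHeartbeats 1000000 in
/-- The short variations of the averages form a family adapted to the grid of boxes. -/
lemma exists_fam (hinj : Function.Injective c) (hint : ∀ i, ∀ k : ℕ, c i ≠ (k : ℝ))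
    {σ : ℤ} (hσ : σ = 1 ∨ σ = -1) :
    ∃ Φ : Fam (dboxGrid hm c hpos), Φ.T = blockV (dboxGrid hm c hpos) (zf c σ) ∧
      Φ.ker = bker (dboxGrid hm c hpos) (zf c σ) := by
  classical
  obtain ⟨C, δ, hC, hδ, hδ1, hdec⟩ := mult_decay c hpos hinj hint
  obtain ⟨c₀, hc₀, h⟩ : ∃ c₀ : ℝ, 0 < c₀ ∧ ∀ i, c₀ ≤ c i := by
    have : Nonempty (Fin m) := ⟨⟨0, hm⟩⟩
    obtain ⟨i₀, hi₀⟩ := Finite.exists_min c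
    exact ⟨c i₀, hpos i₀, hi₀⟩
  set ρ : ℝ := (2:ℝ) ^ (-(c₀ * δ / 4)) with hρ
  have hcd : 0 < c₀ * δ := by positivity
  have hρ0 : 0 < ρ := by positivity
  have hρ1 : ρ < 1 := Real.rpow_lt_one_of_one_lt_of_neg one_lt_two (by linarith)
  have hρ4 : ρ ^ 4 = ((2:ℝ) ^ (-c₀)) ^ δ := by
    rw [hρ, ← Real.rpow_natCast, ← Real.rpow_mul two_pos.le, ← Real.rpow_mul two_pos.le]
    congr 1
    push_cast; ring
  set K : ℕ := ⌈cA c⌉₊ with hK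
  set a : ℝ := 8 + 2 * √(cA c) + 2 ^ m * (2 * Real.pi * C * cA c) with ha
  have hB1 : (0:ℝ) ≤ 30 * a ^ 2 := by positivity
  have hB2 : (0:ℝ) ≤ ((2 * K + 2 : ℕ) : ℝ) ^ m := by positivity
  refine ⟨{ T := blockV (dboxGrid hm c hpos) (zf c σ)
            ker := bker (dboxGrid hm c hpos) (zf c σ)
            near := nearBox c K
            B := 30 * a ^ 2 + 30 + ((2 * K + 2 : ℕ) : ℝ) ^ m
            ρ := ρ
            B_pos := by linarith
            ρ_pos := hρ0
            ρ_lt := hρ1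
            sub := fun k f g x => blockV_sub _ _ k f g x
            le_ker := fun k f x => blockV_le_ker _ _ k f x
            row := fun k x => (bker_row _ _ k x).trans (ENNReal.ofReal_le_ofReal (by linarith))
            col := fun k y => (bker_col _ _ k y).trans (ENNReal.ofReal_le_ofReal (by linarith))
            near_ad := fun s y y' hy => nearBox_congr K hy
            near_card := ?_
            loc := ?_
            l2 := ?_ }, rfl, rfl⟩
  · intro s y
    rw [card_nearBox, Nat.cast_mul]
    refine mul_le_mul_left ?_ _
    rw [← ENNReal.ofReal_natCast]
    refine ENNReal.ofReal_le_ofReal ?_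
    rw [Nat.cast_pow]
    linarith
  · intro k s x y hks hne
    have hcase : y ∈ dbox c k x ∨ ∃ n ≤ 2 ^ (k + 1), y = x - zf c σ n := by
      by_contra hcon
      push Not at hcon
      apply hne
      unfold bker
      have h1 : y ∉ (dboxGrid hm c hpos).cell k x := hcon.1
      rw [if_neg h1, mul_zero, mul_zero, add_zero]
      refine mul_eq_zero.2 (Or.inr (sum_eq_zero fun n hn => if_neg (hcon.2 n ?_)))
      have := mem_range.1 hn
      omega
    rcases hcase with hy | ⟨n, hn, rfl⟩
    · exact box_sub_nearBox K s y ((dboxGrid hm c hpos).cell_mono hks y ((dboxGrid hm c hpos).mem_symm hy))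
    · refine mem_nearBox fun i => ?_
      rw [Pi.sub_apply, sub_sub_cancel]
      have hn' : n ≤ 2 ^ (s + 1) := hn.trans (Nat.pow_le_pow_right two_pos (by omega))
      have h1 := natAbs_zf_le c hpos hσ hn' i
      have h2 : (((zf c σ n i).natAbs : ℤ) : ℝ) ≤ (((K : ℤ) * side c i s : ℤ) : ℝ) := by
        rw [side]
        push_cast
        rw [← Int.cast_abs, ← Nat.cast_natAbs]
        calc ((zf c σ n i).natAbs : ℝ) ≤ (2:ℝ) ^ c i * (2:ℝ) ^ (s * c i) := h1
          _ ≤ (2:ℝ) ^ c i * (2 * 2 ^ bdy c i s) :=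
              mul_le_mul_of_nonneg_left (two_rpow_le_side c i s) (by positivity)
          _ = (2 * (2:ℝ) ^ c i) * 2 ^ bdy c i s := by ring
          _ ≤ K * 2 ^ bdy c i s :=
              mul_le_mul_of_nonneg_right ((le_cA c i).trans (Nat.le_ceil _)) (by positivity)
      have h3 : ((zf c σ n i).natAbs : ℤ) ≤ K * side c i s := by exact_mod_cast h2
      rwa [Int.natCast_natAbs] at h3
  · intro k i f
    refine (blockV_l2 hm c hpos hC hδ hδ1 hc₀ h hdec hσ hρ0 hρ1.le hρ4 ha k i f).trans
      (mul_le_mul_left (ENNReal.ofReal_le_ofReal ?_) _)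
    refine mul_le_mul_of_nonneg_right (by linarith) (by positivity)

end fam

/-! ### The adjoint maximal function and the square function for all exponents -/

lemma log_two_mem {N : ℕ} (hN : 1 ≤ N) :
    N ∈ Set.Icc (2 ^ Nat.log 2 N) (2 ^ (Nat.log 2 N + 1)) :=
  ⟨Nat.pow_log_le_self 2 (by omega), (Nat.lt_pow_succ_log_self one_lt_two N).le⟩

lemma enorm_avg_one_le {N : ℕ} (hN : 1 ≤ N) : ‖avg N (fun _ => 1)‖ₑ ≤ 1 := by
  refine (enorm_avg_le hN _).trans ?_
  rw [sum_const, Nat.card_Ioc, nsmul_eq_mul, enorm_one, mul_one]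
  calc (N : ℝ≥0∞)⁻¹ * ((N - N / 2 : ℕ) : ℝ≥0∞) ≤ (N : ℝ≥0∞)⁻¹ * (N : ℝ≥0∞) :=
        mul_le_mul_right (by exact_mod_cast Nat.sub_le _ _) _
    _ = 1 := ENNReal.inv_mul_cancel (Nat.cast_ne_zero.2 (by omega)) (ENNReal.natCast_ne_top _)

lemma avg_eq_bop {X : Type*} [AddCommGroup X] (G : Grid X) (z : ℕ → X) (k N : ℕ) (f : X → ℂ) (x : X) :
    avg N (fun n => f (x - z n)) = bop G z k N f x + avg N (fun _ => 1) * G.E k f x := by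
  unfold bop avg
  rw [mul_assoc, sum_mul, ← mul_add, ← sum_add_distrib]
  congr 1
  refine sum_congr rfl fun n _ => ?_
  ring

/-- Each average is dominated by the short variations and the Doob maximal function. -/
lemma enorm_avg_le_max {X : Type*} [AddCommGroup X] (G : Grid X) (z : ℕ → X) {N : ℕ} (hN : 1 ≤ N)
    (f : X → ℂ) (x : X) : ‖avg N (fun n => f (x - z n))‖ₑ ≤
      nr 2 (fun k => blockV G z k f x) + G.M (fun y => ‖f y‖ₑ) x := by
  have hle : ∀ k, blockV G z k f x ≤ nr 2 (fun k => blockV G z k f x) := by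
    intro k
    unfold nr
    rw [ENNReal.le_rpow_inv_iff two_pos]
    exact ENNReal.le_tsum k
  have hmem := log_two_mem hN
  generalize Nat.log 2 N = k at hmem
  rw [avg_eq_bop G z k N f x]
  refine (enorm_add_le _ _).trans (add_le_add ?_ ?_)
  · exact (enorm_le_shortV (fun M => bop G z k M f x) k hmem).trans (hle k)
  · rw [enorm_mul]
    calc _ ≤ 1 * ‖G.E k f x‖ₑ := mul_le_mul_left (enorm_avg_one_le hN) _
      _ ≤ _ := by
        rw [one_mul]
        exact (G.enorm_E_le _ f x).trans (G.P_le_M _ _ x)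

lemma sum_le_dyadic (h : ℕ → ℝ≥0∞) {A : ℝ≥0∞}
    (hA : ∀ N : ℕ, 1 ≤ N → (N : ℝ≥0∞)⁻¹ * ∑ n ∈ Ioc (N / 2) N, h n ≤ A) (l : ℕ) :
    ∑ n ∈ range (2 ^ l + 1), h n ≤ h 0 + 2 ^ (l + 1) * A := by
  have hA' : ∀ N : ℕ, 1 ≤ N → ∑ n ∈ Ioc (N / 2) N, h n ≤ N * A := by
    intro N hN
    have h1 := hA N hN
    rw [← ENNReal.div_eq_inv_mul] at h1
    rw [mul_comm]
    exact (ENNReal.div_le_iff (Nat.cast_ne_zero.2 (by omega)) (ENNReal.natCast_ne_top _)).1 h1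
  induction l with
  | zero =>
    have h1 := hA' 1 le_rfl
    have e : Ioc (1 / 2) 1 = ({1} : Finset ℕ) := by decide
    rw [e, sum_singleton, Nat.cast_one, one_mul] at h1
    rw [pow_zero, sum_range_succ, sum_range_one]
    refine add_le_add_right (h1.trans ?_) _
    calc A = 1 * A := (one_mul A).symm
      _ ≤ _ := mul_le_mul_left (by norm_num) _
  | succ l ih =>
    have h1 := hA' (2 ^ (l + 1)) Nat.one_le_two_pow
    have e0 : 2 ^ (l + 1) / 2 = 2 ^ l := by rw [pow_succ]; omega
    rw [e0] at h1
    have e : range (2 ^ (l + 1) + 1) = range (2 ^ l + 1) ∪ Ioc (2 ^ l) (2 ^ (l + 1)) := by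
      ext n
      rw [mem_union, mem_range, mem_range, mem_Ioc, pow_succ]
      omega
    have hd : Disjoint (range (2 ^ l + 1)) (Ioc (2 ^ l) (2 ^ (l + 1))) := by
      rw [disjoint_left]
      intro n hn hn'
      rw [mem_range] at hn
      rw [mem_Ioc] at hn'
      omega
    rw [e, sum_union hd]
    calc _ ≤ (h 0 + 2 ^ (l + 1) * A) + ((2 ^ (l + 1) : ℕ) : ℝ≥0∞) * A := add_le_add ih h1
      _ = _ := by push_cast; ring

section good

variable {m : ℕ} (hm : 0 < m) (c : Fin m → ℝ) (hpos : ∀ i, 0 < c i)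

lemma zf_zero (hpos : ∀ i, 0 < c i) (σ : ℤ) : zf c σ 0 = 0 := by
  funext i
  simp [zf, Real.zero_rpow (hpos i).ne']

lemma zf_neg (n : ℕ) : zf c (-1) n = - zf c 1 n := by
  funext i
  simp [zf]

set_option maxHeartbeats 1000000 in
/-- The maximal function of the adjoint kernels is controlled by the averages along the reflected
curve, for which the square function is already bounded when `q < 2`. -/
lemma adjMax (hpos : ∀ i, 0 < c i) {G : Grid (Fin m → ℤ)} (Φ Ψ : Fam G) (hker : Φ.ker = bker G (zf c 1))
    (hT : Ψ.T = blockV G (zf c (-1))) {q : ℝ} (hq : 1 < q) (hq2 : q < 2) : Φ.AdjMax q := by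
  obtain ⟨C1, hC1, hsq⟩ := Ψ.square hq.le (Ψ.good_lt hq hq2)
  obtain ⟨C2, hC2, hdoob⟩ := G.doob_nr hq
  rw [hT] at hsq
  have hq0 : 0 < q := by linarith
  refine ⟨40 * (C1 + C2), by positivity, fun H => ?_⟩
  rcases eq_or_ne (nr q H) ⊤ with htop | htop
  · rw [htop, ENNReal.mul_top (ENNReal.ofReal_pos.2 (by positivity)).ne']
    exact le_top
  have hHt : ∀ y, H y ≠ ⊤ := by
    intro y hy
    apply htop
    have : H y ^ q ≤ ∑' x, H x ^ q := ENNReal.le_tsum y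
    rw [hy, ENNReal.top_rpow_of_pos hq0, top_le_iff] at this
    unfold nr
    rw [this, ENNReal.top_rpow_of_pos (by positivity)]
  set f : (Fin m → ℤ) → ℂ := fun y => (((H y).toReal : ℝ) : ℂ) with hf
  have hfn : ∀ y, ‖f y‖ₑ = H y := by
    intro y
    rw [← ofReal_norm, hf, Complex.norm_of_nonneg ENNReal.toReal_nonneg, ENNReal.ofReal_toReal (hHt y)]
  have hfn' : (fun y => ‖f y‖ₑ) = H := funext hfn
  set Sq : (Fin m → ℤ) → ℝ≥0∞ := fun y => nr 2 (fun k => blockV G (zf c (-1)) k f y) with hSq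
  have hmax : ∀ y, ∀ N : ℕ, 1 ≤ N → (N : ℝ≥0∞)⁻¹ * ∑ n ∈ Ioc (N / 2) N, H (y + zf c 1 n) ≤ Sq y + G.M H y := by
    intro y N hN
    have h1 := enorm_avg_le_max G (zf c (-1)) hN f y
    rw [hfn'] at h1
    refine le_trans (le_of_eq ?_) h1
    have e : ∀ n, y - zf c (-1) n = y + zf c 1 n := fun n => by rw [zf_neg, sub_neg_eq_add]
    simp only [e]
    rw [avg, enorm_mul, enorm_natCast_inv hN]
    congr 1
    have e2 : ∑ n ∈ Ioc (N / 2) N, f (y + zf c 1 n) =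
        ((∑ n ∈ Ioc (N / 2) N, (H (y + zf c 1 n)).toReal : ℝ) : ℂ) := by
      push_cast; rfl
    rw [e2, ← ofReal_norm, Complex.norm_of_nonneg (sum_nonneg fun _ _ => ENNReal.toReal_nonneg),
      ENNReal.ofReal_sum_of_nonneg (fun _ _ => ENNReal.toReal_nonneg)]
    exact sum_congr rfl fun n _ => (ENNReal.ofReal_toReal (hHt _)).symm
  have hpt : ∀ y, (⨆ k, ∑' x, Φ.ker k x y * H x) ≤ 40 * (Sq y + G.M H y) := by
    intro y
    refine iSup_le fun k => ?_
    rw [hker, tsum_bker']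
    have h1 := sum_le_dyadic (fun n => H (y + zf c 1 n)) (hmax y) (k + 1)
    simp only [zf_zero c hpos, add_zero] at h1
    have hk1 : ((2 ^ k : ℕ) : ℝ≥0∞)⁻¹ ≤ 1 := ENNReal.inv_le_one.2 (by exact_mod_cast Nat.one_le_two_pow)
    have hkc : ((2 ^ k : ℕ) : ℝ≥0∞)⁻¹ * ((2 ^ k : ℕ) : ℝ≥0∞) = 1 :=
      ENNReal.inv_mul_cancel (Nat.cast_ne_zero.2 (by positivity)) (ENNReal.natCast_ne_top _)
    calc _ ≤ 5 * ((2 ^ k : ℕ) : ℝ≥0∞)⁻¹ * (H y + 2 ^ (k + 1 + 1) * (Sq y + G.M H y)) + 15 * G.M H y :=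
          add_le_add (mul_le_mul_right h1 _) (mul_le_mul_right (G.P_le_M k H y) _)
      _ = 5 * (((2 ^ k : ℕ) : ℝ≥0∞)⁻¹ * H y) +
          20 * ((((2 ^ k : ℕ) : ℝ≥0∞)⁻¹ * ((2 ^ k : ℕ) : ℝ≥0∞)) * (Sq y + G.M H y)) + 15 * G.M H y := by
          push_cast; ring
      _ ≤ 5 * (1 * G.M H y) + 20 * (1 * (Sq y + G.M H y)) + 15 * G.M H y := by
          rw [hkc]
          exact add_le_add_left (add_le_add_left (mul_le_mul_right (mul_le_mul' hk1 (G.le_M H y)) _) _) _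
      _ = 20 * Sq y + 40 * G.M H y := by ring
      _ ≤ 40 * Sq y + 40 * G.M H y := add_le_add_left (mul_le_mul_left (by norm_num) _) _
      _ = _ := by ring
  have hsqf := hsq f
  rw [hfn'] at hsqf
  calc nr q (fun y => ⨆ k, ∑' x, Φ.ker k x y * H x)
      ≤ nr q (fun y => 40 * (Sq y + G.M H y)) := nr_mono hq0 hpt
    _ = 40 * nr q (fun y => Sq y + G.M H y) := nr_const_mul hq0 _ _
    _ ≤ 40 * (ENNReal.ofReal C1 * nr q H + ENNReal.ofReal C2 * nr q H) :=
        mul_le_mul_right ((nr_add_le hq.le _ _).trans (add_le_add (hsqf htop) (hdoob H))) _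
    _ = _ := by
        rw [← add_mul, ← mul_assoc, ← ENNReal.ofReal_add hC1.le hC2.le, ENNReal.ofReal_mul (by norm_num)]
        norm_num

/-- The square function of the short variations is bounded for all exponents. -/
lemma square_all (hinj : Function.Injective c) (hint : ∀ i, ∀ k : ℕ, c i ≠ (k : ℝ))
    {p : ℝ} (hp : 1 < p) : ∃ C : ℝ, 0 < C ∧ ∀ f : (Fin m → ℤ) → ℂ,
    nr p (fun x => ‖f x‖ₑ) ≠ ⊤ → nr p (fun x => nr 2 (fun k => blockV (dboxGrid hm c hpos) (zf c 1) k f x)) ≤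
      ENNReal.ofReal C * nr p (fun x => ‖f x‖ₑ) := by
  obtain ⟨Φ, hT, hker⟩ := exists_fam hm c hpos hinj hint (σ := 1) (Or.inl rfl)
  rw [← hT]
  refine Φ.square hp.le ?_
  rcases lt_trichotomy p 2 with h | rfl | h
  · exact Φ.good_lt hp h
  · exact Φ.good_two
  · obtain ⟨Ψ, hT', -⟩ := exists_fam hm c hpos hinj hint (σ := -1) (Or.inr rfl)
    exact Φ.good_gt h fun q hq hq2 => adjMax c hpos Φ Ψ hker hT' hq hq2

end good

/-! ### From short variations and the martingale to the full variation -/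

lemma sum_jump_le (F : ℕ → ℝ≥0∞) {u : ℕ → ℕ} (hu : Monotone u) (J : ℕ) :
    ∑ j ∈ range J, (if u j ≠ u (j + 1) then F (u j) + F (u (j + 1)) else 0) ≤ 2 * ∑' k, F k := by
  rw [← sum_filter, sum_add_distrib, two_mul]
  have hlt : ∀ j ∈ (range J).filter (fun j => u j ≠ u (j + 1)), u j < u (j + 1) := fun j hj =>
    lt_of_le_of_ne (hu (Nat.le_succ j)) (mem_filter.1 hj).2
  refine add_le_add ?_ ?_
  · rw [← sum_image (f := F) (g := u)]
    · exact ENNReal.sum_le_tsum _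
    · intro i hi j hj hij
      have h1 := hlt i hi
      have h2 := hlt j hj
      rcases lt_trichotomy i j with h | h | h
      · have := hu (show i + 1 ≤ j from h); omega
      · exact h
      · have := hu (show j + 1 ≤ i from h); omega
  · rw [← sum_image (f := F) (g := fun j => u (j + 1))]
    · exact ENNReal.sum_le_tsum _
    · intro i hi j hj hij
      have h1 := hlt i hi
      have h2 := hlt j hj
      simp only at hij
      rcases lt_trichotomy i j with h | h | h
      · have := hu (show i + 1 ≤ j from h); omega
      · exact h
      · have := hu (show j + 1 ≤ i from h); omega

lemma sum_rpow_le_of_sq {r : ℝ} (hr : 2 ≤ r) (s : Finset ℕ) (d : ℕ → ℝ≥0∞) :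
    ∑ j ∈ s, d j ^ r ≤ (∑ j ∈ s, d j ^ (2:ℝ)) ^ (r / 2) := by
  set S := ∑ j ∈ s, d j ^ (2:ℝ) with hS
  have e : r / 2 = 1 + (r - 2) / 2 := by ring
  rw [e, ENNReal.rpow_add_of_nonneg _ _ zero_le_one (by linarith), ENNReal.rpow_one]
  nth_rewrite 1 [hS]
  rw [sum_mul]
  refine sum_le_sum fun j hj => ?_
  have e2 : r = 2 + 2 * ((r - 2) / 2) := by ring
  have h1 : d j ^ r = d j ^ (2:ℝ) * (d j ^ (2:ℝ)) ^ ((r - 2) / 2) := by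
    conv_lhs => rw [e2]
    rw [ENNReal.rpow_add_of_nonneg _ _ zero_le_two (by linarith), ENNReal.rpow_mul]
  rw [h1]
  refine mul_le_mul_right (ENNReal.rpow_le_rpow ?_ (by linarith)) _
  exact single_le_sum (f := fun j => d j ^ (2:ℝ)) (fun _ _ => zero_le) hj

/-- The block-wise short variations control the squared increments along any chain: increments
inside a block are charged to the variation there, increments that change the block to the sizes
in the two blocks involved. -/
lemma chain_sq_le (b : ℕ → ℕ → ℂ) {v : ℕ → ℕ} (hv : Monotone v) (h1 : ∀ j, 1 ≤ v j) (J : ℕ) :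
    ∑ j ∈ range J, ‖b (Nat.log 2 (v (j + 1))) (v (j + 1)) - b (Nat.log 2 (v j)) (v j)‖ₑ ^ (2:ℝ) ≤
      5 * ∑' k, shortV (b k) k ^ (2:ℝ) := by
  set T : ℕ → ℝ≥0∞ := fun k => shortV (b k) k ^ (2:ℝ) with hT
  -- projection to the dyadic block of level `k`
  set cl : ℕ → ℕ → ℕ := fun k n => max (2 ^ k) (min n (2 ^ (k + 1))) with hcl
  have hclm : ∀ k, Monotone (cl k) := fun k a b h => max_le_max le_rfl (min_le_min h le_rfl)
  have hclI : ∀ k n, cl k n ∈ Set.Icc (2 ^ k) (2 ^ (k + 1)) := fun k n =>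
    ⟨le_max_left _ _, max_le (Nat.pow_le_pow_right two_pos (Nat.le_succ k)) (min_le_right _ _)⟩
  have hcle : ∀ n, 1 ≤ n → cl (Nat.log 2 n) n = n := fun n hn => by
    have := log_two_mem hn
    simp only [hcl]
    rw [min_eq_left this.2, max_eq_right this.1]
  have hbT : ∀ n, 1 ≤ n → ‖b (Nat.log 2 n) n‖ₑ ^ (2:ℝ) ≤ T (Nat.log 2 n) := fun n hn =>
    ENNReal.rpow_le_rpow (enorm_le_shortV _ _ (log_two_mem hn)) zero_le_two
  have hterm : ∀ j, ‖b (Nat.log 2 (v (j + 1))) (v (j + 1)) - b (Nat.log 2 (v j)) (v j)‖ₑ ^ (2:ℝ) ≤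
      (∑' k, ‖b k (cl k (v (j + 1))) - b k (cl k (v j))‖ₑ ^ (2:ℝ)) +
      2 * (if Nat.log 2 (v j) ≠ Nat.log 2 (v (j + 1)) then
        T (Nat.log 2 (v j)) + T (Nat.log 2 (v (j + 1))) else 0) := by
    intro j
    by_cases h : Nat.log 2 (v j) = Nat.log 2 (v (j + 1))
    · rw [if_neg (not_not.2 h), mul_zero, add_zero]
      refine le_trans (le_of_eq ?_) (ENNReal.le_tsum (Nat.log 2 (v j)))
      have e1 := hcle _ (h1 j)
      have e2 := hcle _ (h1 (j + 1))
      rw [← h] at e2 ⊢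
      rw [e1, e2]
    · rw [if_pos h]
      refine le_trans ?_ le_add_self
      refine (ENNReal.rpow_le_rpow enorm_sub_le zero_le_two).trans ((ennreal_add_sq_le _ _).trans ?_)
      rw [add_comm]
      exact mul_le_mul_right (add_le_add (hbT _ (h1 j)) (hbT _ (h1 (j + 1)))) _
  have hlog : Monotone fun j => Nat.log 2 (v j) := fun i j h => Nat.log_mono_right (hv h)
  refine (sum_le_sum fun j _ => hterm j).trans ?_
  rw [sum_add_distrib, ← mul_sum, ← Summable.tsum_finsetSum (fun _ _ => ENNReal.summable)]
  calc _ ≤ (∑' k, T k) + 2 * (2 * ∑' k, T k) := by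
        refine add_le_add (ENNReal.tsum_le_tsum fun k => ?_) (mul_le_mul_right (sum_jump_le T hlog J) _)
        refine (le_W 2 (b k) J (v := fun j => cl k (v j)) (fun i j h => hclm k (hv h))
          (fun j => hclI k _)).trans ?_
        rw [hT, ← ENNReal.rpow_inv_le_iff two_pos]
        exact le_self_add
    _ = _ := by ring

lemma avg_one_eq {N : ℕ} : avg N (fun _ => 1) = (((N - N / 2 : ℕ) : ℝ) / N : ℝ) := by
  rw [avg, sum_const, Nat.card_Ioc, nsmul_eq_mul, mul_one]
  push_cast
  rw [div_eq_inv_mul]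

/-- The total masses `avg N 1` differ from `1 / 2` by at most `1 / (2 N)`, so that their squared
increments telescope. -/
lemma avg_one_sq_le {u v : ℕ} (hu : 1 ≤ u) (huv : u ≤ v) :
    ‖avg v (fun _ => 1) - avg u (fun _ => 1)‖ₑ ^ (2:ℝ) ≤ ENNReal.ofReal (1 / (u:ℝ) - 1 / (v:ℝ)) := by
  rcases huv.eq_or_lt with h | h
  · subst h; simp
  have key : ∀ N : ℕ, 1 ≤ N → 1 / 2 ≤ ((N - N / 2 : ℕ) : ℝ) / N ∧
      ((N - N / 2 : ℕ) : ℝ) / N ≤ 1 / 2 + 1 / (2 * N) := by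
    intro N hN
    have hN' : (0:ℝ) < N := by exact_mod_cast hN
    have a1 : (N:ℝ) ≤ 2 * ((N - N / 2 : ℕ) : ℝ) := by
      have : N ≤ 2 * (N - N / 2) := by omega
      exact_mod_cast this
    have a2 : 2 * ((N - N / 2 : ℕ) : ℝ) ≤ N + 1 := by
      have : 2 * (N - N / 2) ≤ N + 1 := by omega
      exact_mod_cast this
    constructor
    · rw [le_div_iff₀ hN']; linarith
    · rw [div_le_iff₀ hN']
      have : (1 / 2 + 1 / (2 * (N:ℝ))) * N = (N + 1) / 2 := by field_simp
      rw [this]; linarith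
  have hu' : (1:ℝ) ≤ u := by exact_mod_cast hu
  have hv' : (u:ℝ) + 1 ≤ v := by exact_mod_cast h
  obtain ⟨p1, p2⟩ := key u hu
  obtain ⟨q1, q2⟩ := key v (by omega)
  rw [avg_one_eq, avg_one_eq, ← Complex.ofReal_sub, ← ofReal_norm, Complex.norm_real,
    Real.norm_eq_abs]
  generalize ((u - u / 2 : ℕ) : ℝ) / u = s at *
  generalize ((v - v / 2 : ℕ) : ℝ) / v = t at *
  rw [ENNReal.ofReal_rpow_of_nonneg (abs_nonneg _) zero_le_two]
  refine ENNReal.ofReal_le_ofReal ?_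
  have hvu : 1 / (2 * (v:ℝ)) ≤ 1 / (2 * u) := by
    apply one_div_le_one_div_of_le <;> linarith
  have hab : |t - s| ≤ 1 / (2 * u) := by rw [abs_le]; constructor <;> linarith
  have e1 : |t - s| ^ (2:ℝ) ≤ (1 / (2 * (u:ℝ))) ^ 2 := by
    rw [Real.rpow_two]; exact pow_le_pow_left₀ (abs_nonneg _) hab 2
  have e2 : 1 / (v:ℝ) ≤ 1 / (u + 1) := one_div_le_one_div_of_le (by linarith) hv'
  have e3 : (1 / (2 * (u:ℝ))) ^ 2 ≤ 1 / u - 1 / (u + 1) := by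
    have : 1 / (u:ℝ) - 1 / (u + 1) = 1 / (u * (u + 1)) := by field_simp; ring
    rw [this, div_pow, one_pow]
    apply one_div_le_one_div_of_le <;> nlinarith
  linarith

lemma chain_avg_one_le {v : ℕ → ℕ} (hv : Monotone v) (h1 : ∀ j, 1 ≤ v j) (J : ℕ) :
    ∑ j ∈ range J, ‖avg (v (j + 1)) (fun _ => 1) - avg (v j) (fun _ => 1)‖ₑ ^ (2:ℝ) ≤ 1 := by
  refine (sum_le_sum fun j _ => avg_one_sq_le (h1 j) (hv (Nat.le_succ j))).trans ?_
  rw [← ENNReal.ofReal_sum_of_nonneg, sum_range_sub' (fun j => 1 / (v j : ℝ))]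
  · rw [ENNReal.ofReal_le_one]
    have h0 : (1:ℝ) ≤ v 0 := by exact_mod_cast h1 0
    have : 1 / (v 0:ℝ) ≤ 1 := by rw [div_le_one (by linarith)]; exact h0
    have : (0:ℝ) ≤ 1 / (v J:ℝ) := by positivity
    linarith
  · intro j _
    have h0 : (1:ℝ) ≤ v j := by exact_mod_cast h1 j
    have h2 : (v j:ℝ) ≤ v (j + 1) := by exact_mod_cast hv (Nat.le_succ j)
    have := one_div_le_one_div_of_le (by linarith) h2
    linarith

section path

variable {X : Type*} [AddCommGroup X] (G : Grid X) (z : ℕ → X) (f : X → ℂ) (x : X)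

lemma W_bop_le {r : ℝ} (hr : 2 < r) :
    W r (fun N => bop G z (Nat.log 2 N) N f x) (Set.Ici 1) ^ r⁻¹ ≤
      3 * nr 2 (fun k => blockV G z k f x) := by
  have hr0 : 0 < r := by linarith
  rw [ENNReal.rpow_inv_le_iff hr0]
  refine W_le fun J v hv hD => (sum_rpow_le_of_sq hr.le _ _).trans ?_
  have h := chain_sq_le (fun k N => bop G z k N f x) hv hD J
  have h2 : (5 : ℝ≥0∞) * ∑' k, shortV (fun N => bop G z k N f x) k ^ (2:ℝ) ≤
      (3 * nr 2 (fun k => blockV G z k f x)) ^ (2:ℝ) := by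
    rw [ENNReal.mul_rpow_of_nonneg _ _ zero_le_two]
    refine mul_le_mul' (by rw [ennreal_rpow_two]; norm_num) ?_
    rw [nr_rpow two_pos]
    exact le_rfl
  refine (ENNReal.rpow_le_rpow (h.trans h2) (by positivity)).trans (le_of_eq ?_)
  rw [← ENNReal.rpow_mul]
  congr 1
  ring

lemma W_avg_E_le {r : ℝ} (hr : 2 < r) :
    W r (fun N => avg N (fun _ => 1) * G.E (Nat.log 2 N) f x) (Set.Ici 1) ^ r⁻¹ ≤
      W r (fun k => G.E k f x) Set.univ ^ r⁻¹ + G.M (fun y => ‖f y‖ₑ) x := by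
  have hr0 : 0 < r := by linarith
  have hκ : Monotone (Nat.log 2) := fun _ _ h => Nat.log_mono_right h
  generalize Nat.log 2 = κ at hκ ⊢
  rw [ENNReal.rpow_inv_le_iff hr0]
  refine W_le fun J v hv hD => ?_
  rw [← ENNReal.rpow_inv_le_iff hr0]
  set e : ℕ → ℂ := fun k => G.E k f x with he
  set a : ℕ → ℂ := fun N => avg N (fun _ => 1) with ha
  set Mx := G.M (fun y => ‖f y‖ₑ) x with hMx
  have heM : ∀ k, ‖e k‖ₑ ≤ Mx := fun k => (G.enorm_E_le _ f x).trans (G.P_le_M _ _ x)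
  have hterm : ∀ j, ‖a (v (j + 1)) * e (κ (v (j + 1))) - a (v j) * e (κ (v j))‖ₑ ≤
      ‖e (κ (v (j + 1))) - e (κ (v j))‖ₑ + Mx * ‖a (v (j + 1)) - a (v j)‖ₑ := by
    intro j
    have e1 : a (v (j + 1)) * e (κ (v (j + 1))) - a (v j) * e (κ (v j)) =
        a (v (j + 1)) * (e (κ (v (j + 1))) - e (κ (v j))) +
          e (κ (v j)) * (a (v (j + 1)) - a (v j)) := by ring
    rw [e1]
    refine (enorm_add_le _ _).trans ?_
    rw [enorm_mul, enorm_mul]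
    refine add_le_add ?_ (mul_le_mul_left (heM _) _)
    exact (mul_le_mul_left (enorm_avg_one_le (hD _)) _).trans (one_mul _).le
  have hlog : Monotone fun j => κ (v j) := fun i j h => hκ (hv h)
  have h1 := ENNReal.Lp_add_le (range J)
    (fun j => ‖e (κ (v (j + 1))) - e (κ (v j))‖ₑ)
    (fun j => Mx * ‖a (v (j + 1)) - a (v j)‖ₑ) (p := r) (by linarith)
  rw [one_div] at h1
  have hinv : 0 ≤ r⁻¹ := by positivity
  refine (ENNReal.rpow_le_rpow (sum_le_sum fun j _ =>
    ENNReal.rpow_le_rpow (hterm j) hr0.le) hinv).trans (h1.trans (add_le_add ?_ ?_))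
  · exact ENNReal.rpow_le_rpow (le_W r e J (v := fun j => κ (v j)) hlog fun _ => Set.mem_univ _) hinv
  · rw [ENNReal.rpow_inv_le_iff hr0]
    simp only [ENNReal.mul_rpow_of_nonneg _ _ hr0.le]
    rw [← mul_sum]
    refine (mul_le_mul_right ((sum_rpow_le_of_sq hr.le _ _).trans
      (ENNReal.rpow_le_one (chain_avg_one_le hv hD J) (by positivity))) _).trans (mul_one _).le

/-- Pathwise bound of the full variation by the square function of the short variations, the Doob
maximal function and the variation of the martingale. -/
lemma Vvar_avg_le {r : ℝ} (hr : 2 < r) :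
    Vvar r (fun N => avg N (fun n => f (x - z n))) (Set.Ici 1) ≤
      4 * nr 2 (fun k => blockV G z k f x) + (2 * G.M (fun y => ‖f y‖ₑ) x +
        W r (fun k => G.E k f x) Set.univ ^ r⁻¹) := by
  have hr0 : 0 < r := by linarith
  have hsup : (⨆ N ∈ Set.Ici 1, (‖avg N (fun n => f (x - z n))‖₊ : ℝ≥0∞)) ≤
      nr 2 (fun k => blockV G z k f x) + G.M (fun y => ‖f y‖ₑ) x :=
    iSup₂_le fun N hN => enorm_avg_le_max G z hN f x
  have hW : W r (fun N => avg N (fun n => f (x - z n))) (Set.Ici 1) ^ r⁻¹ ≤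
      3 * nr 2 (fun k => blockV G z k f x) +
        (W r (fun k => G.E k f x) Set.univ ^ r⁻¹ + G.M (fun y => ‖f y‖ₑ) x) := by
    have e : (fun N => avg N (fun n => f (x - z n))) = fun N => bop G z (Nat.log 2 N) N f x +
        avg N (fun _ => 1) * G.E (Nat.log 2 N) f x := funext fun N => avg_eq_bop G z _ N f x
    rw [e]
    exact (W_add_le (by linarith) _ _ _).trans (add_le_add (W_bop_le G z f x hr) (W_avg_E_le G f x hr))
  have hch : (⨆ (J : ℕ) (u : Fin (J + 1) → ℕ) (_ : StrictMono u) (_ : ∀ j, u j ∈ Set.Ici 1),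
      (∑ j : Fin J, (‖avg (u j.succ) (fun n => f (x - z n)) -
        avg (u j.castSucc) (fun n => f (x - z n))‖₊ : ℝ≥0∞) ^ r) ^ r⁻¹) ≤
      W r (fun N => avg N (fun n => f (x - z n))) (Set.Ici 1) ^ r⁻¹ := by
    refine iSup_le fun J => iSup_le fun u => iSup_le fun hu => iSup_le fun hD => ?_
    refine ENNReal.rpow_le_rpow ?_ (by positivity)
    -- extend the finite chain to a monotone chain indexed by all natural numbers
    have hlt : ∀ n, min n J < J + 1 := fun n => Nat.lt_succ_of_le (min_le_right _ _)
    refine le_trans (le_of_eq ?_) (le_W r (fun N => avg N (fun n => f (x - z n))) J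
      (v := fun n => u ⟨min n J, hlt n⟩) ?_ fun n => hD _)
    · rw [← Fin.sum_univ_eq_sum_range (fun j => ‖avg (u ⟨min (j + 1) J, hlt (j + 1)⟩) (fun n => f (x - z n)) -
        avg (u ⟨min j J, hlt j⟩) (fun n => f (x - z n))‖ₑ ^ r)]
      refine sum_congr rfl fun j _ => ?_
      have e1 : j.succ = ⟨min (j + 1) J, hlt (j + 1)⟩ := by
        ext; simp only [Fin.val_succ]; omega
      have e2 : j.castSucc = ⟨min j J, hlt j⟩ := by
        ext; simp only [Fin.val_castSucc]; omega
      rw [e1, e2]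
      rfl
    · intro i j h
      refine hu.monotone ?_
      rw [Fin.mk_le_mk]
      exact min_le_min h le_rfl
  unfold Vvar
  refine (add_le_add hsup (hch.trans hW)).trans (le_of_eq ?_)
  ring

end path

/-! ### The variational inequality -/

lemma Atil_eq_avg (m : ℕ) (c : Fin m → ℝ) (N : ℕ) (f : (Fin m → ℤ) → ℂ) (x : Fin m → ℤ) :
    Atil m c N f x = avg N (fun n => f (x - zf c 1 n)) := by
  unfold Atil avg
  rw [← sum_filter]
  congr 1
  refine sum_congr ?_ fun n _ => ?_
  · ext n
    rw [mem_filter, mem_Icc, mem_Ioc]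
    omega
  · congr 2
    funext i
    simp [zf]

/-- full variational inequality on `ℤ^m`, Theorem 1.5 of the
paper: for non-integer `0 < c₁ < ⋯ < c_m`, `p ∈ (1,∞)` and `r > 2` there is
`C = C(c₁,…,c_m,m,p,r)` such that for every `f ∈ ℓ^p(ℤ^m)`,
`‖V^r(Ã_N f)_{N∈ℕ}‖_{ℓ^p(ℤ^m)} ≤ C ‖f‖_{ℓ^p(ℤ^m)}` (here `ℕ = {1,2,…}`). -/
theorem stmt4 {m : ℕ} (hm : 0 < m) (c : Fin m → ℝ)
    (hpos : ∀ i, 0 < c i) (hmono : StrictMono c)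
    (hint : ∀ i, ∀ k : ℤ, c i ≠ (k : ℝ))
    (p r : ℝ) (hp : 1 < p) (hr : 2 < r) :
    ∃ C : ℝ, 0 < C ∧ ∀ f : (Fin m → ℤ) → ℂ, lpZ m p f ≠ ⊤ →
      lpZE m p (fun x => Vvar r (fun N => Atil m c N f x) (Set.Ici 1)) ≤
        ENNReal.ofReal C * lpZ m p f := by
  have hint' : ∀ i, ∀ k : ℕ, c i ≠ (k : ℝ) := fun i k h => hint i k (by rw [h, Int.cast_natCast])
  obtain ⟨C1, hC1, h1⟩ := square_all hm c hpos hmono.injective hint' hp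
  obtain ⟨C2, hC2, h2⟩ := (dboxGrid hm c hpos).doob_nr hp
  obtain ⟨C3, hC3, h3⟩ := (dboxGrid hm c hpos).variation hp hr
  have hp0 : 0 < p := by linarith
  refine ⟨4 * C1 + (2 * C2 + C3), by positivity, fun f hf => ?_⟩
  change nr p _ ≤ _ * nr p (fun x => ‖f x‖ₑ)
  simp only [Atil_eq_avg]
  generalize dboxGrid hm c hpos = G at *
  calc _ ≤ nr p (fun x => 4 * nr 2 (fun k => blockV G (zf c 1) k f x) +
        (2 * G.M (fun y => ‖f y‖ₑ) x + W r (fun k => G.E k f x) Set.univ ^ r⁻¹)) :=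
        nr_mono hp0 fun x => Vvar_avg_le G (zf c 1) f x hr
    _ ≤ 4 * nr p (fun x => nr 2 (fun k => blockV G (zf c 1) k f x)) +
        (2 * nr p (fun x => G.M (fun y => ‖f y‖ₑ) x) +
          nr p (fun x => W r (fun k => G.E k f x) Set.univ ^ r⁻¹)) := by
        refine (nr_add_le hp.le _ _).trans (add_le_add (nr_const_mul hp0 _ _).le ?_)
        exact (nr_add_le hp.le _ _).trans (add_le_add_left (nr_const_mul hp0 _ _).le _)
    _ ≤ 4 * (ENNReal.ofReal C1 * nr p (fun x => ‖f x‖ₑ)) +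
        (2 * (ENNReal.ofReal C2 * nr p (fun x => ‖f x‖ₑ)) +
          ENNReal.ofReal C3 * nr p (fun x => ‖f x‖ₑ)) :=
        add_le_add (mul_le_mul_right (h1 f hf) _)
          (add_le_add (mul_le_mul_right (h2 _) _) (h3 f))
    _ = _ := by
        rw [ENNReal.ofReal_add (by positivity) (by positivity),
          ENNReal.ofReal_add (by positivity) (by positivity), ENNReal.ofReal_mul (by norm_num),
          ENNReal.ofReal_mul (by norm_num), ENNReal.ofReal_ofNat, ENNReal.ofReal_ofNat]
        ring

end
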